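/- For every integer n ≥ 6 and every integer m with 2n−3 ≤ m ≤ 3n−6, add(n,m) = ⌈(3/2)(3n−6−m)⌉. -/

import Mathlib

/-!
Write `k = 3n - 6 - m`. The claim is `2 * add(n, m) ∈ {3k, 3k + 1}`.

**Lower bound.** Call a set of at most three pairs, each addable to `G` (or already an edge) but not
all addable together, a *conflict*. Every planar graph with `n ≥ 5` and `2n - 3 ≤ m ≤ 3n - 7` has a
conflict (`Range.conflict`). Given one, take a minimal non-planar subset `D` of it; it has two or
three elements, and adding all of them but one loses all `|D|` addable pairs for `|D| - 1 ≤ 2` added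
edges. Induction on `k` gives `3k ≤ 2 |add(G)|` (`lower_bound`).

For a 3-connected `G` a conflict consists of two crossing chords of a non-triangular face. Faces are
handled combinatorially, since planarity is defined by excluded minors: they are the peripheral
cycles (induced, with connected complement). By Tutte they generate the cycle space over `ZMod 2`
(`generate_all`), and in a planar graph every edge lies on at most two of them (`per_le_two`), so
they form a two-fold family in the sense of MacLane (`face_family`). Conversely a graph whose cycle
space has a two-fold generating family is planar (`TwoFam.planar`): such families pass to minors,
and counting shows that `K₅` and `K₃,₃` have none. Hence an edge may be added inside a face
(`chord_planar`), two crossing chords of a face cannot both be added (`crossing_chords`), and a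
3-connected planar graph all of whose faces are triangles has `3n - 6` edges (`conn3_edge_ge`).

If `G` is not 3-connected, it has a separation of order at most two, and at least one of its sides,
after completing the cut set to a clique, lies in the same density range or is a triangulation. In
the former case a conflict is lifted from the side (`Sep.lift`); in the latter, the triangulated
side can be placed at a corner beside the cut set in different ways, and these are incompatible
(`conflict_tri`).

**Upper bound.** Take a double wheel, a rim of `n - 2` vertices joined to two hubs, and remove both
spokes at `j` rim vertices, no two of them consecutive. This removes `2j` edges; the addable pairs
are the `2j` missing spokes and the `j` chords joining the two rim neighbours of a vertex without
spokes (`extremal_addable`). For odd `k` one missing spoke is added back (`exists_odd`). The case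
`n = 6`, `k = 3` needs a different count (`exists_six`), as two vertices without spokes on a rim of
length four have the same neighbours.
-/

open SimpleGraph Filter Asymptotics

/-- `H` is a minor of `G`: to each vertex of `H` we can assign a connected nonempty
branch set in `G`, pairwise disjoint, with an edge of `G` between the branch sets of
any two adjacent vertices of `H`. -/
def IsMinor {α β : Type*} (H : SimpleGraph α) (G : SimpleGraph β) : Prop :=
  ∃ f : α → Set β,
    (∀ a, (G.induce (f a)).Connected) ∧
    (∀ a b, a ≠ b → Disjoint (f a) (f b)) ∧
    (∀ a b, H.Adj a b → ∃ u ∈ f a, ∃ v ∈ f b, G.Adj u v)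

/-- A graph is planar iff it has neither a `K₅`-minor nor a `K₃,₃`-minor
(Wagner's theorem). -/
def IsPlanar {V : Type*} (G : SimpleGraph V) : Prop :=
  ¬ IsMinor (completeGraph (Fin 5)) G ∧
    ¬ IsMinor (completeBipartiteGraph (Fin 3) (Fin 3)) G

/-- The number of edges of a graph. -/
noncomputable def edgeCount {V : Type*} (G : SimpleGraph V) : ℕ :=
  G.edgeSet.ncard

/-- The degree of a vertex. -/
noncomputable def vertexDegree {V : Type*} (G : SimpleGraph V) (v : V) : ℕ :=
  (G.neighborSet v).ncard

/-- `𝒫(n,m)`: the set of labelled planar graphs on `{1,…,n}` with exactly `m` edges. -/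
def planarSet (n m : ℕ) : Set (SimpleGraph (Fin n)) :=
  {G | IsPlanar G ∧ edgeCount G = m}

/-- The probability that the uniform random planar graph `P_{n,m}` satisfies `P`. -/
noncomputable def planarProb (n m : ℕ) (P : SimpleGraph (Fin n) → Prop) : ℝ :=
  ({G ∈ planarSet n m | P G}.ncard : ℝ) / ((planarSet n m).ncard : ℝ)

/-- The number of pendant edges (edges incident to a vertex of degree 1). -/
noncomputable def pendantCount {V : Type*} (G : SimpleGraph V) : ℕ :=
  {e ∈ G.edgeSet | ∃ v ∈ e, vertexDegree G v = 1}.ncard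

/-- The set of addable non-edges of `G`: non-edges whose addition keeps the graph planar. -/
def addableSet {V : Type*} (G : SimpleGraph V) : Set (Sym2 V) :=
  {e | ¬ e.IsDiag ∧ e ∉ G.edgeSet ∧ IsPlanar (G ⊔ SimpleGraph.fromEdgeSet {e})}

/-- `add(n,m)`: the minimum number of addable non-edges over all graphs in `𝒫(n,m)`. -/
noncomputable def addMin (n m : ℕ) : ℕ :=
  sInf ((fun G => (addableSet G).ncard) '' planarSet n m)

/-- `W` carries an induced order-preserving copy of `H` in `G`: the increasing bijection
from `{1,…,h}` to `W` is an isomorphism between `H` and the induced subgraph `G[W]`. -/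
def IsOrderCopy {h n : ℕ} (H : SimpleGraph (Fin h)) (G : SimpleGraph (Fin n))
    (W : Finset (Fin n)) : Prop :=
  ∃ hW : W.card = h,
    ∀ i j : Fin h,
      H.Adj i j ↔ G.Adj ((W.orderIsoOfFin hW i : Fin n)) ((W.orderIsoOfFin hW j : Fin n))

/-- `W` is the vertex set of a connected component of `G`. -/
def IsComponent {V : Type*} (G : SimpleGraph V) (W : Finset V) : Prop :=
  (G.induce (W : Set V)).Connected ∧ ∀ v ∈ W, ∀ u, G.Adj v u → u ∈ W

/-- The number of components of `G` admitting an order-preserving isomorphism to `H`. -/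
noncomputable def numOrderComponents {h n : ℕ} (H : SimpleGraph (Fin h))
    (G : SimpleGraph (Fin n)) : ℕ :=
  {W : Finset (Fin n) | IsComponent G W ∧ IsOrderCopy H G W}.ncard

/-- The number of distinct cycles (as subgraphs, identified with their edge sets) of
length at most `k` in `S`. -/
noncomputable def cycleCountLe {V : Type*} (S : SimpleGraph V) (k : ℕ) : ℕ :=
  {E : Set (Sym2 V) | ∃ (v : V) (c : S.Walk v v),
    c.IsCycle ∧ c.length ≤ k ∧ {e | e ∈ c.edges} = E}.ncard

set_option autoImplicit false
set_option linter.unusedSectionVars false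

namespace PlanarAdd

/-! ### Connected vertex sets and minor models -/

section Conn
variable {V : Type*} {G H : SimpleGraph V} {X Y Z I J : Set V}

/-- The vertex set `X` induces a connected (nonempty) subgraph of `G`; phrased through closed
subsets, which is the form in which connectivity gets used. -/
def ConnSet (G : SimpleGraph V) (X : Set V) : Prop :=
  X.Nonempty ∧ ∀ Y ⊆ X, Y.Nonempty → (∀ u ∈ Y, ∀ v ∈ X, G.Adj u v → v ∈ Y) → Y = X

/-- Some edge of `G` joins a vertex of `X` to a vertex of `Y`. -/
def Touch (G : SimpleGraph V) (X Y : Set V) : Prop := ∃ u ∈ X, ∃ v ∈ Y, G.Adj u v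

theorem Touch.symm (h : Touch G X Y) : Touch G Y X := by
  obtain ⟨u, hu, v, hv, h⟩ := h
  exact ⟨v, hv, u, hu, h.symm⟩

theorem Touch.mono {X' Y' : Set V} (h : Touch G X Y) (hG : G ≤ H) (hX : X ⊆ X') (hY : Y ⊆ Y') :
    Touch H X' Y' := by
  obtain ⟨u, hu, v, hv, h⟩ := h
  exact ⟨u, hX hu, v, hY hv, hG h⟩

theorem connSet_iff : ConnSet G X ↔ (G.induce X).Connected := by
  constructor
  · rintro ⟨⟨x, hx⟩, h⟩
    rw [connected_iff]
    refine ⟨?_, ⟨x, hx⟩⟩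
    rintro ⟨u, hu⟩ ⟨v, hv⟩
    have := h {v | ∃ hv : v ∈ X, (G.induce X).Reachable ⟨u, hu⟩ ⟨v, hv⟩} (fun v hv => hv.1)
      ⟨u, hu, Reachable.refl _⟩ (by
        rintro a ⟨ha, hr⟩ b hb hab
        exact ⟨hb, hr.trans (Adj.reachable (by simpa using hab))⟩)
    have hv' := hv
    rw [← this] at hv'
    exact hv'.2
  · intro h
    rw [connected_iff] at h
    obtain ⟨hp, ⟨x, hx⟩⟩ := h
    refine ⟨⟨x, hx⟩, ?_⟩
    rintro Y hY ⟨y, hy⟩ hcl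
    refine Set.Subset.antisymm hY fun z hz => ?_
    obtain ⟨w⟩ := hp ⟨y, hY hy⟩ ⟨z, hz⟩
    have key : ∀ (a b : X), (G.induce X).Walk a b → (a : V) ∈ Y → (b : V) ∈ Y := by
      intro a b w
      induction w with
      | nil => exact id
      | cons hab _ ih => exact fun ha => ih (hcl _ ha _ (Subtype.coe_prop _) (by simpa using hab))
    exact key _ _ w hy

theorem ConnSet.singleton (v : V) : ConnSet G {v} := by
  refine ⟨⟨v, rfl⟩, fun Y hY hn _ => ?_⟩
  exact (Set.subset_singleton_iff_eq.1 hY).resolve_left hn.ne_empty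

theorem ConnSet.mono (h : ConnSet G X) (hG : G ≤ H) : ConnSet H X :=
  ⟨h.1, fun Y hY hn hc => h.2 Y hY hn fun u hu v hv ha => hc u hu v hv (hG ha)⟩

/-- Connectivity only depends on the edges inside the set. -/
theorem ConnSet.congr (h : ConnSet G X) (hG : ∀ u ∈ X, ∀ v ∈ X, G.Adj u v → H.Adj u v) :
    ConnSet H X :=
  ⟨h.1, fun Y hY hn hc =>
    h.2 Y hY hn fun u hu v hv ha => hc u hu v hv (hG u (hY hu) v hv ha)⟩

theorem ConnSet.union (hX : ConnSet G X) (hY : ConnSet G Y)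
    (h : Touch G X Y ∨ (X ∩ Y).Nonempty) : ConnSet G (X ∪ Y) := by
  refine ⟨hX.1.mono Set.subset_union_left, fun S hS hn hc => ?_⟩
  have hSX : (S ∩ X).Nonempty → X ⊆ S := by
    intro hne
    have := hX.2 (S ∩ X) Set.inter_subset_right hne
      (fun u hu v hv ha => ⟨hc u hu.1 v (Or.inl hv) ha, hv⟩)
    rw [← this]; exact Set.inter_subset_left
  have hSY : (S ∩ Y).Nonempty → Y ⊆ S := by
    intro hne
    have := hY.2 (S ∩ Y) Set.inter_subset_right hne
      (fun u hu v hv ha => ⟨hc u hu.1 v (Or.inr hv) ha, hv⟩)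
    rw [← this]; exact Set.inter_subset_left
  have hXY : X ⊆ S ↔ Y ⊆ S := by
    rcases h with ⟨u, hu, v, hv, ha⟩ | ⟨w, hw1, hw2⟩
    · constructor
      · intro hh; exact hSY ⟨v, hc u (hh hu) v (Or.inr hv) ha, hv⟩
      · intro hh; exact hSX ⟨u, hc v (hh hv) u (Or.inl hu) ha.symm, hu⟩
    · constructor
      · intro hh; exact hSY ⟨w, hh hw1, hw2⟩
      · intro hh; exact hSX ⟨w, hh hw2, hw1⟩
  obtain ⟨s, hs⟩ := hn
  refine Set.Subset.antisymm hS ?_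
  rcases hS hs with h1 | h1
  · have := hSX ⟨s, hs, h1⟩
    exact Set.union_subset this (hXY.1 this)
  · have := hSY ⟨s, hs, h1⟩
    exact Set.union_subset (hXY.2 this) this

theorem ConnSet.insert {v : V} (hX : ConnSet G X) (h : Touch G {v} X) :
    ConnSet G (insert v X) := by
  rw [Set.insert_eq]
  exact (ConnSet.singleton v).union hX (Or.inl h)

/-- If a connected set is split into two nonempty parts, the parts touch. -/
theorem ConnSet.touch_diff (hX : ConnSet G X) (hY : Y ⊆ X) (hn : Y.Nonempty)
    (hn' : (X \ Y).Nonempty) : Touch G Y (X \ Y) := by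
  by_contra hcon
  have := hX.2 Y hY hn (fun u hu v hv ha => by
    by_contra hvY
    exact hcon ⟨u, hu, v, ⟨hv, hvY⟩, ha⟩)
  obtain ⟨z, hz, hz'⟩ := hn'
  rw [this] at hz'
  exact hz' hz

/-- The connected component of `u` in `G[X]`. -/
def comp (G : SimpleGraph V) (X : Set V) (u : V) : Set V :=
  {v | v ∈ X ∧ ∀ Y ⊆ X, u ∈ Y → (∀ a ∈ Y, ∀ b ∈ X, G.Adj a b → b ∈ Y) → v ∈ Y}

theorem comp_subset (G : SimpleGraph V) (X : Set V) (u : V) : comp G X u ⊆ X := fun _ h => h.1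

theorem mem_comp_self {u : V} (hu : u ∈ X) : u ∈ comp G X u := ⟨hu, fun _ _ h _ => h⟩

theorem comp_closed {u a b : V} (ha : a ∈ comp G X u) (hb : b ∈ X) (hab : G.Adj a b) :
    b ∈ comp G X u :=
  ⟨hb, fun Y hY hu hc => hc a (ha.2 Y hY hu hc) b hb hab⟩

theorem comp_conn {u : V} (hu : u ∈ X) : ConnSet G (comp G X u) := by
  refine ⟨⟨u, mem_comp_self hu⟩, fun Y hY hn hc => ?_⟩
  refine Set.Subset.antisymm hY fun v hv => ?_
  by_cases huY : u ∈ Y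
  · refine hv.2 Y (hY.trans (comp_subset _ _ _)) huY fun a ha b hb hab => ?_
    exact hc a ha b (comp_closed (hY ha) hb hab) hab
  · exfalso
    obtain ⟨y, hy⟩ := hn
    have := (hY hy).2 (comp G X u \ Y) (Set.sdiff_subset.trans (comp_subset _ _ _))
      ⟨mem_comp_self hu, huY⟩ (by
        rintro a ⟨ha, haY⟩ b hb hab
        have hb' := comp_closed ha hb hab
        exact ⟨hb', fun hbY => haY (hc b hbY a ha hab.symm)⟩)
    exact this.2 hy

/-- A connected set meeting a component lies inside it. -/
theorem ConnSet.subset_comp {u : V} (hY : ConnSet G Y) (hYX : Y ⊆ X)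
    (h : (Y ∩ comp G X u).Nonempty) : Y ⊆ comp G X u := by
  have := hY.2 (Y ∩ comp G X u) Set.inter_subset_left h
    (fun a ha b hb hab => ⟨hb, comp_closed ha.2 (hYX hb) hab⟩)
  rw [← this]; exact Set.inter_subset_right

/-- Two disjoint nonempty parts of a connected set touch, or are linked by a component of
the remainder. -/
theorem exists_link (hX : ConnSet G X) (hI : I ⊆ X) (hJ : J ⊆ X) (hIn : I.Nonempty)
    (hJn : J.Nonempty) (hd : Disjoint I J) :
    Touch G I J ∨ ∃ D, ConnSet G D ∧ D ⊆ X \ (I ∪ J) ∧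
      (∀ a ∈ D, ∀ b ∈ X \ (I ∪ J), G.Adj a b → b ∈ D) ∧ Touch G D I ∧ Touch G D J := by
  by_contra! hcon
  obtain ⟨hIJ, hD⟩ := hcon
  have hD' : ∀ u ∈ X \ (I ∪ J), Touch G (comp G (X \ (I ∪ J)) u) I →
      ¬ Touch G (comp G (X \ (I ∪ J)) u) J := fun u hu =>
    hD _ (comp_conn hu) (comp_subset _ _ _) (fun a ha b hb hab => comp_closed ha hb hab)
  have := hX.2 (I ∪ {v | ∃ u ∈ X \ (I ∪ J), Touch G (comp G (X \ (I ∪ J)) u) I ∧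
      v ∈ comp G (X \ (I ∪ J)) u})
    (by
      rintro v (hv | ⟨u, hu, -, hv⟩)
      · exact hI hv
      · exact (comp_subset _ _ _ hv).1)
    (hIn.mono Set.subset_union_left)
    (by
      rintro a (ha | ⟨u, hu, ht, ha⟩) b hb hab
      · by_cases hbI : b ∈ I
        · exact Or.inl hbI
        by_cases hbJ : b ∈ J
        · exact (hIJ ⟨a, ha, b, hbJ, hab⟩).elim
        have hb' : b ∈ X \ (I ∪ J) := ⟨hb, by simp [hbI, hbJ]⟩
        exact Or.inr ⟨b, hb', ⟨b, mem_comp_self hb', a, ha, hab.symm⟩, mem_comp_self hb'⟩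
      · by_cases hbI : b ∈ I
        · exact Or.inl hbI
        by_cases hbJ : b ∈ J
        · exact (hD' u hu ht ⟨a, ha, b, hbJ, hab⟩).elim
        have hb' : b ∈ X \ (I ∪ J) := ⟨hb, by simp [hbI, hbJ]⟩
        exact Or.inr ⟨u, hu, ht, comp_closed ha hb' hab⟩)
  obtain ⟨j, hj⟩ := hJn
  have hjX := hJ hj
  rw [← this] at hjX
  rcases hjX with h | ⟨u, hu, -, h⟩
  · exact Set.disjoint_left.1 hd h hj
  · exact (comp_subset _ _ _ h).2 (Or.inr hj)

/-- A family of branch sets exhibiting `K` as a minor of `G`. -/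
structure Model {α : Type*} (K : SimpleGraph α) (G : SimpleGraph V) (f : α → Set V) : Prop where
  conn : ∀ a, ConnSet G (f a)
  disj : ∀ a b, a ≠ b → Disjoint (f a) (f b)
  touch : ∀ a b, K.Adj a b → Touch G (f a) (f b)

theorem isMinor_iff {α : Type*} {K : SimpleGraph α} : IsMinor K G ↔ ∃ f, Model K G f := by
  constructor
  · rintro ⟨f, h1, h2, h3⟩
    exact ⟨f, fun a => connSet_iff.2 (h1 a), h2, h3⟩
  · rintro ⟨f, h⟩
    exact ⟨f, fun a => connSet_iff.1 (h.conn a), h.disj, h.touch⟩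

theorem Model.mono {α : Type*} {K : SimpleGraph α} {f : α → Set V} (h : Model K G f)
    (hG : G ≤ H) : Model K H f :=
  ⟨fun a => (h.conn a).mono hG, h.disj, fun a b hab => (h.touch a b hab).mono hG le_rfl le_rfl⟩

theorem planar_iff : IsPlanar G ↔ (∀ f, ¬ Model (completeGraph (Fin 5)) G f) ∧
    ∀ f, ¬ Model (completeBipartiteGraph (Fin 3) (Fin 3)) G f := by
  simp [IsPlanar, isMinor_iff]

/-- The two excluded minors, packaged in one type so that they can be treated uniformly. -/
inductive Kur : ∀ {α : Type}, SimpleGraph α → Prop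
  | k5 : Kur (completeGraph (Fin 5))
  | k33 : Kur (completeBipartiteGraph (Fin 3) (Fin 3))

theorem planar_iff_kur : IsPlanar G ↔
    ∀ {α : Type} {K : SimpleGraph α}, Kur K → ∀ f, ¬ Model K G f := by
  rw [planar_iff]
  constructor
  · rintro ⟨h1, h2⟩ α K hK f
    cases hK
    · exact h1 f
    · exact h2 f
  · intro h
    exact ⟨h Kur.k5, h Kur.k33⟩

theorem planar_mono (hH : IsPlanar H) (hG : G ≤ H) : IsPlanar G := by
  rw [planar_iff] at *
  exact ⟨fun f hf => hH.1 f (hf.mono hG), fun f hf => hH.2 f (hf.mono hG)⟩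

theorem not_planar_K5 {A B C D E : Set V} (hA : ConnSet G A) (hB : ConnSet G B)
    (hC : ConnSet G C) (hD : ConnSet G D) (hE : ConnSet G E)
    (hd : [A, B, C, D, E].Pairwise Disjoint) (ht : [A, B, C, D, E].Pairwise (Touch G)) :
    ¬ IsPlanar G := by
  rw [planar_iff]
  rintro ⟨h, -⟩
  refine h ![A, B, C, D, E] ⟨?_, ?_, ?_⟩
  · intro a; fin_cases a <;> assumption
  · intro a b hab
    simp only [List.pairwise_cons, List.mem_cons, List.not_mem_nil, or_false, forall_eq_or_imp,
      forall_eq] at hd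
    obtain ⟨⟨h1, h2, h3, h4⟩, ⟨h5, h6, h7⟩, ⟨h8, h9⟩, h10, -⟩ := hd
    fin_cases a <;> fin_cases b <;> first | exact (hab rfl).elim | assumption | exact (Disjoint.symm (by assumption))
  · intro a b hab
    simp only [List.pairwise_cons, List.mem_cons, List.not_mem_nil, or_false, forall_eq_or_imp,
      forall_eq] at ht
    obtain ⟨⟨h1, h2, h3, h4⟩, ⟨h5, h6, h7⟩, ⟨h8, h9⟩, h10, -⟩ := ht
    fin_cases a <;> fin_cases b <;> first | exact (hab.ne rfl).elim | assumption | exact (Touch.symm (by assumption))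

theorem not_planar_K33 {A B C X Y Z : Set V} (hA : ConnSet G A) (hB : ConnSet G B)
    (hC : ConnSet G C) (hX : ConnSet G X) (hY : ConnSet G Y) (hZ : ConnSet G Z)
    (hd : [A, B, C, X, Y, Z].Pairwise Disjoint)
    (hAX : Touch G A X) (hAY : Touch G A Y) (hAZ : Touch G A Z)
    (hBX : Touch G B X) (hBY : Touch G B Y) (hBZ : Touch G B Z)
    (hCX : Touch G C X) (hCY : Touch G C Y) (hCZ : Touch G C Z) : ¬ IsPlanar G := by
  rw [planar_iff]
  rintro ⟨-, h⟩
  refine h (Sum.elim ![A, B, C] ![X, Y, Z]) ⟨?_, ?_, ?_⟩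
  · rintro (a | a) <;> fin_cases a <;> assumption
  · intro a b hab
    simp only [List.pairwise_cons, List.mem_cons, List.not_mem_nil, or_false, forall_eq_or_imp,
      forall_eq] at hd
    obtain ⟨⟨h1, h2, h3, h4, h4'⟩, ⟨h5, h6, h7, h7'⟩, ⟨h8, h9, h9'⟩, ⟨h10, h11⟩, h12, -⟩ := hd
    rcases a with a | a <;> rcases b with b | b <;>
    fin_cases a <;> fin_cases b <;> first | exact (hab rfl).elim | assumption | exact (Disjoint.symm (by assumption))
  · intro a b hab
    rcases a with a | a <;> rcases b with b | b <;> simp at hab <;>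
    fin_cases a <;> fin_cases b <;> first | assumption | exact (Touch.symm (by assumption))

/-- All edges of `G` lie inside `W`. -/
def InW (G : SimpleGraph V) (W : Set V) : Prop := ∀ ⦃u v⦄, G.Adj u v → u ∈ W ∧ v ∈ W

theorem Kur.exists_adj {α : Type} {K : SimpleGraph α} (hK : Kur K) (a : α) : ∃ b, K.Adj a b := by
  cases hK
  · fin_cases a
    · exact ⟨1, by decide⟩
    all_goals exact ⟨0, by decide⟩
  · rcases a with a | a
    · exact ⟨Sum.inr 0, by simp⟩
    · exact ⟨Sum.inl 0, by simp⟩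

theorem Model.subset {α : Type} {K : SimpleGraph α} {f : α → Set V} (hK : Kur K)
    (h : Model K G f) {W : Set V} (hW : InW G W) (a : α) : f a ⊆ W := by
  obtain ⟨b, hb⟩ := hK.exists_adj a
  obtain ⟨u, hu, v, hv, huv⟩ := h.touch a b hb
  have := (h.conn a).2 (f a ∩ W) Set.inter_subset_left ⟨u, hu, (hW huv).1⟩
    (fun x hx y hy hxy => ⟨hy, (hW hxy).2⟩)
  rw [← this]; exact Set.inter_subset_right

theorem Kur.card_ge {α : Type} {K : SimpleGraph α} (hK : Kur K) : Finite α ∧ 5 ≤ Nat.card α := by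
  cases hK <;> exact ⟨inferInstance, by simp⟩

/-- A model inside `W` has at most `|W|` branch sets. -/
theorem Model.card_le {α : Type} {K : SimpleGraph α} {f : α → Set V} (h : Model K G f)
    {W : Set V} (hfin : W.Finite) (hW : ∀ a, f a ⊆ W) : Nat.card α ≤ W.ncard := by
  choose g hg using fun a => (h.conn a).1
  have hinj : Function.Injective (fun a => (⟨g a, hW a (hg a)⟩ : W)) := by
    intro a b hab
    by_contra hne
    have hab' : g a = g b := congrArg Subtype.val hab
    exact Set.disjoint_left.1 (h.disj a b hne) (hg a) (hab' ▸ hg b)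
  have := hfin.to_subtype
  exact Nat.card_le_card_of_injective _ hinj

theorem planar_of_card_le_four {W : Set V} (hfin : W.Finite) (hW : InW G W) (hc : W.ncard ≤ 4) :
    IsPlanar G := by
  rw [planar_iff_kur]
  intro α K hK f hf
  have := hf.card_le hfin (hf.subset hK hW)
  have := hK.card_ge.2
  omega

theorem planar_of_card_five {W : Set V} (hfin : W.Finite) (hW : InW G W) (hc : W.ncard = 5)
    {x y : V} (hx : x ∈ W) (hy : y ∈ W) (hxy : x ≠ y) (hadj : ¬ G.Adj x y) : IsPlanar G := by
  rw [planar_iff_kur]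
  intro α K hK f hf
  have hsub := hf.subset hK hW
  cases hK
  · choose g hg using fun a => (hf.conn a).1
    have hinj : Function.Injective g := by
      intro a b hab
      by_contra hne
      exact Set.disjoint_left.1 (hf.disj a b hne) (hg a) (hab ▸ hg b)
    have hr : Set.range g = W := by
      refine Set.eq_of_subset_of_ncard_le ?_ ?_ hfin
      · rintro _ ⟨a, rfl⟩; exact hsub a (hg a)
      · rw [hc, ← Set.image_univ, Set.ncard_image_of_injective _ hinj]; simp [Set.ncard_univ]
    have hfg : ∀ a, ∀ v ∈ f a, v = g a := by
      intro a v hv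
      have : v ∈ Set.range g := hr ▸ hsub a hv
      obtain ⟨b, rfl⟩ := this
      by_contra hne
      exact Set.disjoint_left.1 (hf.disj a b (fun h => hne (h ▸ rfl))) hv (hg b)
    obtain ⟨a, rfl⟩ : x ∈ Set.range g := hr ▸ hx
    obtain ⟨b, rfl⟩ : y ∈ Set.range g := hr ▸ hy
    have hab : a ≠ b := fun h => hxy (h ▸ rfl)
    obtain ⟨u, hu, v, hv, huv⟩ := hf.touch a b hab
    rw [hfg a u hu, hfg b v hv] at huv
    exact hadj huv
  · have := hf.card_le hfin hsub
    simp at this; omega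

end Conn

/-! ### Gluing planar graphs along small cliques -/

section Glue
variable {V : Type*} {G G1 G2 : SimpleGraph V} {V1 V2 X W : Set V}

/-- The subgraph of `G` on the edges with both ends in `X`. -/
def res (G : SimpleGraph V) (X : Set V) : SimpleGraph V where
  Adj u v := G.Adj u v ∧ u ∈ X ∧ v ∈ X
  symm := ⟨fun _ _ h => ⟨h.1.symm, h.2.2, h.2.1⟩⟩
  loopless := ⟨fun _ h => h.1.ne rfl⟩

theorem res_adj {u v : V} : (res G X).Adj u v ↔ G.Adj u v ∧ u ∈ X ∧ v ∈ X := Iff.rfl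

theorem res_le : res G X ≤ G := fun _ _ h => h.1

theorem inW_res : InW (res G X) X := fun _ _ h => h.2

/-- The star with centre `t` and leaves `S` (without `t`). -/
def star (t : V) (S : Set V) : SimpleGraph V where
  Adj u v := u ≠ v ∧ (u = t ∧ v ∈ S ∨ v = t ∧ u ∈ S)
  symm := ⟨fun _ _ h => ⟨h.1.symm, h.2.symm⟩⟩
  loopless := ⟨fun _ h => h.1 rfl⟩

theorem star_adj {t u v : V} {S : Set V} :
    (star t S).Adj u v ↔ u ≠ v ∧ (u = t ∧ v ∈ S ∨ v = t ∧ u ∈ S) := Iff.rfl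

theorem InW.sup (h1 : InW G1 W) (h2 : InW G2 W) : InW (G1 ⊔ G2) W := by
  rintro u v (h | h)
  · exact h1 h
  · exact h2 h

theorem InW.mono (h : InW G V1) (hV : V1 ⊆ V2) : InW G V2 := fun _ _ ha =>
  ⟨hV (h ha).1, hV (h ha).2⟩

theorem InW.anti (h : InW G W) (hG : G1 ≤ G) : InW G1 W := fun _ _ ha => h (hG ha)

theorem edge_adj' {s t u v : V} :
    (edge s t).Adj u v ↔ (u = s ∧ v = t ∨ u = t ∧ v = s) ∧ u ≠ v := by
  rw [edge_adj]

theorem inW_edge {s t : V} (hs : s ∈ W) (ht : t ∈ W) : InW (edge s t) W := by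
  intro u v h
  rw [edge_adj'] at h
  rcases h.1 with ⟨rfl, rfl⟩ | ⟨rfl, rfl⟩ <;> exact ⟨‹_›, ‹_›⟩

theorem inW_star {t : V} {S : Set V} (ht : t ∈ W) (hS : S ⊆ W) : InW (star t S) W := by
  rintro u v ⟨-, ⟨rfl, h⟩ | ⟨rfl, h⟩⟩
  · exact ⟨ht, hS h⟩
  · exact ⟨hS h, ht⟩

theorem meets_cut (h1 : InW G1 V1) (h2 : InW G2 V2) (hX : ConnSet (G1 ⊔ G2) X)
    (hX1 : (X ∩ V1).Nonempty) (hX2 : (X ∩ V2).Nonempty) : (X ∩ (V1 ∩ V2)).Nonempty := by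
  by_contra hcon
  have hno : ∀ u ∈ X, u ∈ V1 → u ∉ V2 := fun u hu a b => hcon ⟨u, hu, a, b⟩
  have := hX.2 (X ∩ V1) Set.inter_subset_left hX1 (by
    rintro u ⟨hu, hu1⟩ v hv (h | h)
    · exact ⟨hv, (h1 h).2⟩
    · exact (hno u hu hu1 (h2 h).1).elim)
  obtain ⟨x, hx, hx2⟩ := hX2
  have hx1 : x ∈ X ∩ V1 := by rw [this]; exact hx
  exact hno x hx hx1.2 hx2

theorem proj_conn (h1 : InW G1 V1) (h2 : InW G2 V2)
    (hS : ∀ s ∈ V1 ∩ V2, ∀ s' ∈ V1 ∩ V2, s ≠ s' → G1.Adj s s') (hX : ConnSet (G1 ⊔ G2) X)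
    (hX1 : (X ∩ V1).Nonempty) : ConnSet G1 (X ∩ V1) := by
  refine ⟨hX1, fun Y hY hn hc => ?_⟩
  by_cases hYS : (Y ∩ (V1 ∩ V2)).Nonempty
  · have hall : ∀ s ∈ X, s ∈ V1 → s ∈ V2 → s ∈ Y := by
      intro s hs hs1 hs2
      obtain ⟨y, hy, hyS⟩ := hYS
      by_cases hys : y = s
      · exact hys ▸ hy
      · exact hc y hy s ⟨hs, hs1⟩ (hS y hyS s ⟨hs1, hs2⟩ hys)
    have := hX.2 (Y ∪ X \ V1) (Set.union_subset (hY.trans Set.inter_subset_left)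
      Set.sdiff_subset) (hn.mono Set.subset_union_left) (by
        rintro u hu v hv (h | h)
        · have hu' : u ∈ Y := by
            rcases hu with hu | hu
            · exact hu
            · exact (hu.2 (h1 h).1).elim
          exact Or.inl (hc u hu' v ⟨hv, (h1 h).2⟩ h)
        · by_cases hv1 : v ∈ V1
          · exact Or.inl (hall v hv hv1 (h2 h).2)
          · exact Or.inr ⟨hv, hv1⟩)
    refine Set.Subset.antisymm hY ?_
    rintro x ⟨hx, hx1⟩
    rw [← this] at hx
    rcases hx with hx | hx
    · exact hx
    · exact (hx.2 hx1).elim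
  · have := hX.2 Y (hY.trans Set.inter_subset_left) hn (by
        rintro u hu v hv (h | h)
        · exact hc u hu v ⟨hv, (h1 h).2⟩ h
        · exact (hYS ⟨u, hu, (hY hu).2, (h2 h).1⟩).elim)
    refine Set.Subset.antisymm hY ?_
    rw [this]; exact Set.inter_subset_left

/-- If at most one branch set of a model in a clique sum misses `V1`, then contracting the
part outside `V1` yields a model in `G1` plus a vertex joined to the separating clique. -/
theorem glue_core {α : Type} {K : SimpleGraph α} {f : α → Set V} (h1 : InW G1 V1) (h2 : InW G2 V2)
    (hS : ∀ s ∈ V1 ∩ V2, ∀ s' ∈ V1 ∩ V2, s ≠ s' → G1.Adj s s')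
    (hf : Model K (G1 ⊔ G2) f) {t : V} (ht : t ∉ V1) {a : α}
    (ha : ∀ x, x ≠ a → (f x ∩ V1).Nonempty) : ∃ g, Model K (G1 ⊔ star t (V1 ∩ V2)) g := by
  classical
  have htouch : ∀ x y, K.Adj x y → (f x ∩ V1).Nonempty → (f y ∩ V1).Nonempty →
      Touch G1 (f x ∩ V1) (f y ∩ V1) := by
    intro x y hxy hx hy
    obtain ⟨u, hu, v, hv, h | h⟩ := hf.touch x y hxy
    · exact ⟨u, ⟨hu, (h1 h).1⟩, v, ⟨hv, (h1 h).2⟩, h⟩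
    · obtain ⟨s, hs, hsS⟩ := meets_cut h1 h2 (hf.conn x) hx ⟨u, hu, (h2 h).1⟩
      obtain ⟨s', hs', hsS'⟩ := meets_cut h1 h2 (hf.conn y) hy ⟨v, hv, (h2 h).2⟩
      refine ⟨s, ⟨hs, hsS.1⟩, s', ⟨hs', hsS'.1⟩, hS s hsS s' hsS' ?_⟩
      rintro rfl
      exact Set.disjoint_left.1 (hf.disj x y hxy.ne) hs hs'
  by_cases haV : (f a ∩ V1).Nonempty
  · have hall : ∀ x, (f x ∩ V1).Nonempty := fun x => by
      by_cases hx : x = a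
      · exact hx ▸ haV
      · exact ha x hx
    refine ⟨fun x => f x ∩ V1, fun x => (proj_conn h1 h2 hS (hf.conn x) (hall x)).mono le_sup_left,
      fun x y hxy => (hf.disj x y hxy).mono Set.inter_subset_left Set.inter_subset_left,
      fun x y hxy => (htouch x y hxy (hall x) (hall y)).mono le_sup_left le_rfl le_rfl⟩
  · -- a neighbour of `a` meets both sides, hence meets the separating clique
    have hcut : ∀ y, K.Adj a y → ∃ s ∈ f y, s ∈ V1 ∩ V2 := by
      intro y hy
      obtain ⟨u, hu, v, hv, h⟩ := hf.touch a y hy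
      have hv2 : v ∈ V2 := by
        rcases h with h | h
        · exact (haV ⟨u, hu, (h1 h).1⟩).elim
        · exact (h2 h).2
      obtain ⟨s, hs, hsS⟩ := meets_cut h1 h2 (hf.conn y) (ha y hy.ne') ⟨v, hv, hv2⟩
      exact ⟨s, hs, hsS⟩
    have hts : ∀ s ∈ V1 ∩ V2, (G1 ⊔ star t (V1 ∩ V2)).Adj t s := by
      intro s hs
      exact Or.inr ⟨fun h => ht (h ▸ hs.1), Or.inl ⟨rfl, hs⟩⟩
    refine ⟨fun x => if x = a then {t} else f x ∩ V1, ?_, ?_, ?_⟩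
    · intro x
      by_cases hx : x = a
      · simp only [hx, if_true]; exact ConnSet.singleton t
      · simp only [hx, if_false]
        exact (proj_conn h1 h2 hS (hf.conn x) (ha x hx)).mono le_sup_left
    · intro x y hxy
      by_cases hx : x = a
      · have hy : y ≠ a := fun h => hxy (hx.trans h.symm)
        simp only [hx, hy, if_true, if_false, Set.disjoint_singleton_left]
        exact fun h => ht h.2
      · by_cases hy : y = a
        · simp only [hx, hy, if_true, if_false, Set.disjoint_singleton_right]
          exact fun h => ht h.2
        · simp only [hx, hy, if_false]
          exact (hf.disj x y hxy).mono Set.inter_subset_left Set.inter_subset_left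
    · intro x y hxy
      by_cases hx : x = a
      · have hy : y ≠ a := fun h => hxy.ne (hx.trans h.symm)
        simp only [hx, hy, if_true, if_false]
        obtain ⟨s, hs, hsS⟩ := hcut y (hx ▸ hxy)
        exact ⟨t, rfl, s, ⟨hs, hsS.1⟩, hts s hsS⟩
      · by_cases hy : y = a
        · simp only [hx, hy, if_true, if_false]
          obtain ⟨s, hs, hsS⟩ := hcut x (hy ▸ hxy.symm)
          exact ⟨s, ⟨hs, hsS.1⟩, t, rfl, (hts s hsS).symm⟩
        · simp only [hx, hy, if_false]
          exact (htouch x y hxy (ha x hx) (ha y hy)).mono le_sup_left le_rfl le_rfl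

theorem proj_model {α : Type} {K : SimpleGraph α} {f : α → Set V} (h1 : InW G1 V1)
    (h2 : InW G2 V2) (hS : ∀ s ∈ V1 ∩ V2, ∀ s' ∈ V1 ∩ V2, s ≠ s' → G1.Adj s s')
    (hf : Model K (G1 ⊔ G2) f) (ha : ∀ x, (f x ∩ V1).Nonempty) :
    Model K G1 (fun x => f x ∩ V1) := by
  refine ⟨fun x => proj_conn h1 h2 hS (hf.conn x) (ha x),
    fun x y hxy => (hf.disj x y hxy).mono Set.inter_subset_left Set.inter_subset_left, ?_⟩
  intro x y hxy
  obtain ⟨u, hu, v, hv, h | h⟩ := hf.touch x y hxy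
  · exact ⟨u, ⟨hu, (h1 h).1⟩, v, ⟨hv, (h1 h).2⟩, h⟩
  · obtain ⟨s, hs, hsS⟩ := meets_cut h1 h2 (hf.conn x) (ha x) ⟨u, hu, (h2 h).1⟩
    obtain ⟨s', hs', hsS'⟩ := meets_cut h1 h2 (hf.conn y) (ha y) ⟨v, hv, (h2 h).2⟩
    refine ⟨s, ⟨hs, hsS.1⟩, s', ⟨hs', hsS'.1⟩, hS s hsS s' hsS' ?_⟩
    rintro rfl
    exact Set.disjoint_left.1 (hf.disj x y hxy.ne) hs hs'

/-- Two distinct nonadjacent vertices of `K₅` or `K₃,₃` have three common neighbours, and only one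
further vertex `d` exists. -/
theorem Kur.common {α : Type} {K : SimpleGraph α} (hK : Kur K) {a b : α} (hab : a ≠ b)
    (hn : ¬ K.Adj a b) : ∃ c : Fin 3 → α, Function.Injective c ∧ (∀ i, K.Adj a (c i)) ∧
      (∀ i, K.Adj b (c i)) ∧ ∃ d, ∀ x, x ≠ a → x ≠ b → x ≠ d → ∃ i, x = c i := by
  cases hK
  · exact (hn hab).elim
  · rcases a with a | a <;> rcases b with b | b
    · refine ⟨Sum.inr, Sum.inr_injective, by simp, by simp, ?_⟩
      have : ∃ d : Fin 3, ∀ x, x ≠ a → x ≠ b → x = d := by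
        have : a ≠ b := fun h => hab (h ▸ rfl)
        clear hn hab; revert a b; decide
      obtain ⟨d, hd⟩ := this
      refine ⟨Sum.inl d, ?_⟩
      rintro (x | x) h1 h2 h3
      · exact (h3 (congrArg _ (hd x (fun h => h1 (h ▸ rfl)) (fun h => h2 (h ▸ rfl))))).elim
      · exact ⟨x, rfl⟩
    · exact (hn (by simp)).elim
    · exact (hn (by simp)).elim
    · refine ⟨Sum.inl, Sum.inl_injective, by simp, by simp, ?_⟩
      have : ∃ d : Fin 3, ∀ x, x ≠ a → x ≠ b → x = d := by
        have : a ≠ b := fun h => hab (h ▸ rfl)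
        clear hn hab; revert a b; decide
      obtain ⟨d, hd⟩ := this
      refine ⟨Sum.inr d, ?_⟩
      rintro (x | x) h1 h2 h3
      · exact ⟨x, rfl⟩
      · exact (h3 (congrArg _ (hd x (fun h => h1 (h ▸ rfl)) (fun h => h2 (h ▸ rfl))))).elim

/-- The obstruction shared by both gluing lemmas: if one branch set misses `V1` and another
misses `V2`, three branch sets meet the separator. -/
theorem glue_sep {α : Type} {K : SimpleGraph α} {f : α → Set V} (hK : Kur K) (h1 : InW G1 V1)
    (h2 : InW G2 V2) (hf : Model K (G1 ⊔ G2) f) {a b : α} (ha : ¬ (f a ∩ V1).Nonempty)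
    (hb : ¬ (f b ∩ V2).Nonempty) :
    a ≠ b ∧ ∃ c : Fin 3 → α, Function.Injective c ∧ (∀ i, ((f (c i)) ∩ (V1 ∩ V2)).Nonempty) ∧
      ∃ d, ∀ x, x ≠ a → x ≠ b → x ≠ d → ∃ i, x = c i := by
  have hsub := hf.subset hK ((h1.mono Set.subset_union_left).sup
    (h2.mono (Set.subset_union_right (s := V1))))
  have hab : a ≠ b := by
    rintro rfl
    obtain ⟨u, hu⟩ := (hf.conn a).1
    rcases hsub a hu with h | h
    · exact ha ⟨u, hu, h⟩
    · exact hb ⟨u, hu, h⟩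
  have hn : ¬ K.Adj a b := by
    intro h
    obtain ⟨u, hu, v, hv, h | h⟩ := hf.touch a b h
    · exact ha ⟨u, hu, (h1 h).1⟩
    · exact hb ⟨v, hv, (h2 h).2⟩
  obtain ⟨c, hc, hca, hcb, hd⟩ := hK.common hab hn
  refine ⟨hab, c, hc, fun i => meets_cut h1 h2 (hf.conn _) ?_ ?_, hd⟩
  · obtain ⟨u, hu, v, hv, h | h⟩ := hf.touch b (c i) (hcb i)
    · exact ⟨v, hv, (h1 h).2⟩
    · exact (hb ⟨u, hu, (h2 h).1⟩).elim
  · obtain ⟨u, hu, v, hv, h | h⟩ := hf.touch a (c i) (hca i)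
    · exact (ha ⟨u, hu, (h1 h).1⟩).elim
    · exact ⟨v, hv, (h2 h).2⟩

/-- Clique sums of planar graphs along at most two vertices are planar. -/
theorem glue2 (h1 : InW G1 V1) (h2 : InW G2 V2) (hfin : (V1 ∩ V2).Finite)
    (hcard : (V1 ∩ V2).ncard ≤ 2)
    (hS1 : ∀ s ∈ V1 ∩ V2, ∀ s' ∈ V1 ∩ V2, s ≠ s' → G1.Adj s s')
    (hS2 : ∀ s ∈ V1 ∩ V2, ∀ s' ∈ V1 ∩ V2, s ≠ s' → G2.Adj s s')
    (hP1 : IsPlanar G1) (hP2 : IsPlanar G2) : IsPlanar (G1 ⊔ G2) := by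
  rw [planar_iff_kur]
  intro α K hK f hf
  rw [planar_iff_kur] at hP1 hP2
  by_cases ha : ∀ x, (f x ∩ V1).Nonempty
  · exact hP1 hK _ (proj_model h1 h2 hS1 hf ha)
  by_cases hb : ∀ x, (f x ∩ V2).Nonempty
  · rw [sup_comm] at hf
    rw [Set.inter_comm] at hS2
    exact hP2 hK _ (proj_model h2 h1 hS2 hf hb)
  push Not at ha hb
  obtain ⟨a, ha⟩ := ha
  obtain ⟨b, hb⟩ := hb
  obtain ⟨-, c, hc, hcS, -⟩ := glue_sep hK h1 h2 hf (a := a) (b := b)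
    (by simp [ha]) (by simp [hb])
  choose s hs hsS using hcS
  have hinj : Function.Injective s := by
    intro i j hij
    by_contra hne
    exact Set.disjoint_left.1 (hf.disj _ _ (fun h => hne (hc h))) (hs i) (hij ▸ hs j)
  have : (Set.range s).ncard ≤ (V1 ∩ V2).ncard :=
    Set.ncard_le_ncard (by rintro _ ⟨i, rfl⟩; exact hsS i) hfin
  rw [← Set.image_univ, Set.ncard_image_of_injective _ hinj] at this
  simp [Set.ncard_univ] at this
  omega

/-- Clique sums are planar, provided each side stays planar when a vertex joined to the separator
is added. -/
theorem glue3 (h1 : InW G1 V1) (h2 : InW G2 V2)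
    (hS1 : ∀ s ∈ V1 ∩ V2, ∀ s' ∈ V1 ∩ V2, s ≠ s' → G1.Adj s s')
    (hS2 : ∀ s ∈ V1 ∩ V2, ∀ s' ∈ V1 ∩ V2, s ≠ s' → G2.Adj s s')
    {t1 t2 : V} (ht1 : t1 ∉ V1) (ht2 : t2 ∉ V2)
    (hP1 : IsPlanar (G1 ⊔ star t1 (V1 ∩ V2))) (hP2 : IsPlanar (G2 ⊔ star t2 (V1 ∩ V2))) :
    IsPlanar (G1 ⊔ G2) := by
  rw [planar_iff_kur]
  intro α K hK f hf
  rw [planar_iff_kur] at hP1 hP2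
  have hsub := hf.subset hK ((h1.mono Set.subset_union_left).sup
    (h2.mono (Set.subset_union_right (s := V1))))
  have hA : ∀ a, ¬ (∀ x, x ≠ a → (f x ∩ V1).Nonempty) := by
    intro a ha
    obtain ⟨g, hg⟩ := glue_core h1 h2 hS1 hf ht1 ha
    exact hP1 hK g hg
  have hB : ∀ a, ¬ (∀ x, x ≠ a → (f x ∩ V2).Nonempty) := by
    intro a ha
    rw [sup_comm] at hf
    rw [Set.inter_comm] at hS2 hP2
    obtain ⟨g, hg⟩ := glue_core h2 h1 hS2 hf ht2 ha
    exact hP2 hK g hg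
  have ⟨a0⟩ : Nonempty α := by cases hK <;> infer_instance
  obtain ⟨a, ha⟩ : ∃ a, ¬ (f a ∩ V1).Nonempty := by
    have := hA a0; push Not at this; obtain ⟨a, -, h⟩ := this; exact ⟨a, by simp [h]⟩
  obtain ⟨b, hb⟩ : ∃ a, ¬ (f a ∩ V2).Nonempty := by
    have := hB a0; push Not at this; obtain ⟨a, -, h⟩ := this; exact ⟨a, by simp [h]⟩
  obtain ⟨hab, c, hc, hcS, d, hd⟩ := glue_sep hK h1 h2 hf ha hb
  -- any vertex other than `a, b, d` meets the separator, so `d` is the second one missing `V1`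
  -- and also the second one missing `V2`
  have hda : ¬ (f d ∩ V1).Nonempty := by
    intro hdV
    refine hA a fun x hx => ?_
    by_cases hxd : x = d
    · exact hxd ▸ hdV
    by_cases hxb : x = b
    · subst hxb
      obtain ⟨u, hu⟩ := (hf.conn x).1
      rcases hsub x hu with h | h
      · exact ⟨u, hu, h⟩
      · exact (hb ⟨u, hu, h⟩).elim
    obtain ⟨i, rfl⟩ := hd x hx hxb hxd
    obtain ⟨s, hs, hsS⟩ := hcS i
    exact ⟨s, hs, hsS.1⟩
  have hdb : ¬ (f d ∩ V2).Nonempty := by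
    intro hdV
    refine hB b fun x hx => ?_
    by_cases hxd : x = d
    · exact hxd ▸ hdV
    by_cases hxa : x = a
    · subst hxa
      obtain ⟨u, hu⟩ := (hf.conn x).1
      rcases hsub x hu with h | h
      · exact (ha ⟨u, hu, h⟩).elim
      · exact ⟨u, hu, h⟩
    obtain ⟨i, rfl⟩ := hd x hxa hx hxd
    obtain ⟨s, hs, hsS⟩ := hcS i
    exact ⟨s, hs, hsS.2⟩
  obtain ⟨u, hu⟩ := (hf.conn d).1
  rcases hsub d hu with h | h
  · exact hda ⟨u, hu, h⟩
  · exact hdb ⟨u, hu, h⟩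

/-- A connected set `P` outside `V1` attached to `z` and `w` can play the role of an edge `zw`. -/
theorem virtual_edge {P : Set V} {z w : V} (hG : IsPlanar G) (h1 : InW G1 V1) (hle : G1 ≤ G)
    (hP : ConnSet G P) (hPV : Disjoint P V1) (hz : z ∈ V1) (hw : w ∈ V1)
    (hzP : Touch G {z} P) (hwP : Touch G {w} P) : IsPlanar (G1 ⊔ edge z w) := by
  classical
  rw [planar_iff_kur] at *
  intro α K hK f hf
  have hsub := hf.subset hK (h1.sup (inW_edge hz hw))
  have hPf : ∀ a, Disjoint P (f a) := fun a => hPV.mono_right (hsub a)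
  refine hG hK (fun a => if z ∈ f a then f a ∪ P else f a) ⟨?_, ?_, ?_⟩
  · intro a
    by_cases hza : z ∈ f a
    · simp only [hza, if_true]
      refine ⟨⟨z, Or.inl hza⟩, fun T hT hn hc => ?_⟩
      have hTP : (T ∩ P).Nonempty → P ⊆ T := by
        intro hne
        have := hP.2 (T ∩ P) Set.inter_subset_right hne
          (fun u hu v hv ha => ⟨hc u hu.1 v (Or.inr hv) ha, hv⟩)
        rw [← this]; exact Set.inter_subset_left
      obtain ⟨z', hz', p, hp, hzp⟩ := hzP
      obtain rfl : z' = z := hz'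
      obtain ⟨w', hw', p', hp', hwp⟩ := hwP
      obtain rfl : w' = w := hw'
      have hPz : P ⊆ T → z' ∈ T := fun h => hc p (h hp) z' (Or.inl hza) hzp.symm
      have hzPT : z' ∈ T → P ⊆ T := fun h => hTP ⟨p, hc z' h p (Or.inr hp) hzp, hp⟩
      have hwPT : w' ∈ T → P ⊆ T := fun h => hTP ⟨p', hc w' h p' (Or.inr hp') hwp, hp'⟩
      have hzT : (T ∩ f a).Nonempty := by
        obtain ⟨x, hx⟩ := hn
        rcases hT hx with h | h
        · exact ⟨x, hx, h⟩
        · exact ⟨z', hPz (hTP ⟨x, hx, h⟩), hza⟩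
      have := (hf.conn a).2 (T ∩ f a) Set.inter_subset_right hzT (by
        rintro u ⟨hu, hua⟩ v hv (h | h)
        · exact ⟨hc u hu v (Or.inl hv) (hle h), hv⟩
        · refine ⟨?_, hv⟩
          rw [edge_adj'] at h
          rcases h.1 with ⟨rfl, rfl⟩ | ⟨rfl, rfl⟩
          · exact hc p' (hzPT hu hp') _ (Or.inl hv) hwp.symm
          · exact hPz (hwPT hu))
      have hfT : f a ⊆ T := by rw [← this]; exact Set.inter_subset_left
      exact Set.Subset.antisymm hT (Set.union_subset hfT (hzPT (hfT hza)))
    · simp only [hza, if_false]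
      refine (hf.conn a).congr fun u hu v hv h => ?_
      rcases h with h | h
      · exact hle h
      · rw [edge_adj'] at h
        rcases h.1 with ⟨rfl, rfl⟩ | ⟨rfl, rfl⟩
        · exact (hza hu).elim
        · exact (hza hv).elim
  · intro a b hab
    have hd := hf.disj a b hab
    by_cases hza : z ∈ f a
    · have hzb : z ∉ f b := fun h => Set.disjoint_left.1 hd hza h
      simp only [hza, hzb, if_true, if_false, Set.disjoint_union_left]
      exact ⟨hd, hPf b⟩
    · by_cases hzb : z ∈ f b
      · simp only [hza, hzb, if_true, if_false, Set.disjoint_union_right]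
        exact ⟨hd, (hPf a).symm⟩
      · simpa only [hza, hzb, if_false] using hd
  · intro a b hab
    have hle' : ∀ a, f a ⊆ (if z ∈ f a then f a ∪ P else f a) := by
      intro a; split_ifs
      · exact Set.subset_union_left
      · exact le_rfl
    have hPle : ∀ a, z ∈ f a → P ⊆ (if z ∈ f a then f a ∪ P else f a) := by
      intro a ha; rw [if_pos ha]; exact Set.subset_union_right
    obtain ⟨u, hu, v, hv, h | h⟩ := hf.touch a b hab
    · exact ⟨u, hle' a hu, v, hle' b hv, hle h⟩
    · obtain ⟨w', hw', p', hp', hwp⟩ := hwP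
      obtain rfl : w' = w := hw'
      rw [edge_adj'] at h
      rcases h.1 with ⟨rfl, rfl⟩ | ⟨rfl, rfl⟩
      · exact ⟨p', hPle a hu hp', _, hle' b hv, hwp.symm⟩
      · exact ⟨_, hle' a hu, p', hPle b hv hp', hwp⟩

end Glue

/-! ### Chains over `ZMod 2` and the cycle space -/

noncomputable section Chains
open scoped Classical
variable {V : Type*} [Fintype V] {G H : SimpleGraph V} {X W : Set V}

/-- Edge chains with coefficients in `ZMod 2`. -/
abbrev Chain (V : Type*) := Sym2 V → ZMod 2

theorem zmod2_ne {a : ZMod 2} : a ≠ 0 ↔ a = 1 := by revert a; decide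

theorem chain_add_self (z : Chain V) : z + z = 0 := by
  funext e; exact CharTwo.add_self_eq_zero (z e)

theorem vec_add_self (z : V → ZMod 2) : z + z = 0 := by
  funext e; exact CharTwo.add_self_eq_zero (z e)

/-- The boundary of a chain. -/
def bd : Chain V →ₗ[ZMod 2] (V → ZMod 2) where
  toFun z v := ∑ u, z s(v, u)
  map_add' z z' := by funext v; simp [Finset.sum_add_distrib]
  map_smul' a z := by funext v; simp [Finset.mul_sum]

theorem bd_apply (z : Chain V) (v : V) : bd z v = ∑ u, z s(v, u) := rfl

/-- The indicator vector of a vertex. -/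
def dl (v : V) : V → ZMod 2 := Pi.single v 1

/-- The chain consisting of the single edge `uv`. -/
def eg (u v : V) : Chain V := Pi.single s(u, v) 1

theorem eg_apply (u v : V) (e : Sym2 V) : eg u v e = if e = s(u, v) then 1 else 0 := by
  simp [eg, Pi.single_apply]

theorem dl_apply (u v : V) : dl u v = if v = u then 1 else 0 := by
  simp [dl, Pi.single_apply]

theorem bd_eg {u v : V} (h : u ≠ v) : bd (eg u v) = dl u + dl v := by
  funext x
  rw [bd_apply, Pi.add_apply, dl_apply, dl_apply]
  simp only [eg_apply, Sym2.eq_iff]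
  by_cases h1 : x = u
  · subst h1
    simp [h]
  · by_cases h2 : x = v
    · subst h2
      simp [h.symm]
    · simp [h1, h2]

/-- The chain `z` uses only edges of `G`. -/
def SuppOn (G : SimpleGraph V) (z : Chain V) : Prop := ∀ e, z e ≠ 0 → e ∈ G.edgeSet

theorem SuppOn.zero : SuppOn G 0 := fun _ h => (h rfl).elim

theorem SuppOn.add {z z' : Chain V} (h : SuppOn G z) (h' : SuppOn G z') : SuppOn G (z + z') := by
  intro e he
  by_cases h1 : z e = 0
  · exact h' e (by simpa [h1] using he)
  · exact h e h1

theorem SuppOn.mono {z : Chain V} (h : SuppOn G z) (hG : G ≤ H) : SuppOn H z := fun e he =>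
  edgeSet_mono hG (h e he)

theorem SuppOn.eg {u v : V} (h : G.Adj u v) : SuppOn G (eg u v) := by
  intro e he
  rw [eg_apply] at he
  have : e = s(u, v) := by by_contra hne; simp [hne] at he
  rw [this]; exact h

/-- The cycle space of `G`. -/
def Zc (G : SimpleGraph V) : Submodule (ZMod 2) (Chain V) where
  carrier := {z | SuppOn G z ∧ bd z = 0}
  add_mem' h h' := ⟨h.1.add h'.1, by rw [map_add, h.2, h'.2, add_zero]⟩
  zero_mem' := ⟨SuppOn.zero, map_zero _⟩
  smul_mem' a z h := ⟨fun e he => h.1 e (fun h0 => he (by simp [h0])), by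
    rw [map_smul, h.2, smul_zero]⟩

theorem mem_Zc {z : Chain V} : z ∈ Zc G ↔ SuppOn G z ∧ bd z = 0 := Iff.rfl

theorem Zc_mono (h : G ≤ H) : Zc G ≤ Zc H := fun _ hz => ⟨hz.1.mono h, hz.2⟩

/-- Inside a connected set any two vertices are joined by a chain. -/
theorem chain_of_conn (hX : ConnSet G X) {p q : V} (hp : p ∈ X) (hq : q ∈ X) :
    ∃ P, SuppOn (res G X) P ∧ bd P = dl p + dl q := by
  have := hX.2 {q | q ∈ X ∧ ∃ P, SuppOn (res G X) P ∧ bd P = dl p + dl q} (fun q hq => hq.1)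
    ⟨p, hp, 0, SuppOn.zero, by rw [map_zero, vec_add_self]⟩ (by
      rintro u ⟨hu, P, hP, hbd⟩ v hv huv
      refine ⟨hv, P + eg u v, hP.add (SuppOn.eg ⟨huv, hu, hv⟩), ?_⟩
      rw [map_add, hbd, bd_eg huv.ne]
      calc dl p + dl u + (dl u + dl v) = dl p + (dl u + dl u) + dl v := by abel
        _ = _ := by rw [vec_add_self, add_zero])
  have hq' := hq
  rw [← this] at hq'
  exact hq'.2

theorem sum_bd (z : Chain V) (hz : ∀ v, z s(v, v) = 0) : ∑ v, bd z v = 0 := by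
  -- every off-diagonal pair is counted twice
  simp only [bd_apply]
  rw [← Finset.sum_product']
  refine Finset.sum_involution (fun p _ => (p.2, p.1)) ?_ ?_ ?_ ?_
  · rintro ⟨a, b⟩ -
    simp only [Sym2.eq_swap (a := b) (b := a)]
    exact CharTwo.add_self_eq_zero _
  · rintro ⟨a, b⟩ - h h'
    simp only [Prod.mk.injEq] at h'
    obtain ⟨rfl, -⟩ := h'
    exact h (hz _)
  · simp
  · simp

theorem SuppOn.diag {z : Chain V} (h : SuppOn G z) (v : V) : z s(v, v) = 0 := by
  by_contra hne
  have := h _ hne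
  simp at this

/-- Extension by zero of a function on the edges of `G` to a chain. -/
def extZ (G : SimpleGraph V) : (G.edgeSet → ZMod 2) →ₗ[ZMod 2] Chain V where
  toFun f e := if h : e ∈ G.edgeSet then f ⟨e, h⟩ else 0
  map_add' f g := by funext e; by_cases h : e ∈ G.edgeSet <;> simp [h]
  map_smul' a f := by funext e; by_cases h : e ∈ G.edgeSet <;> simp [h]

theorem extZ_supp (f : G.edgeSet → ZMod 2) : SuppOn G (extZ G f) := by
  intro e he
  by_contra h
  exact he (by simp [extZ, h])

theorem extZ_restrict {z : Chain V} (hz : SuppOn G z) : extZ G (fun e => z e) = z := by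
  funext e
  by_cases h : e ∈ G.edgeSet
  · simp [extZ, h]
  · have : z e = 0 := by by_contra hne; exact h (hz e hne)
    simp only [extZ, LinearMap.coe_mk, AddHom.coe_mk, h, dite_false, this]

theorem extZ_inj : Function.Injective (extZ G) := by
  intro f g h
  funext e
  have := congrFun h e
  simpa [extZ] using this

theorem edgeCount_eq : edgeCount G = Fintype.card G.edgeSet := by
  rw [edgeCount, ← Nat.card_coe_set_eq, Nat.card_eq_fintype_card]

/-- The rank–nullity count for the boundary map restricted to `G`. -/
theorem rank_nullity : Module.finrank (ZMod 2) (LinearMap.range (bd ∘ₗ extZ G)) +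
    Module.finrank (ZMod 2) (Zc G) = edgeCount G := by
  have h := LinearMap.finrank_range_add_finrank_ker (bd ∘ₗ extZ G)
  have h2 : Module.finrank (ZMod 2) (LinearMap.ker (bd ∘ₗ extZ G)) =
      Module.finrank (ZMod 2) (Zc G) := by
    have : Zc G = (LinearMap.ker (bd ∘ₗ extZ G)).map (extZ G) := by
      ext z
      simp only [Submodule.mem_map, LinearMap.mem_ker, LinearMap.comp_apply]
      constructor
      · rintro ⟨h1, h2⟩
        exact ⟨fun e => z e, by rw [extZ_restrict h1]; exact h2, extZ_restrict h1⟩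
      · rintro ⟨f, hf, rfl⟩
        exact ⟨extZ_supp f, hf⟩
    rw [this]
    exact ((Submodule.equivMapOfInjective _ extZ_inj _).finrank_eq)
  rw [h2, Module.finrank_fintype_fun_eq_card] at h
  rw [edgeCount_eq, ← h]

/-- Restriction of a vertex vector to `W` with one vertex removed. -/
def restr (W : Set V) (w0 : V) : (V → ZMod 2) →ₗ[ZMod 2] ((W \ {w0} : Set V) → ZMod 2) where
  toFun x v := x v
  map_add' _ _ := rfl
  map_smul' _ _ := rfl

theorem bd_zero_outside (hW : InW G W) {z : Chain V} (hz : SuppOn G z) {v : V} (hv : v ∉ W) :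
    bd z v = 0 := by
  rw [bd_apply]
  refine Finset.sum_eq_zero fun u _ => ?_
  by_contra hne
  exact hv (hW (hz _ hne)).1

theorem card_sdiff_one {w0 : V} (hw : w0 ∈ W) :
    Fintype.card (W \ {w0} : Set V) + 1 = W.ncard := by
  rw [← Nat.card_eq_fintype_card, Nat.card_coe_set_eq, Set.ncard_sdiff_singleton_add_one hw]

/-- The dimension of the cycle space is at least `m - n + 1`. -/
theorem finrank_Zc_ge (hW : InW G W) (hne : W.Nonempty) :
    edgeCount G + 1 ≤ Module.finrank (ZMod 2) (Zc G) + W.ncard := by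
  obtain ⟨w0, hw0⟩ := hne
  have h := rank_nullity (G := G)
  have hinj : LinearMap.ker ((restr W w0).domRestrict (LinearMap.range (bd ∘ₗ extZ G))) = ⊥ := by
    rw [LinearMap.ker_eq_bot']
    rintro ⟨x, f, rfl⟩ hx
    have hs := extZ_supp f
    ext v
    simp only [LinearMap.comp_apply, ZeroMemClass.coe_zero, Pi.zero_apply]
    have hoff : ∀ v, v ≠ w0 → bd (extZ G f) v = 0 := by
      intro v hv
      by_cases hvW : v ∈ W
      · exact congrFun hx ⟨v, hvW, hv⟩
      · exact bd_zero_outside hW hs hvW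
    by_cases hv : v = w0
    · have := sum_bd (extZ G f) hs.diag
      rw [Finset.sum_eq_single w0 (fun b _ hb => hoff b hb) (by simp)] at this
      rw [hv, this]
    · exact hoff v hv
  have := LinearMap.finrank_le_finrank_of_injective (LinearMap.ker_eq_bot.1 hinj)
  rw [Module.finrank_fintype_fun_eq_card] at this
  have := card_sdiff_one hw0
  omega

/-- The dimension of the cycle space of a connected graph is at most `m - n + 1`. -/
theorem finrank_Zc_le (hc : ConnSet G W) :
    Module.finrank (ZMod 2) (Zc G) + W.ncard ≤ edgeCount G + 1 := by
  obtain ⟨w0, hw0⟩ := hc.1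
  have h := rank_nullity (G := G)
  have hsurj : Function.Surjective
      ((restr W w0).domRestrict (LinearMap.range (bd ∘ₗ extZ G))) := by
    rw [← LinearMap.range_eq_top, eq_top_iff, ← (Pi.basisFun (ZMod 2) _).span_eq,
      Submodule.span_le]
    rintro _ ⟨⟨v, hv, hv0⟩, rfl⟩
    obtain ⟨P, hP, hbd⟩ := chain_of_conn hc hv hw0
    refine ⟨⟨bd P, fun e => P e, ?_⟩, ?_⟩
    · simp only [LinearMap.comp_apply]; rw [extZ_restrict (hP.mono res_le)]
    · funext x
      obtain ⟨x, hx, hx0⟩ := x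
      have hx0' : x ≠ w0 := hx0
      simp [restr, hbd, dl_apply, hx0', Pi.single_apply, Subtype.ext_iff]
  have := LinearMap.finrank_le_finrank_of_surjective hsurj
  rw [Module.finrank_fintype_fun_eq_card] at this
  have := card_sdiff_one hw0
  omega

end Chains

/-! ### Cycles -/

noncomputable section Cycles
open scoped Classical
variable {V : Type*} [Fintype V] {G H : SimpleGraph V} {X W : Set V} {l : ℕ} {c : ℤ → V}

/-- A cycle of length `l` in `G`, parametrised periodically by the integers. -/
structure IsCyc (G : SimpleGraph V) (l : ℕ) (c : ℤ → V) : Prop where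
  three : 3 ≤ l
  inj : ∀ i j, c i = c j ↔ (l : ℤ) ∣ i - j
  adj : ∀ i, G.Adj (c i) (c (i + 1))

/-- The cycle `c` has no chord in `G`. -/
def IsInd (G : SimpleGraph V) (l : ℕ) (c : ℤ → V) : Prop :=
  ∀ i j, G.Adj (c i) (c j) → (l : ℤ) ∣ j - i - 1 ∨ (l : ℤ) ∣ i - j - 1

/-- The chain of all edges `c i c (i+1)`. -/
def zeta (c : ℤ → V) : Chain V := fun e => if ∃ i, e = s(c i, c (i + 1)) then 1 else 0

/-- The chain of the `k` edges following `c a`. -/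
def arc (c : ℤ → V) (a : ℤ) (k : ℕ) : Chain V :=
  ∑ i ∈ Finset.range k, eg (c (a + i)) (c (a + i + 1))

theorem zeta_ne {c : ℤ → V} {e : Sym2 V} : zeta c e ≠ 0 ↔ ∃ i, e = s(c i, c (i + 1)) := by
  unfold zeta; split_ifs with h <;> simp [h]

theorem IsCyc.mono (h : IsCyc G l c) (hG : G ≤ H) : IsCyc H l c :=
  ⟨h.three, h.inj, fun i => hG (h.adj i)⟩

theorem IsCyc.shift (h : IsCyc G l c) (s : ℤ) : IsCyc G l (fun i => c (i + s)) := by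
  refine ⟨h.three, fun i j => ?_, fun i => ?_⟩
  · rw [h.inj]; ring_nf
  · have := h.adj (i + s); rwa [show i + s + 1 = i + 1 + s by ring] at this

theorem IsCyc.neg (h : IsCyc G l c) : IsCyc G l (fun i => c (-i)) := by
  refine ⟨h.three, fun i j => ?_, fun i => ?_⟩
  · rw [h.inj, ← dvd_neg]; ring_nf
  · have := (h.adj (-(i + 1))).symm; simpa using this

theorem IsInd.shift (h : IsInd G l c) (s : ℤ) : IsInd G l (fun i => c (i + s)) := by
  intro i j hij
  have := h _ _ hij
  ring_nf at this ⊢; exact this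

theorem IsInd.neg (h : IsInd G l c) : IsInd G l (fun i => c (-i)) := by
  intro i j hij
  have := h _ _ hij
  rw [show j - i - 1 = - i - - j - 1 by ring, show i - j - 1 = - j - - i - 1 by ring]
  exact this.symm

theorem zeta_shift (c : ℤ → V) (s : ℤ) : zeta (fun i => c (i + s)) = zeta c := by
  funext e
  unfold zeta
  congr 1
  rw [eq_iff_iff]
  constructor
  · rintro ⟨i, rfl⟩; exact ⟨i + s, by ring_nf⟩
  · rintro ⟨i, rfl⟩; exact ⟨i - s, by ring_nf⟩

theorem zeta_neg (c : ℤ → V) : zeta (fun i => c (-i)) = zeta c := by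
  funext e
  unfold zeta
  congr 1
  rw [eq_iff_iff]
  constructor
  · rintro ⟨i, rfl⟩; exact ⟨-(i + 1), by rw [Sym2.eq_swap]; ring_nf⟩
  · rintro ⟨i, rfl⟩; exact ⟨-(i + 1), by rw [Sym2.eq_swap]; ring_nf⟩

theorem range_shift (c : ℤ → V) (s : ℤ) : Set.range (fun i => c (i + s)) = Set.range c := by
  ext v
  constructor
  · rintro ⟨i, rfl⟩; exact ⟨i + s, rfl⟩
  · rintro ⟨i, rfl⟩; exact ⟨i - s, by simp⟩

theorem range_neg (c : ℤ → V) : Set.range (fun i => c (-i)) = Set.range c := by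
  ext v
  constructor
  · rintro ⟨i, rfl⟩; exact ⟨-i, rfl⟩
  · rintro ⟨i, rfl⟩; exact ⟨-i, by simp⟩

theorem IsCyc.edge_eq (h : IsCyc G l c) (i j : ℤ) :
    s(c i, c (i + 1)) = s(c j, c (j + 1)) ↔ (l : ℤ) ∣ i - j := by
  have h3 := h.three
  rw [Sym2.eq_iff, h.inj, h.inj, h.inj, h.inj]
  constructor
  · rintro (⟨h1, -⟩ | ⟨h1, h2⟩)
    · exact h1
    · exfalso
      have := dvd_sub h2 h1
      have h4 := Int.le_of_dvd (by ring_nf; norm_num) this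
      ring_nf at h4; omega
  · intro h1
    exact Or.inl ⟨h1, by simpa using h1⟩

theorem IsCyc.eq_of_lt (h : IsCyc G l c) {a : ℤ} {i j : ℤ} (hi : a ≤ i) (hi' : i < a + l)
    (hj : a ≤ j) (hj' : j < a + l) (hij : (l : ℤ) ∣ i - j) : i = j := by
  have h3 := h.three
  have : i - j = 0 := Int.eq_zero_of_abs_lt_dvd hij (by rw [abs_lt]; constructor <;> omega)
  omega

theorem IsCyc.rep (h : IsCyc G l c) (a j : ℤ) : ∃ i, a ≤ i ∧ i < a + l ∧ c i = c j := by
  have h3 := h.three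
  refine ⟨a + (j - a) % l, ?_, ?_, ?_⟩
  · have := Int.emod_nonneg (j - a) (b := l) (by omega); omega
  · have := Int.emod_lt_of_pos (j - a) (b := l) (by omega); omega
  · rw [h.inj]
    refine ⟨-((j - a) / l), ?_⟩
    have := Int.mul_ediv_add_emod (j - a) l
    linarith

theorem arc_apply (h : IsCyc G l c) (a : ℤ) {k : ℕ} (hk : k ≤ l) (e : Sym2 V) :
    arc c a k e = if ∃ i : ℕ, i < k ∧ e = s(c (a + i), c (a + i + 1)) then 1 else 0 := by
  unfold arc
  rw [Finset.sum_apply]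
  simp only [eg_apply]
  split_ifs with hex
  · obtain ⟨i, hi, rfl⟩ := hex
    rw [Finset.sum_eq_single i]
    · simp
    · intro j hj hji
      rw [if_neg]
      rw [h.edge_eq]
      intro hd
      rw [Finset.mem_range] at hj
      have := h.eq_of_lt (a := a) (by omega) (by omega) (by omega) (by omega) hd
      omega
    · intro hi'; exact (hi' (Finset.mem_range.2 hi)).elim
  · refine Finset.sum_eq_zero fun i hi => ?_
    rw [if_neg]
    intro he
    exact hex ⟨i, Finset.mem_range.1 hi, he⟩

theorem zeta_eq_arc (h : IsCyc G l c) (a : ℤ) : zeta c = arc c a l := by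
  funext e
  rw [arc_apply h a le_rfl, zeta]
  congr 1
  rw [eq_iff_iff]
  constructor
  · rintro ⟨j, rfl⟩
    obtain ⟨i, hi, hi', hij⟩ := h.rep a j
    refine ⟨(i - a).toNat, by omega, ?_⟩
    have e : a + ((i - a).toNat : ℤ) = i := by omega
    rw [e, h.edge_eq, ← h.inj, hij]
  · rintro ⟨i, -, rfl⟩; exact ⟨_, rfl⟩

theorem arc_bd (hadj : ∀ i, G.Adj (c i) (c (i + 1))) (a : ℤ) (k : ℕ) :
    bd (arc c a k) = dl (c a) + dl (c (a + k)) := by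
  induction k with
  | zero => simp [arc, vec_add_self]
  | succ k ih =>
    have : arc c a (k + 1) = arc c a k + eg (c (a + k)) (c (a + k + 1)) := by
      simp [arc, Finset.sum_range_succ]
    rw [this, map_add, ih, bd_eg (hadj _).ne]
    push_cast
    rw [← add_assoc a (k : ℤ) 1]
    calc dl (c a) + dl (c (a + k)) + (dl (c (a + k)) + dl (c (a + k + 1)))
        = dl (c a) + (dl (c (a + k)) + dl (c (a + k))) + dl (c (a + k + 1)) := by abel
      _ = _ := by rw [vec_add_self, add_zero]

theorem arc_supp {a : ℤ} {k : ℕ} (hadj : ∀ i : ℕ, i < k → G.Adj (c (a + i)) (c (a + i + 1))) :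
    SuppOn G (arc c a k) := by
  intro e he
  unfold arc at he
  rw [Finset.sum_apply] at he
  obtain ⟨i, hi, hne⟩ := Finset.exists_ne_zero_of_sum_ne_zero he
  exact SuppOn.eg (hadj i (Finset.mem_range.1 hi)) e hne

theorem arc_add (c : ℤ → V) (a : ℤ) (j k : ℕ) :
    arc c a (j + k) = arc c a j + arc c (a + j) k := by
  unfold arc
  rw [Finset.sum_range_add]
  congr 1
  refine Finset.sum_congr rfl fun i _ => ?_
  rw [Nat.cast_add, ← add_assoc a]

theorem IsCyc.zeta_mem (h : IsCyc G l c) : zeta c ∈ Zc G := by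
  rw [mem_Zc]
  constructor
  · intro e he
    obtain ⟨i, rfl⟩ := zeta_ne.1 he
    exact h.adj i
  · rw [zeta_eq_arc h 0, arc_bd h.adj]
    have : c (0 + l) = c 0 := by rw [h.inj]; simp
    rw [this, vec_add_self]

theorem zeta_ne_zero (c : ℤ → V) : zeta c ≠ 0 := by
  intro h0
  have : zeta c s(c 0, c (0 + 1)) ≠ 0 := zeta_ne.2 ⟨0, rfl⟩
  exact this (by rw [h0]; rfl)

theorem IsCyc.weight (h : IsCyc G l c) : {e | zeta c e ≠ 0}.ncard = l := by
  have : {e | zeta c e ≠ 0} = (fun i : ℕ => s(c i, c (i + 1))) '' (Finset.range l : Set ℕ) := by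
    ext e
    simp only [Set.mem_ofPred_eq, zeta_ne, Set.mem_image, Finset.coe_range, Set.mem_Iio]
    constructor
    · rintro ⟨j, rfl⟩
      obtain ⟨i, hi, hi', hij⟩ := h.rep 0 j
      refine ⟨i.toNat, by omega, ?_⟩
      rw [Int.toNat_of_nonneg hi, h.edge_eq, ← h.inj, hij]
    · rintro ⟨i, -, rfl⟩; exact ⟨i, rfl⟩
  rw [this, Set.InjOn.ncard_image, Set.ncard_coe_finset, Finset.card_range]
  intro i hi j hj hij
  simp only [Finset.coe_range, Set.mem_Iio] at hi hj
  have := (h.edge_eq i j).1 hij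
  have := h.eq_of_lt (a := 0) (by omega) (by omega) (by omega) (by omega) this
  omega

theorem IsCyc.card_range (h : IsCyc G l c) : (Set.range c).ncard = l := by
  have : Set.range c = (fun i : ℕ => c i) '' (Finset.range l : Set ℕ) := by
    ext v
    simp only [Set.mem_range, Set.mem_image, Finset.coe_range, Set.mem_Iio]
    constructor
    · rintro ⟨j, rfl⟩
      obtain ⟨i, hi, hi', hij⟩ := h.rep 0 j
      exact ⟨i.toNat, by omega, by rw [Int.toNat_of_nonneg hi, hij]⟩
    · rintro ⟨i, -, rfl⟩; exact ⟨i, rfl⟩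
  rw [this, Set.InjOn.ncard_image, Set.ncard_coe_finset, Finset.card_range]
  intro i hi j hj hij
  simp only [Finset.coe_range, Set.mem_Iio] at hi hj
  have := (h.inj i j).1 hij
  have := h.eq_of_lt (a := 0) (by omega) (by omega) (by omega) (by omega) this
  omega

theorem conn_Icc {c : ℤ → V} {a b : ℤ} (hab : a ≤ b)
    (hadj : ∀ i, a ≤ i → i < b → G.Adj (c i) (c (i + 1))) : ConnSet G (c '' Set.Icc a b) := by
  induction b, hab using Int.leInduction with
  | base => simpa using ConnSet.singleton (c a)
  | succ b hb ih =>
    have : c '' Set.Icc a (b + 1) = insert (c (b + 1)) (c '' Set.Icc a b) := by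
      rw [← Set.image_insert_eq]
      congr 1
      ext x; simp only [Set.mem_Icc, Set.mem_insert_iff]; omega
    rw [this]
    exact (ih fun i h1 h2 => hadj i h1 (by omega)).insert
      ⟨_, rfl, c b, ⟨b, ⟨hb, le_rfl⟩, rfl⟩, (hadj b hb (by omega)).symm⟩

/-- Every nonzero cycle-space element contains a cycle. -/
theorem exists_cyc {z : Chain V} (hz : z ∈ Zc G) (h0 : z ≠ 0) :
    ∃ l c, IsCyc G l c ∧ ∀ i, z s(c i, c (i + 1)) ≠ 0 := by
  -- a vertex on an edge of `z` lies on a second edge, since the boundary vanishes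
  have hnext : ∀ u v, z s(u, v) ≠ 0 → ∃ w, w ≠ u ∧ z s(v, w) ≠ 0 := by
    intro u v huv
    by_contra! hcon
    have := congrFun hz.2 v
    rw [bd_apply, Finset.sum_eq_single u (fun b _ hb => hcon b hb) (by simp)] at this
    rw [Sym2.eq_swap] at this
    exact huv this
  obtain ⟨e, he⟩ : ∃ e, z e ≠ 0 := by
    by_contra! hcon; exact h0 (funext hcon)
  induction e using Sym2.ind with
  | _ x y =>
  choose nx hnx1 hnx2 using hnext
  let st := {p : V × V // z s(p.1, p.2) ≠ 0}
  let step : st → st := fun p => ⟨(p.1.2, nx p.1.1 p.1.2 p.2), hnx2 _ _ p.2⟩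
  let sq : ℕ → st := fun n => step^[n] ⟨(x, y), he⟩
  have hsq : ∀ n, sq (n + 1) = step (sq n) := fun n => Function.iterate_succ_apply' _ _ _
  let w : ℕ → V := fun n => (sq n).1.1
  have hw1 : ∀ n, (sq n).1.2 = w (n + 1) := fun n => by
    change _ = (sq (n + 1)).1.1
    rw [hsq]
  have hwz : ∀ n, z s(w n, w (n + 1)) ≠ 0 := fun n => by
    rw [← hw1]; exact (sq n).2
  have hw2 : ∀ n, w (n + 2) ≠ w n := fun n => by
    rw [show w (n + 2) = (sq (n + 1)).1.2 from (hw1 (n + 1)).symm, hsq]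
    exact hnx1 _ _ _
  have hwadj : ∀ n, G.Adj (w n) (w (n + 1)) := fun n => hz.1 _ (hwz n)
  have hrep : ∃ d, 0 < d ∧ ∃ i, w i = w (i + d) := by
    obtain ⟨i, j, hij, h⟩ := Finite.exists_ne_map_eq_of_infinite w
    rcases lt_or_gt_of_ne hij with hlt | hlt
    · exact ⟨j - i, by omega, i, by rw [h]; congr 1; omega⟩
    · exact ⟨i - j, by omega, j, by rw [← h]; congr 1; omega⟩
  obtain ⟨hd0, i, hi⟩ := Nat.find_spec hrep
  set l := Nat.find hrep with hl
  have hmin : ∀ d, 0 < d → d < l → ∀ i, w i ≠ w (i + d) := by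
    intro d hd0 hdl j hj
    exact Nat.find_min hrep hdl ⟨hd0, j, hj⟩
  have hl3 : 3 ≤ l := by
    by_contra hlt
    have : l = 1 ∨ l = 2 := by omega
    rcases this with h | h
    · rw [h] at hi; exact (hwadj i).ne hi
    · rw [h] at hi; exact hw2 i hi.symm
  have hlz : (0 : ℤ) < l := by omega
  have hstep : ∀ k : ℤ, ∃ r : ℕ, r < l ∧ (k % l).toNat = r ∧
      w (i + ((k + 1) % l).toNat) = w (i + r + 1) := by
    intro k
    have h1 := Int.emod_nonneg k hlz.ne'
    have h2 := Int.emod_lt_of_pos k hlz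
    refine ⟨(k % l).toNat, by omega, rfl, ?_⟩
    by_cases hk : k % l = l - 1
    · have : (k + 1) % l = 0 := by
        rw [Int.add_emod, hk]
        have h1 : (1 : ℤ) % l = 1 := Int.emod_eq_of_lt (by omega) (by omega)
        rw [h1]; simp
      rw [this, hk]
      simp only [Int.toNat_zero, add_zero]
      rw [hi]; congr 1; omega
    · have : (k + 1) % l = k % l + 1 := by
        rw [Int.add_emod]
        have h1 : (1 : ℤ) % l = 1 := Int.emod_eq_of_lt (by omega) (by omega)
        rw [h1]; exact Int.emod_eq_of_lt (by omega) (by omega)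
      rw [this]; congr 1; omega
  refine ⟨l, fun k => w (i + (k % l).toNat), ⟨hl3, ?_, ?_⟩, ?_⟩
  · intro a b
    have ha1 := Int.emod_nonneg a hlz.ne'
    have ha2 := Int.emod_lt_of_pos a hlz
    have hb1 := Int.emod_nonneg b hlz.ne'
    have hb2 := Int.emod_lt_of_pos b hlz
    rw [Int.dvd_iff_emod_eq_zero, ← Int.emod_eq_emod_iff_emod_sub_eq_zero]
    constructor
    · intro hab
      by_contra hne
      rcases lt_or_gt_of_ne hne with hlt | hlt
      · refine hmin ((b % l).toNat - (a % l).toNat) (by omega) (by omega) (i + (a % l).toNat) ?_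
        rw [hab]; congr 1; omega
      · refine hmin ((a % l).toNat - (b % l).toNat) (by omega) (by omega) (i + (b % l).toNat) ?_
        rw [← hab]; congr 1; omega
    · intro hab; rw [hab]
  · intro k
    obtain ⟨r, hr, hkr, hk⟩ := hstep k
    simp only [hkr, hk]; exact hwadj _
  · intro k
    obtain ⟨r, hr, hkr, hk⟩ := hstep k
    simp only [hkr, hk]; exact hwz _

end Cycles

/-! ### Peripheral cycles generate the cycle space of a 3-connected graph -/

noncomputable section Tutte
open scoped Classical
variable {V : Type*} [Fintype V] {G H : SimpleGraph V} {X W B D : Set V} {l : ℕ} {c : ℤ → V}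

/-- `G` restricted to `W` is 3-connected. -/
def Conn3 (G : SimpleGraph V) (W : Set V) : Prop :=
  4 ≤ W.ncard ∧ ∀ S : Set V, S.ncard ≤ 2 → ConnSet G (W \ S)

/-- A peripheral cycle: induced, and with connected complement in `W`. -/
structure Per (G : SimpleGraph V) (W : Set V) (l : ℕ) (c : ℤ → V) : Prop where
  cyc : IsCyc G l c
  ind : IsInd G l c
  sub : Set.range c ⊆ W
  conn : ConnSet G (W \ Set.range c)

/-- The chains of the peripheral cycles avoiding `B`. -/
def perAvoid (G : SimpleGraph V) (W B : Set V) : Set (Chain V) :=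
  {z | ∃ l c, Per G W l c ∧ Disjoint (Set.range c) B ∧ z = zeta c}

theorem ncard_pair_le (a b : V) : ({a, b} : Set V).ncard ≤ 2 := by
  have := Set.ncard_insert_le a {b}
  rwa [Set.ncard_singleton] at this

/-- The number of edges of a chain. -/
def wt (z : Chain V) : ℕ := {e | z e ≠ 0}.ncard

theorem wt_add (x y : Chain V) : wt (x + y) ≤ wt x + wt y := by
  refine le_trans (Set.ncard_le_ncard ?_ (Set.toFinite _)) (Set.ncard_union_le _ _)
  intro e he
  by_contra hcon
  simp only [Set.mem_union, Set.mem_ofPred_eq, not_or, not_not] at hcon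
  exact he (by simp [hcon.1, hcon.2])

theorem wt_eg (u v : V) : wt (eg u v) ≤ 1 := by
  have : {e | eg u v e ≠ 0} ⊆ {s(u, v)} := by
    intro e he
    by_contra hne
    exact he (by rw [eg_apply, if_neg (by simpa using hne)])
  calc _ ≤ _ := Set.ncard_le_ncard this (Set.toFinite _)
    _ = 1 := Set.ncard_singleton _

theorem wt_arc (c : ℤ → V) (a : ℤ) (k : ℕ) : wt (arc c a k) ≤ k := by
  induction k with
  | zero => simp [arc, wt]
  | succ k ih =>
    have : arc c a (k + 1) = arc c a k + eg (c (a + k)) (c (a + k + 1)) := by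
      simp [arc, Finset.sum_range_succ]
    rw [this]
    exact (wt_add _ _).trans (add_le_add ih (wt_eg _ _))

theorem perAvoid_anti {B B' : Set V} (h : B ⊆ B') : perAvoid G W B' ⊆ perAvoid G W B := by
  rintro z ⟨l, c, h1, h2, h3⟩
  exact ⟨l, c, h1, h2.mono_right h, h3⟩

theorem IsCyc.add_l (h : IsCyc G l c) (i : ℤ) : c (i + l) = c i := by rw [h.inj]; simp

theorem IsCyc.ne_of (h : IsCyc G l c) {i j : ℤ} (h1 : i < j) (h2 : j < i + l) : c i ≠ c j := by
  intro he
  rw [h.inj] at he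
  have := h.eq_of_lt (a := i) (by omega) (by omega) (by omega) (by omega) he
  omega

/-- An arc of a cycle together with a chain `P` joining its ends is a cycle-space element. -/
theorem arc_add_mem (hadj : ∀ i, G.Adj (c i) (c (i + 1))) {P : Chain V} {a : ℤ} {k : ℕ}
    (hP : SuppOn (res G X) P) (hb : bd P = dl (c a) + dl (c (a + k)))
    (hX : ∀ i : ℤ, a ≤ i → i ≤ a + k → c i ∈ X) : arc c a k + P ∈ Zc (res G X) := by
  have ha : SuppOn (res G X) (arc c a k) := arc_supp fun i hi =>
    ⟨hadj _, hX _ (by omega) (by omega), hX _ (by omega) (by omega)⟩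
  refine ⟨ha.add hP, ?_⟩
  rw [map_add, arc_bd hadj, hb, vec_add_self]

theorem zeta_split (h : IsCyc G l c) (a : ℤ) {k : ℕ} (hk : k ≤ l) (P : Chain V) :
    zeta c = (arc c a k + P) + (arc c (a + k) (l - k) + P) := by
  rw [zeta_eq_arc h a]
  conv_lhs => rw [show l = k + (l - k) by omega, arc_add]
  calc _ = arc c a k + arc c (a + k) (l - k) + 0 := by rw [add_zero]
    _ = arc c a k + arc c (a + k) (l - k) + (P + P) := by rw [chain_add_self]
    _ = _ := by abel

/-- The inductive hypothesis available after enlarging the connected set `B`. -/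
def GenAbove (G : SimpleGraph V) (W B : Set V) : Prop :=
  ∀ B' ⊆ W, B ⊂ B' → ConnSet G B' → ∀ z ∈ Zc (res G (W \ B')),
    z ∈ Submodule.span (ZMod 2) (perAvoid G W B')

theorem GenAbove.insert (hI : GenAbove G W B) (hB : ConnSet G B) (hBW : B ⊆ W) {v : V} (hv : v ∈ W)
    (hvB : v ∉ B) (ht : Touch G {v} B) {z : Chain V} (hz : z ∈ Zc (res G (W \ insert v B))) :
    z ∈ Submodule.span (ZMod 2) (perAvoid G W B) := by
  have := hI (Insert.insert v B) (Set.insert_subset hv hBW) (Set.ssubset_insert hvB)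
    (hB.insert ht) z hz
  exact Submodule.span_mono (perAvoid_anti (Set.subset_insert v B)) this

/-- Splitting a cycle along a connected set `D` attached at `c i` and `c j`: each half avoids a
neighbour `c a` or `c b` of `B`, so the set `B` can be enlarged. -/
theorem gen_split (hI : GenAbove G W B) (hB : ConnSet G B) (hBW : B ⊆ W)
    (hc : IsCyc G l c) (hcW : ∀ i, c i ∈ W) (hcB : ∀ i, c i ∉ B)
    (hD : ConnSet G D) (hDW : D ⊆ W) (hDB : Disjoint D B) (hDc : ∀ i, c i ∉ D)
    {i j a b : ℤ} (hia : i < a) (haj : a < j) (hjb : j < b) (hbi : b < i + l)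
    (hDi : Touch G {c i} D) (hDj : Touch G {c j} D)
    (ha : Touch G {c a} B) (hb : Touch G {c b} B) :
    zeta c ∈ Submodule.span (ZMod 2) (perAvoid G W B) := by
  have hc2 : ConnSet G (insert (c i) (insert (c j) D)) := by
    refine (hD.insert hDj).insert (hDi.mono le_rfl le_rfl (Set.subset_insert _ _))
  obtain ⟨P, hP, hbd⟩ := chain_of_conn hc2 (p := c i) (q := c j) (by simp) (by simp)
  have hl3 := hc.three
  obtain ⟨k, rfl⟩ : ∃ k : ℕ, j = i + k := ⟨(j - i).toNat, by omega⟩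
  have hPX : ∀ x : ℤ, (i < x ∧ x < i + l) → x ≠ i + k →
      SuppOn (res G (W \ insert (c x) B)) P := by
    rintro x ⟨hx1, hx2⟩ hxj
    refine hP.mono ?_
    have hsub : ∀ v ∈ insert (c i) (insert (c (i + k)) D), v ∈ W \ insert (c x) B := by
      rintro v (rfl | rfl | hv)
      · refine ⟨hcW _, ?_⟩
        rintro (h | h)
        · exact hc.ne_of hx1 hx2 h
        · exact hcB _ h
      · refine ⟨hcW _, ?_⟩
        rintro (h | h)
        · rcases lt_or_gt_of_ne hxj with h' | h'
          · exact hc.ne_of h' (by omega) h.symm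
          · exact hc.ne_of h' (by omega) h
        · exact hcB _ h
      · refine ⟨hDW hv, ?_⟩
        rintro (h | h)
        · exact hDc x (h ▸ hv)
        · exact Set.disjoint_left.1 hDB hv h
    intro u v huv
    exact ⟨huv.1, hsub u huv.2.1, hsub v huv.2.2⟩
  rw [zeta_split hc i (k := k) (by omega) P]
  refine Submodule.add_mem _ ?_ ?_
  · refine hI.insert hB hBW (hcW b) (hcB b) hb (arc_add_mem hc.adj (hPX b ⟨by omega, hbi⟩ (by omega))
      hbd ?_)
    intro x hx1 hx2
    refine ⟨hcW x, ?_⟩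
    rintro (h | h)
    · exact hc.ne_of (show x < b by omega) (by omega) h
    · exact hcB _ h
  · refine hI.insert hB hBW (hcW a) (hcB a) ha (arc_add_mem hc.adj (hPX a ⟨hia, by omega⟩ (by omega))
      ?_ ?_)
    · rw [hbd, add_comm]
      congr 2
      rw [← hc.add_l i]; congr 1; omega
    · intro x hx1 hx2
      refine ⟨hcW x, ?_⟩
      rintro (h | h)
      · exact hc.ne_of (show a < x by omega) (by omega) h.symm
      · exact hcB _ h

theorem not_dvd_of {l : ℕ} {x : ℤ} (h1 : 0 < x) (h2 : x < l) : ¬ (l : ℤ) ∣ x := fun h => by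
  have := Int.le_of_dvd h1 h; omega

/-- The case where `B` has no neighbours outside the induced cycle `c`, and some vertex of `c` has
no neighbour in `B`. -/
theorem gen_case1 (hC3 : Conn3 G W) (hI : GenAbove G W B) (hB : ConnSet G B) (hBW : B ⊆ W)
    (hc : IsCyc G l c) (hi : IsInd G l c) (hcW : ∀ i, c i ∈ W) (hcB : ∀ i, c i ∉ B)
    (hN : ∀ v ∈ W, v ∉ B → v ∉ Set.range c → ¬ Touch G {v} B)
    (h0 : ¬ Touch G {c 0} B) :
    zeta c ∈ Submodule.span (ZMod 2) (perAvoid G W B) := by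
  have hl3 := hc.three
  set F := (Finset.Ioo (0 : ℤ) l).filter (fun i => Touch G {c i} B) with hF
  have hrepF : ∀ i, Touch G {c i} B → ∃ j ∈ F, c j = c i := by
    intro i ht
    obtain ⟨j, hj1, hj2, hj⟩ := hc.rep 0 i
    refine ⟨j, ?_, hj⟩
    rw [hF, Finset.mem_filter, Finset.mem_Ioo]
    refine ⟨⟨lt_of_le_of_ne hj1 ?_, by omega⟩, hj ▸ ht⟩
    rintro rfl
    exact h0 (hj ▸ ht)
  have hFn : F.Nonempty := by
    have hW : ConnSet G W := by simpa using hC3.2 ∅ (by simp)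
    obtain ⟨u, hu, v, hv, huv⟩ := hW.touch_diff hBW hB.1 ⟨c 0, hcW 0, hcB 0⟩
    have ht : Touch G {v} B := ⟨v, rfl, u, hu, huv.symm⟩
    by_cases hvc : v ∈ Set.range c
    · obtain ⟨i, rfl⟩ := hvc
      obtain ⟨j, hj, -⟩ := hrepF i ht
      exact ⟨j, hj⟩
    · exact (hN v hv.1 hv.2 hvc ht).elim
  set a := F.min' hFn with ha
  set b := F.max' hFn with hb
  have haF : a ∈ F := F.min'_mem hFn
  have hbF : b ∈ F := F.max'_mem hFn
  have hab : a ≤ b := F.min'_le _ hbF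
  have haF' := haF
  have hbF' := hbF
  rw [hF, Finset.mem_filter, Finset.mem_Ioo] at haF' hbF'
  -- indices between `b - l` and `a` carry no neighbour of `B`
  have hnot : ∀ i, b - l < i → i < a → ¬ Touch G {c i} B := by
    intro i h1 h2 ht
    obtain ⟨j, hj, hji⟩ := hrepF i ht
    have h3 := F.min'_le _ hj
    have h4 := F.le_max' _ hj
    rw [← ha] at h3
    rw [← hb] at h4
    exact hc.ne_of (show i < j by omega) (by omega) hji.symm
  have hconn := hC3.2 {c a, c b} (ncard_pair_le _ _)
  have hnab : ∀ i, b - l < i → i < a → c i ∉ ({c a, c b} : Set V) := by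
    intro i h1 h2
    rintro (h | h)
    · exact hc.ne_of h2 (by omega) h
    · exact hc.ne_of (show i < b by omega) (by omega) h
  have hnab' : ∀ i, a < i → i < b → c i ∉ ({c a, c b} : Set V) := by
    intro i h1 h2
    rintro (h | h)
    · exact hc.ne_of h1 (by omega) h.symm
    · exact hc.ne_of h2 (by omega) h
  have hlink := exists_link hconn (I := c '' Set.Ioo (b - l) a) (J := B ∪ c '' Set.Ioo a b)
    (by
      rintro _ ⟨i, ⟨h1, h2⟩, rfl⟩
      exact ⟨hcW i, hnab i h1 h2⟩)
    (by
      rintro v (hv | ⟨i, ⟨h1, h2⟩, rfl⟩)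
      · refine ⟨hBW hv, ?_⟩
        rintro (h | h)
        · exact hcB a (h ▸ hv)
        · exact hcB b (h ▸ hv)
      · exact ⟨hcW i, hnab' i h1 h2⟩)
    ⟨c 0, 0, ⟨by omega, by omega⟩, rfl⟩ (hB.1.mono Set.subset_union_left)
    (by
      rw [Set.disjoint_left]
      rintro _ ⟨i, ⟨h1, h2⟩, rfl⟩ (h | ⟨j, ⟨h3, h4⟩, h⟩)
      · exact hcB i h
      · exact hc.ne_of (show i < j by omega) (by omega) h.symm)
  rcases hlink with ⟨_, ⟨i, ⟨h1, h2⟩, rfl⟩, v, hv | ⟨j, ⟨h3, h4⟩, rfl⟩, hadj⟩ |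
    ⟨D, hDc, hDs, hDcl, hDI, hDJ⟩
  · exact (hnot i h1 h2 ⟨_, rfl, v, hv, hadj⟩).elim
  · exfalso
    rcases hi i j hadj with h | h
    · exact not_dvd_of (by omega) (by omega) h
    · rw [← dvd_neg] at h
      exact not_dvd_of (by omega) (by omega) h
  · have hDrange : ∀ i, c i ∉ D := by
      intro i hiD
      obtain ⟨j, hj1, hj2, hj⟩ := hc.rep (b - l + 1) i
      rw [← hj] at hiD
      have h := hDs hiD
      simp only [Set.mem_sdiff, Set.mem_insert_iff, Set.mem_singleton_iff, not_or,
        Set.mem_union, Set.mem_image, Set.mem_Ioo, not_exists, not_and, and_imp] at h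
      rcases lt_trichotomy j a with h' | h' | h'
      · exact h.2.1 j (by omega) h' rfl
      · exact h.1.2.1 (h' ▸ rfl)
      · rcases lt_or_eq_of_le (show j ≤ b by omega) with h'' | h''
        · exact h.2.2.2 j h' h'' rfl
        · exact h.1.2.2 (h'' ▸ rfl)
    have hDB : Disjoint D B := by
      rw [Set.disjoint_left]
      intro v hv hvB
      exact (hDs hv).2 (Or.inr (Or.inl hvB))
    have hDW : D ⊆ W := fun v hv => (hDs hv).1.1
    obtain ⟨u, hu, _, ⟨i, ⟨h1, h2⟩, rfl⟩, hui⟩ := hDI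
    obtain ⟨v, hv, w, hw | ⟨j, ⟨h3, h4⟩, rfl⟩, hvj⟩ := hDJ
    · exfalso
      refine hN v (hDW hv) (Set.disjoint_left.1 hDB hv) ?_ ⟨v, rfl, w, hw, hvj⟩
      rintro ⟨i, rfl⟩
      exact hDrange i hv
    · exact gen_split hI hB hBW hc hcW hcB hDc hDW hDB hDrange h2 h3 h4 (by omega)
        ⟨_, rfl, u, hu, hui.symm⟩ ⟨_, rfl, v, hv, hvj.symm⟩ haF'.2 hbF'.2

/-- The case where `B` has no neighbours outside the cycle `c`, every vertex of `c` has a neighbour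
in `B`, and there are vertices outside `c` and `B`. -/
theorem gen_case2 (hC3 : Conn3 G W) (hI : GenAbove G W B) (hB : ConnSet G B) (hBW : B ⊆ W)
    (hc : IsCyc G l c) (hcW : ∀ i, c i ∈ W) (hcB : ∀ i, c i ∉ B)
    (hN : ∀ v ∈ W, v ∉ B → v ∉ Set.range c → ¬ Touch G {v} B)
    (hall : ∀ i, Touch G {c i} B) {x : V} (hxW : x ∈ W) (hxB : x ∉ B) (hxc : x ∉ Set.range c) :
    zeta c ∈ Submodule.span (ZMod 2) (perAvoid G W B) := by
  have hl3 := hc.three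
  set X := W \ (B ∪ Set.range c) with hX
  have hxX : x ∈ X := ⟨hxW, by rintro (h | h); exacts [hxB h, hxc h]⟩
  set D := comp G X x with hD
  have hDc : ConnSet G D := comp_conn hxX
  have hDX : D ⊆ X := comp_subset _ _ _
  have hDW : D ⊆ W := fun v hv => (hDX hv).1
  have hDB : Disjoint D B := by
    rw [Set.disjoint_left]; intro v hv hvB; exact (hDX hv).2 (Or.inl hvB)
  have hDr : ∀ i, c i ∉ D := fun i hi => (hDX hi).2 (Or.inr ⟨i, rfl⟩)
  -- `D` has at least three attachments on the cycle
  have h3 : ∀ S : Set V, S.ncard ≤ 2 → S ⊆ Set.range c → ∃ i, c i ∉ S ∧ Touch G {c i} D := by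
    intro S hS hSc
    by_contra! hcon
    have hDsub : D ⊆ W \ S := fun v hv => ⟨hDW hv, fun hvS => by
      obtain ⟨i, rfl⟩ := hSc hvS; exact hDr i hv⟩
    obtain ⟨u, hu, v, hv, huv⟩ := (hC3.2 S hS).touch_diff hDsub hDc.1 (by
      obtain ⟨b, hb⟩ := hB.1
      refine ⟨b, ⟨hBW hb, fun hbS => ?_⟩, fun hbD => Set.disjoint_left.1 hDB hbD hb⟩
      obtain ⟨i, rfl⟩ := hSc hbS; exact hcB i hb)
    by_cases hvB : v ∈ B
    · exact hN u (hDW hu) (Set.disjoint_left.1 hDB hu) (fun ⟨i, hi⟩ => hDr i (hi ▸ hu))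
        ⟨u, rfl, v, hvB, huv⟩
    by_cases hvc : v ∈ Set.range c
    · obtain ⟨i, rfl⟩ := hvc
      exact hcon i hv.1.2 ⟨_, rfl, u, hu, huv.symm⟩
    · exact hv.2 (comp_closed hu ⟨hv.1.1, by rintro (h | h); exacts [hvB h, hvc h]⟩ huv)
  obtain ⟨i, -, hti⟩ := h3 ∅ (by simp) (by simp)
  obtain ⟨j', hj', htj'⟩ := h3 {c i} (by simp) (by simp)
  obtain ⟨k', hk', htk'⟩ := h3 {c i, c j'} (ncard_pair_le _ _) (by
    rintro v (rfl | rfl)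
    · exact ⟨_, rfl⟩
    · exact ⟨_, rfl⟩)
  obtain ⟨j, hj1, hj2, hj⟩ := hc.rep i j'
  obtain ⟨k, hk1, hk2, hk⟩ := hc.rep i k'
  rw [← hj] at hj' htj' hk'
  rw [← hk] at hk' htk'
  simp only [Set.mem_singleton_iff, Set.mem_insert_iff, not_or] at hj' hk'
  have hji : j ≠ i := fun h => hj' (h ▸ rfl)
  have hki : k ≠ i := fun h => hk'.1 (h ▸ rfl)
  have hkj : k ≠ j := fun h => hk'.2 (h ▸ rfl)
  have key : ∀ p q : ℤ, p + 1 < q → q < p + l - 1 → Touch G {c p} D → Touch G {c q} D →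
      zeta c ∈ Submodule.span (ZMod 2) (perAvoid G W B) := by
    intro p q hpq hqp htp htq
    exact gen_split hI hB hBW hc hcW hcB hDc hDW hDB hDr (show p < p + 1 by omega) hpq
      (show q < q + 1 by omega) (by omega) htp htq (hall _) (hall _)
  by_cases hl4 : 4 ≤ l
  · -- two of three attachments are not consecutive
    by_cases c1 : i + 1 < j ∧ j < i + l - 1
    · exact key i j c1.1 c1.2 hti htj'
    by_cases c2 : i + 1 < k ∧ k < i + l - 1
    · exact key i k c2.1 c2.2 hti htk'
    by_cases c3 : j < k
    · exact key j k (by omega) (by omega) htj' htk'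
    · exact key k j (by omega) (by omega) htk' htj'
  · have hl : l = 3 := by omega
    subst hl
    have hcover : ∀ m, Touch G {c m} D := by
      intro m
      obtain ⟨r, hr1, hr2, hr⟩ := hc.rep i m
      rw [← hr]
      have : r = i ∨ r = j ∨ r = k := by omega
      rcases this with rfl | rfl | rfl <;> assumption
    choose T hT hTb using fun m => chain_of_conn (hDc.insert (hcover m)) (p := c m) (q := x)
      (by simp) (Or.inr (mem_comp_self hxX))
    have hside : ∀ m, eg (c m) (c (m + 1)) + (T m + T (m + 1)) ∈
        Submodule.span (ZMod 2) (perAvoid G W B) := by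
      intro m
      refine hI.insert hB hBW (hcW (m + 2)) (hcB (m + 2)) (hall _) ?_
      have hsub : ∀ r, (r = m ∨ r = m + 1) → ∀ v ∈ insert (c r) D, v ∈ W \ insert (c (m + 2)) B := by
        rintro r hr v (rfl | hv)
        · refine ⟨hcW _, ?_⟩
          rintro (h | h)
          · exact hc.ne_of (show r < m + 2 by omega) (by push_cast; omega) h
          · exact hcB _ h
        · refine ⟨hDW hv, ?_⟩
          rintro (h | h)
          · exact hDr _ (h ▸ hv)
          · exact Set.disjoint_left.1 hDB hv h
      have hsupp : ∀ r, (r = m ∨ r = m + 1) → SuppOn (res G (W \ insert (c (m + 2)) B)) (T r) := by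
        intro r hr
        exact (hT r).mono fun u v huv => ⟨huv.1, hsub r hr u huv.2.1, hsub r hr v huv.2.2⟩
      have he : (res G (W \ insert (c (m + 2)) B)).Adj (c m) (c (m + 1)) := ⟨hc.adj m,
        hsub m (Or.inl rfl) _ (by simp), hsub (m + 1) (Or.inr rfl) _ (by simp)⟩
      refine ⟨(SuppOn.eg he).add ((hsupp _ (Or.inl rfl)).add
          (hsupp _ (Or.inr rfl))), ?_⟩
      rw [map_add, map_add, bd_eg (hc.adj m).ne, hTb, hTb]
      calc dl (c m) + dl (c (m + 1)) + (dl (c m) + dl x + (dl (c (m + 1)) + dl x))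
          = (dl (c m) + dl (c m)) + (dl (c (m + 1)) + dl (c (m + 1))) + (dl x + dl x) := by abel
        _ = 0 := by simp only [vec_add_self, add_zero]
    -- the chain `T 3` may differ from `T 0`, so the last side is taken with index `-1`
    have hz : zeta c = (eg (c 0) (c (0 + 1)) + (T 0 + T (0 + 1))) +
        ((eg (c 1) (c (1 + 1)) + (T 1 + T (1 + 1))) +
          (eg (c (-1)) (c (-1 + 1)) + (T (-1) + T (-1 + 1)))) + (T (-1) + T 2) := by
      rw [zeta_eq_arc hc (-1)]
      simp only [arc, Finset.sum_range_succ, Finset.sum_range_zero, zero_add]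
      push_cast
      have h1 := chain_add_self (T 0)
      have h2 := chain_add_self (T 1)
      have h3 := chain_add_self (T 2)
      have h4 := chain_add_self (T (-1))
      have : ∀ A B C t0 t1 t2 t3 : Chain V, t0 + t0 = 0 → t1 + t1 = 0 → t2 + t2 = 0 →
          t3 + t3 = 0 →
          A + B + C = B + (t0 + t1) + (C + (t1 + t2) + (A + (t3 + t0))) + (t3 + t2) := by
        intro A B C t0 t1 t2 t3 h0 h1 h2 h3
        calc A + B + C = A + B + C + 0 + 0 + 0 + 0 := by simp
          _ = A + B + C + (t0 + t0) + (t1 + t1) + (t2 + t2) + (t3 + t3) := by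
            rw [h0, h1, h2, h3]
          _ = _ := by abel
      exact this _ _ _ _ _ _ _ h1 h2 h3 h4
    rw [hz]
    refine Submodule.add_mem _ (Submodule.add_mem _ (hside 0) (Submodule.add_mem _ (hside 1)
      (hside (-1)))) ?_
    -- `T (-1)` and `T 2` have the same boundary and both avoid `c 0`
    have hc12 : c (-1) = c 2 := by rw [hc.inj]; norm_num
    refine hI.insert hB hBW (hcW 0) (hcB 0) (hall _) ⟨?_, ?_⟩
    · have hsub : ∀ v ∈ insert (c 2) D, v ∈ W \ insert (c 0) B := by
        rintro v (rfl | hv)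
        · refine ⟨hcW _, ?_⟩
          rintro (h | h)
          · exact hc.ne_of (show (0 : ℤ) < 2 by omega) (by norm_num) h.symm
          · exact hcB _ h
        · refine ⟨hDW hv, ?_⟩
          rintro (h | h)
          · exact hDr _ (h ▸ hv)
          · exact Set.disjoint_left.1 hDB hv h
      have h1 := hT (-1)
      rw [hc12] at h1
      have hle : res G (insert (c 2) D) ≤ res G (W \ insert (c 0) B) := fun u v huv =>
        ⟨huv.1, hsub u huv.2.1, hsub v huv.2.2⟩
      exact (h1.mono hle).add ((hT 2).mono hle)
    · rw [map_add, hTb, hTb, hc12, vec_add_self]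

end Tutte

/-! ### Generation of the cycle space, conclusion -/

noncomputable section Tutte2
open scoped Classical
variable {V : Type*} [Fintype V] {G H : SimpleGraph V} {X W B D : Set V} {l : ℕ} {c : ℤ → V}

/-- A cycle with a chord is the sum of two cycle-space elements of smaller weight. -/
theorem gen_chord {M : Submodule (ZMod 2) (Chain V)} (hc : IsCyc G l c)
    (hM : ∀ y ∈ Zc G, wt y < l → y ∈ M) (hi : ¬ IsInd G l c) : zeta c ∈ M := by
  unfold IsInd at hi
  push Not at hi
  obtain ⟨i, j', hadj, h1, h2⟩ := hi
  obtain ⟨j, hj1, hj2, hj⟩ := hc.rep i j'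
  rw [← hj] at hadj
  have hjj := (hc.inj _ _).1 hj
  have n0 : j ≠ i := by rintro rfl; exact hadj.ne rfl
  have n1 : j ≠ i + 1 := by
    rintro rfl
    apply h1
    obtain ⟨t, ht⟩ := hjj
    exact ⟨-t, by linear_combination -ht⟩
  have n2 : j ≠ i + l - 1 := by
    rintro rfl
    apply h2
    obtain ⟨t, ht⟩ := hjj
    exact ⟨t - 1, by linear_combination ht⟩
  obtain ⟨k, rfl⟩ : ∃ k : ℕ, j = i + k := ⟨(j - i).toNat, by omega⟩
  rw [zeta_split hc i (k := k) (by omega) (eg (c i) (c (i + k)))]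
  have hbd := bd_eg hadj.ne
  refine M.add_mem (hM _ ⟨?_, ?_⟩ ?_) (hM _ ⟨?_, ?_⟩ ?_)
  · exact (arc_supp fun _ _ => hc.adj _).add (SuppOn.eg hadj)
  · rw [map_add, arc_bd hc.adj, hbd, vec_add_self]
  · have := wt_add (arc c i k) (eg (c i) (c (i + k)))
    have := wt_arc c i k
    have := wt_eg (c i) (c (i + k))
    omega
  · exact (arc_supp fun _ _ => hc.adj _).add (SuppOn.eg hadj)
  · rw [map_add, arc_bd hc.adj, hbd]
    have : c (i + k + ((l - k : ℕ) : ℤ)) = c i := by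
      rw [← hc.add_l i]; congr 1; omega
    rw [this, add_comm (dl (c (i + k))), vec_add_self]
  · have := wt_add (arc c (i + k) (l - k)) (eg (c i) (c (i + k)))
    have := wt_arc c (i + k) (l - k)
    have := wt_eg (c i) (c (i + k))
    omega

theorem wt_zeta_add {z : Chain V} (hz : ∀ i, z s(c i, c (i + 1)) ≠ 0) :
    wt (z + zeta c) + wt (zeta c) = wt z := by
  unfold wt
  rw [← Set.ncard_union_eq]
  · congr 1
    ext e
    simp only [Set.mem_union, Set.mem_ofPred_eq, zeta_ne, Pi.add_apply]
    by_cases he : ∃ i, e = s(c i, c (i + 1))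
    · obtain ⟨i, rfl⟩ := he
      exact iff_of_true (Or.inr ⟨i, rfl⟩) (hz i)
    · have : zeta c e = 0 := by by_contra h; exact he (zeta_ne.1 h)
      simp [he, this]
  · rw [Set.disjoint_left]
    rintro e h1 h2
    obtain ⟨i, rfl⟩ := zeta_ne.1 h2
    exact h1 (by
      rw [Pi.add_apply, zmod2_ne.1 (hz i), zmod2_ne.1 h2]; decide)

/-- Cycle-space chains whose cycles all lie in a submodule lie in that submodule. -/
theorem mem_of_cycles {M : Submodule (ZMod 2) (Chain V)} (z : Chain V) (hz : z ∈ Zc G)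
    (hM : ∀ l c, IsCyc G l c → wt (zeta c) ≤ wt z → zeta c ∈ M) : z ∈ M := by
  induction hn : wt z using Nat.strong_induction_on generalizing z with
  | _ n ih =>
    by_cases h0 : z = 0
    · rw [h0]; exact M.zero_mem
    obtain ⟨l, c, hc, hcz⟩ := exists_cyc hz h0
    have hw := wt_zeta_add hcz
    have hl : wt (zeta c) = l := hc.weight
    have h3 := hc.three
    have hmem : zeta c ∈ M := hM l c hc (by omega)
    have : z + zeta c ∈ M := ih _ (by omega) (z + zeta c) ((Zc G).add_mem hz hc.zeta_mem)
      (fun l' c' hc' hle => hM l' c' hc' (by omega)) rfl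
    have h2 := M.add_mem this hmem
    rwa [add_assoc, chain_add_self, add_zero] at h2

/-- Tutte: in a 3-connected graph the peripheral cycles avoiding a connected set `B` generate the
cycle space of the complement of `B`. -/
theorem generate (hC3 : Conn3 G W) (B : Set V) (hBW : B ⊆ W) (hB : ConnSet G B) (z : Chain V)
    (hz : z ∈ Zc (res G (W \ B))) : z ∈ Submodule.span (ZMod 2) (perAvoid G W B) := by
  induction hn : (W \ B).ncard using Nat.strong_induction_on generalizing B z with
  | _ n ih =>
    have hI : GenAbove G W B := by
      intro B' hB'W hBB' hB'c y hy
      refine ih _ ?_ B' hB'W hB'c y hy rfl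
      rw [← hn]
      refine Set.ncard_lt_ncard ?_ (Set.toFinite _)
      obtain ⟨hs, x, hx, hxB⟩ := Set.ssubset_iff_exists.1 hBB'
      exact Set.ssubset_iff_exists.2 ⟨Set.sdiff_subset_sdiff_right hs, x, ⟨hB'W hx, hxB⟩,
        fun h => h.2 hx⟩
    clear ih
    have key : ∀ n l c, l ≤ n → IsCyc (res G (W \ B)) l c →
        zeta c ∈ Submodule.span (ZMod 2) (perAvoid G W B) := by
      intro n
      induction n with
      | zero => intro l c hl hc; have := hc.three; omega
      | succ n ihn =>
        intro l c hl hc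
        by_cases hi : IsInd (res G (W \ B)) l c
        swap
        · refine gen_chord hc ?_ hi
          intro y hy hyl
          refine mem_of_cycles y hy fun l' c' hc' hle => ihn l' c' ?_ hc'
          have : wt (zeta c') = l' := hc'.weight
          omega
        have hcX : ∀ i, c i ∈ W \ B := fun i => (hc.adj i).2.1
        have hcG : IsCyc G l c := hc.mono res_le
        have hiG : IsInd G l c := fun i j hij => hi i j ⟨hij, hcX i, hcX j⟩
        by_cases hN : ∀ v ∈ W, v ∉ B → v ∉ Set.range c → ¬ Touch G {v} B
        swap
        · push Not at hN
          obtain ⟨v, hvW, hvB, hvc, ht⟩ := hN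
          have hcy : IsCyc (res G (W \ insert v B)) l c := ⟨hc.three, hc.inj, fun i => by
            have : ∀ j, c j ∈ W \ insert v B := fun j => ⟨(hcX j).1, by
              rintro (h | h)
              · exact hvc ⟨j, h⟩
              · exact (hcX j).2 h⟩
            exact ⟨hcG.adj i, this _, this _⟩⟩
          exact hI.insert hB hBW hvW hvB ht hcy.zeta_mem
        by_cases h0 : ∃ i, ¬ Touch G {c i} B
        · obtain ⟨i, hi0⟩ := h0
          have := gen_case1 hC3 hI hB hBW (hcG.shift i) (hiG.shift i) (fun j => (hcX _).1)
            (fun j => (hcX _).2) (by rwa [range_shift]) (by simpa using hi0)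
          rwa [zeta_shift] at this
        push Not at h0
        by_cases hx : ∃ x ∈ W, x ∉ B ∧ x ∉ Set.range c
        · obtain ⟨x, hxW, hxB, hxc⟩ := hx
          exact gen_case2 hC3 hI hB hBW hcG (fun j => (hcX _).1) (fun j => (hcX _).2) hN h0 hxW hxB
            hxc
        push Not at hx
        refine Submodule.subset_span ⟨l, c, ⟨hcG, hiG, ?_, ?_⟩, ?_, rfl⟩
        · rintro _ ⟨i, rfl⟩; exact (hcX i).1
        · have : W \ Set.range c = B := by
            ext v
            constructor
            · rintro ⟨h1, h2⟩
              by_contra h3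
              exact h2 (hx v h1 h3)
            · intro hv
              exact ⟨hBW hv, by rintro ⟨i, rfl⟩; exact (hcX i).2 hv⟩
          rwa [this]
        · rw [Set.disjoint_left]
          rintro _ ⟨i, rfl⟩ h
          exact (hcX i).2 h
    exact mem_of_cycles z hz fun l c hc _ => key l l c le_rfl hc

/-- All chains of peripheral cycles. -/
abbrev perAll (G : SimpleGraph V) (W : Set V) : Set (Chain V) := perAvoid G W ∅

theorem generate_all (hC3 : Conn3 G W) (hW : InW G W) (z : Chain V) (hz : z ∈ Zc G) :
    z ∈ Submodule.span (ZMod 2) (perAll G W) := by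
  have h4 := hC3.1
  have key : ∀ n l c, l ≤ n → IsCyc G l c → zeta c ∈ Submodule.span (ZMod 2) (perAll G W) := by
    intro n
    induction n with
    | zero => intro l c hl hc; have := hc.three; omega
    | succ n ihn =>
      intro l c hl hc
      have hcW : ∀ i, c i ∈ W := fun i => (hW (hc.adj i)).1
      by_cases hi : IsInd G l c
      swap
      · refine gen_chord hc ?_ hi
        intro y hy hyl
        refine mem_of_cycles y hy fun l' c' hc' hle => ihn l' c' ?_ hc'
        have : wt (zeta c') = l' := hc'.weight
        omega
      have : ∃ r ∈ W, r ∉ Set.range c := by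
        by_contra! hcon
        have hWc : W = Set.range c := Set.Subset.antisymm hcon (by rintro _ ⟨i, rfl⟩; exact hcW i)
        have hl4 : 4 ≤ l := by rw [← hc.card_range, ← hWc]; exact h4
        -- an induced Hamiltonian cycle is disconnected by two vertices at distance two
        have hconn := hC3.2 {c 1, c (-1)} (ncard_pair_le _ _)
        have hm : c 0 ∈ W \ {c 1, c (-1)} := ⟨hcW 0, by
          rintro (h | h)
          · exact hc.ne_of (show (0 : ℤ) < 1 by omega) (by omega) h
          · exact hc.ne_of (show (-1 : ℤ) < 0 by omega) (by omega) h.symm⟩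
        have hm2 : c 2 ∈ W \ {c 1, c (-1)} := ⟨hcW 2, by
          rintro (h | h)
          · exact hc.ne_of (show (1 : ℤ) < 2 by omega) (by omega) h.symm
          · exact hc.ne_of (show (-1 : ℤ) < 2 by omega) (by omega) h.symm⟩
        obtain ⟨u, rfl, v, hv, huv⟩ := hconn.touch_diff (Y := {c 0}) (by simpa using hm) (by simp)
          ⟨c 2, hm2, by simpa using (hc.ne_of (show (0 : ℤ) < 2 by omega) (by omega)).symm⟩
        obtain ⟨j, rfl⟩ := hWc ▸ hv.1.1
        apply hv.1.2
        rcases hi 0 j huv with h | h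
        · left; rw [hc.inj]; simpa using h
        · right
          obtain ⟨t, ht⟩ := h
          rw [Set.mem_singleton_iff, hc.inj]
          exact ⟨-t, by linear_combination -ht⟩
      obtain ⟨r, hrW, hrc⟩ := this
      have hcy : IsCyc (res G (W \ {r})) l c := ⟨hc.three, hc.inj, fun i =>
        ⟨hc.adj i, ⟨hcW _, fun h => hrc ⟨_, h⟩⟩, ⟨hcW _, fun h => hrc ⟨_, h⟩⟩⟩⟩
      have := generate hC3 {r} (by simpa using hrW) (ConnSet.singleton r) _ hcy.zeta_mem
      exact Submodule.span_mono (perAvoid_anti (by simp)) this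
  exact mem_of_cycles z hz fun l c hc _ => key l l c le_rfl hc

/-- Through every edge there is a peripheral cycle avoiding a given third vertex. -/
theorem exists_per_avoid (hC3 : Conn3 G W) (hW : InW G W) {x y r : V} (hxy : G.Adj x y)
    (hr : r ∈ W) (hrx : r ≠ x) (hry : r ≠ y) :
    ∃ l c, Per G W l c ∧ r ∉ Set.range c ∧ zeta c s(x, y) ≠ 0 := by
  have hxW := (hW hxy).1
  have hyW := (hW hxy).2
  have h4 := hC3.1
  -- a path from `x` to `y` avoiding `r` and the edge `xy`
  have hx1 : ConnSet G (W \ {r, x}) := hC3.2 _ (ncard_pair_le _ _)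
  obtain ⟨p, hpx, hp, hpy⟩ : ∃ p, G.Adj x p ∧ p ∈ W \ {r, x} ∧ p ≠ y := by
    have hq : ∃ q ∈ W, q ∉ ({r, x, y} : Set V) := by
      by_contra! hcon
      have h1 := Set.ncard_le_ncard (show W ⊆ {r, x, y} from hcon) (Set.toFinite _)
      have h2 := Set.ncard_insert_le r {x, y}
      have h3 := ncard_pair_le x y
      omega
    obtain ⟨q, hqW, hq⟩ := hq
    simp only [Set.mem_insert_iff, Set.mem_singleton_iff, not_or] at hq
    obtain ⟨u, rfl, v, hv, huv⟩ := (hC3.2 {r, y} (ncard_pair_le _ _)).touch_diff (Y := {x})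
      (by simpa using ⟨hxW, fun h => hrx h.symm, hxy.ne⟩) (by simp)
      ⟨q, ⟨hqW, by simp [hq]⟩, by simp [hq]⟩
    simp only [Set.mem_sdiff, Set.mem_insert_iff, Set.mem_singleton_iff, not_or] at hv
    exact ⟨v, huv, ⟨hv.1.1, by simp [hv]⟩, hv.1.2.2⟩
  obtain ⟨P, hP, hbd⟩ := chain_of_conn hx1 hp (q := y) ⟨hyW, by
    simp only [Set.mem_insert_iff, Set.mem_singleton_iff, not_or]
    exact ⟨fun h => hry h.symm, hxy.ne.symm⟩⟩
  have hz : eg x y + (eg x p + P) ∈ Zc (res G (W \ {r})) := by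
    have e1 : (res G (W \ {r})).Adj x y := ⟨hxy, ⟨hxW, fun h => hrx h.symm⟩, ⟨hyW, fun h => hry h.symm⟩⟩
    have e2 : (res G (W \ {r})).Adj x p := ⟨hpx, ⟨hxW, fun h => hrx h.symm⟩,
      ⟨hp.1, fun h => hp.2 (Or.inl h)⟩⟩
    have hle : res G (W \ {r, x}) ≤ res G (W \ {r}) := fun u v huv =>
      ⟨huv.1, ⟨huv.2.1.1, fun h => huv.2.1.2 (Or.inl h)⟩, ⟨huv.2.2.1, fun h => huv.2.2.2 (Or.inl h)⟩⟩
    refine ⟨(SuppOn.eg e1).add ((SuppOn.eg e2).add (hP.mono hle)), ?_⟩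
    rw [map_add, map_add, bd_eg hxy.ne, bd_eg hpx.ne, hbd]
    calc dl x + dl y + (dl x + dl p + (dl p + dl y)) =
        (dl x + dl x) + (dl y + dl y) + (dl p + dl p) := by abel
      _ = 0 := by simp only [vec_add_self, add_zero]
  have hz1 : (eg x y + (eg x p + P)) s(x, y) ≠ 0 := by
    have hP0 : P s(x, y) = 0 := by
      by_contra h
      have := hP _ h
      exact this.2.1.2 (Or.inr rfl)
    simp only [Pi.add_apply, eg_apply, hP0]
    have : s(x, y) ≠ s(x, p) := by
      intro h
      rw [Sym2.eq_iff] at h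
      rcases h with h | h
      · exact hpy h.2.symm
      · exact hpx.ne h.1
    simp [this]
  have hs := generate hC3 {r} (by simpa using hr) (ConnSet.singleton r) _ hz
  by_contra! hcon
  -- otherwise the edge coordinate vanishes on the span
  have : ∀ z ∈ Submodule.span (ZMod 2) (perAvoid G W {r}), z s(x, y) = 0 := by
    intro z hz
    induction hz using Submodule.span_induction with
    | mem z hz =>
      obtain ⟨l, c, hper, hd, rfl⟩ := hz
      by_contra h
      exact h (hcon l c hper (by simpa using hd))
    | zero => rfl
    | add a b _ _ ha hb => rw [Pi.add_apply, ha, hb, add_zero]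
    | smul a b _ hb => rw [Pi.smul_apply, hb, smul_zero]
  exact hz1 (this _ hs)

end Tutte2

/-! ### Peripheral cycles of a planar graph: at most two through each edge -/

noncomputable section TwoFaces
open scoped Classical
variable {V : Type*} [Fintype V] {G H : SimpleGraph V} {X W B D U : Set V} {l : ℕ} {c : ℤ → V}

/-- A cycle with two crossing bridges `U` and `D` that touch each other gives a `K₃,₃`-minor. -/
theorem ear_K33 (hc : IsCyc G l c) {k : ℤ} (hk : 1 < k) (hkl : k < l - 1) (hU : ConnSet G U)
    (hD : ConnSet G D) (hUc : ∀ i, c i ∉ U) (hDc : ∀ i, c i ∉ D) (hUD : Disjoint U D)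
    (htU : Touch G {c 0} U) (hwU : Touch G {c k} U) (hDI : Touch G D (c '' Set.Icc 1 (k - 1)))
    (hDJ : Touch G D (c '' Set.Icc (k + 1) (l - 1))) (hDU : Touch G D U) : ¬ IsPlanar G := by
  have dU : ∀ s : Set ℤ, Disjoint (c '' s) U := fun s => by
    rw [Set.disjoint_left]; rintro _ ⟨i, -, rfl⟩; exact hUc i
  have dD : ∀ s : Set ℤ, Disjoint (c '' s) D := fun s => by
    rw [Set.disjoint_left]; rintro _ ⟨i, -, rfl⟩; exact hDc i
  have hss : ∀ s t : Set ℤ, (∀ i ∈ s, 0 ≤ i ∧ i < l) → (∀ i ∈ t, 0 ≤ i ∧ i < l) →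
      (∀ i ∈ s, ∀ j ∈ t, i ≠ j) → Disjoint (c '' s) (c '' t) := by
    intro s t hs ht hst
    rw [Set.disjoint_left]
    rintro _ ⟨i, hi, rfl⟩ ⟨j, hj, hij⟩
    have h1 := hs i hi
    have h2 := ht j hj
    rcases lt_or_gt_of_ne (hst i hi j hj) with h | h
    · exact hc.ne_of h (by omega) hij.symm
    · exact hc.ne_of h (by omega) hij
  have hI : ConnSet G (c '' Set.Icc 1 (k - 1)) := conn_Icc (by omega) fun i _ _ => hc.adj i
  have hJ : ConnSet G (c '' Set.Icc (k + 1) (l - 1)) := conn_Icc (by omega) fun i _ _ => hc.adj i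
  have e0 : ({c 0} : Set V) = c '' {0} := by simp
  have ek : ({c k} : Set V) = c '' {k} := by simp
  have hl := hc.add_l 0
  have ha1 := hc.adj 0
  have ha2 := hc.adj (l - 1)
  have ha3 := hc.adj k
  have ha4 := hc.adj (k - 1)
  rw [show (l : ℤ) - 1 + 1 = 0 + l by ring, hl] at ha2
  rw [show k - 1 + 1 = k by ring] at ha4
  refine not_planar_K33 (ConnSet.singleton (c 0)) (ConnSet.singleton (c k)) hD hI hJ hU ?_
    ⟨_, rfl, _, ⟨1, ⟨by omega, by omega⟩, rfl⟩, by simpa using ha1⟩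
    ⟨_, rfl, _, ⟨l - 1, ⟨by omega, by omega⟩, rfl⟩, ha2.symm⟩ htU
    ⟨_, rfl, _, ⟨k - 1, ⟨by omega, by omega⟩, rfl⟩, ha4.symm⟩
    ⟨_, rfl, _, ⟨k + 1, ⟨by omega, by omega⟩, rfl⟩, ha3⟩ hwU hDI hDJ hDU
  rw [e0, ek]
  simp only [List.pairwise_cons, List.mem_cons, List.not_mem_nil, or_false, forall_eq_or_imp,
    forall_eq, false_imp_iff, implies_true, and_true, List.Pairwise.nil]
  refine ⟨⟨?_, dD _, ?_, ?_, dU _⟩, ⟨dD _, ?_, ?_, dU _⟩, ⟨(dD _).symm, (dD _).symm, hUD.symm⟩,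
    ⟨?_, dU _⟩, dU _⟩ <;>
  · refine hss _ _ ?_ ?_ ?_ <;> simp only [Set.mem_Icc, Set.mem_singleton_iff] <;> intros <;> omega

/-- An ear of a peripheral cycle `c₁`: a segment `c₂ 1, …, c₂ (b-1)` of another peripheral cycle,
disjoint from `c₁` and with ends at the non-consecutive positions `0` and `k` of `c₁`. -/
structure Ear (G : SimpleGraph V) (W : Set V) (l₁ l₂ : ℕ) (c₁ c₂ : ℤ → V) (k b : ℤ) : Prop where
  p1 : Per G W l₁ c₁
  p2 : Per G W l₂ c₂
  h0 : c₁ 0 = c₂ 0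
  hk : c₁ k = c₂ b
  k1 : 1 < k
  k2 : k < l₁ - 1
  b1 : 1 < b
  b2 : b < l₂
  off : ∀ j, 0 < j → j < b → c₂ j ∉ Set.range c₁

variable {l₁ l₂ : ℕ} {c₁ c₂ : ℤ → V} {k b : ℤ}

theorem Per.neg (h : Per G W l c) : Per G W l (fun i => c (-i)) :=
  ⟨h.cyc.neg, h.ind.neg, by rw [range_neg]; exact h.sub, by rw [range_neg]; exact h.conn⟩

theorem Per.shift (h : Per G W l c) (s : ℤ) : Per G W l (fun i => c (i + s)) :=
  ⟨h.cyc.shift s, h.ind.shift s, by rw [range_shift]; exact h.sub, by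
    rw [range_shift]; exact h.conn⟩

theorem Ear.flip (h : Ear G W l₁ l₂ c₁ c₂ k b) :
    Ear G W l₁ l₂ (fun i => c₁ (-i)) c₂ (l₁ - k) b := by
  refine ⟨h.p1.neg, h.p2, by simpa using h.h0, ?_, by have := h.k2; omega, by have := h.k1; omega,
    h.b1, h.b2, ?_⟩
  · rw [← h.hk, ← h.p1.cyc.add_l (-(l₁ - k))]; congr 1; ring
  · rw [range_neg]; exact h.off

theorem Ear.connU (h : Ear G W l₁ l₂ c₁ c₂ k b) : ConnSet G (c₂ '' Set.Icc 1 (b - 1)) :=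
  conn_Icc (by have := h.b1; omega) fun i _ _ => h.p2.cyc.adj i

theorem Ear.offU (h : Ear G W l₁ l₂ c₁ c₂ k b) (i : ℤ) : c₁ i ∉ c₂ '' Set.Icc 1 (b - 1) := by
  rintro ⟨j, ⟨hj1, hj2⟩, hj⟩
  exact h.off j (by omega) (by omega) ⟨i, hj.symm⟩

theorem Ear.touch0 (h : Ear G W l₁ l₂ c₁ c₂ k b) :
    Touch G {c₁ 0} (c₂ '' Set.Icc 1 (b - 1)) := by
  have := h.b1
  exact ⟨_, rfl, c₂ 1, ⟨1, ⟨le_rfl, by omega⟩, rfl⟩, by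
    rw [h.h0]; simpa using h.p2.cyc.adj 0⟩

theorem Ear.touchk (h : Ear G W l₁ l₂ c₁ c₂ k b) :
    Touch G {c₁ k} (c₂ '' Set.Icc 1 (b - 1)) := by
  have := h.b1
  exact ⟨_, rfl, c₂ (b - 1), ⟨b - 1, ⟨by omega, le_rfl⟩, rfl⟩, by
    rw [h.hk]; simpa using (h.p2.cyc.adj (b - 1)).symm⟩

/-- As the cycle is induced, a neighbour of `c i` on the cycle is one of the two vertices next to
it. -/
theorem per_step (h : Per G W l c) {i : ℤ} {v : V} (hv : v ∈ Set.range c) (ha : G.Adj (c i) v) :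
    v = c (i + 1) ∨ v = c (i - 1) := by
  obtain ⟨j, rfl⟩ := hv
  rcases h.ind i j ha with h' | h'
  · left
    rw [h.cyc.inj]
    convert h' using 1; ring
  · right
    rw [h.cyc.inj]
    obtain ⟨t, ht⟩ := h'
    exact ⟨-t, by linear_combination -ht⟩

/-- The case where one of the two arcs of `c₁` between the ends of the ear lies on `c₂`. -/
theorem Ear.caseB (h : Ear G W l₁ l₂ c₁ c₂ k b) (hC3 : Conn3 G W)
    (hJ : ∀ i, k < i → i < l₁ → c₁ i ∈ Set.range c₂) : ¬ IsPlanar G := by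
  have k1 := h.k1
  have k2 := h.k2
  have b1 := h.b1
  have b2 := h.b2
  have hc1 := h.p1.cyc
  have hc2 := h.p2.cyc
  have hstep : ∀ n : ℕ, k + n ≤ l₁ → c₁ (k + n) = c₂ (b + n) := by
    intro n
    induction n using Nat.strong_induction_on with
    | _ n ih =>
      intro hn
      rcases n with _ | n
      · simpa using h.hk
      have e := ih n (by omega) (by push_cast at hn; omega)
      have hmem : c₁ (k + n + 1) ∈ Set.range c₂ := by
        rcases lt_or_eq_of_le hn with h' | h'
        · exact hJ _ (by omega) (by push_cast at h'; omega)
        · refine ⟨0, ?_⟩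
          rw [← h.h0, ← hc1.add_l 0]; congr 1; push_cast at h'; omega
      have hadj := hc1.adj (k + n)
      have e3 : c₁ (k + n + 1) = c₂ (b + n + 1) := by
        nth_rewrite 1 [e] at hadj
        rcases per_step h.p2 hmem hadj with h' | h'
        · exact h'
        · exfalso
          rcases n with _ | n
          · exact h.off (b - 1) (by omega) (by omega) ⟨k + 1, by simpa using h'⟩
          · have e' := ih n (by omega) (by push_cast at hn; omega)
            rw [show b + ((n + 1 : ℕ) : ℤ) - 1 = b + n by push_cast; ring, ← e'] at h'
            exact hc1.ne_of (i := k + n) (j := k + (n + 1 : ℕ) + 1) (by push_cast; omega)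
              (by push_cast; omega) h'.symm
      convert e3 using 2 <;> (push_cast; ring)
  have hlen : (l₂ : ℤ) - b = l₁ - k := by
    have e := hstep (l₁ - k).toNat (by omega)
    rw [Int.toNat_of_nonneg (by omega)] at e
    have e2 : c₂ (b + (l₁ - k)) = c₂ 0 := by
      rw [← e, ← h.h0, ← hc1.add_l 0]; congr 1; ring
    by_contra hne
    rcases lt_or_gt_of_ne hne with h' | h'
    · have e3 := hstep (l₂ - b).toNat (by omega)
      rw [Int.toNat_of_nonneg (by omega)] at e3
      rw [show b + (l₂ - b) = 0 + (l₂ : ℤ) by ring, hc2.add_l, ← h.h0, ← hc1.add_l 0] at e3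
      exact hc1.ne_of (i := k + (l₂ - b)) (j := 0 + l₁) (by omega) (by omega) e3
    · exact hc2.ne_of (i := 0) (j := b + (l₁ - k)) (by omega) (by omega) e2.symm
  have hC2C1 : ∀ j, c₂ j ∉ c₂ '' Set.Icc 1 (b - 1) → c₂ j ∈ Set.range c₁ := by
    intro j hj
    obtain ⟨i, hi1, hi2, hi⟩ := hc2.rep 1 j
    rw [← hi] at hj ⊢
    have hib : b ≤ i := by
      by_contra hlt
      exact hj ⟨i, ⟨hi1, by omega⟩, rfl⟩
    have := hstep (i - b).toNat (by omega)
    rw [Int.toNat_of_nonneg (by omega)] at this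
    exact ⟨_, by rw [this]; congr 1; ring⟩
  have hC1C2 : ∀ i, c₁ i ∉ c₁ '' Set.Icc 1 (k - 1) → c₁ i ∈ Set.range c₂ := by
    intro j hj
    obtain ⟨i, hi1, hi2, hi⟩ := hc1.rep 1 j
    rw [← hi] at hj ⊢
    have hib : k ≤ i := by
      by_contra hlt
      exact hj ⟨i, ⟨hi1, by omega⟩, rfl⟩
    have := hstep (i - k).toNat (by omega)
    rw [Int.toNat_of_nonneg (by omega)] at this
    exact ⟨_, by rw [← this]; congr 1; ring⟩
  have hI2 : ∀ i, 1 ≤ i → i ≤ k - 1 → c₁ i ∉ Set.range c₂ := by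
    rintro i hi1 hi2 ⟨j', hj'⟩
    obtain ⟨j, hj1, hj2, hj⟩ := hc2.rep 1 j'
    rw [← hj] at hj'
    by_cases hjb : j < b
    · exact h.off j (by omega) hjb ⟨i, hj'.symm⟩
    · have := hstep (j - b).toNat (by omega)
      rw [Int.toNat_of_nonneg (by omega)] at this
      rw [show b + (j - b) = j by ring, hj'] at this
      exact hc1.ne_of (i := i) (j := k + (j - b)) (by omega) (by omega) this.symm
  -- the inner vertex `s` of the common part has a neighbour off both cycles
  have hs1 := hstep 1 (by push_cast; omega)
  have hs2 := hstep 2 (by push_cast; omega)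
  push_cast at hs1 hs2
  set s := c₁ (k + 1) with hs
  have hsW : s ∈ W := h.p1.sub ⟨_, rfl⟩
  have hsW' : s ∈ W \ {c₁ k, c₁ (k + 2)} := ⟨hsW, by
    rintro (h' | h')
    · exact hc1.ne_of (i := k) (j := k + 1) (by omega) (by omega) h'.symm
    · exact hc1.ne_of (i := k + 1) (j := k + 2) (by omega) (by have := hc1.three; omega) h'⟩
  obtain ⟨_, rfl, v, hv, hsv⟩ := (hC3.2 _ (ncard_pair_le (c₁ k) (c₁ (k + 2)))).touch_diff (Y := {s})
    (by simpa using hsW') (by simp) (by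
      refine ⟨c₁ 1, ⟨h.p1.sub ⟨_, rfl⟩, ?_⟩, ?_⟩
      · rintro (h' | h')
        · exact hc1.ne_of (i := 1) (j := k) (by omega) (by omega) h'
        · exact hc1.ne_of (i := 1) (j := k + 2) (by omega) (by omega) h'
      · exact hc1.ne_of (i := 1) (j := k + 1) (by omega) (by omega))
  have hvs : v ∉ Set.range c₁ := by
    intro hv1
    rcases per_step h.p1 hv1 hsv with h' | h'
    · exact hv.1.2 (Or.inr (by rw [Set.mem_singleton_iff, h']; congr 1; ring))
    · exact hv.1.2 (Or.inl (by rw [h']; congr 1; ring))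
  have hvs2 : v ∉ Set.range c₂ := by
    intro hv1
    rw [hs1] at hsv
    rcases per_step h.p2 hv1 hsv with h' | h'
    · exact hv.1.2 (Or.inr (by rw [Set.mem_singleton_iff, h', hs2]; congr 1; ring))
    · exact hv.1.2 (Or.inl (by rw [h', h.hk]; congr 1; ring))
  set R := W \ (Set.range c₁ ∪ Set.range c₂) with hR
  have hvR : v ∈ R := ⟨hv.1.1, by rintro (h' | h'); exacts [hvs h', hvs2 h']⟩
  set D := comp G R v with hD
  have hDR : D ⊆ R := comp_subset _ _ _
  have hDU : Touch G D (c₂ '' Set.Icc 1 (b - 1)) := by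
    obtain ⟨x, hx, y, hy, hxy⟩ := h.p1.conn.touch_diff (Y := D)
      (fun w hw => ⟨(hDR hw).1, fun h' => (hDR hw).2 (Or.inl h')⟩) (comp_conn hvR).1
      (by
        have : c₂ 1 ∈ c₂ '' Set.Icc 1 (b - 1) := ⟨1, ⟨le_rfl, by omega⟩, rfl⟩
        exact ⟨c₂ 1, ⟨h.p2.sub ⟨_, rfl⟩, h.off 1 (by omega) (by omega)⟩,
          fun h' => (hDR h').2 (Or.inr ⟨_, rfl⟩)⟩)
    refine ⟨x, hx, y, ?_, hxy⟩
    by_contra hyU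
    refine hy.2 (comp_closed hx ⟨hy.1.1, ?_⟩ hxy)
    rintro (h' | ⟨j, rfl⟩)
    · exact hy.1.2 h'
    · exact hy.1.2 (hC2C1 j hyU)
  have hDI : Touch G D (c₁ '' Set.Icc 1 (k - 1)) := by
    obtain ⟨x, hx, y, hy, hxy⟩ := h.p2.conn.touch_diff (Y := D)
      (fun w hw => ⟨(hDR hw).1, fun h' => (hDR hw).2 (Or.inr h')⟩) (comp_conn hvR).1
      (by
        exact ⟨c₁ 1, ⟨h.p1.sub ⟨_, rfl⟩, hI2 1 (by omega) (by omega)⟩,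
          fun h' => (hDR h').2 (Or.inl ⟨_, rfl⟩)⟩)
    refine ⟨x, hx, y, ?_, hxy⟩
    by_contra hyU
    refine hy.2 (comp_closed hx ⟨hy.1.1, ?_⟩ hxy)
    rintro (⟨j, rfl⟩ | h')
    · exact hy.1.2 (hC1C2 j hyU)
    · exact hy.1.2 h'
  refine ear_K33 hc1 k1 k2 h.connU (comp_conn hvR) h.offU
    (fun i hi => (hDR hi).2 (Or.inl ⟨_, rfl⟩)) ?_ h.touch0 h.touchk hDI
    ⟨v, mem_comp_self hvR, s, ⟨k + 1, ⟨le_rfl, by omega⟩, rfl⟩, hsv.symm⟩ hDU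
  rw [Set.disjoint_left]
  rintro _ ⟨j, -, rfl⟩ h'
  exact (hDR h').2 (Or.inr ⟨_, rfl⟩)

theorem Ear.not_planar (h : Ear G W l₁ l₂ c₁ c₂ k b) (hC3 : Conn3 G W) :
    ¬ IsPlanar G := by
  have k1 := h.k1
  have k2 := h.k2
  have b1 := h.b1
  have hc1 := h.p1.cyc
  by_cases hJ : ∀ i, k < i → i < l₁ → c₁ i ∈ Set.range c₂
  · exact h.caseB hC3 hJ
  by_cases hI : ∀ i, 0 < i → i < k → c₁ i ∈ Set.range c₂
  · refine h.flip.caseB hC3 fun i h1 h2 => ?_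
    rw [← hc1.add_l]
    exact hI _ (by omega) (by omega)
  push Not at hI hJ
  obtain ⟨i, i1, i2, hi⟩ := hI
  obtain ⟨j, j1, j2, hj⟩ := hJ
  set U := c₂ '' Set.Icc 1 (b - 1) with hU
  set I := c₁ '' Set.Icc 1 (k - 1) with hIdef
  set J := c₁ '' Set.Icc (k + 1) (l₁ - 1) with hJdef
  have hdIJ : Disjoint I J := by
    rw [Set.disjoint_left]
    rintro _ ⟨p, ⟨p1, p2⟩, rfl⟩ ⟨q, ⟨q1, q2⟩, hpq⟩
    exact hc1.ne_of (i := p) (j := q) (by omega) (by omega) hpq.symm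
  have hlink := exists_link h.p2.conn (I := I \ Set.range c₂) (J := J \ Set.range c₂)
    (by rintro _ ⟨⟨p, -, rfl⟩, hp⟩; exact ⟨h.p1.sub ⟨_, rfl⟩, hp⟩)
    (by rintro _ ⟨⟨p, -, rfl⟩, hp⟩; exact ⟨h.p1.sub ⟨_, rfl⟩, hp⟩)
    ⟨c₁ i, ⟨i, ⟨by omega, by omega⟩, rfl⟩, hi⟩ ⟨c₁ j, ⟨j, ⟨by omega, by omega⟩, rfl⟩, hj⟩
    (hdIJ.mono Set.sdiff_subset Set.sdiff_subset)
  rcases hlink with ⟨_, ⟨⟨p, ⟨p1, p2⟩, rfl⟩, -⟩, _, ⟨⟨q, ⟨q1, q2⟩, rfl⟩, -⟩, hpq⟩ |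
    ⟨D, hDc, hDs, -, hDI, hDJ⟩
  · exfalso
    rcases h.p1.ind p q hpq with h' | h'
    · exact not_dvd_of (by omega) (by omega) h'
    · rw [← dvd_neg] at h'
      exact not_dvd_of (by omega) (by omega) h'
  have hDr : ∀ p, c₁ p ∉ D := by
    intro p hp
    obtain ⟨q, q1, q2, hq⟩ := hc1.rep 0 p
    rw [← hq] at hp
    have h' := hDs hp
    have h2 := h'.1.2
    have h3 : ¬ (c₁ q ∈ I ∨ c₁ q ∈ J) := by
      rintro (h4 | h4)
      · exact h'.2 (Or.inl ⟨h4, h2⟩)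
      · exact h'.2 (Or.inr ⟨h4, h2⟩)
    have hq0 : q ≠ 0 := by rintro rfl; exact h2 ⟨0, h.h0.symm⟩
    have hqk : q ≠ k := by rintro rfl; exact h2 ⟨b, h.hk.symm⟩
    rcases lt_or_gt_of_ne hqk with h4 | h4
    · exact h3 (Or.inl ⟨q, ⟨by omega, by omega⟩, rfl⟩)
    · exact h3 (Or.inr ⟨q, ⟨by omega, by omega⟩, rfl⟩)
  have hDU : Disjoint U D := by
    rw [Set.disjoint_left]
    rintro _ ⟨p, -, rfl⟩ hp
    exact (hDs hp).1.2 ⟨_, rfl⟩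
  have hDI' := hDI.mono le_rfl le_rfl (Set.sdiff_subset : I \ Set.range c₂ ⊆ I)
  have hDJ' := hDJ.mono le_rfl le_rfl (Set.sdiff_subset : J \ Set.range c₂ ⊆ J)
  rcases exists_link h.p1.conn (I := U) (J := D)
    (by rintro _ ⟨p, ⟨p1, p2⟩, rfl⟩; exact ⟨h.p2.sub ⟨_, rfl⟩, h.off p (by omega) (by omega)⟩)
    (fun v hv => ⟨(hDs hv).1.1, by rintro ⟨p, rfl⟩; exact hDr p hv⟩) h.connU.1 hDc.1 hDU with
    ht | ⟨E, hEc, hEs, -, hEU, hED⟩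
  · exact ear_K33 hc1 k1 k2 h.connU hDc h.offU hDr hDU h.touch0 h.touchk hDI' hDJ' ht.symm
  · refine ear_K33 hc1 k1 k2 (h.connU.union hEc (Or.inl hEU.symm)) hDc ?_ hDr ?_
      (h.touch0.mono le_rfl le_rfl Set.subset_union_left)
      (h.touchk.mono le_rfl le_rfl Set.subset_union_left) hDI' hDJ'
      (hED.symm.mono le_rfl le_rfl Set.subset_union_right)
    · rintro p (h' | h')
      · exact h.offU p h'
      · exact (hEs h').1.2 ⟨_, rfl⟩
    · rw [Set.disjoint_union_left]
      refine ⟨hDU, ?_⟩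
      rw [Set.disjoint_left]
      exact fun v hv hvD => (hEs hv).2 (Or.inr hvD)

end TwoFaces

/-! ### Intersections of peripheral cycles -/

noncomputable section TwoFaces2
open scoped Classical
variable {V : Type*} [Fintype V] {G H : SimpleGraph V} {X W B D U : Set V} {l : ℕ} {c : ℤ → V}
variable {l₁ l₂ l₃ : ℕ} {c₁ c₂ c₃ : ℤ → V}

/-- An induced cycle is determined by its vertex set, and no induced cycle contains another. -/
theorem zeta_eq_of_subset (h1 : Per G W l₁ c₁) (h2 : Per G W l₂ c₂)
    (hs : Set.range c₂ ⊆ Set.range c₁) : zeta c₂ = zeta c₁ := by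
  have hsub : {e | zeta c₂ e ≠ 0} ⊆ {e | zeta c₁ e ≠ 0} := by
    intro e he
    obtain ⟨i, rfl⟩ := zeta_ne.1 he
    obtain ⟨j, hj⟩ := hs ⟨i, rfl⟩
    have ha := h2.cyc.adj i
    rw [← hj] at ha
    rcases per_step h1 (hs ⟨i + 1, rfl⟩) ha with h' | h'
    · exact zeta_ne.2 ⟨j, by rw [h', hj]⟩
    · exact zeta_ne.2 ⟨j - 1, by rw [h', hj.symm, Sym2.eq_swap, sub_add_cancel]⟩
  -- the successor map of `c₂` inside `c₁` keeps its direction, so it runs around all of `c₁`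
  have hwt1 : {e | zeta c₁ e ≠ 0}.ncard = l₁ := h1.cyc.weight
  have hwt2 : {e | zeta c₂ e ≠ 0}.ncard = l₂ := h2.cyc.weight
  obtain ⟨j, hj⟩ := hs ⟨0, rfl⟩
  have hdir : ∀ ε : ℤ, (ε = 1 ∨ ε = -1) → c₂ 1 = c₁ (j + ε) →
      ∀ n : ℕ, c₂ n = c₁ (j + ε * n) := by
    intro ε hε h0 n
    induction n using Nat.strong_induction_on with
    | _ n ih =>
      rcases n with _ | _ | n
      · simpa using hj.symm
      · simpa using h0
      · have e1 := ih (n + 1) (by omega)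
        have e0 := ih n (by omega)
        have ha := h2.cyc.adj ((n + 1 : ℕ) : ℤ)
        rw [e1] at ha
        have hne : c₂ n ≠ c₂ (((n + 1 : ℕ) : ℤ) + 1) := h2.cyc.ne_of (by push_cast; omega)
          (by have := h2.cyc.three; push_cast; omega)
        rw [e0] at hne
        have e4 : c₂ (((n + 1 : ℕ) : ℤ) + 1) = c₁ (j + ε * ((n + 1 : ℕ) : ℤ) + ε) := by
          rcases per_step h1 (hs ⟨_, rfl⟩) ha with h' | h' <;> rcases hε with rfl | rfl
          · exact h'
          · exfalso; apply hne; rw [h']; congr 1; push_cast; ring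
          · exfalso; apply hne; rw [h']; congr 1; push_cast; ring
          · exact h'
        convert e4 using 2 <;> (push_cast; ring)
  have hdir' : ∃ ε : ℤ, (ε = 1 ∨ ε = -1) ∧ c₂ 1 = c₁ (j + ε) := by
    have ha := h2.cyc.adj 0
    rw [← hj] at ha
    rcases per_step h1 (hs ⟨_, rfl⟩) ha with h' | h'
    · exact ⟨1, Or.inl rfl, by simpa using h'⟩
    · exact ⟨-1, Or.inr rfl, by simpa [sub_eq_add_neg] using h'⟩
  obtain ⟨ε, hε, he⟩ := hdir'
  have hall := hdir ε hε he
  have hle : l₁ ≤ l₂ := by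
    have e := hall l₂
    have e2 := h2.cyc.add_l 0
    rw [zero_add] at e2
    rw [e2, ← hj, h1.cyc.inj] at e
    have e3 : (l₁ : ℤ) ∣ l₂ := by
      rcases hε with rfl | rfl
      · obtain ⟨t, ht⟩ := e
        exact ⟨-t, by linear_combination -ht⟩
      · obtain ⟨t, ht⟩ := e
        exact ⟨t, by linear_combination ht⟩
    have := h2.cyc.three
    exact_mod_cast Int.le_of_dvd (by omega) e3
  have heq := Set.eq_of_subset_of_ncard_le hsub (by rw [hwt1, hwt2]; exact hle) (Set.toFinite _)
  funext e
  have : zeta c₂ e ≠ 0 ↔ zeta c₁ e ≠ 0 := by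
    have := Set.ext_iff.1 heq e
    simpa using this
  by_cases h : zeta c₁ e = 0
  · rw [h]; by_contra h'; exact this.1 h' h
  · rw [zmod2_ne.1 h, zmod2_ne.1 (this.2 h)]

/-- Two different peripheral cycles of a planar 3-connected graph share at most two vertices. -/
theorem per_inter (hG : IsPlanar G) (hC3 : Conn3 G W) (h1 : Per G W l₁ c₁)
    (h2 : Per G W l₂ c₂) (hne : zeta c₁ ≠ zeta c₂) {x y : V} (hxy : x ≠ y)
    (hx1 : x ∈ Set.range c₁) (hx2 : x ∈ Set.range c₂) (hy1 : y ∈ Set.range c₁)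
    (hy2 : y ∈ Set.range c₂) : Set.range c₁ ∩ Set.range c₂ = {x, y} := by
  have hns : ¬ Set.range c₂ ⊆ Set.range c₁ := fun h => hne (zeta_eq_of_subset h1 h2 h).symm
  rw [Set.not_subset] at hns
  obtain ⟨_, ⟨i0, rfl⟩, hi0⟩ := hns
  obtain ⟨p', rfl⟩ := hx2
  obtain ⟨q', rfl⟩ := hy2
  obtain ⟨p, hp1, hp2, hp⟩ := h2.cyc.rep i0 p'
  obtain ⟨q, hq1, hq2, hq⟩ := h2.cyc.rep i0 q'
  rw [← hp] at hx1 hxy ⊢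
  rw [← hq] at hy1 hxy ⊢
  clear hp hq p' q'
  have hl2 := h2.cyc.three
  have hpq : p ≠ q := fun h => hxy (h ▸ rfl)
  have hper : ∀ i, c₂ (i - l₂) = c₂ i := fun i => by rw [← h2.cyc.add_l (i - l₂)]; simp
  -- the first hit after `i0` and the last hit before it
  obtain ⟨β, ⟨hβ1, hβ2, hβ3⟩, hβmin⟩ : ∃ β, (i0 ≤ β ∧ β < i0 + l₂ ∧ c₂ β ∈ Set.range c₁) ∧
      ∀ j, i0 ≤ j → j < β → c₂ j ∉ Set.range c₁ := by
    set F := (Finset.Ico i0 (i0 + l₂)).filter (fun i => c₂ i ∈ Set.range c₁) with hF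
    have hFn : F.Nonempty := ⟨p, by rw [hF, Finset.mem_filter, Finset.mem_Ico]; exact ⟨⟨hp1, hp2⟩, hx1⟩⟩
    have hm := F.min'_mem hFn
    have hmF : ∀ x ∈ F, x ∈ Finset.Ico _ _ ∧ c₂ x ∈ Set.range c₁ := fun x hx => Finset.mem_filter.1 hx
    replace hm := hmF _ hm
    rw [Finset.mem_Ico] at hm
    refine ⟨F.min' hFn, ⟨hm.1.1, hm.1.2, hm.2⟩, fun j hj1 hj2 hj => ?_⟩
    have := F.min'_le j (by rw [hF, Finset.mem_filter, Finset.mem_Ico]; exact ⟨⟨hj1, by omega⟩, hj⟩)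
    omega
  obtain ⟨α, ⟨hα1, hα2, hα3⟩, hαmax⟩ : ∃ α, (α < i0 ∧ i0 - l₂ ≤ α ∧ c₂ α ∈ Set.range c₁) ∧
      ∀ j, α < j → j ≤ i0 → c₂ j ∉ Set.range c₁ := by
    set F := (Finset.Ico (i0 - l₂) i0).filter (fun i => c₂ i ∈ Set.range c₁) with hF
    have hFn : F.Nonempty := ⟨p - l₂, by
      rw [hF, Finset.mem_filter, Finset.mem_Ico, hper]
      exact ⟨⟨by omega, by omega⟩, hx1⟩⟩
    have hm := F.max'_mem hFn
    have hmF : ∀ x ∈ F, x ∈ Finset.Ico _ _ ∧ c₂ x ∈ Set.range c₁ := fun x hx => Finset.mem_filter.1 hx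
    replace hm := hmF _ hm
    rw [Finset.mem_Ico] at hm
    refine ⟨F.max' hFn, ⟨hm.1.2, hm.1.1, hm.2⟩, fun j hj1 hj2 hj => ?_⟩
    rcases lt_or_eq_of_le hj2 with h | h
    · have := F.le_max' j (by
        rw [hF, Finset.mem_filter, Finset.mem_Ico]; exact ⟨⟨by omega, h⟩, hj⟩)
      omega
    · exact hi0 (h ▸ hj)
  have hβi : β ≠ i0 := fun h => hi0 (h ▸ hβ3)
  have hoff : ∀ j, α < j → j < β → c₂ j ∉ Set.range c₁ := by
    intro j h3 h4
    rcases le_total j i0 with h | h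
    · exact hαmax j h3 h
    · exact hβmin j h h4
  have hspan : β < α + l₂ := by
    have hp' : β ≤ p := by by_contra h; exact hβmin p hp1 (by omega) hx1
    have hq' : β ≤ q := by by_contra h; exact hβmin q hq1 (by omega) hy1
    have hp'' : p - l₂ ≤ α := by
      by_contra h; exact hαmax (p - l₂) (by omega) (by omega) (by rw [hper]; exact hx1)
    have hq'' : q - l₂ ≤ α := by
      by_contra h; exact hαmax (q - l₂) (by omega) (by omega) (by rw [hper]; exact hy1)
    omega
  obtain ⟨s, hs⟩ := hα3
  obtain ⟨r', hr'⟩ := hβ3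
  obtain ⟨r, hr1, hr2, hr⟩ := h1.cyc.rep s r'
  rw [hr'] at hr
  have hrs : r ≠ s := by
    rintro rfl
    rw [hs] at hr
    exact h2.cyc.ne_of (by omega) hspan hr
  by_cases hadj : G.Adj (c₁ s) (c₁ r)
  · -- the ear closes up, so the second cycle consists of the ear and its two ends
    rw [hs, hr] at hadj
    have hlen : β = α + l₂ - 1 := by
      rcases h2.ind α β hadj with h | h
      · exact absurd h (not_dvd_of (by omega) (by omega))
      · rw [← dvd_neg] at h
        have := Int.le_of_dvd (by omega) h
        omega
    have hsub : ∀ v ∈ Set.range c₁ ∩ Set.range c₂, v = c₂ α ∨ v = c₂ β := by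
      rintro _ ⟨hv, ⟨j', rfl⟩⟩
      obtain ⟨j, hj1, hj2, hj⟩ := h2.cyc.rep α j'
      rw [← hj] at hv ⊢
      by_cases e1 : j = α
      · left; rw [e1]
      by_cases e2 : j = β
      · right; rw [e2]
      exact absurd hv (hoff j (by omega) (by omega))
    have ex := hsub _ ⟨hx1, ⟨p, rfl⟩⟩
    have ey := hsub _ ⟨hy1, ⟨q, rfl⟩⟩
    apply Set.Subset.antisymm
    · intro v hv
      rcases hsub v hv with h | h <;> rcases ex with ex | ex <;> rcases ey with ey | ey
      all_goals first
        | exact (hxy (ex.trans ey.symm)).elim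
        | exact Or.inl (h.trans ex.symm)
        | exact Or.inr (h.trans ey.symm)
    · rintro v (rfl | rfl)
      · exact ⟨hx1, ⟨_, rfl⟩⟩
      · exact ⟨hy1, ⟨_, rfl⟩⟩
  · exfalso
    have hl1 := h1.cyc.three
    have n1 : r ≠ s + 1 := by rintro rfl; exact hadj (h1.cyc.adj s)
    have n2 : r ≠ s + l₁ - 1 := by
      rintro rfl
      have := h1.cyc.adj (s + l₁ - 1)
      rw [show s + (l₁ : ℤ) - 1 + 1 = s + l₁ by ring, h1.cyc.add_l] at this
      exact hadj this.symm
    refine Ear.not_planar (k := r - s) (b := β - α) ⟨h1.shift s, h2.shift α, by simpa using hs,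
      by simpa using hr, by omega, by omega, by omega, by omega, ?_⟩ hC3 hG
    rw [range_shift]
    intro j hj1 hj2
    exact hoff _ (by omega) (by omega)

/-- A peripheral cycle through `xy`, minus `x` and `y`, is a connected set touching both. -/
theorem per_rest (h : Per G W l c) {x y : V} (he : zeta c s(x, y) ≠ 0) :
    x ∈ Set.range c ∧ y ∈ Set.range c ∧ ConnSet G (Set.range c \ {x, y}) ∧
      Touch G {x} (Set.range c \ {x, y}) ∧ Touch G {y} (Set.range c \ {x, y}) := by
  obtain ⟨i, hi⟩ := zeta_ne.1 he
  have h3 := h.cyc.three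
  -- both orientations of the edge give the same remaining path
  have key : ∀ c' : ℤ → V, IsCyc G l c' → ConnSet G (Set.range c' \ {c' 0, c' 1}) ∧
      Touch G {c' 0} (Set.range c' \ {c' 0, c' 1}) ∧
      Touch G {c' 1} (Set.range c' \ {c' 0, c' 1}) := by
    intro c' hc
    have hset : Set.range c' \ {c' 0, c' 1} = Set.image c' (Set.Icc 2 (l - 1)) := by
      ext v
      constructor
      · rintro ⟨⟨j', rfl⟩, hv⟩
        obtain ⟨j, hj1, hj2, hj⟩ := hc.rep 0 j'
        rw [← hj] at hv ⊢
        have h0 : j ≠ 0 := by rintro rfl; exact hv (Or.inl rfl)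
        have h1 : j ≠ 1 := by rintro rfl; exact hv (Or.inr rfl)
        exact ⟨j, ⟨by omega, by omega⟩, rfl⟩
      · rintro ⟨j, ⟨hj1, hj2⟩, rfl⟩
        refine ⟨⟨j, rfl⟩, ?_⟩
        rintro (h' | h')
        · exact hc.ne_of (i := 0) (j := j) (by omega) (by omega) h'.symm
        · exact hc.ne_of (i := 1) (j := j) (by omega) (by omega) h'.symm
    rw [hset]
    refine ⟨conn_Icc (by omega) fun i _ _ => hc.adj i, ⟨_, rfl, _, ⟨l - 1, ⟨by omega, le_rfl⟩, rfl⟩, ?_⟩,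
      ⟨_, rfl, _, ⟨2, ⟨le_rfl, by omega⟩, rfl⟩, by simpa using hc.adj 1⟩⟩
    have := hc.adj (l - 1)
    rw [show (l : ℤ) - 1 + 1 = 0 + l by ring, hc.add_l] at this
    exact this.symm
  have hk := key _ (h.cyc.shift i)
  rw [range_shift] at hk
  simp only [zero_add] at hk
  rw [add_comm (1 : ℤ) i] at hk
  rw [Sym2.eq_iff] at hi
  rcases hi with ⟨rfl, rfl⟩ | ⟨rfl, rfl⟩
  · exact ⟨⟨_, rfl⟩, ⟨_, rfl⟩, hk⟩
  · refine ⟨⟨_, rfl⟩, ⟨_, rfl⟩, ?_⟩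
    rw [Set.pair_comm]
    exact ⟨hk.1, hk.2.2, hk.2.1⟩

theorem conn_closed_eq {D E R : Set V} (hD : ConnSet G D) (hE : ConnSet G E) (hDR : D ⊆ R)
    (hER : E ⊆ R) (cD : ∀ a ∈ D, ∀ b ∈ R, G.Adj a b → b ∈ D)
    (cE : ∀ a ∈ E, ∀ b ∈ R, G.Adj a b → b ∈ E) (h : (D ∩ E).Nonempty) : D = E := by
  have h1 := hD.2 (D ∩ E) Set.inter_subset_left h fun a ha b hb hab =>
    ⟨hb, cE a ha.2 b (hDR hb) hab⟩
  have h2 := hE.2 (D ∩ E) Set.inter_subset_right h fun a ha b hb hab =>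
    ⟨cD a ha.1 b (hER hb) hab, hb⟩
  exact h1.symm.trans h2

/-- In a planar 3-connected graph at most two peripheral cycles pass through any given edge. -/
theorem per_le_two (hG : IsPlanar G) (hC3 : Conn3 G W) (h1 : Per G W l₁ c₁)
    (h2 : Per G W l₂ c₂) (h3 : Per G W l₃ c₃) {x y : V} (hxy : G.Adj x y)
    (e1 : zeta c₁ s(x, y) ≠ 0) (e2 : zeta c₂ s(x, y) ≠ 0) (e3 : zeta c₃ s(x, y) ≠ 0)
    (n12 : zeta c₁ ≠ zeta c₂) (n13 : zeta c₁ ≠ zeta c₃) (n23 : zeta c₂ ≠ zeta c₃) : False := by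
  obtain ⟨x1, y1, k1, tx1, ty1⟩ := per_rest h1 e1
  obtain ⟨x2, y2, k2, tx2, ty2⟩ := per_rest h2 e2
  obtain ⟨x3, y3, k3, tx3, ty3⟩ := per_rest h3 e3
  have i12 := per_inter hG hC3 h1 h2 n12 hxy.ne x1 x2 y1 y2
  have i13 := per_inter hG hC3 h1 h3 n13 hxy.ne x1 x3 y1 y3
  have i23 := per_inter hG hC3 h2 h3 n23 hxy.ne x2 x3 y2 y3
  set Q1 := Set.range c₁ \ {x, y} with hQ1
  set Q2 := Set.range c₂ \ {x, y} with hQ2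
  set Q3 := Set.range c₃ \ {x, y} with hQ3
  have dis : ∀ {A B : Set V}, A ∩ B = {x, y} → Disjoint (A \ {x, y}) (B \ {x, y}) := by
    intro A B hAB
    rw [Set.disjoint_left]
    rintro v ⟨hv, hv'⟩ ⟨hw, -⟩
    exact hv' (hAB ▸ ⟨hv, hw⟩)
  have d12 : Disjoint Q1 Q2 := dis i12
  have d13 : Disjoint Q1 Q3 := dis i13
  have d23 : Disjoint Q2 Q3 := dis i23
  set T : Set V := {x, y} ∪ (Q1 ∪ Q2 ∪ Q3) with hT
  set R := W \ T with hR
  -- a link between two of the paths that avoids the third cycle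
  have link : ∀ {A Q Q' : Set V} , ConnSet G (W \ A) → Q ⊆ W → Q' ⊆ W → Disjoint Q A →
      Disjoint Q' A → ConnSet G Q → ConnSet G Q' → Disjoint Q Q' → A ∪ Q ∪ Q' = T →
      Touch G Q Q' ∨ ∃ D, ConnSet G D ∧ D ⊆ R ∧ (∀ a ∈ D, ∀ b ∈ R, G.Adj a b → b ∈ D) ∧
        Touch G D Q ∧ Touch G D Q' := by
    intro A Q Q' hA hQW hQW' hQA hQA' hQ hQ' hd hT'
    have : (W \ A) \ (Q ∪ Q') = R := by rw [hR, ← hT', Set.union_assoc, Set.sdiff_sdiff]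
    have h := exists_link hA (I := Q) (J := Q')
      (fun v hv => ⟨hQW hv, Set.disjoint_left.1 hQA hv⟩)
      (fun v hv => ⟨hQW' hv, Set.disjoint_left.1 hQA' hv⟩) hQ.1 hQ'.1 hd
    rwa [this] at h
  have rg : ∀ {c : ℤ → V}, x ∈ Set.range c → y ∈ Set.range c →
      Set.range c = {x, y} ∪ (Set.range c \ {x, y}) := by
    intro c hx hy
    rw [Set.union_sdiff_cancel]
    rintro v (rfl | rfl) <;> assumption
  have dA : ∀ {A B : Set V}, A ∩ B = {x, y} → Disjoint (A \ {x, y}) B := by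
    intro A B hAB
    rw [Set.disjoint_left]
    rintro v ⟨hv, hv'⟩ hw
    exact hv' (hAB ▸ ⟨hv, hw⟩)
  have s1 : Q1 ⊆ W := fun v hv => h1.sub hv.1
  have s2 : Q2 ⊆ W := fun v hv => h2.sub hv.1
  have s3 : Q3 ⊆ W := fun v hv => h3.sub hv.1
  have L12 := link h3.conn s1 s2 (dA i13) (dA i23) k1 k2 d12 (by
    rw [rg x3 y3, ← hQ3, hT]; ext v; simp only [Set.mem_union]; tauto)
  have L23 := link h1.conn s2 s3 (dA (by rw [Set.inter_comm]; exact i12))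
    (dA (by rw [Set.inter_comm]; exact i13)) k2 k3 d23 (by
    rw [rg x1 y1, ← hQ1, hT]; ext v; simp only [Set.mem_union]; tauto)
  have L31 := link h2.conn s3 s1 (dA (by rw [Set.inter_comm]; exact i23)) (dA i12) k3 k1 d13.symm (by
    rw [rg x2 y2, ← hQ2, hT]; ext v; simp only [Set.mem_union]; tauto)
  have xQ : ∀ {A : Set V}, Disjoint {x} (A \ {x, y}) := by
    intro A; rw [Set.disjoint_singleton_left]; exact fun h => h.2 (Or.inl rfl)
  have yQ : ∀ {A : Set V}, Disjoint {y} (A \ {x, y}) := by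
    intro A; rw [Set.disjoint_singleton_left]; exact fun h => h.2 (Or.inr rfl)
  have dxy : Disjoint ({x} : Set V) {y} := by simpa using hxy.ne
  have DR : ∀ {D S : Set V}, D ⊆ R → S ⊆ T → Disjoint S D := by
    intro D S hD hS
    rw [Set.disjoint_left]
    exact fun v hv hvD => (hD hvD).2 (hS hv)
  have tX : ({x} : Set V) ⊆ T := by rw [hT]; intro v hv; exact Or.inl (Or.inl hv)
  have tY : ({y} : Set V) ⊆ T := by rw [hT]; intro v hv; exact Or.inl (Or.inr hv)
  have t1 : Q1 ⊆ T := by rw [hT]; intro v hv; exact Or.inr (Or.inl (Or.inl hv))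
  have t2 : Q2 ⊆ T := by rw [hT]; intro v hv; exact Or.inr (Or.inl (Or.inr hv))
  have t3 : Q3 ⊆ T := by rw [hT]; intro v hv; exact Or.inr (Or.inr hv)
  -- a component touching all three paths gives `K₃,₃`
  have noall : ∀ D, ConnSet G D → D ⊆ R → Touch G D Q1 → Touch G D Q2 → Touch G D Q3 → False := by
    intro D hD hDR a1 a2 a3
    refine not_planar_K33 (ConnSet.singleton x) (ConnSet.singleton y) hD k1 k2 k3 ?_ tx1 tx2 tx3
      ty1 ty2 ty3 a1 a2 a3 hG
    simp only [List.pairwise_cons, List.mem_cons, List.not_mem_nil, or_false, forall_eq_or_imp,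
      forall_eq, false_imp_iff, implies_true, and_true, List.Pairwise.nil]
    exact ⟨⟨dxy, DR hDR tX, xQ, xQ, xQ⟩, ⟨DR hDR tY, yQ, yQ, yQ⟩,
      ⟨(DR hDR t1).symm, (DR hDR t2).symm, (DR hDR t3).symm⟩, ⟨d12, d13⟩, d23⟩
  -- uniform form of the links, with an empty set for a direct edge
  have unif : ∀ {Q Q' : Set V}, ConnSet G Q → (Touch G Q Q' ∨ ∃ D, ConnSet G D ∧ D ⊆ R ∧
      (∀ a ∈ D, ∀ b ∈ R, G.Adj a b → b ∈ D) ∧ Touch G D Q ∧ Touch G D Q') →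
      ∃ D, D ⊆ R ∧ (∀ a ∈ D, ∀ b ∈ R, G.Adj a b → b ∈ D) ∧ ConnSet G (Q ∪ D) ∧
        Touch G (Q ∪ D) Q' ∧ (D.Nonempty → ConnSet G D ∧ Touch G D Q ∧ Touch G D Q') := by
    rintro Q Q' hQ (h | ⟨D, a1, a2, a3, a4, a5⟩)
    · exact ⟨∅, by simp, by simp, by simpa using hQ, by simpa using h, by simp⟩
    · exact ⟨D, a2, a3, hQ.union a1 (Or.inl a4.symm), a5.mono le_rfl Set.subset_union_right le_rfl,
        fun _ => ⟨a1, a4, a5⟩⟩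
  obtain ⟨D1, r1, cl1, kk1, tt1, f1⟩ := unif k1 L12
  obtain ⟨D2, r2, cl2, kk2, tt2, f2⟩ := unif k2 L23
  obtain ⟨D3, r3, cl3, kk3, tt3, f3⟩ := unif k3 L31
  have g12 : Disjoint D1 D2 := by
    rw [Set.disjoint_iff_inter_eq_empty]
    by_contra h
    have hn := Set.nonempty_iff_ne_empty.2 h
    obtain ⟨a1, a2, a3⟩ := f1 (hn.mono Set.inter_subset_left)
    obtain ⟨b1, b2, b3⟩ := f2 (hn.mono Set.inter_subset_right)
    have := conn_closed_eq a1 b1 r1 r2 cl1 cl2 hn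
    subst this
    exact noall D1 a1 r1 a2 a3 b3
  have g13 : Disjoint D1 D3 := by
    rw [Set.disjoint_iff_inter_eq_empty]
    by_contra h
    have hn := Set.nonempty_iff_ne_empty.2 h
    obtain ⟨a1, a2, a3⟩ := f1 (hn.mono Set.inter_subset_left)
    obtain ⟨b1, b2, b3⟩ := f3 (hn.mono Set.inter_subset_right)
    have := conn_closed_eq a1 b1 r1 r3 cl1 cl3 hn
    subst this
    exact noall D1 a1 r1 a2 a3 b2
  have g23 : Disjoint D2 D3 := by
    rw [Set.disjoint_iff_inter_eq_empty]
    by_contra h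
    have hn := Set.nonempty_iff_ne_empty.2 h
    obtain ⟨a1, a2, a3⟩ := f2 (hn.mono Set.inter_subset_left)
    obtain ⟨b1, b2, b3⟩ := f3 (hn.mono Set.inter_subset_right)
    have := conn_closed_eq a1 b1 r2 r3 cl2 cl3 hn
    subst this
    exact noall D2 a1 r2 b3 a2 a3
  refine not_planar_K5 (ConnSet.singleton x) (ConnSet.singleton y) kk1 kk2 kk3 ?_ ?_ hG
  · simp only [List.pairwise_cons, List.mem_cons, List.not_mem_nil, or_false, forall_eq_or_imp,
      forall_eq, false_imp_iff, implies_true, and_true, List.Pairwise.nil, Set.disjoint_union_left,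
      Set.disjoint_union_right]
    exact ⟨⟨dxy, ⟨xQ, DR r1 tX⟩, ⟨xQ, DR r2 tX⟩, ⟨xQ, DR r3 tX⟩⟩, ⟨⟨yQ, DR r1 tY⟩, ⟨yQ, DR r2 tY⟩,
      ⟨yQ, DR r3 tY⟩⟩, ⟨⟨⟨d12, DR r2 t1⟩, ⟨(DR r1 t2).symm, g12⟩⟩, ⟨⟨d13, DR r3 t1⟩,
      ⟨(DR r1 t3).symm, g13⟩⟩⟩, ⟨⟨d23, DR r3 t2⟩, ⟨(DR r2 t3).symm, g23⟩⟩⟩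
  · simp only [List.pairwise_cons, List.mem_cons, List.not_mem_nil, or_false, forall_eq_or_imp,
      forall_eq, false_imp_iff, implies_true, and_true, List.Pairwise.nil]
    have m : ∀ {S Q D : Set V}, Touch G S Q → Touch G S (Q ∪ D) := fun h =>
      h.mono le_rfl le_rfl Set.subset_union_left
    exact ⟨⟨⟨x, rfl, y, rfl, hxy⟩, m tx1, m tx2, m tx3⟩, ⟨m ty1, m ty2, m ty3⟩,
      ⟨m tt1, (m tt3).symm⟩, m tt2⟩

/-- In a 3-connected graph every edge lies on two different peripheral cycles. -/
theorem per_ge_two (hC3 : Conn3 G W) (hW : InW G W) {x y : V} (hxy : G.Adj x y) :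
    ∃ l₁ c₁ l₂ c₂, Per G W l₁ c₁ ∧ Per G W l₂ c₂ ∧ zeta c₁ s(x, y) ≠ 0 ∧ zeta c₂ s(x, y) ≠ 0 ∧
      zeta c₁ ≠ zeta c₂ := by
  have h4 := hC3.1
  have hr : ∃ r ∈ W, r ∉ ({x, y} : Set V) := by
    by_contra! hcon
    have h1 := Set.ncard_le_ncard (show W ⊆ {x, y} from hcon) (Set.toFinite _)
    have h3 := ncard_pair_le x y
    omega
  obtain ⟨r, hrW, hr⟩ := hr
  simp only [Set.mem_insert_iff, Set.mem_singleton_iff, not_or] at hr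
  obtain ⟨l₁, c₁, h1, -, e1⟩ := exists_per_avoid hC3 hW hxy hrW hr.1 hr.2
  obtain ⟨q, hq⟩ := (per_rest h1 e1).2.2.1.1
  simp only [Set.mem_sdiff, Set.mem_insert_iff, Set.mem_singleton_iff, not_or] at hq
  obtain ⟨l₂, c₂, h2, hq2, e2⟩ := exists_per_avoid hC3 hW hxy (h1.sub hq.1) hq.2.1 hq.2.2
  refine ⟨l₁, c₁, l₂, c₂, h1, h2, e1, e2, fun h => hq2 ?_⟩
  -- equal chains have equal vertex sets
  obtain ⟨i, hi⟩ := hq.1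
  have : zeta c₁ s(c₁ i, c₁ (i + 1)) ≠ 0 := zeta_ne.2 ⟨i, rfl⟩
  rw [h] at this
  obtain ⟨j, hj⟩ := zeta_ne.1 this
  rw [Sym2.eq_iff, hi] at hj
  rcases hj with hj | hj
  · exact ⟨_, hj.1.symm⟩
  · exact ⟨_, hj.1.symm⟩

end TwoFaces2

/-! ### Two-fold generating families -/

noncomputable section TwoFamilies
open scoped Classical

/-- A two-fold generating family of a space of binary vectors: the vectors `b i` lie in `M`,
span it, and every coordinate is nonzero in at most two of them. For the cycle space of a graph
this is the condition of MacLane's planarity criterion. -/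
structure TwoFam {E ι : Type*} [Fintype ι] (M : Submodule (ZMod 2) (E → ZMod 2))
    (b : ι → E → ZMod 2) : Prop where
  mem : ∀ i, b i ∈ M
  span : M ≤ Submodule.span (ZMod 2) (Set.range b)
  two : ∀ e, (Finset.univ.filter fun i => b i e ≠ 0).card ≤ 2

/-- The vectors vanishing on `S`. -/
def zeroOn {E : Type*} (S : Set E) : Submodule (ZMod 2) (E → ZMod 2) where
  carrier := {z | ∀ e ∈ S, z e = 0}
  add_mem' h h' e he := by simp [h e he, h' e he]
  zero_mem' _ _ := rfl
  smul_mem' a z h e he := by simp [h e he]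

theorem mem_zeroOn {E : Type*} {S : Set E} {z : E → ZMod 2} :
    z ∈ zeroOn S ↔ ∀ e ∈ S, z e = 0 := Iff.rfl

variable {E E' ι : Type*} [Fintype ι] {M : Submodule (ZMod 2) (E → ZMod 2)}
  {b : ι → E → ZMod 2}

/-- Deleting a coordinate: the two vectors using it are merged. -/
theorem TwoFam.delete (h : TwoFam M b) (e : E) :
    ∃ b' : ι → E → ZMod 2, TwoFam (M ⊓ zeroOn {e}) b' := by
  have key : ∀ z ∈ M ⊓ zeroOn {e}, ∃ c : ι → ZMod 2, ∑ i, c i • b i = z ∧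
      ∑ i ∈ Finset.univ.filter (fun i => b i e ≠ 0), c i = 0 := by
    rintro z ⟨hz, hz0⟩
    obtain ⟨c, hc⟩ := (Submodule.mem_span_range_iff_exists_fun _).1 (h.span hz)
    refine ⟨c, hc, ?_⟩
    have h0 : z e = 0 := hz0 e rfl
    rw [← hc, Finset.sum_apply] at h0
    rw [Finset.sum_filter]
    refine Eq.trans (Finset.sum_congr rfl fun i _ => ?_) h0
    by_cases hi : b i e ≠ 0
    · simp [zmod2_ne.1 hi]
    · push Not at hi; simp [hi]
  have h2 := h.two e
  obtain h0 | h1 | h2 : (Finset.univ.filter fun i => b i e ≠ 0).card = 0 ∨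
    (Finset.univ.filter fun i => b i e ≠ 0).card = 1 ∨
    (Finset.univ.filter fun i => b i e ≠ 0).card = 2 := by omega
  · refine ⟨b, fun i => ⟨h.mem i, ?_⟩, fun z hz => h.span hz.1, h.two⟩
    rw [Finset.card_eq_zero, Finset.filter_eq_empty_iff] at h0
    rintro _ rfl
    have := h0 (Finset.mem_univ i)
    push Not at this
    exact this
  · obtain ⟨i, hi⟩ := Finset.card_eq_one.1 h1
    have hoth : ∀ k, k ≠ i → b k e = 0 := by
      intro k hk
      by_contra hne
      have : k ∈ Finset.univ.filter (fun i => b i e ≠ 0) := by simp [hne]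
      rw [hi, Finset.mem_singleton] at this
      exact hk this
    refine ⟨Function.update b i 0, ?_, ?_, ?_⟩
    · intro k
      by_cases hk : k = i
      · subst hk; simp
      · rw [Function.update_of_ne hk]
        exact ⟨h.mem k, by rintro _ rfl; exact hoth k hk⟩
    · intro z hz
      obtain ⟨c, hc, hs⟩ := key z hz
      rw [hi, Finset.sum_singleton] at hs
      rw [Submodule.mem_span_range_iff_exists_fun]
      refine ⟨c, hc ▸ Finset.sum_congr rfl fun k _ => ?_⟩
      by_cases hk : k = i
      · subst hk; simp [hs]
      · rw [Function.update_of_ne hk]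
    · intro e'
      refine le_trans (Finset.card_le_card ?_) (h.two e')
      intro k hk
      simp only [Finset.mem_filter, Finset.mem_univ, true_and] at hk ⊢
      by_cases hk' : k = i
      · subst hk'; simp at hk
      · rwa [Function.update_of_ne hk'] at hk
  · obtain ⟨i, j, hij, hf⟩ := Finset.card_eq_two.1 h2
    have hoth : ∀ k, b k e ≠ 0 ↔ k = i ∨ k = j := by
      intro k
      have : k ∈ Finset.univ.filter (fun i => b i e ≠ 0) ↔ b k e ≠ 0 := by simp
      rw [← this, hf]; simp
    have hi1 : b i e = 1 := zmod2_ne.1 ((hoth i).2 (Or.inl rfl))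
    have hj1 : b j e = 1 := zmod2_ne.1 ((hoth j).2 (Or.inr rfl))
    set b' := Function.update (Function.update b i (b i + b j)) j 0 with hb'
    have hbj : b' j = 0 := by simp [hb']
    have hbi : b' i = b i + b j := by simp [hb', hij]
    have hbk : ∀ k, k ≠ i → k ≠ j → b' k = b k := by
      intro k h1 h2; simp [hb', h1, h2]
    refine ⟨b', ?_, ?_, ?_⟩
    · intro k
      by_cases hkj : k = j
      · subst hkj; rw [hbj]; exact Submodule.zero_mem _
      by_cases hki : k = i
      · subst hki; rw [hbi]
        refine ⟨M.add_mem (h.mem _) (h.mem _), ?_⟩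
        rintro _ rfl
        rw [Pi.add_apply, hi1, hj1]; decide
      · rw [hbk k hki hkj]
        refine ⟨h.mem k, ?_⟩
        rintro _ rfl
        by_contra hne
        rcases (hoth k).1 hne with h | h
        · exact hki h
        · exact hkj h
    · intro z hz
      obtain ⟨c, hc, hs⟩ := key z hz
      rw [hf, Finset.sum_pair hij] at hs
      have hcij : c j = c i := by
        have : c i + c i = 0 := CharTwo.add_self_eq_zero _
        exact add_left_cancel (hs.trans this.symm)
      rw [Submodule.mem_span_range_iff_exists_fun]
      refine ⟨c, ?_⟩
      rw [← hc]
      have hsub : ∀ F : ι → E → ZMod 2, ∑ k, c k • F k =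
          c i • F i + (c j • F j + ∑ k ∈ (Finset.univ.erase i).erase j, c k • F k) := by
        intro F
        rw [Finset.add_sum_erase _ (fun k => c k • F k) (by simp [hij.symm]),
          Finset.add_sum_erase _ (fun k => c k • F k) (by simp)]
      rw [hsub, hsub b, hbj, hbi, hcij, smul_add, smul_zero, zero_add, add_assoc]
      congr 2
      refine Finset.sum_congr rfl fun k hk => ?_
      simp only [Finset.mem_erase] at hk
      rw [hbk k hk.2.1 hk.1]
    · intro e'
      refine le_trans ?_ (h.two e')
      by_cases hi0 : b i e' = 0 ∧ b j e' ≠ 0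
      · have : (Finset.univ.filter fun k => b' k e' ≠ 0) ⊆
            insert i ((Finset.univ.filter fun k => b k e' ≠ 0).erase j) := by
          intro k hk
          simp only [Finset.mem_filter, Finset.mem_univ, true_and, Finset.mem_insert,
            Finset.mem_erase] at hk ⊢
          by_cases hki : k = i
          · exact Or.inl hki
          have hkj : k ≠ j := by rintro rfl; simp [hbj] at hk
          rw [hbk k hki hkj] at hk
          exact Or.inr ⟨hkj, hk⟩
        refine (Finset.card_le_card this).trans ((Finset.card_insert_le _ _).trans ?_)
        rw [Finset.card_erase_add_one (by simp [hi0.2])]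
      · refine Finset.card_le_card ?_
        intro k hk
        simp only [Finset.mem_filter, Finset.mem_univ, true_and] at hk ⊢
        by_cases hkj : k = j
        · subst hkj; simp [hbj] at hk
        by_cases hki : k = i
        · subst hki
          intro h0
          rw [hbi, Pi.add_apply, h0, zero_add] at hk
          exact hi0 ⟨h0, hk⟩
        · rwa [hbk k hki hkj] at hk

theorem TwoFam.deleteSet (h : TwoFam M b) (S : Finset E) :
    ∃ b' : ι → E → ZMod 2, TwoFam (M ⊓ zeroOn (S : Set E)) b' := by
  induction S using Finset.induction_on with
  | empty =>
    refine ⟨b, ?_⟩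
    have : M ⊓ zeroOn ((∅ : Finset E) : Set E) = M := by
      ext z; simp [mem_zeroOn]
    rwa [this]
  | insert e S _ ih =>
    obtain ⟨b', hb'⟩ := ih
    obtain ⟨b'', hb''⟩ := hb'.delete e
    refine ⟨b'', ?_⟩
    have : M ⊓ zeroOn ((insert e S : Finset E) : Set E) =
        M ⊓ zeroOn (S : Set E) ⊓ zeroOn {e} := by
      ext z; simp [mem_zeroOn]; tauto
    rwa [this]

theorem TwoFam.map (h : TwoFam M b) (ε : E' → E) :
    TwoFam (M.map (LinearMap.funLeft (ZMod 2) (ZMod 2) ε)) (fun i e => b i (ε e)) := by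
  refine ⟨fun i => ⟨b i, h.mem i, rfl⟩, ?_, fun e => h.two (ε e)⟩
  refine (Submodule.map_mono h.span).trans ?_
  rw [Submodule.map_span, ← Set.range_comp]
  exact le_rfl

theorem TwoFam.congr {M' : Submodule (ZMod 2) (E → ZMod 2)} (h : TwoFam M b) (hM : M = M') :
    TwoFam M' b := hM ▸ h

end TwoFamilies

/-! ### Sufficiency in MacLane's criterion -/

noncomputable section Soundness
open scoped Classical
variable {V : Type*} [Fintype V] {G H : SimpleGraph V} {X W B D U : Set V} {l : ℕ} {c : ℤ → V}
  {ι : Type*} [Fintype ι]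

/-- Euler-type inequality: if all nonzero vectors of `M` have weight at least `w`, then a two-fold
generating family bounds the dimension of `M`. The sum of all family members plays the role of
one further face. -/
theorem TwoFam.numeric {M : Submodule (ZMod 2) (Chain V)} {b : ι → Chain V} (h : TwoFam M b)
    {w : ℕ} (hw : ∀ z ∈ M, z ≠ 0 → w ≤ wt z) (S : Finset (Sym2 V))
    (hS : ∀ z ∈ M, ∀ e, z e ≠ 0 → e ∈ S) (hr : 1 ≤ Module.finrank (ZMod 2) M) :
    w * (Module.finrank (ZMod 2) M + 1) ≤ 2 * S.card := by
  set I := Finset.univ.filter fun i => b i ≠ 0 with hI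
  have hwt : ∀ z ∈ M, wt z = (S.filter fun e => z e ≠ 0).card := by
    intro z hz
    rw [wt, ← Set.ncard_coe_finset]
    congr 1
    ext e
    simp only [Set.mem_ofPred_eq, Finset.coe_filter]
    exact ⟨fun he => ⟨hS z hz e he, he⟩, fun he => he.2⟩
  have hsumM : ∑ i, b i ∈ M := M.sum_mem fun i _ => h.mem i
  have hcount : ∑ i ∈ I, wt (b i) + wt (∑ i, b i) ≤ 2 * S.card := by
    rw [hwt _ hsumM, Finset.sum_congr rfl (fun i _ => hwt _ (h.mem i))]
    simp only [Finset.card_filter]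
    rw [Finset.sum_comm, ← Finset.sum_add_distrib, mul_comm, ← smul_eq_mul, ← Finset.sum_const]
    refine Finset.sum_le_sum fun e _ => ?_
    have h1 : ∑ i ∈ I, (if b i e ≠ 0 then 1 else 0) ≤
        (Finset.univ.filter fun i => b i e ≠ 0).card := by
      rw [← Finset.card_filter]
      exact Finset.card_le_card (Finset.filter_subset_filter _ (Finset.subset_univ _))
    have h2 := h.two e
    have h3 : (∑ i, b i) e = ((Finset.univ.filter fun i => b i e ≠ 0).card : ZMod 2) := by
      rw [Finset.sum_apply, Finset.card_filter, Nat.cast_sum]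
      refine Finset.sum_congr rfl fun i _ => ?_
      by_cases hi : b i e = 0
      · simp [hi]
      · simp [zmod2_ne.1 hi]
    obtain h0 | h0 : (Finset.univ.filter fun i => b i e ≠ 0).card = 2 ∨
      (Finset.univ.filter fun i => b i e ≠ 0).card ≤ 1 := by omega
    · rw [h3, h0]
      have : ((2 : ℕ) : ZMod 2) = 0 := by decide
      rw [this, if_neg (by simp)]
      omega
    · split_ifs <;> omega
  have hIw : I.card * w ≤ ∑ i ∈ I, wt (b i) := by
    rw [← smul_eq_mul, ← Finset.sum_const]
    exact Finset.sum_le_sum fun i hi => hw _ (h.mem i) (by simpa [hI] using hi)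
  have hspan : ∀ J : Finset ι, M ≤ Submodule.span (ZMod 2) (b '' J) →
      Module.finrank (ZMod 2) M ≤ J.card := by
    intro J hJ
    refine (Submodule.finrank_mono hJ).trans ?_
    rw [← Finset.coe_image]
    exact (finrank_span_finset_le_card _).trans Finset.card_image_le
  have hIspan : M ≤ Submodule.span (ZMod 2) (b '' I) := by
    refine h.span.trans (Submodule.span_le.2 ?_)
    rintro _ ⟨i, rfl⟩
    by_cases hi : b i = 0
    · rw [hi]; exact Submodule.zero_mem _
    · exact Submodule.subset_span ⟨i, by simpa [hI] using hi, rfl⟩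
  have hle : Module.finrank (ZMod 2) M ≤ I.card := hspan I hIspan
  by_cases hz : ∑ i, b i = 0
  · obtain ⟨i0, hi0⟩ := Finset.card_pos.1 (lt_of_lt_of_le hr hle)
    have : Module.finrank (ZMod 2) M ≤ (I.erase i0).card := by
      refine hspan _ (hIspan.trans (Submodule.span_le.2 ?_))
      rintro _ ⟨i, hi, rfl⟩
      by_cases hii : i = i0
      · subst hii
        have hs : ∑ k ∈ I, b k = 0 := by
          rw [← hz]
          refine Finset.sum_subset (Finset.subset_univ _) fun k _ hk => ?_
          simpa [hI] using hk
        rw [← Finset.add_sum_erase _ _ hi] at hs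
        have : b i = ∑ k ∈ I.erase i, b k := by
          have h4 := chain_add_self (∑ k ∈ I.erase i, b k)
          exact add_right_cancel (hs.trans h4.symm)
        rw [this]
        exact Submodule.sum_mem _ fun k hk => Submodule.subset_span ⟨k, hk, rfl⟩
      · exact Submodule.subset_span ⟨i, by simpa [hii] using hi, rfl⟩
    rw [Finset.card_erase_of_mem hi0] at this
    have : w * (Module.finrank (ZMod 2) M + 1) ≤ I.card * w := by
      rw [mul_comm]; exact Nat.mul_le_mul_right _ (by omega)
    omega
  · have h5 := hw _ hsumM hz
    have : w * (Module.finrank (ZMod 2) M + 1) ≤ I.card * w + w := by nlinarith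
    omega

/-- The contraction step: a two-fold family for the cycle space of `G` yields one for every minor
of `G`. -/
theorem TwoFam.minor {b : ι → Chain V} (h : TwoFam (Zc G) b) {α : Type} [Fintype α]
    {K : SimpleGraph α} {f : α → Set V} (hf : Model K G f) :
    ∃ b' : ι → Chain α, TwoFam (Zc K) b' := by
  by_cases hα : Nonempty α
  swap
  · have : IsEmpty α := not_nonempty_iff.1 hα
    refine ⟨fun _ => 0, fun _ => Submodule.zero_mem _, fun z _ => ?_, fun e => by simp⟩
    have : z = 0 := by funext e; induction e with | _ a b => exact (this.false a).elim
    rw [this]; exact Submodule.zero_mem _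
  obtain ⟨a0⟩ := hα
  obtain ⟨v0, -⟩ := (hf.conn a0).1
  have hex : ∀ e : Sym2 α, ∃ e' : Sym2 V, (e ∈ K.edgeSet → ∃ a b u v, e = s(a, b) ∧ e' = s(u, v) ∧
      u ∈ f a ∧ v ∈ f b ∧ G.Adj u v) ∧ (e ∉ K.edgeSet → e' = s(v0, v0)) := by
    intro e
    by_cases he : e ∈ K.edgeSet
    · induction e with | _ a b =>
      obtain ⟨u, hu, v, hv, huv⟩ := hf.touch a b he
      exact ⟨s(u, v), fun _ => ⟨a, b, u, v, rfl, rfl, hu, hv, huv⟩, fun h => (h he).elim⟩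
    · exact ⟨s(v0, v0), fun h => (he h).elim, fun _ => rfl⟩
  choose ε hε1 hε0 using hex
  -- the edges kept: those inside a branch set and one edge for each edge of `K`
  set E0 : Set (Sym2 V) := {e | (∃ e' ∈ K.edgeSet, e = ε e') ∨
    ∃ a, ∃ u ∈ f a, ∃ v ∈ f a, e = s(u, v)} with hE0
  obtain ⟨b', hb'⟩ := h.deleteSet (Finset.univ.filter fun e => e ∉ E0)
  refine ⟨_, (hb'.map ε).congr ?_⟩
  have hmem0 : ∀ z : Chain V, z ∈ zeroOn ((Finset.univ.filter fun e => e ∉ E0 :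
      Finset (Sym2 V)) : Set (Sym2 V)) ↔ ∀ e, z e ≠ 0 → e ∈ E0 := by
    intro z
    rw [mem_zeroOn]
    simp only [Finset.coe_filter, Finset.mem_univ, true_and, Set.mem_ofPred_eq]
    exact forall_congr' fun e => ⟨fun h h' => by_contra fun h'' => h' (h h''),
      fun h h' => by_contra fun h'' => h' (h h'')⟩
  have huniq : ∀ {a b v}, v ∈ f a → v ∈ f b → a = b := by
    intro a b v ha hb
    by_contra hne
    exact Set.disjoint_left.1 (hf.disj a b hne) ha hb
  have hεadj : ∀ a b, K.Adj a b → ∃ u v, ε s(a, b) = s(u, v) ∧ u ∈ f a ∧ v ∈ f b ∧ G.Adj u v := by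
    intro a b hab
    obtain ⟨a', b', u, v, he, he', hu, hv, huv⟩ := hε1 s(a, b) hab
    rcases Sym2.eq_iff.1 he with ⟨rfl, rfl⟩ | ⟨rfl, rfl⟩
    · exact ⟨u, v, he', hu, hv, huv⟩
    · exact ⟨v, u, by rw [he', Sym2.eq_swap], hv, hu, huv.symm⟩
  apply le_antisymm
  · rintro _ ⟨z, ⟨hz, hz0⟩, rfl⟩
    rw [SetLike.mem_coe, hmem0] at hz0
    refine ⟨fun e he => ?_, ?_⟩
    · by_contra hne
      exact he (by rw [LinearMap.funLeft_apply, hε0 e hne]; exact hz.1.diag v0)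
    · funext a
      rw [bd_apply, Pi.zero_apply]
      simp only [LinearMap.funLeft_apply]
      have hall : ∑ v ∈ Finset.univ.filter (· ∈ f a), bd z v = 0 :=
        Finset.sum_eq_zero fun v _ => congrFun hz.2 v
      have hin : ∑ v ∈ Finset.univ.filter (· ∈ f a), ∑ u ∈ Finset.univ.filter (· ∈ f a),
          z s(v, u) = 0 := by
        set z' : Chain V := fun e => if ∀ v ∈ e, v ∈ f a then z e else 0 with hz'
        have := sum_bd z' (fun v => by simp [hz', hz.1.diag v])
        rw [← this, Finset.sum_filter]
        refine Finset.sum_congr rfl fun v _ => ?_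
        rw [bd_apply, Finset.sum_filter]
        by_cases hv : v ∈ f a
        · rw [if_pos hv]
          refine Finset.sum_congr rfl fun u _ => ?_
          simp [hz', hv]
        · rw [if_neg hv]
          symm
          refine Finset.sum_eq_zero fun u _ => ?_
          simp [hz', hv]
      have hout : ∑ v ∈ Finset.univ.filter (· ∈ f a), ∑ u ∈ Finset.univ.filter (· ∉ f a),
          z s(v, u) = 0 := by
        have h1 : ∑ v ∈ Finset.univ.filter (· ∈ f a), bd z v =
            ∑ v ∈ Finset.univ.filter (· ∈ f a), ∑ u ∈ Finset.univ.filter (· ∈ f a), z s(v, u) +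
            ∑ v ∈ Finset.univ.filter (· ∈ f a), ∑ u ∈ Finset.univ.filter (· ∉ f a),
              z s(v, u) := by
          rw [← Finset.sum_add_distrib]
          refine Finset.sum_congr rfl fun v _ => ?_
          rw [bd_apply, Finset.sum_filter_add_sum_filter_not]
        rw [hall, hin, zero_add] at h1
        exact h1.symm
      rw [← hout, ← Finset.sum_product']
      have hpick : ∀ b, ∃ p : V × V, K.Adj a b → ε s(a, b) = s(p.1, p.2) ∧ p.1 ∈ f a ∧
          p.2 ∈ f b := by
        intro b
        by_cases hab : K.Adj a b
        · obtain ⟨u, v, h1, h2, h3, -⟩ := hεadj a b hab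
          exact ⟨(u, v), fun _ => ⟨h1, h2, h3⟩⟩
        · exact ⟨(v0, v0), fun h => (hab h).elim⟩
      choose p hp using hpick
      have hnz : ∀ b, z (ε s(a, b)) ≠ 0 → K.Adj a b := by
        intro b hb
        by_contra hne
        exact hb (by rw [hε0 s(a, b) hne]; exact hz.1.diag v0)
      refine Finset.sum_bij_ne_zero (fun b _ _ => p b) ?_ ?_ ?_ ?_
      · intro b _ hb
        have hab := hnz b hb
        obtain ⟨-, h2, h3⟩ := hp b hab
        simp only [Finset.mem_product, Finset.mem_filter, Finset.mem_univ, true_and]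
        exact ⟨h2, fun h4 => hab.ne (huniq h4 h3)⟩
      · intro b _ hb b' _ hb' hbb
        obtain ⟨-, h2, h3⟩ := hp b (hnz b hb)
        obtain ⟨-, h2', h3'⟩ := hp b' (hnz b' hb')
        rw [hbb] at h3
        exact huniq h3 h3'
      · rintro ⟨v, u⟩ hvu hne
        simp only [Finset.mem_product, Finset.mem_filter, Finset.mem_univ, true_and] at hvu
        rcases hz0 _ hne with ⟨e', he', hee⟩ | ⟨a', u', hu', v', hv', hee⟩
        · obtain ⟨a1, b1, u1, v1, h1, h2, h3, h4, h5⟩ := hε1 e' he'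
          have hee2 : s(v, u) = s(u1, v1) := hee.trans h2
          subst h1
          rcases Sym2.eq_iff.1 hee2 with ⟨rfl, rfl⟩ | ⟨rfl, rfl⟩
          · obtain rfl := huniq hvu.1 h3
            have hz1 : z (ε s(a, b1)) ≠ 0 := by rw [← hee]; exact hne
            refine ⟨b1, Finset.mem_univ _, hz1, ?_⟩
            obtain ⟨h6, h7, h8⟩ := hp b1 he'
            have h9 := hee.trans h6
            rcases Sym2.eq_iff.1 h9 with ⟨h10, h11⟩ | ⟨h10, h11⟩
            · exact Prod.ext h10.symm h11.symm
            · exact (hvu.2 ((show u = _ from h11) ▸ h7)).elim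
          · obtain rfl := huniq hvu.1 h4
            rw [Sym2.eq_swap] at hee he'
            rw [Sym2.eq_swap (a := a1)] at hee
            have hz1 : z (ε s(a, a1)) ≠ 0 := by rw [← hee, Sym2.eq_swap]; exact hne
            refine ⟨a1, Finset.mem_univ _, hz1, ?_⟩
            obtain ⟨h6, h7, h8⟩ := hp a1 he'
            have h9 := hee.trans h6
            rcases Sym2.eq_iff.1 h9 with ⟨h10, h11⟩ | ⟨h10, h11⟩
            · exact (hvu.2 ((show u = _ from h10) ▸ h7)).elim
            · exact Prod.ext h11.symm h10.symm
        · exfalso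
          rcases Sym2.eq_iff.1 hee with ⟨rfl, rfl⟩ | ⟨rfl, rfl⟩
          · obtain rfl := huniq hvu.1 hu'
            exact hvu.2 hv'
          · obtain rfl := huniq hvu.1 hv'
            exact hvu.2 hu'
      · intro b _ hb
        rw [(hp b (hnz b hb)).1]
  · have hρ : ∀ a, ∃ v, v ∈ f a := fun a => (hf.conn a).1
    choose ρ hρ using hρ
    set R : (α → ZMod 2) →ₗ[ZMod 2] (V → ZMod 2) :=
      Fintype.linearCombination (ZMod 2) (fun a => dl (ρ a)) with hR
    have hRdl : ∀ a, R (dl a) = dl (ρ a) := by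
      intro a
      rw [hR, dl, Fintype.linearCombination_apply_single, one_smul]
    have hL : ∀ e, ∃ L : Chain V, e ∈ K.edgeSet → SuppOn G L ∧ (∀ e', L e' ≠ 0 → e' ∈ E0) ∧
        bd L = R (bd (Pi.single e 1)) ∧
        LinearMap.funLeft (ZMod 2) (ZMod 2) ε L = Pi.single e 1 := by
      intro e
      by_cases he : e ∈ K.edgeSet
      swap
      · exact ⟨0, fun h => (he h).elim⟩
      obtain ⟨a, b, u, v, rfl, h2, h3, h4, h5⟩ := hε1 e he
      have hab : a ≠ b := by rintro rfl; simp at he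
      obtain ⟨T, hT, hTb⟩ := chain_of_conn (hf.conn a) (hρ a) h3
      obtain ⟨T', hT', hTb'⟩ := chain_of_conn (hf.conn b) (hρ b) h4
      have hins : ∀ {a : α} {T : Chain V}, SuppOn (res G (f a)) T → ∀ e', T e' ≠ 0 →
          ∃ u ∈ f a, ∃ v ∈ f a, e' = s(u, v) := by
        intro a T hT e' he'
        have := hT e' he'
        induction e' with | _ x y =>
        have hxy : (res G (f a)).Adj x y := this
        rw [res_adj] at hxy
        exact ⟨x, hxy.2.1, y, hxy.2.2, rfl⟩
      have hzero : ∀ {a : α} {T : Chain V}, SuppOn (res G (f a)) T → ∀ e' ∈ K.edgeSet,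
          T (ε e') = 0 := by
        intro a T hT e' he'
        by_contra hne
        obtain ⟨x, hx, y, hy, hxy⟩ := hins hT _ hne
        obtain ⟨a1, b1, u1, v1, g1, g2, g3, g4, g5⟩ := hε1 e' he'
        have hne1 : a1 ≠ b1 := by rintro rfl; rw [g1] at he'; simp at he'
        rcases Sym2.eq_iff.1 (g2.symm.trans hxy) with ⟨rfl, rfl⟩ | ⟨rfl, rfl⟩
        · exact hne1 ((huniq g3 hx).trans (huniq hy g4))
        · exact hne1 ((huniq g3 hy).trans (huniq hx g4))
      have hsG : SuppOn G (T + eg u v + T') :=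
        ((hT.mono res_le).add (SuppOn.eg h5)).add (hT'.mono res_le)
      refine ⟨T + eg u v + T', fun _ => ⟨hsG, ?_, ?_, ?_⟩⟩
      · intro e' he'
        by_cases h1 : T e' = 0
        · by_cases h2' : T' e' = 0
          · left
            refine ⟨_, he, ?_⟩
            rw [h2]
            by_contra hne
            exact he' (by simp [h1, h2', eg_apply, hne])
          · exact Or.inr ⟨b, hins hT' _ h2'⟩
        · exact Or.inr ⟨a, hins hT _ h1⟩
      · change _ = R (bd (eg a b))
        rw [bd_eg hab, map_add, map_add, map_add, hRdl, hRdl, hTb, hTb', bd_eg h5.ne]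
        have e1 := vec_add_self (dl u)
        have e2 := vec_add_self (dl v)
        linear_combination e1 + e2
      · funext e'
        rw [LinearMap.funLeft_apply]
        by_cases he' : e' ∈ K.edgeSet
        · rw [Pi.add_apply, Pi.add_apply, hzero hT e' he', hzero hT' e' he', zero_add, add_zero,
            eg_apply, ← h2, Pi.single_apply]
          by_cases hee : e' = s(a, b)
          · simp [hee]
          · rw [if_neg, if_neg hee]
            intro hεε
            obtain ⟨a1, b1, u1, v1, g1, g2, g3, g4, g5⟩ := hε1 e' he'
            apply hee
            rcases Sym2.eq_iff.1 (g2.symm.trans (hεε.trans h2)) with ⟨rfl, rfl⟩ | ⟨rfl, rfl⟩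
            · rw [g1, huniq g3 h3, huniq g4 h4]
            · rw [g1, huniq g3 h4, huniq g4 h3, Sym2.eq_swap]
        · rw [hε0 e' he', hsG.diag v0, Pi.single_apply, if_neg]
          rintro rfl
          exact he' he
    choose L hL using hL
    intro y hy
    have hysum : y = ∑ e, y e • (Pi.single e 1 : Chain α) := by
      funext e
      rw [Finset.sum_apply]
      simp [Pi.single_apply]
    have hterm : ∀ e, y e • L e = 0 ∨ e ∈ K.edgeSet := by
      intro e
      by_cases hye : y e = 0
      · left; rw [hye, zero_smul]
      · exact Or.inr (hy.1 e hye)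
    refine ⟨∑ e, y e • L e, ⟨⟨?_, ?_⟩, ?_⟩, ?_⟩
    · intro e' he'
      rw [Finset.sum_apply] at he'
      obtain ⟨e, -, hne⟩ := Finset.exists_ne_zero_of_sum_ne_zero he'
      rcases hterm e with h0 | h0
      · rw [h0] at hne; exact (hne rfl).elim
      · exact (hL e h0).1 e' (fun h1 => hne (by simp [h1]))
    · rw [map_sum]
      have : ∀ e, bd (y e • L e) = R (bd (y e • (Pi.single e 1 : Chain α))) := by
        intro e
        by_cases hye : y e = 0
        · simp [hye]
        · rw [map_smul, (hL e (hy.1 e hye)).2.2.1, map_smul, map_smul]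
      rw [Finset.sum_congr rfl (fun e _ => this e), ← map_sum, ← map_sum, ← hysum, hy.2, map_zero]
    · rw [SetLike.mem_coe, hmem0]
      intro e' he'
      rw [Finset.sum_apply] at he'
      obtain ⟨e, -, hne⟩ := Finset.exists_ne_zero_of_sum_ne_zero he'
      rcases hterm e with h0 | h0
      · rw [h0] at hne; exact (hne rfl).elim
      · exact (hL e h0).2.1 e' (fun h1 => hne (by simp [h1]))
    · rw [map_sum]
      conv_rhs => rw [hysum]
      refine Finset.sum_congr rfl fun e _ => ?_
      by_cases hye : y e = 0
      · simp [hye]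
      · rw [map_smul, (hL e (hy.1 e hye)).2.2.2]

theorem wt_ge_three {z : Chain V} (hz : z ∈ Zc G) (h0 : z ≠ 0) : 3 ≤ wt z := by
  obtain ⟨l, c, hc, hcz⟩ := exists_cyc hz h0
  have := wt_zeta_add hcz
  have h1 : wt (zeta c) = l := hc.weight
  have := hc.three
  omega

theorem TwoFam.numeric_edges {b : ι → Chain V} (h : TwoFam (Zc G) b)
    {w : ℕ} (hw : ∀ z ∈ Zc G, z ≠ 0 → w ≤ wt z) (hr : 1 ≤ Module.finrank (ZMod 2) (Zc G)) :
    w * (Module.finrank (ZMod 2) (Zc G) + 1) ≤ 2 * edgeCount G := by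
  have := h.numeric hw G.edgeSet.toFinset
    (fun z hz e he => by rw [Set.mem_toFinset]; exact hz.1 e he) hr
  rwa [← Set.ncard_eq_toFinset_card'] at this

/-- MacLane's criterion, sufficiency: a graph whose cycle space has a two-fold generating family
is planar. -/
theorem TwoFam.planar {b : ι → Chain V} (h : TwoFam (Zc G) b) : IsPlanar G := by
  rw [planar_iff_kur]
  intro α K hK f hf
  cases hK with
  | k5 =>
    obtain ⟨b', hb'⟩ := h.minor hf
    set K := completeGraph (Fin 5) with hKdef
    have h2 : edgeCount K = 10 := by
      have := card_edgeFinset_top_eq_card_choose_two (V := Fin 5)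
      rw [Fintype.card_fin] at this
      rw [edgeCount, ← coe_edgeFinset, Set.ncard_coe_finset]
      exact this
    have h1 := finrank_Zc_ge (G := K) (W := Set.univ) (fun _ _ _ => ⟨trivial, trivial⟩) ⟨0, trivial⟩
    rw [h2, Set.ncard_univ, Nat.card_eq_fintype_card, Fintype.card_fin] at h1
    have h3 := hb'.numeric_edges (w := 3) (fun z hz h0 => wt_ge_three hz h0) (by omega)
    omega
  | k33 =>
    obtain ⟨b', hb'⟩ := h.minor hf
    set K := completeBipartiteGraph (Fin 3) (Fin 3) with hKdef
    have h2 : edgeCount K = 9 := by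
      have : K.edgeSet = ↑(Finset.univ.image fun p : Fin 3 × Fin 3 =>
          s((Sum.inl p.1 : Fin 3 ⊕ Fin 3), Sum.inr p.2)) := by
        ext e
        induction e with | _ x y =>
        rcases x with x | x <;> rcases y with y | y <;> simp [hKdef]
      rw [edgeCount, this, Set.ncard_coe_finset, Finset.card_image_of_injective]
      · rfl
      · rintro ⟨a, b⟩ ⟨a', b'⟩ hab
        simpa using hab
    have h1 := finrank_Zc_ge (G := K) (W := Set.univ) (fun _ _ _ => ⟨trivial, trivial⟩)
      ⟨Sum.inl 0, trivial⟩
    rw [h2, Set.ncard_univ, Nat.card_eq_fintype_card, Fintype.card_sum, Fintype.card_fin] at h1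
    have h4 : ∀ z ∈ Zc K, z ≠ 0 → 4 ≤ wt z := by
      intro z hz h0
      obtain ⟨l, c, hc, hcz⟩ := exists_cyc hz h0
      have hw := wt_zeta_add hcz
      have hl : wt (zeta c) = l := hc.weight
      have h3 := hc.three
      by_contra hlt
      have hl3 : l = 3 := by omega
      subst hl3
      have a0 := hc.adj 0
      have a1 := hc.adj 1
      have a2 := hc.adj 2
      have e3 : c (2 + 1) = c 0 := (hc.inj _ _).2 (by norm_num)
      rw [e3] at a2
      norm_num at a0 a1 a2
      rw [hKdef, completeBipartiteGraph_adj] at a0 a1 a2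
      rcases h0 : c 0 <;> rcases h1 : c 1 <;> rcases h2 : c 2 <;> simp_all
    have h3 := hb'.numeric_edges (w := 4) h4 (by omega)
    omega

end Soundness

/-! ### Cutting and coning faces -/

noncomputable section FaceOps
open scoped Classical
universe u
variable {V : Type*} [Fintype V] {G H : SimpleGraph V} {X W B D U : Set V} {l : ℕ} {c : ℤ → V}
  {ι : Type u} [Fintype ι]

theorem SuppOn.sub_edge {p q : V} {z : Chain V} (hz : SuppOn (G ⊔ edge p q) z)
    (h0 : z s(p, q) = 0) : SuppOn G z := by
  intro e he
  have := hz e he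
  induction e with | _ x y =>
  rcases (this : (G ⊔ edge p q).Adj x y) with h | h
  · exact h
  · rw [edge_adj'] at h
    exfalso
    rcases h.1 with ⟨rfl, rfl⟩ | ⟨rfl, rfl⟩
    · exact he h0
    · exact he (by rw [Sym2.eq_swap]; exact h0)

/-- The family obtained when the face `b i0` is cut along a new edge `pq`: the chain `T` (a path in
the boundary of the face, closed up by the new edge) is split off. -/
def splitFam (b : ι → Chain V) (i0 : ι) (T : Chain V) : Option ι → Chain V
  | none => T
  | some i => if i = i0 then b i0 + T else b i

/-- Cutting a face by a new edge. -/
theorem TwoFam.split {b : ι → Chain V} (h : TwoFam (Zc G) b) {p q : V} (hpq : p ≠ q)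
    (hnadj : ¬ G.Adj p q) {P : Chain V} (hP : SuppOn G P) (hbd : bd P = dl p + dl q) (i0 : ι)
    (hface : ∀ e, P e ≠ 0 → b i0 e ≠ 0 ∨ ∀ i, b i e = 0) :
    TwoFam (Zc (G ⊔ edge p q)) (splitFam b i0 (P + eg p q)) := by
  have hadj : (G ⊔ edge p q).Adj p q := Or.inr (by rw [edge_adj']; exact ⟨Or.inl ⟨rfl, rfl⟩, hpq⟩)
  have hT : P + eg p q ∈ Zc (G ⊔ edge p q) := by
    refine ⟨(hP.mono le_sup_left).add (SuppOn.eg hadj), ?_⟩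
    rw [map_add, hbd, bd_eg hpq]; exact vec_add_self _
  have hle : Zc G ≤ Zc (G ⊔ edge p q) := Zc_mono le_sup_left
  have hz0 : ∀ z : Chain V, SuppOn G z → z s(p, q) = 0 := by
    intro z hz
    by_contra hne
    exact hnadj (hz _ hne)
  refine ⟨?_, ?_, ?_⟩
  · rintro (_ | i)
    · exact hT
    · simp only [splitFam]
      split_ifs
      · exact Submodule.add_mem _ (hle (h.mem _)) hT
      · exact hle (h.mem _)
  · set N := Submodule.span (ZMod 2) (Set.range (splitFam b i0 (P + eg p q))) with hN
    have hTN : P + eg p q ∈ N := Submodule.subset_span ⟨none, rfl⟩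
    have hbN : ∀ i, b i ∈ N := by
      intro i
      by_cases hi : i = i0
      · subst hi
        have h1 : b i + (P + eg p q) ∈ N := Submodule.subset_span ⟨some i, by simp [splitFam]⟩
        have h2 := N.add_mem h1 hTN
        rwa [add_assoc, chain_add_self, add_zero] at h2
      · exact Submodule.subset_span ⟨some i, by simp [splitFam, hi]⟩
    have hGN : Zc G ≤ N := h.span.trans (Submodule.span_le.2 (by rintro _ ⟨i, rfl⟩; exact hbN i))
    intro z hz
    by_cases hzpq : z s(p, q) = 0
    · exact hGN ⟨hz.1.sub_edge hzpq, hz.2⟩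
    · have hz' := Submodule.add_mem _ hz hT
      have h1 : z + (P + eg p q) ∈ Zc G := by
        refine ⟨SuppOn.sub_edge hz'.1 ?_, hz'.2⟩
        rw [Pi.add_apply, Pi.add_apply, hz0 P hP, zmod2_ne.1 hzpq, eg_apply]
        simp only [if_true]; decide
      have h2 := N.add_mem (hGN h1) hTN
      rwa [add_assoc, chain_add_self, add_zero] at h2
  · intro e
    by_cases he : e = s(p, q)
    · subst he
      refine (Finset.card_le_card (t := {none, some i0}) ?_).trans (Finset.card_le_two)
      intro o ho
      rcases o with _ | i
      · simp
      · replace ho := (Finset.mem_filter.1 ho).2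
        simp only [splitFam] at ho
        by_cases hi : i = i0
        · simp [hi]
        · rw [if_neg hi] at ho
          exact (ho (hz0 _ (h.mem i).1)).elim
    · have heg : eg p q e = 0 := by rw [eg_apply, if_neg he]
      by_cases hPe : P e = 0
      · refine le_trans ?_ (h.two e)
        rw [← Finset.card_map (s := Finset.univ.filter fun i => b i e ≠ 0) Function.Embedding.some]
        refine Finset.card_le_card ?_
        intro o ho
        simp only [Finset.mem_filter, Finset.mem_univ, true_and] at ho
        rcases o with _ | i
        · simp [splitFam, hPe, heg] at ho
        · simp only [Finset.mem_map, Finset.mem_filter, Finset.mem_univ, true_and]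
          refine ⟨i, ?_, rfl⟩
          by_cases hi : i = i0
          · subst hi; simpa [splitFam, hPe, heg] using ho
          · simpa [splitFam, hi] using ho
      · rcases hface e hPe with h1 | h1
        · refine le_trans ?_ (h.two e)
          -- `T` takes over the edge from the face `b i0`
          have hsub : (Finset.univ.filter fun o => splitFam b i0 (P + eg p q) o e ≠ 0) ⊆
              insert none (((Finset.univ.filter fun i => b i e ≠ 0).erase i0).map
                Function.Embedding.some) := by
            intro o ho
            simp only [Finset.mem_filter, Finset.mem_univ, true_and] at ho
            rcases o with _ | i
            · simp
            · have hi : i ≠ i0 := by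
                rintro rfl
                simp only [splitFam, if_true, Pi.add_apply, heg, zmod2_ne.1 h1,
                  zmod2_ne.1 hPe] at ho
                exact ho (by decide)
              simp only [Finset.mem_insert, Finset.mem_map, Finset.mem_erase, Finset.mem_filter,
                Finset.mem_univ, true_and]
              exact Or.inr ⟨i, ⟨hi, by simpa [splitFam, hi] using ho⟩, rfl⟩
          refine (Finset.card_le_card hsub).trans ((Finset.card_insert_le _ _).trans ?_)
          rw [Finset.card_map, Finset.card_erase_add_one (by simp [h1])]
        · refine (Finset.card_le_card (t := {none, some i0}) ?_).trans (Finset.card_le_two)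
          intro o ho
          rcases o with _ | i
          · simp
          · replace ho := (Finset.mem_filter.1 ho).2
            simp only [splitFam] at ho
            by_cases hi : i = i0
            · simp [hi]
            · rw [if_neg hi] at ho
              exact (ho (h1 i)).elim

/-- A pendant edge does not change the cycle space. -/
theorem Zc_pendant {t v : V} (ht : ∀ x, ¬ G.Adj t x) : Zc (G ⊔ edge t v) = Zc G := by
  refine le_antisymm (fun z hz => ?_) (Zc_mono le_sup_left)
  refine ⟨hz.1.sub_edge ?_, hz.2⟩
  have h1 : bd z t = 0 := congrFun hz.2 t
  rw [bd_apply, Finset.sum_eq_single v] at h1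
  · exact h1
  · intro x _ hx
    by_contra hne
    rcases (hz.1 _ hne : (G ⊔ edge t v).Adj t x) with h | h
    · exact ht x h
    · rw [edge_adj'] at h
      rcases h.1 with ⟨-, h2⟩ | ⟨h2, h3⟩
      · exact hx h2
      · exact h.2 h3.symm
  · intro h; exact (h (Finset.mem_univ _)).elim

theorem star_insert (t v : V) (S : Set V) : star t (insert v S) = star t S ⊔ edge t v := by
  ext x y
  rw [sup_adj, star_adj, star_adj, edge_adj', Set.mem_insert_iff, Set.mem_insert_iff]
  tauto

theorem star_empty (t : V) : star t (∅ : Set V) = ⊥ := by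
  ext x y
  simp [star_adj]

set_option maxHeartbeats 1000000 in
/-- Coning a face: a new vertex `t` is joined to all vertices of the facial cycle `c`. A second
face `Z` of the family survives. -/
theorem TwoFam.cone {b : ι → Chain V} (h : TwoFam (Zc G) b) (hc : IsCyc G l c) {i0 : ι}
    (hi0 : b i0 = zeta c) {t : V} (ht : ∀ x, ¬ G.Adj t x) {Z : Chain V} :
    ∃ (κ : Type u) (_ : Fintype κ) (b' : κ → Chain V), TwoFam (Zc (G ⊔ star t (Set.range c))) b' ∧
      ((∃ i, i ≠ i0 ∧ b i = Z) → ∃ i, b' i = Z) := by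
  have h3 := hc.three
  have htc : ∀ i, t ≠ c i := by rintro i rfl; exact ht _ (hc.adj i)
  have key : ∀ k : ℕ, 1 ≤ k → k ≤ l → ∃ (κ : Type u) (_ : Fintype κ) (b' : κ → Chain V) (i' : κ),
      TwoFam (Zc (G ⊔ star t (c '' {j : ℤ | 0 ≤ j ∧ j < k}))) b' ∧
      b' i' = arc c (k - 1) (l - k + 1) + eg t (c (k - 1)) + eg t (c 0) ∧
      (∀ i, b' i s(t, c 0) ≠ 0 → 2 ≤ k) ∧
      ((∃ i, i ≠ i0 ∧ b i = Z) → ∃ i, i ≠ i' ∧ b' i = Z) := by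
    intro k hk
    induction k, hk using Nat.le_induction with
    | base =>
      intro _
      have hS : c '' {j : ℤ | 0 ≤ j ∧ j < (1 : ℕ)} = {c 0} := by
        have : {j : ℤ | 0 ≤ j ∧ j < (1 : ℕ)} = {0} := by
          ext j; simp only [Set.mem_ofPred_eq, Set.mem_singleton_iff]; omega
        rw [this, Set.image_singleton]
      have hst : star t {c 0} = edge t (c 0) := by
        rw [← insert_empty_eq, star_insert, star_empty, bot_sup_eq]
      refine ⟨ι, inferInstance, b, i0, ?_, ?_, ?_, fun h => h⟩
      · rw [hS, hst, Zc_pendant ht]; exact h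
      · rw [hi0, zeta_eq_arc hc 0, add_assoc]
        have : l - 1 + 1 = l := by omega
        rw [this]; simp [chain_add_self]
      · intro i hi
        exact (ht _ ((h.mem i).1 _ hi)).elim
    | succ k hk ih =>
      intro hkl
      obtain ⟨κ, _, b', i', hb', hi', h0, hZ⟩ := ih (by omega)
      set S := c '' {j : ℤ | 0 ≤ j ∧ j < k} with hS
      have hS' : c '' {j : ℤ | 0 ≤ j ∧ j < ((k + 1 : ℕ) : ℤ)} = insert (c k) S := by
        rw [hS, ← Set.image_insert_eq]
        congr 1
        ext j
        simp only [Set.mem_ofPred_eq, Set.mem_insert_iff]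
        push_cast
        omega
      have hst : G ⊔ star t (insert (c k) S) = (G ⊔ star t S) ⊔ edge t (c k) := by
        rw [star_insert, sup_assoc]
      have hck : c k ∉ S := by
        rintro ⟨j, ⟨hj0, hjk⟩, hj⟩
        exact hc.ne_of hjk (by omega) hj
      have hnadj : ¬ (G ⊔ star t S).Adj t (c k) := by
        rintro (h1 | h1)
        · exact ht _ h1
        · rw [star_adj] at h1
          rcases h1.2 with ⟨-, h2⟩ | ⟨h2, -⟩
          · exact hck h2
          · exact htc k h2.symm
      have hstep : c ((k : ℤ) - 1 + 1) = c k := by congr 1; ring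
      have hadjk : G.Adj (c (k - 1)) (c k) := by
        have := hc.adj ((k : ℤ) - 1); rwa [hstep] at this
      have hadjt : (G ⊔ star t S).Adj t (c (k - 1)) := by
        refine Or.inr ⟨htc _, Or.inl ⟨rfl, ⟨(k : ℤ) - 1, ⟨by omega, by omega⟩, rfl⟩⟩⟩
      have harc : arc c (k - 1) (l - k + 1) = eg (c (k - 1)) (c k) + arc c k (l - k) := by
        rw [add_comm (l - k) 1, arc_add]
        congr 1
        · unfold arc; simp
        · congr 1; push_cast; ring
      set P : Chain V := eg t (c (k - 1)) + eg (c (k - 1)) (c k) with hP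
      have hPs : SuppOn (G ⊔ star t S) P :=
        (SuppOn.eg hadjt).add (SuppOn.eg (Or.inl hadjk))
      have hPb : bd P = dl t + dl (c k) := by
        rw [hP, map_add, bd_eg (htc _), bd_eg hadjk.ne]
        have := vec_add_self (dl (c ((k : ℤ) - 1)))
        linear_combination this
      have harcG : SuppOn G (arc c k (l - k)) := arc_supp fun i _ => hc.adj _
      have hface : ∀ e, P e ≠ 0 → b' i' e ≠ 0 ∨ ∀ i, b' i e = 0 := by
        intro e he
        rw [hP, Pi.add_apply] at he
        by_cases e1 : e = s(t, c (k - 1))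
        · have g1 : eg (c (k - 1)) (c k) e = 0 := by
            rw [eg_apply, if_neg]
            rw [e1]; intro h5
            rcases Sym2.eq_iff.1 h5 with ⟨h6, -⟩ | ⟨h6, -⟩
            · exact htc _ h6
            · exact htc _ h6
          have g2 : arc c k (l - k) e = 0 := by
            by_contra hne
            rw [e1] at hne
            exact ht _ (harcG _ hne)
          by_cases hk1 : k = 1
          · right
            intro i
            by_contra hne
            have := h0 i (by rw [e1, hk1] at hne; simpa using hne)
            omega
          · left
            rw [hi', harc, Pi.add_apply, Pi.add_apply, Pi.add_apply, g1, g2, eg_apply, if_pos e1,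
              eg_apply, if_neg]
            · decide
            · rw [e1]; intro h5
              rcases Sym2.eq_iff.1 h5 with ⟨-, h6⟩ | ⟨h6, -⟩
              · exact hc.ne_of (i := 0) (j := (k : ℤ) - 1) (by omega) (by omega) h6.symm
              · exact htc _ h6
        · have e2 : e = s(c (k - 1), c k) := by
            by_contra hne
            exact he (by simp [eg_apply, e1, hne])
          left
          have g1 : eg t (c (k - 1)) e = 0 := by rw [eg_apply, if_neg e1]
          have g2 : eg t (c 0) e = 0 := by
            rw [eg_apply, if_neg]
            rw [e2]; intro h5
            rcases Sym2.eq_iff.1 h5 with ⟨h6, -⟩ | ⟨-, h6⟩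
            · exact htc _ h6.symm
            · exact htc _ h6.symm
          rw [hi', Pi.add_apply, Pi.add_apply, g1, g2, add_zero, add_zero, arc_apply hc _ (by omega),
            if_pos ⟨0, by omega, by rw [e2]; simp⟩]
          exact one_ne_zero
      have hnew := hb'.split (htc k) hnadj hPs hPb i' hface
      refine ⟨Option κ, inferInstance, splitFam b' i' (P + eg t (c k)), some i', ?_, ?_, ?_, ?_⟩
      · rw [hS', hst]; exact hnew
      · simp only [splitFam, if_true]
        rw [hi', harc]
        have e1 : ((k + 1 : ℕ) : ℤ) - 1 = k := by push_cast; ring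
        have e2 : l - (k + 1) + 1 = l - k := by omega
        rw [e1, e2, hP]
        have g1 := chain_add_self (eg (c ((k : ℤ) - 1)) (c k))
        have g2 := chain_add_self (eg t (c ((k : ℤ) - 1)))
        linear_combination g1 + g2
      · intro _ _; omega
      · intro hZ0
        obtain ⟨i, hi1, hi2⟩ := hZ hZ0
        exact ⟨some i, by simpa using hi1, by simp [splitFam, hi1, hi2]⟩
  obtain ⟨κ, hκ, b', i', hb', -, -, hZ⟩ := key l (by omega) le_rfl
  have hr : c '' {j : ℤ | 0 ≤ j ∧ j < l} = Set.range c := by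
    apply Set.Subset.antisymm (Set.image_subset_range _ _)
    rintro _ ⟨j, rfl⟩
    obtain ⟨i, h1, h2, h3⟩ := hc.rep 0 j
    exact ⟨i, ⟨h1, by omega⟩, h3⟩
  rw [hr] at hb'
  exact ⟨κ, hκ, b', hb', fun h => (hZ h).imp fun i hi => hi.2⟩

/-- The triangle `x y z` as a cyclic sequence. -/
def tri (x y z : V) : ℤ → V := fun i => if i % 3 = 0 then x else if i % 3 = 1 then y else z

theorem tri_cyc {x y z : V} (h1 : G.Adj x y) (h2 : G.Adj y z) (h3 : G.Adj z x) :
    IsCyc G 3 (tri x y z) := by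
  refine ⟨le_rfl, fun i j => ?_, fun i => ?_⟩
  · have hi : i % 3 = 0 ∨ i % 3 = 1 ∨ i % 3 = 2 := by omega
    have hj : j % 3 = 0 ∨ j % 3 = 1 ∨ j % 3 = 2 := by omega
    unfold tri
    rcases hi with hi | hi | hi <;> rcases hj with hj | hj | hj <;>
      simp [hi, hj, h1.ne, h2.ne, h3.ne, h1.ne.symm, h2.ne.symm, h3.ne.symm] <;> omega
  · unfold tri
    have hi : i % 3 = 0 ∨ i % 3 = 1 ∨ i % 3 = 2 := by omega
    rcases hi with hi | hi | hi
    · rw [show (i + 1) % 3 = 1 by omega]; simp [hi, h1]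
    · rw [show (i + 1) % 3 = 2 by omega]; simp [hi, h2]
    · rw [show (i + 1) % 3 = 0 by omega]; simp [hi, h3]

theorem tri_zeta {x y z : V} (h1 : G.Adj x y) (h2 : G.Adj y z) (h3 : G.Adj z x) :
    zeta (tri x y z) = eg x y + eg y z + eg z x := by
  rw [zeta_eq_arc (tri_cyc h1 h2 h3) 0]
  simp [arc, Finset.sum_range_succ, tri]

theorem tri_range (x y z : V) : Set.range (tri x y z) = {x, y, z} := by
  ext v
  simp only [Set.mem_range, Set.mem_insert_iff, Set.mem_singleton_iff]
  constructor
  · rintro ⟨i, rfl⟩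
    unfold tri
    split_ifs <;> simp
  · rintro (rfl | rfl | rfl)
    · exact ⟨0, by simp [tri]⟩
    · exact ⟨1, by simp [tri]⟩
    · exact ⟨2, by simp [tri]⟩

end FaceOps

/-! ### Faces of 3-connected planar graphs -/

noncomputable section ConnFaces
open scoped Classical
variable {V : Type*} [Fintype V] {G H : SimpleGraph V} {X W B D U : Set V} {l : ℕ} {c : ℤ → V}

theorem Per.mem_perAll (h : Per G W l c) : zeta c ∈ perAll G W :=
  ⟨l, c, h, by simp, rfl⟩

theorem perAll_elim {z : Chain V} (hz : z ∈ perAll G W) : ∃ l c, Per G W l c ∧ z = zeta c := by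
  obtain ⟨l, c, h, -, h2⟩ := hz
  exact ⟨l, c, h, h2⟩

theorem per_le_two' (hG : IsPlanar G) (hC3 : Conn3 G W) {z1 z2 z3 : Chain V}
    (h1 : z1 ∈ perAll G W) (h2 : z2 ∈ perAll G W) (h3 : z3 ∈ perAll G W) {e : Sym2 V}
    (e1 : z1 e ≠ 0) (e2 : z2 e ≠ 0) (e3 : z3 e ≠ 0) (n12 : z1 ≠ z2) (n13 : z1 ≠ z3)
    (n23 : z2 ≠ z3) : False := by
  obtain ⟨_, _, p1, rfl⟩ := perAll_elim h1
  obtain ⟨_, _, p2, rfl⟩ := perAll_elim h2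
  obtain ⟨_, _, p3, rfl⟩ := perAll_elim h3
  have := p1.cyc.zeta_mem.1 e e1
  induction e with | _ x y =>
  exact per_le_two hG hC3 p1 p2 p3 this e1 e2 e3 n12 n13 n23

/-- MacLane's criterion, necessity, for a 3-connected planar graph: the peripheral cycles form a
two-fold generating family. -/
theorem face_family (hG : IsPlanar G) (hC3 : Conn3 G W) (hW : InW G W) :
    TwoFam (Zc G) (fun i : perAll G W => (i : Chain V)) := by
  refine ⟨?_, ?_, ?_⟩
  · rintro ⟨z, hz⟩
    obtain ⟨l, c, h, rfl⟩ := perAll_elim hz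
    exact h.cyc.zeta_mem
  · intro z hz
    rw [Subtype.range_coe]
    exact generate_all hC3 hW z hz
  · intro e
    by_contra hlt
    push Not at hlt
    obtain ⟨a, b, c, ha, hb, hc, hab, hac, hbc⟩ := Finset.two_lt_card_iff.1 hlt
    simp only [Finset.mem_filter, Finset.mem_univ, true_and] at ha hb hc
    exact per_le_two' hG hC3 a.2 b.2 c.2 ha hb hc (fun h => hab (Subtype.ext h))
      (fun h => hac (Subtype.ext h)) (fun h => hbc (Subtype.ext h))

theorem Conn3.conn (h : Conn3 G W) : ConnSet G W := by
  have := h.2 ∅ (by simp)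
  rwa [Set.sdiff_empty] at this

theorem Conn3.exists_adj (h : Conn3 G W) : ∃ x y, G.Adj x y := by
  have h4 := h.1
  obtain ⟨x, hx⟩ := h.conn.1
  have : (W \ {x}).Nonempty := by
    rw [← Set.ncard_pos]
    have := Set.ncard_sdiff_singleton_add_one hx
    omega
  obtain ⟨u, -, v, -, huv⟩ := h.conn.touch_diff (Set.singleton_subset_iff.2 hx)
    (Set.singleton_nonempty x) this
  exact ⟨u, v, huv⟩

theorem conn3_edge_le (hG : IsPlanar G) (hC3 : Conn3 G W) (hW : InW G W) :
    edgeCount G + 6 ≤ 3 * W.ncard := by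
  have hf := face_family hG hC3 hW
  obtain ⟨x, y, hxy⟩ := hC3.exists_adj
  obtain ⟨l, c, -, -, h1, -, -⟩ := per_ge_two hC3 hW hxy
  have hr : 1 ≤ Module.finrank (ZMod 2) (Zc G) := by
    rw [Submodule.one_le_finrank_iff]
    intro hbot
    have := h1.cyc.zeta_mem
    rw [hbot, Submodule.mem_bot] at this
    exact zeta_ne_zero c this
  have h2 := hf.numeric_edges (w := 3) (fun z hz h0 => wt_ge_three hz h0) hr
  have h3 := finrank_Zc_ge hW hC3.conn.1
  omega

/-- In a 3-connected planar graph the peripheral cycles satisfy only the trivial linear relation: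
the faces are connected through common edges. -/
theorem face_relation (hG : IsPlanar G) (hC3 : Conn3 G W) (hW : InW G W)
    (x : perAll G W → ZMod 2) (hx : ∑ i, x i • (i : Chain V) = 0) (i j : perAll G W)
    (hi : x i = 1) (hj : x j = 0) : False := by
  set EA : ZMod 2 → Set (Sym2 V) := fun a => {e | ∃ k : perAll G W, x k = a ∧ (k : Chain V) e ≠ 0}
    with hEA
  have hcover : ∀ u v, G.Adj u v → s(u, v) ∈ EA 0 ∨ s(u, v) ∈ EA 1 := by
    intro u v huv
    obtain ⟨l, c, -, -, h1, -, e1, -, -⟩ := per_ge_two hC3 hW huv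
    by_cases h0 : x ⟨zeta c, h1.mem_perAll⟩ = 0
    · exact Or.inl ⟨_, h0, e1⟩
    · exact Or.inr ⟨_, zmod2_ne.1 h0, e1⟩
  have hdisj : ∀ e, e ∈ EA 0 → e ∈ EA 1 → False := by
    rintro e ⟨k, hk, hke⟩ ⟨k', hk', hke'⟩
    have hne : k ≠ k' := by rintro rfl; rw [hk] at hk'; exact zero_ne_one hk'
    have h0 := congrFun hx e
    rw [Finset.sum_apply, Finset.sum_eq_single k'] at h0
    · rw [Pi.smul_apply, hk', one_smul] at h0
      exact hke' h0
    · intro m _ hm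
      rw [Pi.smul_apply]
      by_cases hme : (m : Chain V) e = 0
      · rw [hme, smul_zero]
      · have hmk : m = k := by
          by_contra hmk
          exact per_le_two' hG hC3 m.2 k.2 k'.2 hme hke hke' (fun h => hmk (Subtype.ext h))
            (fun h => hm (Subtype.ext h)) (fun h => hne (Subtype.ext h))
        rw [hmk, hk, zero_smul]
    · intro h; exact (h (Finset.mem_univ _)).elim
  set VA : ZMod 2 → Set V := fun a => {v | ∃ u, G.Adj v u ∧ s(v, u) ∈ EA a} with hVA
  have hVW : ∀ a, VA a ⊆ W := by rintro a v ⟨u, hu, -⟩; exact (hW hu).1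
  have hVne : ∀ k : perAll G W, (VA (x k)).Nonempty := by
    intro k
    obtain ⟨l, c, hc, hk⟩ := perAll_elim k.2
    refine ⟨c 0, c (0 + 1), hc.cyc.adj 0, k, rfl, ?_⟩
    rw [hk]; exact zeta_ne.2 ⟨0, rfl⟩
  have hmeet : ∃ v, v ∈ VA 0 ∧ v ∈ VA 1 := by
    by_contra! hcon
    obtain ⟨w, hw⟩ := hj ▸ hVne j
    obtain ⟨w', hw'⟩ := hi ▸ hVne i
    obtain ⟨u, hu, v, hv, huv⟩ := hC3.conn.touch_diff (hVW 0) ⟨w, hw⟩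
      ⟨w', hVW 1 hw', fun h => hcon w' h hw'⟩
    rcases hcover u v huv with h | h
    · exact hv.2 ⟨u, huv.symm, by rw [Sym2.eq_swap]; exact h⟩
    · exact hcon u hu ⟨v, huv, h⟩
  obtain ⟨v, ⟨a, hva, ha⟩, ⟨b, hvb, hb⟩⟩ := hmeet
  have hab : a ≠ b := by rintro rfl; exact hdisj _ ha hb
  have hcn := hC3.2 {v} (by simp)
  obtain ⟨T, hT, hTb⟩ := chain_of_conn hcn (p := a) (q := b) ⟨(hW hva).2, hva.ne.symm⟩
    ⟨(hW hvb).2, hvb.ne.symm⟩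
  have hTv : ∀ u, T s(v, u) = 0 := by
    intro u
    by_contra hne
    have h1 : (res G (W \ {v})).Adj v u := hT _ hne
    rw [res_adj] at h1
    exact h1.2.1.2 rfl
  have hz : T + eg v a + eg v b ∈ Zc G := by
    refine ⟨((hT.mono res_le).add (SuppOn.eg hva)).add (SuppOn.eg hvb), ?_⟩
    rw [map_add, map_add, hTb, bd_eg hva.ne, bd_eg hvb.ne]
    have e1 := vec_add_self (dl a)
    have e2 := vec_add_self (dl b)
    have e3 := vec_add_self (dl v)
    linear_combination e1 + e2 + e3
  -- the part of the cycle made of faces with `x = 1` would have degree one at `v`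
  obtain ⟨y, hy⟩ := (Submodule.mem_span_range_iff_exists_fun _).1
    ((face_family hG hC3 hW).span hz)
  set zA : Chain V := ∑ k : perAll G W, (x k * y k) • (k : Chain V) with hzA
  have hzA0 : bd zA v = 0 := by
    have : zA ∈ Zc G := Submodule.sum_mem _ fun k _ =>
      Submodule.smul_mem _ _ ((face_family hG hC3 hW).mem k)
    rw [this.2]; rfl
  have hval0 : ∀ e ∈ EA 0, zA e = 0 := by
    intro e he
    rw [hzA, Finset.sum_apply]
    refine Finset.sum_eq_zero fun k _ => ?_
    rw [Pi.smul_apply]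
    by_cases hk : x k = 0
    · rw [hk, zero_mul, zero_smul]
    · have : (k : Chain V) e = 0 := by
        by_contra hne
        exact hdisj e he ⟨k, zmod2_ne.1 hk, hne⟩
      rw [this, smul_zero]
  have hval1 : ∀ e ∈ EA 1, zA e = (T + eg v a + eg v b) e := by
    intro e he
    rw [← hy, hzA, Finset.sum_apply, Finset.sum_apply]
    refine Finset.sum_congr rfl fun k _ => ?_
    rw [Pi.smul_apply, Pi.smul_apply]
    by_cases hk : x k = 0
    · have : (k : Chain V) e = 0 := by
        by_contra hne
        exact hdisj e ⟨k, hk, hne⟩ he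
      rw [this, smul_zero, smul_zero]
    · rw [zmod2_ne.1 hk, one_mul]
  have hzAS : SuppOn G zA := (Submodule.sum_mem (Zc G) fun k _ =>
      Submodule.smul_mem _ _ ((face_family hG hC3 hW).mem k) : zA ∈ Zc G).1
  rw [bd_apply, Finset.sum_eq_single b] at hzA0
  · rw [hval1 _ hb, Pi.add_apply, Pi.add_apply, hTv, eg_apply, eg_apply, if_neg, if_pos rfl] at hzA0
    · simp at hzA0
    · intro h
      rcases Sym2.eq_iff.1 h with ⟨-, h⟩ | ⟨h, -⟩
      · exact hab h.symm
      · exact hva.ne h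
  · intro u _ hu
    by_contra hne
    have hvu : G.Adj v u := hzAS _ hne
    rcases hcover v u hvu with h | h
    · exact hne (hval0 _ h)
    · have hua : u ≠ a := by rintro rfl; exact hdisj _ ha h
      apply hne
      rw [hval1 _ h, Pi.add_apply, Pi.add_apply, hTv, eg_apply, eg_apply, if_neg, if_neg]
      · simp
      · intro h
        rcases Sym2.eq_iff.1 h with ⟨-, h⟩ | ⟨h, -⟩
        · exact hu h
        · exact hvb.ne h
      · intro h
        rcases Sym2.eq_iff.1 h with ⟨-, h⟩ | ⟨h, -⟩
        · exact hua h
        · exact hva.ne h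
  · intro h; exact (h (Finset.mem_univ _)).elim

/-- If all peripheral cycles of a 3-connected planar graph are triangles, it is a triangulation. -/
theorem conn3_edge_ge (hG : IsPlanar G) (hC3 : Conn3 G W) (hW : InW G W)
    (h3 : ∀ l c, Per G W l c → l = 3) : 3 * W.ncard ≤ edgeCount G + 6 := by
  have hf := face_family hG hC3 hW
  set N := Fintype.card (perAll G W) with hN
  -- at most one linear relation among the faces
  have h1 : N ≤ Module.finrank (ZMod 2) (Zc G) + 1 := by
    set φ := Fintype.linearCombination (ZMod 2) (fun i : perAll G W => (i : Chain V)) with hφ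
    have hrk := LinearMap.finrank_range_add_finrank_ker φ
    rw [Module.finrank_fintype_fun_eq_card] at hrk
    have hr : Module.finrank (ZMod 2) (LinearMap.range φ) ≤ Module.finrank (ZMod 2) (Zc G) := by
      apply Submodule.finrank_mono
      rintro _ ⟨x, rfl⟩
      rw [hφ, Fintype.linearCombination_apply]
      exact Submodule.sum_mem _ fun k _ => Submodule.smul_mem _ _ (hf.mem k)
    have hk : Module.finrank (ZMod 2) (LinearMap.ker φ) ≤ 1 := by
      have hle : LinearMap.ker φ ≤ Submodule.span (ZMod 2) {(fun _ => 1 : perAll G W → ZMod 2)} := by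
        intro x hx
        rw [LinearMap.mem_ker, hφ, Fintype.linearCombination_apply] at hx
        rw [Submodule.mem_span_singleton]
        by_cases hex : ∃ i, x i = 1
        · obtain ⟨i, hi⟩ := hex
          refine ⟨1, ?_⟩
          funext j
          rw [one_smul]
          by_contra hne
          exact face_relation hG hC3 hW x hx i j hi (by
            by_contra hj
            exact hne (zmod2_ne.1 hj).symm)
        · push Not at hex
          refine ⟨0, ?_⟩
          funext j
          rw [zero_smul]
          by_contra hne
          exact hex j (zmod2_ne.1 (fun h => hne h.symm))
      refine (Submodule.finrank_mono hle).trans ?_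
      refine (finrank_span_le_card _).trans ?_
      simp
    omega
  -- double counting of incidences between edges and faces
  have h2 : 2 * edgeCount G ≤ 3 * N := by
    have hsum : ∑ i : perAll G W, wt (i : Chain V) = 3 * N := by
      have : ∀ i : perAll G W, wt (i : Chain V) = 3 := by
        intro i
        obtain ⟨l, c, hc, hi⟩ := perAll_elim i.2
        rw [hi, ← h3 l c hc]; exact hc.cyc.weight
      rw [Finset.sum_congr rfl (fun i _ => this i), Finset.sum_const, smul_eq_mul,
        Finset.card_univ, mul_comm]
    have hwt : ∀ i : perAll G W, wt (i : Chain V) =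
        (G.edgeSet.toFinset.filter fun e => (i : Chain V) e ≠ 0).card := by
      intro i
      rw [wt, ← Set.ncard_coe_finset]
      congr 1
      ext e
      simp only [Set.mem_ofPred_eq, Finset.coe_filter, Set.mem_toFinset]
      exact ⟨fun he => ⟨(hf.mem i).1 e he, he⟩, fun he => he.2⟩
    rw [← hsum, Finset.sum_congr rfl (fun i _ => hwt i)]
    simp only [Finset.card_filter]
    rw [Finset.sum_comm, edgeCount, Set.ncard_eq_toFinset_card', mul_comm, ← smul_eq_mul,
      ← Finset.sum_const]
    refine Finset.sum_le_sum fun e he => ?_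
    rw [Set.mem_toFinset] at he
    induction e with | _ x y =>
    obtain ⟨l₁, c₁, l₂, c₂, p1, p2, e1, e2, hne⟩ := per_ge_two hC3 hW he
    rw [← Finset.card_filter]
    have : ({⟨zeta c₁, p1.mem_perAll⟩, ⟨zeta c₂, p2.mem_perAll⟩} : Finset (perAll G W)) ⊆
        Finset.univ.filter fun i : perAll G W => (i : Chain V) s(x, y) ≠ 0 := by
      intro i hi
      rw [Finset.mem_insert, Finset.mem_singleton] at hi
      rcases hi with rfl | rfl <;> simp [e1, e2]
    refine le_trans ?_ (Finset.card_le_card this)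
    rw [Finset.card_pair]
    intro h
    exact hne (congrArg Subtype.val h)
  have h5 := finrank_Zc_le hC3.conn
  omega

/-- Every vertex of a peripheral cycle has a neighbour off the cycle. -/
theorem Per.touch_out (hC3 : Conn3 G W) (h : Per G W l c) (i : ℤ) :
    Touch G {c i} (W \ Set.range c) := by
  have h3 := h.cyc.three
  have hcn := hC3.2 {c (i - 1), c (i + 1)} (ncard_pair_le _ _)
  obtain ⟨w, hw⟩ := h.conn.1
  have hi : c i ∈ W \ {c (i - 1), c (i + 1)} := by
    refine ⟨h.sub ⟨i, rfl⟩, ?_⟩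
    rintro (h1 | h1)
    · exact h.cyc.ne_of (i := i - 1) (j := i) (by omega) (by omega) h1.symm
    · exact h.cyc.ne_of (i := i) (j := i + 1) (by omega) (by omega) h1
  obtain ⟨u, rfl, v, hv, huv⟩ := hcn.touch_diff (Set.singleton_subset_iff.2 hi)
    (Set.singleton_nonempty _) ⟨w, ⟨hw.1, by
      rintro (h1 | h1)
      · exact hw.2 ⟨_, h1.symm⟩
      · exact hw.2 ⟨_, h1.symm⟩⟩, fun h1 => hw.2 ⟨i, h1.symm⟩⟩
  refine ⟨_, rfl, v, ⟨hv.1.1, ?_⟩, huv⟩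
  rintro ⟨j, rfl⟩
  apply hv.1.2
  rcases h.ind i j huv with h1 | h1
  · right
    exact (h.cyc.inj _ _).2 (by obtain ⟨t, ht⟩ := h1; exact ⟨t, by linear_combination ht⟩)
  · left
    exact (h.cyc.inj _ _).2 (by obtain ⟨t, ht⟩ := h1; exact ⟨-t, by linear_combination -ht⟩)

/-- Two crossing chords of a peripheral cycle cannot both be added. -/
theorem crossing_chords (hC3 : Conn3 G W) (h : Per G W l c) (hl : 4 ≤ l) :
    ¬ IsPlanar (G ⊔ edge (c 0) (c 2) ⊔ edge (c 1) (c 3)) := by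
  set G' := G ⊔ edge (c 0) (c 2) ⊔ edge (c 1) (c 3) with hG'
  have hle : G ≤ G' := le_sup_of_le_left le_sup_left
  have hc := h.cyc
  have hne : ∀ i j : ℤ, i < j → j < i + l → c i ≠ c j := fun i j => hc.ne_of
  have h02 : G'.Adj (c 0) (c 2) := Or.inl (Or.inr (by
    rw [edge_adj']; exact ⟨Or.inl ⟨rfl, rfl⟩, hne 0 2 (by omega) (by omega)⟩))
  have h13 : G'.Adj (c 1) (c 3) := Or.inr (by
    rw [edge_adj']; exact ⟨Or.inl ⟨rfl, rfl⟩, hne 1 3 (by omega) (by omega)⟩)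
  have hP : ConnSet G (c '' Set.Icc (3 : ℤ) (l - 1)) := conn_Icc (by omega) fun i _ _ => hc.adj i
  have h01 : G.Adj (c 0) (c 1) := hc.adj 0
  have h12 : G.Adj (c 1) (c 2) := hc.adj 1
  have h23 : G.Adj (c 2) (c 3) := hc.adj 2
  have hl0 : G.Adj (c (l - 1)) (c 0) := by
    have h1 := hc.adj ((l : ℤ) - 1)
    have h2 := hc.add_l 0
    rw [show (l : ℤ) - 1 + 1 = 0 + l by ring, h2] at h1
    exact h1
  have m3 : c 3 ∈ c '' Set.Icc (3 : ℤ) (l - 1) := ⟨3, ⟨le_rfl, by omega⟩, rfl⟩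
  have ml : c (l - 1) ∈ c '' Set.Icc (3 : ℤ) (l - 1) := ⟨l - 1, ⟨by omega, le_rfl⟩, rfl⟩
  have hnP : ∀ i : ℤ, 0 ≤ i → i < 3 → c i ∉ c '' Set.Icc (3 : ℤ) (l - 1) := by
    rintro i h0 h3 ⟨j, ⟨hj1, hj2⟩, hj⟩
    exact hne i j (by omega) (by omega) hj.symm
  have hnO : ∀ i : ℤ, c i ∉ W \ Set.range c := fun i hi => hi.2 ⟨i, rfl⟩
  have ht := fun i => (h.touch_out hC3 i).mono hle le_rfl le_rfl
  refine not_planar_K5 (A := {c 0}) (B := {c 1}) (C := {c 2}) (D := c '' Set.Icc (3 : ℤ) (l - 1))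
    (E := W \ Set.range c) (ConnSet.singleton _) (ConnSet.singleton _) (ConnSet.singleton _)
    (hP.mono hle) (h.conn.mono hle) ?_ ?_
  · simp only [List.pairwise_cons, List.mem_cons, List.not_mem_nil, or_false, forall_eq_or_imp,
      forall_eq, false_imp_iff, implies_true, and_true, List.Pairwise.nil,
      Set.disjoint_singleton_left, Set.mem_singleton_iff]
    refine ⟨⟨hne 0 1 (by omega) (by omega), hne 0 2 (by omega) (by omega),
      hnP 0 (by omega) (by omega), hnO 0⟩, ⟨hne 1 2 (by omega) (by omega),
      hnP 1 (by omega) (by omega), hnO 1⟩, ⟨hnP 2 (by omega) (by omega), hnO 2⟩, ?_⟩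
    rw [Set.disjoint_left]
    rintro _ ⟨i, -, rfl⟩
    exact hnO i
  · simp only [List.pairwise_cons, List.mem_cons, List.not_mem_nil, or_false, forall_eq_or_imp,
      forall_eq, false_imp_iff, implies_true, and_true, List.Pairwise.nil]
    refine ⟨⟨⟨_, rfl, _, rfl, hle h01⟩, ⟨_, rfl, _, rfl, h02⟩, ⟨_, rfl, _, ml, hle hl0.symm⟩, ht 0⟩,
      ⟨⟨_, rfl, _, rfl, hle h12⟩, ⟨_, rfl, _, m3, h13⟩, ht 1⟩,
      ⟨⟨_, rfl, _, m3, hle h23⟩, ht 2⟩, ?_⟩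
    exact (ht 3).mono le_rfl (Set.singleton_subset_iff.2 m3) le_rfl

/-- Cutting off a corner of a face of a 3-connected planar graph, and coning the resulting
triangle. -/
theorem corner_planar (hG : IsPlanar G) (hC3 : Conn3 G W) (hW : InW G W) (h : Per G W l c)
    {t : V} (ht : t ∉ W) :
    IsPlanar (G ⊔ edge (c 0) (c 2) ⊔ star t {c 0, c 1, c 2}) := by
  have hf := face_family hG hC3 hW
  have hc := h.cyc
  have h3 := hc.three
  have htG : ∀ x, ¬ G.Adj t x := fun x hx => ht (hW hx).1
  have hadj : (G ⊔ edge (c 0) (c 2)).Adj (c 2) (c 0) := Or.inr (by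
    rw [edge_adj']; exact ⟨Or.inr ⟨rfl, rfl⟩, (hc.ne_of (i := 0) (by omega) (by omega)).symm⟩)
  have h01 : G.Adj (c 0) (c 1) := hc.adj 0
  have h12 : G.Adj (c 1) (c 2) := hc.adj 1
  have h01' : (G ⊔ edge (c 0) (c 2)).Adj (c 0) (c 1) := Or.inl h01
  have h12' : (G ⊔ edge (c 0) (c 2)).Adj (c 1) (c 2) := Or.inl h12
  rw [← tri_range]
  by_cases hl : l = 3
  · subst hl
    have h20 : G.Adj (c 2) (c 0) := by
      have h1 := hc.adj 2
      have h2 := hc.add_l 0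
      norm_num at h1 h2
      rwa [h2] at h1
    have hsup : G ⊔ edge (c 0) (c 2) = G := by
      rw [sup_eq_left]
      intro x y hxy
      rw [edge_adj'] at hxy
      rcases hxy.1 with ⟨rfl, rfl⟩ | ⟨rfl, rfl⟩
      · exact h20.symm
      · exact h20
    rw [hsup]
    have hz : zeta c = zeta (tri (c 0) (c 1) (c 2)) := by
      rw [tri_zeta h01 h12 h20, zeta_eq_arc hc 0]
      have h2 := hc.add_l 0
      norm_num at h2
      simp [arc, Finset.sum_range_succ, h2]
    obtain ⟨κ, _, b', hb', -⟩ := hf.cone (Z := 0) (tri_cyc h01 h12 h20)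
      (i0 := ⟨zeta c, h.mem_perAll⟩) hz htG
    exact hb'.planar
  · have hnadj : ¬ G.Adj (c 0) (c 2) := by
      intro hadj
      rcases h.ind 0 2 hadj with h1 | h1
      · exact not_dvd_of (l := l) (x := 1) (by omega) (by omega) (by simpa using h1)
      · have h1' : (l : ℤ) ∣ 3 := by
          obtain ⟨s, hs⟩ := h1; exact ⟨-s, by linear_combination -hs⟩
        exact not_dvd_of (l := l) (x := 3) (by omega) (by omega) h1'
    have hP : arc c 0 2 = eg (c 0) (c 1) + eg (c 1) (c 2) := by
      simp [arc, Finset.sum_range_succ]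
    have hsplit := hf.split (P := arc c 0 2) (hc.ne_of (i := 0) (j := 2) (by omega) (by omega)) hnadj
      (arc_supp fun i _ => hc.adj _) (by simpa using arc_bd hc.adj 0 2) ⟨zeta c, h.mem_perAll⟩ (by
        intro e he
        left
        rw [arc_apply hc _ (by omega)] at he
        split_ifs at he with hex
        · obtain ⟨i, -, hi⟩ := hex
          exact zeta_ne.2 ⟨_, hi⟩
        · exact (he rfl).elim)
    have htG' : ∀ x, ¬ (G ⊔ edge (c 0) (c 2)).Adj t x := by
      rintro x (hx | hx)
      · exact htG x hx
      · exact ht ((inW_edge (h.sub ⟨0, rfl⟩) (h.sub ⟨2, rfl⟩)) hx).1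
    obtain ⟨κ, _, b', hb', -⟩ := hsplit.cone (Z := 0) (tri_cyc h01' h12' hadj) (i0 := none) (by
      rw [tri_zeta h01' h12' hadj, splitFam, hP]
      have : eg (c 2) (c 0) = eg (c 0) (c 2) := by unfold eg; rw [Sym2.eq_swap]
      rw [this]) htG'
    exact hb'.planar

end ConnFaces

/-! ### Separations of order at most two and Euler's bound -/

noncomputable section Separations
open scoped Classical
variable {V : Type*} [Fintype V] {G H : SimpleGraph V} {X W A B S : Set V} {l : ℕ} {c : ℤ → V}

/-- `W` is partitioned into `A`, `B` and a cut set `S`, with `A` and `B` nonempty and no edge of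
`G` between them. -/
structure Sep (G : SimpleGraph V) (W S A B : Set V) : Prop where
  cover : A ∪ B ∪ S = W
  dAB : Disjoint A B
  dAS : Disjoint A S
  dBS : Disjoint B S
  neA : A.Nonempty
  neB : B.Nonempty
  cut : ∀ a ∈ A, ∀ b ∈ B, ¬ G.Adj a b

/-- `A` contains a connected set, closed under adjacency inside `A`, that touches every vertex
of `S`. -/
def Link (G : SimpleGraph V) (S A : Set V) : Prop :=
  ∃ A0 ⊆ A, ConnSet G A0 ∧ (∀ a ∈ A0, ∀ b ∈ A, G.Adj a b → b ∈ A0) ∧ ∀ s ∈ S, Touch G {s} A0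

theorem Sep.symm (h : Sep G W S A B) : Sep G W S B A where
  cover := by rw [Set.union_comm B A]; exact h.cover
  dAB := h.dAB.symm
  dAS := h.dBS
  dBS := h.dAS
  neA := h.neB
  neB := h.neA
  cut := fun a ha b hb hab => h.cut b hb a ha hab.symm

/-- A cut set of minimum size: every component of its complement touches all of it. -/
theorem sep_min (h3 : 3 ≤ W.ncard) (hcon : ¬ ∀ S : Set V, S.ncard ≤ 2 → ConnSet G (W \ S)) :
    ∃ S A B : Set V, S.ncard ≤ 2 ∧ Sep G W S A B ∧ Link G S A ∧ Link G S B := by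
  have hex : ∃ k, ∃ S ⊆ W, S.ncard = k ∧ S.ncard ≤ 2 ∧ ¬ ConnSet G (W \ S) := by
    push Not at hcon
    obtain ⟨S, hS, hn⟩ := hcon
    refine ⟨_, S ∩ W, Set.inter_subset_right, rfl,
      (Set.ncard_le_ncard Set.inter_subset_left (Set.toFinite _)).trans hS, ?_⟩
    rwa [Set.sdiff_inter_self_eq_sdiff]
  obtain ⟨S, hSW, hSk, hS2, hn⟩ := Nat.find_spec hex
  have hmin : ∀ s ∈ S, ConnSet G (W \ (S \ {s})) := by
    intro s hs
    by_contra hc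
    have h1 := Set.ncard_sdiff_singleton_add_one hs (Set.toFinite S)
    exact Nat.find_min hex (m := (S \ {s}).ncard) (by omega)
      ⟨S \ {s}, Set.sdiff_subset.trans hSW, rfl, by omega, hc⟩
  have hne : (W \ S).Nonempty := by
    rw [Set.nonempty_iff_ne_empty]
    intro h0
    have := Set.ncard_le_ncard (Set.sdiff_eq_empty.1 h0) (Set.toFinite _)
    omega
  have hY : ∃ Y ⊆ W \ S, Y.Nonempty ∧ (∀ u ∈ Y, ∀ v ∈ W \ S, G.Adj u v → v ∈ Y) ∧ Y ≠ W \ S := by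
    by_contra! hcon'
    exact hn ⟨hne, hcon'⟩
  obtain ⟨Y, hYs, ⟨a, ha⟩, hYc, hYne⟩ := hY
  obtain ⟨b, hb, hbY⟩ := Set.exists_of_ssubset (hYs.ssubset_of_ne hYne)
  have haY : comp G (W \ S) a ⊆ Y := fun v hv => hv.2 Y hYs ha hYc
  have htouch : ∀ u ∈ W \ S,
      ∀ s ∈ S, Touch G {s} (comp G (W \ S) u) := by
    intro u hu s hs
    have hsub : comp G (W \ S) u ⊆ W \ (S \ {s}) := fun x hx =>
      ⟨(comp_subset _ _ _ hx).1, fun h => (comp_subset _ _ _ hx).2 h.1⟩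
    obtain ⟨x, hx, y, hy, hxy⟩ := (hmin s hs).touch_diff hsub ⟨u, mem_comp_self hu⟩
      ⟨s, ⟨hSW hs, fun h => h.2 rfl⟩, fun h => (comp_subset _ _ _ h).2 hs⟩
    by_cases hys : y = s
    · subst hys
      exact ⟨y, rfl, x, hx, hxy.symm⟩
    · exact (hy.2 (comp_closed hx ⟨hy.1.1, fun h => hy.1.2 ⟨h, hys⟩⟩ hxy)).elim
  have hba : b ∉ comp G (W \ S) a := fun h => hbY (haY h)
  have hBsub : comp G (W \ S) b ⊆ (W \ S) \ comp G (W \ S) a := by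
    refine fun x hx => ⟨comp_subset _ _ _ hx, fun h => hba ?_⟩
    exact (comp_conn hb).subset_comp (comp_subset _ _ _) ⟨x, hx, h⟩ (mem_comp_self hb)
  refine ⟨S, comp G (W \ S) a, (W \ S) \ comp G (W \ S) a, hS2, ⟨?_, ?_, ?_, ?_, ?_, ?_, ?_⟩,
    ⟨_, subset_rfl, comp_conn (hYs ha), fun _ _ _ h _ => h, htouch a (hYs ha)⟩,
    ⟨_, hBsub, comp_conn hb, fun x hx y hy hxy => comp_closed hx hy.1 hxy,
      htouch b hb⟩⟩
  · rw [Set.union_sdiff_cancel (comp_subset _ _ _), Set.sdiff_union_of_subset hSW]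
  · exact Set.disjoint_sdiff_right
  · exact Set.disjoint_left.2 fun x hx => (comp_subset _ _ _ hx).2
  · exact Set.disjoint_left.2 fun x hx => hx.1.2
  · exact ⟨a, mem_comp_self (hYs ha)⟩
  · exact ⟨b, hb, hba⟩
  · exact fun x hx y hy hxy => hy.2 (comp_closed hx hy.1 hxy)

theorem Sep.inter (h : Sep G W S A B) : (A ∪ S) ∩ (B ∪ S) = S := by
  ext x
  have : x ∈ A → x ∉ B := fun h1 h2 => Set.disjoint_left.1 h.dAB h1 h2
  simp only [Set.mem_inter_iff, Set.mem_union]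
  tauto

theorem Sep.subA (h : Sep G W S A B) : A ∪ S ⊆ W := by
  rw [← h.cover]
  exact Set.union_subset_union_left _ Set.subset_union_left

theorem Sep.subB (h : Sep G W S A B) : B ∪ S ⊆ W := h.symm.subA

theorem Sep.subS (h : Sep G W S A B) : S ⊆ W := Set.subset_union_right.trans h.subA

theorem Sep.adj (h : Sep G W S A B) (hW : InW G W) {u v : V} (huv : G.Adj u v) :
    (u ∈ A ∪ S ∧ v ∈ A ∪ S) ∨ (u ∈ B ∪ S ∧ v ∈ B ∪ S) := by
  have h1 := hW huv
  rw [← h.cover] at h1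
  have h2 := fun a b => h.cut u a v b huv
  have h3 := fun a b => h.cut v a u b huv.symm
  simp only [Set.mem_union] at *
  tauto

theorem Sep.eq_sup (h : Sep G W S A B) (hW : InW G W) : G = res G (A ∪ S) ⊔ res G (B ∪ S) := by
  ext u v
  simp only [sup_adj, res_adj]
  constructor
  · intro huv
    exact (h.adj hW huv).imp (fun h => ⟨huv, h⟩) (fun h => ⟨huv, h⟩)
  · tauto

theorem Sep.card (h : Sep G W S A B) : (A ∪ S).ncard + (B ∪ S).ncard = W.ncard + S.ncard := by
  have h1 := Set.ncard_union_add_ncard_inter (A ∪ S) (B ∪ S) (Set.toFinite _) (Set.toFinite _)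
  rw [h.inter] at h1
  have h2 : A ∪ S ∪ (B ∪ S) = W := by
    rw [← h.cover]; ext x; simp only [Set.mem_union]; tauto
  rw [h2] at h1
  exact h1.symm

theorem Sep.cardA (h : Sep G W S A B) : (A ∪ S).ncard = A.ncard + S.ncard :=
  Set.ncard_union_eq h.dAS (Set.toFinite _) (Set.toFinite _)

theorem Sep.cardA_pos (h : Sep G W S A B) : 1 ≤ A.ncard := (Set.ncard_pos (Set.toFinite _)).2 h.neA

theorem mem_edgeSet_res {e : Sym2 V} : e ∈ (res G X).edgeSet ↔ e ∈ G.edgeSet ∧ ∀ x ∈ e, x ∈ X := by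
  induction e using Sym2.ind with
  | _ u v => simp [res_adj]

theorem Sep.edges (h : Sep G W S A B) (hW : InW G W) :
    edgeCount (res G (A ∪ S)) + edgeCount (res G (B ∪ S)) = edgeCount G + edgeCount (res G S) := by
  unfold edgeCount
  rw [← Set.ncard_union_add_ncard_inter _ _ (Set.toFinite _) (Set.toFinite _), ← edgeSet_sup,
    ← h.eq_sup hW]
  congr 2
  ext e
  have h1 := h.inter
  simp only [Set.mem_inter_iff, mem_edgeSet_res]
  constructor
  · rintro ⟨⟨h2, h3⟩, -, h4⟩
    exact ⟨h2, fun x hx => h1 ▸ ⟨h3 x hx, h4 x hx⟩⟩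
  · rintro ⟨h2, h3⟩
    exact ⟨⟨h2, fun x hx => Or.inr (h3 x hx)⟩, h2, fun x hx => Or.inr (h3 x hx)⟩

theorem edgeCount_mono (h : G ≤ H) : edgeCount G ≤ edgeCount H :=
  Set.ncard_le_ncard (edgeSet_mono h) (Set.toFinite _)

theorem edgeCount_add_edge {u v : V} (hne : u ≠ v) (h : ¬ G.Adj u v) :
    edgeCount (G ⊔ edge u v) = edgeCount G + 1 := by
  unfold edgeCount
  have : (G ⊔ edge u v).edgeSet = insert s(u, v) G.edgeSet := by
    rw [edgeSet_sup, edge, edgeSet_fromEdgeSet, Set.union_comm, Set.insert_eq]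
    congr 1
    ext e
    simp only [Set.mem_sdiff, Set.mem_singleton_iff]
    refine ⟨fun h => h.1, ?_⟩
    rintro rfl
    exact ⟨rfl, by simpa using hne⟩
  rw [this, Set.ncard_insert_of_notMem (by simpa using h) (Set.toFinite _)]

theorem edgeCount_complete (W : Set V) : edgeCount (res ⊤ W) = W.ncard.choose 2 := by
  have h1 : (res (⊤ : SimpleGraph V) W).edgeSet
      = ((W.toFinset.offDiag.image Sym2.mk.uncurry : Finset (Sym2 V)) : Set (Sym2 V)) := by
    ext e
    induction e using Sym2.ind with
    | _ u v =>
      simp only [mem_edgeSet, res_adj, top_adj, Finset.coe_image, Finset.coe_offDiag,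
        Set.coe_toFinset, Set.mem_image, Set.mem_offDiag, Prod.exists, Function.uncurry_apply_pair,
        Sym2.eq_iff]
      constructor
      · rintro ⟨h1, h2, h3⟩
        exact ⟨u, v, ⟨h2, h3, h1⟩, Or.inl ⟨rfl, rfl⟩⟩
      · rintro ⟨a, b, ⟨h1, h2, h3⟩, ⟨rfl, rfl⟩ | ⟨rfl, rfl⟩⟩
        · exact ⟨h3, h1, h2⟩
        · exact ⟨h3.symm, h2, h1⟩
  unfold edgeCount
  rw [h1, Set.ncard_coe_finset, Set.ncard_eq_toFinset_card', Sym2.card_image_offDiag]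

end Separations

/-! ### Edge-maximal planar graphs and Euler's bound -/

noncomputable section MaxPlanar
open scoped Classical
variable {V : Type*} [Fintype V] {G H : SimpleGraph V} {X W A B S : Set V} {l : ℕ} {c : ℤ → V}

theorem res_top_pair {z w : V} : res (⊤ : SimpleGraph V) {z, w} = edge z w := by
  ext u v
  rw [edge_adj']
  simp only [res_adj, top_adj, Set.mem_insert_iff, Set.mem_singleton_iff]
  constructor
  · rintro ⟨h, rfl | rfl, rfl | rfl⟩ <;> simp_all
  · rintro ⟨⟨rfl, rfl⟩ | ⟨rfl, rfl⟩, h⟩ <;> simp_all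

theorem res_top_subsingleton (hS : S.ncard ≤ 1) : res (⊤ : SimpleGraph V) S = ⊥ := by
  ext u v
  simp only [res_adj, top_adj, bot_adj, iff_false]
  rintro ⟨h, h1, h2⟩
  exact h (Set.ncard_le_one (Set.toFinite _) |>.1 hS u h1 v h2)

/-- The side `A ∪ S` of a separation stays planar when the cut set is completed, since the other
side contains a path joining the two cut vertices. -/
theorem side_planar (hG : IsPlanar G) (hS : S.ncard ≤ 2) (hd : Disjoint B (A ∪ S))
    (hB : Link G S B) : IsPlanar (res G (A ∪ S) ⊔ res ⊤ S) := by
  by_cases h1 : S.ncard ≤ 1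
  · rw [res_top_subsingleton h1, sup_bot_eq]
    exact planar_mono hG res_le
  · obtain ⟨z, w, -, rfl⟩ := Set.ncard_eq_two.1 (show S.ncard = 2 by omega)
    rw [res_top_pair]
    obtain ⟨B0, hB0, hc, -, ht⟩ := hB
    exact virtual_edge hG inW_res res_le hc (hd.mono_left hB0) (by simp) (by simp)
      (ht z (by simp)) (ht w (by simp))

/-- Two planar graphs that overlap in a cut set, completed in both, have planar union. -/
theorem Sep.glue (h : Sep G W S A B) (hS : S.ncard ≤ 2) {G1 G2 : SimpleGraph V}
    (h1 : InW G1 (A ∪ S)) (h2 : InW G2 (B ∪ S)) (hK1 : res ⊤ S ≤ G1) (hK2 : res ⊤ S ≤ G2)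
    (hP1 : IsPlanar G1) (hP2 : IsPlanar G2) : IsPlanar (G1 ⊔ G2) := by
  refine glue2 h1 h2 (Set.toFinite _) (by rwa [h.inter]) ?_ ?_ hP1 hP2 <;> rw [h.inter]
  · exact fun s hs s' hs' hne => hK1 (res_adj.2 ⟨hne, hs, hs'⟩)
  · exact fun s hs s' hs' hne => hK2 (res_adj.2 ⟨hne, hs, hs'⟩)

theorem inW_res_top (h : S ⊆ X) : InW (res (⊤ : SimpleGraph V) S) X := inW_res.mono h

/-- Completing the cut set of a separation both of whose sides are linked preserves planarity. -/
theorem Sep.complete_planar (h : Sep G W S A B) (hW : InW G W) (hG : IsPlanar G)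
    (hS : S.ncard ≤ 2) (hA : Link G S A) (hB : Link G S B) : IsPlanar (G ⊔ res ⊤ S) := by
  have h1 := side_planar hG hS (A := A) (by
    rw [Set.disjoint_union_right]; exact ⟨h.dAB.symm, h.dBS⟩) hB
  have h2 := side_planar hG hS (A := B) (by
    rw [Set.disjoint_union_right]; exact ⟨h.dAB, h.dAS⟩) hA
  have h3 := h.glue hS (inW_res.sup (inW_res_top Set.subset_union_right))
    (inW_res.sup (inW_res_top Set.subset_union_right)) le_sup_right le_sup_right h1 h2
  refine planar_mono h3 (sup_le ?_ (le_sup_right.trans le_sup_left))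
  conv_lhs => rw [h.eq_sup hW]
  exact sup_le_sup le_sup_left le_sup_left

/-- Across a separation of order at most one, an edge between neighbours of the cut vertex can be
added. -/
theorem Sep.bridge (h : Sep G W S A B) (hW : InW G W) (hG : IsPlanar G) (hS : S.ncard ≤ 1)
    {a b : V} (ha : a ∈ A) (hb : b ∈ B) (has : ∀ s ∈ S, G.Adj a s) (hbs : ∀ s ∈ S, G.Adj b s) :
    IsPlanar (G ⊔ edge a b) := by
  have hAB : ∀ x ∈ A, x ∉ B := fun x h1 h2 => Set.disjoint_left.1 h.dAB h1 h2
  have hAS : ∀ x ∈ A, x ∉ S := fun x h1 h2 => Set.disjoint_left.1 h.dAS h1 h2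
  have hBS : ∀ x ∈ B, x ∉ S := fun x h1 h2 => Set.disjoint_left.1 h.dBS h1 h2
  have hSS : ∀ s ∈ S, ∀ s' ∈ S, s = s' := (Set.ncard_le_one (Set.toFinite _)).1 hS
  have hcard : ∀ x, (insert x S).ncard ≤ 2 := fun x => (Set.ncard_insert_le _ _).trans (by omega)
  have i1 : (A ∪ S) ∩ (insert a (insert b S)) = insert a S := by
    ext x
    have h1 := hAB x; have h2 := hBS x
    simp only [Set.mem_inter_iff, Set.mem_union, Set.mem_insert_iff]
    constructor
    · rintro ⟨h3, rfl | rfl | h4⟩ <;> tauto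
    · rintro (rfl | h3) <;> tauto
  have i2 : (A ∪ S ∪ insert a (insert b S)) ∩ (B ∪ S) = insert b S := by
    ext x
    have h1 := hAB x; have h2 := hBS x
    simp only [Set.mem_inter_iff, Set.mem_union, Set.mem_insert_iff]
    constructor
    · rintro ⟨(h3 | h3) | rfl | rfl | h4, h5⟩ <;> tauto
    · rintro (rfl | h3) <;> tauto
  have hT : IsPlanar (res (⊤ : SimpleGraph V) (insert a (insert b S))) :=
    planar_of_card_le_four (Set.toFinite _) inW_res ((Set.ncard_insert_le _ _).trans (by
      have := hcard b; omega))
  have clq : ∀ (x : V) (K : SimpleGraph V), (∀ s ∈ S, K.Adj x s) →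
      ∀ s ∈ insert x S, ∀ s' ∈ insert x S, s ≠ s' → K.Adj s s' := by
    rintro x K hK s (rfl | hs) s' (rfl | hs') hne
    · exact (hne rfl).elim
    · exact hK s' hs'
    · exact (hK s hs).symm
    · exact (hne (hSS s hs s' hs')).elim
  have hne : ∀ s ∈ S, a ≠ s := fun s hs h' => hAS a ha (h' ▸ hs)
  have hne' : ∀ s ∈ S, b ≠ s := fun s hs h' => hBS b hb (h' ▸ hs)
  have p1 : IsPlanar (res G (A ∪ S) ⊔ res ⊤ (insert a (insert b S))) := by
    refine glue2 inW_res inW_res (Set.toFinite _) (by rw [i1]; exact hcard a) ?_ ?_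
      (planar_mono hG res_le) hT <;> rw [i1]
    · exact clq a _ fun s hs => res_adj.2 ⟨has s hs, Or.inl ha, Or.inr hs⟩
    · exact clq a _ fun s hs => res_adj.2 ⟨hne s hs, by simp, by simp [hs]⟩
  have p2 : IsPlanar (res G (A ∪ S) ⊔ res ⊤ (insert a (insert b S)) ⊔ res G (B ∪ S)) := by
    refine glue2 ((inW_res.mono Set.subset_union_left).sup (inW_res.mono Set.subset_union_right))
      inW_res (Set.toFinite _) (by rw [i2]; exact hcard b) ?_ ?_
      p1 (planar_mono hG res_le) <;> rw [i2]
    · exact clq b _ fun s hs => Or.inr (res_adj.2 ⟨hne' s hs, by simp, by simp [hs]⟩)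
    · exact clq b _ fun s hs => res_adj.2 ⟨hbs s hs, Or.inl hb, Or.inr hs⟩
  refine planar_mono p2 (sup_le ?_ ?_)
  · conv_lhs => rw [h.eq_sup hW]
    exact sup_le_sup le_sup_left le_rfl
  · rw [← res_top_pair]
    refine le_trans ?_ (le_sup_right.trans le_sup_left)
    exact fun u v huv => ⟨huv.1, by have := huv.2.1; simp at this ⊢; tauto,
      by have := huv.2.2; simp at this ⊢; tauto⟩

/-- `G` is planar on `W` and no edge inside `W` can be added. -/
structure MaxOn (G : SimpleGraph V) (W : Set V) : Prop where
  inW : InW G W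
  planar : IsPlanar G
  max : ∀ u ∈ W, ∀ v ∈ W, u ≠ v → IsPlanar (G ⊔ edge u v) → G.Adj u v

theorem exists_max (hG : IsPlanar G) (hW : InW G W) : ∃ H, G ≤ H ∧ MaxOn H W := by
  obtain ⟨H, hGH, hH⟩ := Finite.exists_le_maximal
    (p := fun H : SimpleGraph V => IsPlanar H ∧ InW H W) (a := G) ⟨hG, hW⟩
  refine ⟨H, hGH, hH.prop.2, hH.prop.1, fun u hu v hv hne hp => ?_⟩
  have := hH.2 (y := H ⊔ edge u v) ⟨hp, hH.prop.2.sup (inW_edge hu hv)⟩ le_sup_left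
  exact this (Or.inr (edge_adj'.2 ⟨Or.inl ⟨rfl, rfl⟩, hne⟩))

/-- An edge-maximal planar graph is 3-connected or separated by an edge. -/
theorem MaxOn.conn3_or_sep (h : MaxOn G W) (h4 : 4 ≤ W.ncard) :
    Conn3 G W ∨ ∃ z w A B, G.Adj z w ∧ Sep G W {z, w} A B := by
  by_cases hcon : ∀ S : Set V, S.ncard ≤ 2 → ConnSet G (W \ S)
  · exact Or.inl ⟨h4, hcon⟩
  right
  obtain ⟨S, A, B, hS, hsep, hA, hB⟩ := sep_min (by omega) hcon
  by_cases h1 : S.ncard ≤ 1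
  · exfalso
    have key : ∀ {A : Set V}, A.Nonempty → Link G S A → ∃ a ∈ A, ∀ s ∈ S, G.Adj a s := by
      rintro A ⟨a, ha⟩ ⟨A0, hA0, -, -, ht⟩
      rcases S.eq_empty_or_nonempty with rfl | ⟨s, hs⟩
      · exact ⟨a, ha, by simp⟩
      · obtain ⟨x, rfl, y, hy, hxy⟩ := ht s hs
        refine ⟨y, hA0 hy, fun s' hs' => ?_⟩
        rw [(Set.ncard_le_one (Set.toFinite _)).1 h1 s' hs' x hs]
        exact hxy.symm
    obtain ⟨a, ha, has⟩ := key hsep.neA hA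
    obtain ⟨b, hb, hbs⟩ := key hsep.neB hB
    refine hsep.cut a ha b hb (h.max a (hsep.subA (Or.inl ha)) b (hsep.subB (Or.inl hb)) ?_
      (hsep.bridge h.inW h.planar h1 ha hb has hbs))
    rintro rfl
    exact Set.disjoint_left.1 hsep.dAB ha hb
  · obtain ⟨z, w, hne, rfl⟩ := Set.ncard_eq_two.1 (show S.ncard = 2 by omega)
    refine ⟨z, w, A, B, h.max z (hsep.subS (by simp)) w (hsep.subS (by simp)) hne ?_, hsep⟩
    have := hsep.complete_planar h.inW h.planar hS hA hB
    rwa [res_top_pair] at this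

theorem edgeCount_pair {z w : V} (h : G.Adj z w) : edgeCount (res G {z, w}) = 1 := by
  have : res G {z, w} = res ⊤ {z, w} := by
    ext u v
    simp only [res_adj, top_adj]
    refine ⟨fun h => ⟨h.1.ne, h.2⟩, fun ⟨h1, h2, h3⟩ => ⟨?_, h2, h3⟩⟩
    simp only [Set.mem_insert_iff, Set.mem_singleton_iff] at h2 h3
    rcases h2 with rfl | rfl <;> rcases h3 with rfl | rfl
    exacts [(h1 rfl).elim, h, h.symm, (h1 rfl).elim]
  rw [this, edgeCount_complete, Set.ncard_pair h.ne]
  rfl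

theorem le_res_top (hW : InW G W) : G ≤ res ⊤ W := fun _ _ h => ⟨h.ne, hW h⟩

/-- Euler's bound on the number of edges of a planar graph. -/
theorem edge_le : ∀ (n : ℕ) {G : SimpleGraph V} {W : Set V}, W.ncard = n → 3 ≤ n → IsPlanar G →
    InW G W → edgeCount G + 6 ≤ 3 * n := by
  intro n
  induction n using Nat.strong_induction_on with
  | _ n ih =>
    intro G W hn h3 hG hW
    by_cases h4 : n = 3
    · have := edgeCount_mono (le_res_top hW)
      rw [edgeCount_complete, hn, h4] at this
      have h5 : Nat.choose 3 2 = 3 := rfl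
      omega
    obtain ⟨H, hGH, hH⟩ := exists_max hG hW
    refine le_trans (Nat.add_le_add_right (edgeCount_mono hGH) 6) ?_
    rcases hH.conn3_or_sep (by omega) with hc | ⟨z, w, A, B, hzw, hs⟩
    · rw [← hn]
      exact conn3_edge_le hH.planar hc hH.inW
    · have e1 := hs.edges hH.inW
      rw [edgeCount_pair hzw] at e1
      have e2 := hs.card
      have e3 := hs.cardA
      have e4 := hs.symm.cardA
      have e5 := hs.cardA_pos
      have e6 := hs.symm.cardA_pos
      rw [Set.ncard_pair hzw.ne] at e2 e3 e4
      have b1 := ih _ (by omega) (rfl : (A ∪ {z, w}).ncard = _) (by omega)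
        (planar_mono hH.planar res_le) inW_res
      have b2 := ih _ (by omega) (rfl : (B ∪ {z, w}).ncard = _) (by omega)
        (planar_mono hH.planar res_le) inW_res
      omega

/-- A triangulation on at least four vertices is 3-connected. -/
theorem conn3_of_triangulated (hG : IsPlanar G) (hW : InW G W) (h4 : 4 ≤ W.ncard)
    (hm : 3 * W.ncard ≤ edgeCount G + 6) : Conn3 G W := by
  have hmax : MaxOn G W := by
    refine ⟨hW, hG, fun u hu v hv hne hp => ?_⟩
    by_contra hadj
    have h1 := edgeCount_add_edge hne hadj
    have h2 := edge_le _ rfl (by omega) hp (hW.sup (inW_edge hu hv))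
    omega
  rcases hmax.conn3_or_sep h4 with hc | ⟨z, w, A, B, hzw, hs⟩
  · exact hc
  · exfalso
    have e1 := hs.edges hW
    rw [edgeCount_pair hzw] at e1
    have e2 := hs.card
    have e3 := hs.cardA
    have e4 := hs.symm.cardA
    have e5 := hs.cardA_pos
    have e6 := hs.symm.cardA_pos
    rw [Set.ncard_pair hzw.ne] at e2 e3 e4
    have b1 := edge_le _ (rfl : (A ∪ {z, w}).ncard = _) (by omega)
      (planar_mono hG res_le) inW_res
    have b2 := edge_le _ (rfl : (B ∪ {z, w}).ncard = _) (by omega)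
      (planar_mono hG res_le) inW_res
    omega

end MaxPlanar

/-! ### Corners at an edge and triangulated sides -/

noncomputable section Corners
open scoped Classical
variable {V : Type*} [Fintype V] {G H : SimpleGraph V} {X W A B S : Set V} {l : ℕ} {c : ℤ → V}

theorem Per.at_edge (h : Per G W l c) {z w : V} (he : zeta c s(z, w) ≠ 0) :
    ∃ c', Per G W l c' ∧ c' 0 = z ∧ c' 1 = w ∧ zeta c' = zeta c := by
  obtain ⟨i, hi⟩ := zeta_ne.1 he
  rcases Sym2.eq_iff.1 hi with ⟨h1, h2⟩ | ⟨h1, h2⟩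
  · exact ⟨_, h.shift i, by simp [h1], by simp [h2, add_comm], zeta_shift _ _⟩
  · refine ⟨_, (h.shift (i + 1)).neg, by simp [h1], by simp [h2], ?_⟩
    rw [zeta_neg (fun j => c (j + (i + 1))), zeta_shift]

theorem Per.chord_not_adj (h : Per G W l c) (hl : 4 ≤ l) : ¬ G.Adj (c 0) (c 2) := by
  intro hadj
  rcases h.ind 0 2 hadj with h1 | h1
  · exact not_dvd_of (l := l) (x := 1) (by omega) (by omega) (by simpa using h1)
  · refine not_dvd_of (l := l) (x := 3) (by omega) (by omega) ?_
    obtain ⟨s, hs⟩ := h1; exact ⟨-s, by linear_combination -hs⟩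

theorem chord_planar (hG : IsPlanar G) (hC3 : Conn3 G W) (hW : InW G W) (h : Per G W l c)
    (hl : 4 ≤ l) : IsPlanar (G ⊔ edge (c 0) (c 2)) := by
  have hc := h.cyc
  have hf := face_family hG hC3 hW
  exact (hf.split (P := arc c 0 2) (hc.ne_of (i := 0) (j := 2) (by omega) (by omega))
    (h.chord_not_adj hl)
    (arc_supp fun i _ => hc.adj _) (by simpa using arc_bd hc.adj 0 2) ⟨zeta c, h.mem_perAll⟩ (by
      intro e he
      left
      rw [arc_apply hc _ (by omega)] at he
      split_ifs at he with hex
      · obtain ⟨i, -, hi⟩ := hex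
        exact zeta_ne.2 ⟨_, hi⟩
      · exact (he rfl).elim)).planar

theorem third_vertex (z w : V) (h3 : W.ncard = 3) :
    ∃ q ∈ W, q ≠ z ∧ q ≠ w := by
  by_contra! hcon
  have h1 := Set.ncard_le_ncard (show W ⊆ {z, w} from fun x hx => by
    by_cases h : x = z
    · exact Or.inl h
    · exact Or.inr (hcon x hx h)) (Set.toFinite _)
  have h2 := ncard_pair_le z w
  omega

/-- Beside every edge `zw` there is a corner: a vertex `q` which can be joined to `z` and `w` so
that `zwq` becomes a face, i.e. a new vertex can be joined to all of `z`, `w`, `q`. -/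
theorem exists_corner : ∀ (n : ℕ) {G : SimpleGraph V} {W : Set V} {z w : V}, W.ncard = n → 3 ≤ n →
    IsPlanar G → InW G W → G.Adj z w → ∃ q ∈ W, q ≠ z ∧ q ≠ w ∧
      ∀ t ∉ W, IsPlanar (G ⊔ edge z q ⊔ edge w q ⊔ star t {z, w, q}) := by
  intro n
  induction n using Nat.strong_induction_on with
  | _ n ih =>
    intro G W z w hn h3 hG hW hzw
    by_cases h4 : n = 3
    · obtain ⟨q, hq, h1, h2⟩ := third_vertex z w (hn.trans h4)
      refine ⟨q, hq, h1, h2, fun t ht => planar_of_card_le_four (W := insert t W) (Set.toFinite _)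
        ?_ ((Set.ncard_insert_le _ _).trans (by omega))⟩
      have hz : z ∈ insert t W := Or.inr (hW hzw).1
      have hw : w ∈ insert t W := Or.inr (hW hzw).2
      have hq' : q ∈ insert t W := Or.inr hq
      refine (((hW.mono (Set.subset_insert _ _)).sup (inW_edge hz hq')).sup (inW_edge hw hq')).sup
        (inW_star (Set.mem_insert _ _) ?_)
      rintro x (rfl | rfl | rfl) <;> assumption
    obtain ⟨H, hGH, hH⟩ := exists_max hG hW
    suffices hs : ∃ q ∈ W, q ≠ z ∧ q ≠ w ∧
        ∀ t ∉ W, IsPlanar (H ⊔ edge z q ⊔ edge w q ⊔ star t {z, w, q}) by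
      obtain ⟨q, hq, h1, h2, hp⟩ := hs
      exact ⟨q, hq, h1, h2, fun t ht => planar_mono (hp t ht)
        (sup_le_sup_right (sup_le_sup_right (sup_le_sup_right hGH _) _) _)⟩
    have hzw' := hGH hzw
    clear hzw hW hG
    rcases hH.conn3_or_sep (by omega) with hc | ⟨z', w', A, B, hzw1, hs⟩
    · obtain ⟨l, c1, -, -, h1, -, he, -⟩ := per_ge_two hc hH.inW hzw'
      obtain ⟨c, hcp, rfl, rfl, -⟩ := h1.at_edge he
      have h3 := hcp.cyc.three
      refine ⟨c 2, hcp.sub ⟨2, rfl⟩, (hcp.cyc.ne_of (i := 0) (j := 2) (by omega) (by omega)).symm,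
        (hcp.cyc.ne_of (i := 1) (j := 2) (by omega) (by omega)).symm, fun t ht => ?_⟩
      have h12 : edge (c 1) (c 2) ≤ H := by
        have := hcp.cyc.adj 1
        norm_num at this
        intro u v huv
        rcases edge_adj'.1 huv with ⟨⟨rfl, rfl⟩ | ⟨rfl, rfl⟩, -⟩
        exacts [this, this.symm]
      refine planar_mono (corner_planar hH.planar hc hH.inW hcp ht) ?_
      exact sup_le_sup_right (sup_le le_rfl (h12.trans le_sup_left)) _
    · have key : ∀ {A B : Set V}, Sep H W {z', w'} A B → z ∈ A ∪ {z', w'} → w ∈ A ∪ {z', w'} →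
          ∃ q ∈ W, q ≠ z ∧ q ≠ w ∧
            ∀ t ∉ W, IsPlanar (H ⊔ edge z q ⊔ edge w q ⊔ star t {z, w, q}) := by
        clear hs A B
        intro A B hs hz hw
        have e2 := hs.card
        have e3 := hs.cardA
        have e4 := hs.symm.cardA
        have e5 := hs.cardA_pos
        have e6 := hs.symm.cardA_pos
        rw [Set.ncard_pair hzw1.ne] at e2 e3 e4
        obtain ⟨q, hq, h1, h2, hp⟩ := ih _ (by omega) (rfl : (A ∪ {z', w'}).ncard = _) (by omega)
          (planar_mono hH.planar res_le) inW_res (res_adj.2 ⟨hzw', hz, hw⟩)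
        refine ⟨q, hs.subA hq, h1, h2, fun t ht => ?_⟩
        have hcap : insert t (A ∪ {z', w'}) ∩ (B ∪ {z', w'}) = {z', w'} := by
          rw [Set.insert_inter_of_notMem fun h => ht (hs.subB h)]
          exact hs.inter
        have i1 : InW (res H (A ∪ {z', w'}) ⊔ edge z q ⊔ edge w q ⊔ star t {z, w, q})
            (insert t (A ∪ {z', w'})) := by
          refine (((inW_res.mono (Set.subset_insert _ _)).sup
            (inW_edge (Or.inr hz) (Or.inr hq))).sup (inW_edge (Or.inr hw) (Or.inr hq))).sup
            (inW_star (Set.mem_insert _ _) ?_)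
          rintro x (rfl | rfl | rfl)
          exacts [Or.inr hz, Or.inr hw, Or.inr hq]
        have hadj : ∀ s ∈ ({z', w'} : Set V), ∀ s' ∈ ({z', w'} : Set V), s ≠ s' → H.Adj s s' := by
          rintro s (rfl | rfl) s' (rfl | rfl) hne
          exacts [(hne rfl).elim, hzw1, hzw1.symm, (hne rfl).elim]
        have := glue2 i1 (inW_res (G := H) (X := B ∪ {z', w'})) (Set.toFinite _)
          (by rw [hcap]; exact ncard_pair_le _ _)
          (by
            rw [hcap]
            exact fun s h1 s' h2 hne => Or.inl (Or.inl (Or.inl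
              (res_adj.2 ⟨hadj s h1 s' h2 hne, Or.inr h1, Or.inr h2⟩))))
          (by
            rw [hcap]
            exact fun s h1 s' h2 hne => res_adj.2 ⟨hadj s h1 s' h2 hne, Or.inr h1, Or.inr h2⟩)
          (hp t fun h => ht (hs.subA h)) (planar_mono hH.planar res_le)
        refine planar_mono this ?_
        intro u v huv
        have h5 := hs.eq_sup hH.inW
        rcases huv with ((huv | huv) | huv) | huv
        · rw [h5] at huv
          exact huv.imp (fun h => Or.inl (Or.inl (Or.inl h))) id
        · exact Or.inl (Or.inl (Or.inl (Or.inr huv)))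
        · exact Or.inl (Or.inl (Or.inr huv))
        · exact Or.inl (Or.inr huv)
      rcases hs.adj hH.inW hzw' with ⟨h1, h2⟩ | ⟨h1, h2⟩
      · exact key hs h1 h2
      · exact key hs.symm h1 h2

/-- Joining a new vertex to at least three vertices preserves 3-connectivity. -/
theorem Conn3.star (h : Conn3 G W) {t : V} (ht : t ∉ W) (hS : S ⊆ W) (h3 : 3 ≤ S.ncard) :
    Conn3 (G ⊔ PlanarAdd.star t S) (insert t W) := by
  refine ⟨h.1.trans (Set.ncard_le_ncard (Set.subset_insert _ _) (Set.toFinite _)), fun S' hS' => ?_⟩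
  have hc := (h.2 S' hS').mono (H := G ⊔ PlanarAdd.star t S) le_sup_left
  by_cases htS : t ∈ S'
  · rwa [Set.insert_sdiff_of_mem _ htS]
  · rw [Set.insert_sdiff_of_notMem _ htS]
    refine hc.insert ?_
    have : ∃ s ∈ S, s ∉ S' := by
      by_contra! hcon
      have := Set.ncard_le_ncard hcon (Set.toFinite _)
      omega
    obtain ⟨s, hs, hs'⟩ := this
    refine ⟨t, rfl, s, ⟨hS hs, hs'⟩, Or.inr (star_adj.2 ⟨?_, Or.inl ⟨rfl, hs⟩⟩)⟩
    rintro rfl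
    exact ht (hS hs)

theorem ncard_triple {x y z : V} (h1 : x ≠ y) (h2 : y ≠ z) (h3 : x ≠ z) :
    ({x, y, z} : Set V).ncard = 3 := Set.ncard_eq_three.2 ⟨x, y, z, h1, h3, h2, rfl⟩

/-- Subdividing a triangular face by a vertex `q` creates a triangular face at each side; a
further vertex can be placed in it. -/
theorem double_corner (hG : IsPlanar G) (hC3 : Conn3 G W) (hW : InW G W) (h : Per G W 3 c)
    {q t : V} (hq : q ∉ W) (ht : t ∉ W) (htq : t ≠ q) :
    IsPlanar (G ⊔ star q {c 0, c 1, c 2} ⊔ star t {c 0, c 1, q}) := by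
  have hsub : ({c 0, c 1, c 2} : Set V) ⊆ W := by
    rintro x (rfl | rfl | rfl) <;> exact h.sub ⟨_, rfl⟩
  have h01 := h.cyc.ne_of (i := 0) (j := 1) (by omega) (by omega)
  have h12 := h.cyc.ne_of (i := 1) (j := 2) (by omega) (by omega)
  have h02 := h.cyc.ne_of (i := 0) (j := 2) (by omega) (by omega)
  have hC' := hC3.star hq hsub (ncard_triple h01 h12 h02).ge
  have hq0 : c 0 ≠ q := fun h' => hq (h' ▸ h.sub ⟨0, rfl⟩)
  have hq1 : c 1 ≠ q := fun h' => hq (h' ▸ h.sub ⟨1, rfl⟩)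
  set G' := G ⊔ star q {c 0, c 1, c 2} with hG'
  have a01 : G'.Adj (c 0) (c 1) := Or.inl (by simpa using h.cyc.adj 0)
  have a1q : G'.Adj (c 1) q := Or.inr (star_adj.2 ⟨hq1, Or.inr ⟨rfl, by simp⟩⟩)
  have aq0 : G'.Adj q (c 0) := Or.inr (star_adj.2 ⟨hq0.symm, Or.inl ⟨rfl, by simp⟩⟩)
  have hP' : IsPlanar G' := planar_mono (corner_planar hG hC3 hW h hq)
    (sup_le (le_sup_left.trans le_sup_left) le_sup_right)
  have hW' : InW G' (insert q W) := (hW.mono (Set.subset_insert _ _)).sup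
    (inW_star (Set.mem_insert _ _) (hsub.trans (Set.subset_insert _ _)))
  have hper : Per G' (insert q W) 3 (tri (c 0) (c 1) q) := by
    have hcyc := tri_cyc a01 a1q aq0
    refine ⟨hcyc, ?_, ?_, ?_⟩
    · intro i j hij
      have := hij.ne
      rw [Ne, hcyc.inj] at this
      omega
    · rw [tri_range]
      rintro x (rfl | rfl | rfl)
      exacts [Or.inr (h.sub ⟨_, rfl⟩), Or.inr (h.sub ⟨_, rfl⟩), Or.inl rfl]
    · rw [tri_range]
      have : insert q W \ {c 0, c 1, q} = W \ {c 0, c 1} := by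
        ext x
        simp only [Set.mem_sdiff, Set.mem_insert_iff, Set.mem_singleton_iff]
        constructor
        · tauto
        · rintro ⟨h1, h2⟩
          refine ⟨Or.inr h1, ?_⟩
          have : x ≠ q := fun h' => hq (h' ▸ h1)
          tauto
      rw [this]
      exact (hC3.2 _ (ncard_pair_le _ _)).mono le_sup_left
  have := corner_planar hP' hC' hW' hper (t := t) (by
    rintro (h | h)
    exacts [htq h, ht h])
  refine planar_mono this (sup_le (le_sup_left.trans le_sup_left) ?_)
  simp only [tri]
  exact le_sup_right

end Corners

/-! ### Separations with a triangulated side -/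

noncomputable section TriSide
open scoped Classical
variable {V : Type*} [Fintype V] {G H : SimpleGraph V} {X W A B S : Set V} {l : ℕ} {c : ℤ → V}

theorem edge_le_of_adj {u v : V} (h : G.Adj u v) : edge u v ≤ G := by
  intro a b hab
  rcases edge_adj'.1 hab with ⟨⟨rfl, rfl⟩ | ⟨rfl, rfl⟩, -⟩
  exacts [h, h.symm]

theorem edge_le_star {t s : V} (hs : s ∈ S) : edge t s ≤ star t S := by
  intro a b hab
  rcases edge_adj'.1 hab with ⟨⟨rfl, rfl⟩ | ⟨rfl, rfl⟩, hne⟩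
  exacts [star_adj.2 ⟨hne, Or.inl ⟨rfl, hs⟩⟩, star_adj.2 ⟨hne, Or.inr ⟨rfl, hs⟩⟩]

set_option maxHeartbeats 1000000 in
/-- One side of an edge-separation is 3-connected with a triangular face `z w x`; on the other
side `B0` offers the corner `q` at `zw`. Then the edge `qx` can be added. -/
theorem apex_planar {z w : V} (h : Sep G W {z, w} A B) (hW : InW G W) (hG : IsPlanar G)
    (hzw : G.Adj z w) {B0 : Set V} (hB0 : B0 ⊆ B)
    (hcl : ∀ a ∈ B0, ∀ b ∈ B, G.Adj a b → b ∈ B0)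
    (hC3 : Conn3 (res G (A ∪ {z, w})) (A ∪ {z, w})) (hP : Per (res G (A ∪ {z, w})) (A ∪ {z, w}) 3 c)
    (h0 : c 0 = z) (h1 : c 1 = w) {q : V} (hq : q ∈ B0)
    (hcor : ∀ t ∉ B0 ∪ {z, w}, IsPlanar (res G (B0 ∪ {z, w}) ⊔ edge z q ⊔ edge w q ⊔
      star t {z, w, q})) : IsPlanar (G ⊔ edge q (c 2)) := by
  have hAB : ∀ x ∈ A, x ∉ B := fun x h1 h2 => Set.disjoint_left.1 h.dAB h1 h2
  have hAS : ∀ x ∈ A, x ∉ ({z, w} : Set V) := fun x h1 h2 => Set.disjoint_left.1 h.dAS h1 h2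
  have hBS : ∀ x ∈ B, x ∉ ({z, w} : Set V) := fun x h1 h2 => Set.disjoint_left.1 h.dBS h1 h2
  have hPN : IsPlanar (res G (A ∪ {z, w})) := planar_mono hG res_le
  have hqN : q ∉ A ∪ {z, w} := by
    rintro (h' | h')
    exacts [hAB q h' (hB0 hq), hBS q (hB0 hq) h']
  have hzN : z ∈ A ∪ {z, w} := by simp
  have hwN : w ∈ A ∪ {z, w} := by simp
  have hsub : ({z, w, c 2} : Set V) ⊆ A ∪ {z, w} := by
    rintro x (rfl | rfl | rfl)
    exacts [hzN, hwN, hP.sub ⟨2, rfl⟩]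
  set G1 := res G (A ∪ {z, w}) ⊔ star q {z, w, c 2} with hG1
  set G2 := res G (B0 ∪ {z, w}) ⊔ edge z q ⊔ edge w q with hG2
  have iG1 : InW G1 (insert q (A ∪ {z, w})) := (inW_res.mono (Set.subset_insert _ _)).sup
    (inW_star (Set.mem_insert _ _) (hsub.trans (Set.subset_insert _ _)))
  have iG2 : InW G2 (B0 ∪ {z, w}) := by
    have hq' : q ∈ B0 ∪ {z, w} := Or.inl hq
    exact (inW_res.sup (inW_edge (by simp) hq')).sup (inW_edge (by simp) hq')
  have hzq : z ≠ q := fun h' => hqN (h' ▸ hzN)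
  have hwq : w ≠ q := fun h' => hqN (h' ▸ hwN)
  have pG1 : IsPlanar G1 := by
    have := corner_planar hPN hC3 inW_res hP hqN
    rw [h0, h1] at this
    exact planar_mono this (sup_le (le_sup_left.trans le_sup_left) le_sup_right)
  have g1q : ∀ s ∈ ({z, w, c 2} : Set V), G1.Adj s q := fun s hs =>
    Or.inr (star_adj.2 ⟨fun h' => hqN (h' ▸ hsub hs), Or.inr ⟨rfl, hs⟩⟩)
  have g1zw : G1.Adj z w := Or.inl (res_adj.2 ⟨hzw, hzN, hwN⟩)
  have p12 : IsPlanar (G1 ⊔ G2) := by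
    by_cases hone : ∃ t ∈ B0, t ≠ q
    · obtain ⟨t1, ht1, ht1q⟩ := hone
      obtain ⟨t2, ht2⟩ := h.neA
      have ht1N : t1 ∉ A ∪ {z, w} := by
        rintro (h' | h')
        exacts [hAB t1 h' (hB0 ht1), hBS t1 (hB0 ht1) h']
      have hcap : insert q (A ∪ {z, w}) ∩ (B0 ∪ {z, w}) = {z, w, q} := by
        ext x
        have e1 := hAB x
        have e2 := @hB0 x
        simp only [Set.mem_inter_iff, Set.mem_union, Set.mem_insert_iff, Set.mem_singleton_iff]
        constructor
        · rintro ⟨rfl | h3 | h3, h4⟩ <;> tauto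
        · rintro (rfl | rfl | rfl) <;> simp [hq]
      refine glue3 iG1 iG2 (t1 := t1) (t2 := t2) ?_ ?_ (fun h' => ?_) (fun h' => ?_) ?_ ?_
      · rw [hcap]
        rintro s (rfl | rfl | rfl) s' (rfl | rfl | rfl) hne
        exacts [(hne rfl).elim, g1zw, g1q _ (by simp), g1zw.symm, (hne rfl).elim, g1q _ (by simp),
          (g1q _ (by simp)).symm, (g1q _ (by simp)).symm, (hne rfl).elim]
      · have g2zw : G2.Adj z w := Or.inl (Or.inl (res_adj.2 ⟨hzw, by simp, by simp⟩))
        have g2z : G2.Adj z q := Or.inl (Or.inr (edge_adj'.2 ⟨Or.inl ⟨rfl, rfl⟩, hzq⟩))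
        have g2w : G2.Adj w q := Or.inr (edge_adj'.2 ⟨Or.inl ⟨rfl, rfl⟩, hwq⟩)
        rw [hcap]
        rintro s (rfl | rfl | rfl) s' (rfl | rfl | rfl) hne
        exacts [(hne rfl).elim, g2zw, g2z, g2zw.symm, (hne rfl).elim, g2w,
          g2z.symm, g2w.symm, (hne rfl).elim]
      · rcases h' with h' | h'
        exacts [ht1q h', ht1N h']
      · rcases h' with h' | h'
        exacts [hAB t2 ht2 (hB0 h'), hAS t2 ht2 h']
      · rw [hcap]
        have := double_corner hPN hC3 inW_res hP hqN ht1N ht1q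
        rwa [h0, h1] at this
      · rw [hcap]
        refine hcor t2 fun h' => ?_
        rcases h' with h' | h'
        exacts [hAB t2 ht2 (hB0 h'), hAS t2 ht2 h']
    · push Not at hone
      refine planar_mono pG1 (sup_le le_rfl (sup_le (sup_le ?_ ?_) ?_))
      · rintro u v ⟨huv, hu, hv⟩
        have hu' : u = q ∨ u = z ∨ u = w := hu.imp (hone u) id
        have hv' : v = q ∨ v = z ∨ v = w := hv.imp (hone v) id
        rcases hu' with rfl | rfl | rfl <;> rcases hv' with rfl | rfl | rfl
        exacts [(huv.ne rfl).elim, (g1q _ (by simp)).symm, (g1q _ (by simp)).symm, g1q _ (by simp),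
          (huv.ne rfl).elim, g1zw, g1q _ (by simp), g1zw.symm, (huv.ne rfl).elim]
      · exact edge_le_of_adj (g1q z (by simp))
      · exact edge_le_of_adj (g1q w (by simp))
  have hcap : (insert q (A ∪ {z, w}) ∪ (B0 ∪ {z, w})) ∩ (B \ B0 ∪ {z, w}) = {z, w} := by
    ext x
    have e1 := hAB x
    have e2 := hBS x
    simp only [Set.mem_inter_iff, Set.mem_union, Set.mem_insert_iff, Set.mem_singleton_iff,
      Set.mem_sdiff] at *
    constructor
    · rintro ⟨(rfl | h3 | h3) | h3 | h3, h4⟩ <;> tauto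
    · rintro (rfl | rfl) <;> simp
  have hadj : ∀ s ∈ ({z, w} : Set V), ∀ s' ∈ ({z, w} : Set V), s ≠ s' → G.Adj s s' := by
    rintro s (rfl | rfl) s' (rfl | rfl) hne
    exacts [(hne rfl).elim, hzw, hzw.symm, (hne rfl).elim]
  have := glue2 ((iG1.mono Set.subset_union_left).sup (iG2.mono Set.subset_union_right))
    (inW_res (G := G) (X := B \ B0 ∪ {z, w})) (Set.toFinite _)
    (by rw [hcap]; exact ncard_pair_le _ _)
    (by
      rw [hcap]
      exact fun s h1 s' h2 hne => Or.inl (Or.inl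
        (res_adj.2 ⟨hadj s h1 s' h2 hne, Or.inr h1, Or.inr h2⟩)))
    (by
      rw [hcap]
      exact fun s h1 s' h2 hne => res_adj.2 ⟨hadj s h1 s' h2 hne, Or.inr h1, Or.inr h2⟩)
    p12 (planar_mono hG res_le)
  refine planar_mono this (sup_le ?_ ?_)
  · intro u v huv
    rcases h.adj hW huv with ⟨hu, hv⟩ | ⟨hu, hv⟩
    · exact Or.inl (Or.inl (Or.inl ⟨huv, hu, hv⟩))
    · by_cases hu0 : u ∈ B0
      · refine Or.inl (Or.inr (Or.inl (Or.inl ⟨huv, Or.inl hu0, ?_⟩)))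
        exact hv.imp (fun hv => hcl u hu0 v hv huv) id
      · by_cases hv0 : v ∈ B0
        · refine Or.inl (Or.inr (Or.inl (Or.inl ⟨huv, ?_, Or.inl hv0⟩)))
          exact hu.imp (fun hu => hcl v hv0 u hu huv.symm) id
        · exact Or.inr ⟨huv, hu.imp (fun h => ⟨h, hu0⟩) id, hv.imp (fun h => ⟨h, hv0⟩) id⟩
  · exact (edge_le_of_adj (g1q (c 2) (by simp)).symm).trans (le_sup_left.trans le_sup_left)

/-- If one side of an edge-separation is a triangulation, two edges from a corner on the other
side to the two apexes at the separating edge are individually but not jointly addable. -/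
theorem tri_side {z w : V} (h : Sep G W {z, w} A B) (hW : InW G W) (hG : IsPlanar G)
    (hzw : G.Adj z w) (hB : Link G {z, w} B) (h4 : 4 ≤ (A ∪ {z, w}).ncard)
    (hm : 3 * (A ∪ {z, w}).ncard ≤ edgeCount (res G (A ∪ {z, w})) + 6) :
    ∃ q ∈ W, ∃ x ∈ W, ∃ y ∈ W, IsPlanar (G ⊔ edge q x) ∧ IsPlanar (G ⊔ edge q y) ∧
      ¬ IsPlanar (G ⊔ edge q x ⊔ edge q y) := by
  obtain ⟨B0, hB0, hBc, hcl, hBt⟩ := hB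
  have hBS : ∀ x ∈ B, x ∉ ({z, w} : Set V) := fun x h1 h2 => Set.disjoint_left.1 h.dBS h1 h2
  have hPN : IsPlanar (res G (A ∪ {z, w})) := planar_mono hG res_le
  have hC3 := conn3_of_triangulated hPN inW_res h4 hm
  have htri : ∀ l c, Per (res G (A ∪ {z, w})) (A ∪ {z, w}) l c → l = 3 := by
    intro l c hc
    have := hc.cyc.three
    by_contra hne
    have h1 := chord_planar hPN hC3 inW_res hc (by omega)
    have h2 := edge_le _ rfl (by omega) h1
      (inW_res.sup (inW_edge (hc.sub ⟨_, rfl⟩) (hc.sub ⟨_, rfl⟩)))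
    rw [edgeCount_add_edge (hc.cyc.ne_of (i := 0) (j := 2) (by omega) (by omega))
      (hc.chord_not_adj (by omega))] at h2
    omega
  obtain ⟨l1, d1, l2, d2, hd1, hd2, he1, he2, hne⟩ := per_ge_two hC3 inW_res
    (res_adj.2 ⟨hzw, by simp, by simp⟩ : (res G (A ∪ {z, w})).Adj z w)
  obtain ⟨c1, hc1, h10, h11, hz1⟩ := hd1.at_edge he1
  obtain ⟨c2, hc2, h20, h21, hz2⟩ := hd2.at_edge he2
  obtain rfl := htri _ _ hc1
  obtain rfl := htri _ _ hc2
  have hzB : z ∉ B0 := fun h' => hBS z (hB0 h') (by simp)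
  have hwB : w ∉ B0 := fun h' => hBS w (hB0 h') (by simp)
  have hcardB : 3 ≤ (B0 ∪ {z, w}).ncard := by
    rw [Set.ncard_union_eq (by
      rw [Set.disjoint_left]; rintro x hx (rfl | rfl) <;> contradiction)
      (Set.toFinite _) (Set.toFinite _), Set.ncard_pair hzw.ne]
    have := (Set.ncard_pos (Set.toFinite _)).2 hBc.1
    omega
  obtain ⟨q, hq, hqz, hqw, hcor⟩ := exists_corner _ (rfl : (B0 ∪ {z, w}).ncard = _) hcardB
    (planar_mono hG res_le) inW_res
    (res_adj.2 ⟨hzw, by simp, by simp⟩ : (res G (B0 ∪ {z, w})).Adj z w)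
  have hqB : q ∈ B0 := hq.resolve_right (by rintro (h' | h'); exacts [hqz h', hqw h'])
  refine ⟨q, h.subB (Or.inl (hB0 hqB)), c1 2, h.subA (hc1.sub ⟨2, rfl⟩), c2 2,
    h.subA (hc2.sub ⟨2, rfl⟩),
    apex_planar h hW hG hzw hB0 hcl hC3 hc1 h10 h11 hqB hcor,
    apex_planar h hW hG hzw hB0 hcl hC3 hc2 h20 h21 hqB hcor, ?_⟩
  have hinter := per_inter hPN hC3 hc1 hc2 (by rw [hz1, hz2]; exact hne) hzw.ne
    ⟨0, h10⟩ ⟨0, h20⟩ ⟨1, h11⟩ ⟨1, h21⟩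
  have hx2 : c2 2 ≠ z ∧ c2 2 ≠ w := by
    rw [← h20, ← h21]
    exact ⟨(hc2.cyc.ne_of (i := 0) (j := 2) (by omega) (by omega)).symm,
      (hc2.cyc.ne_of (i := 1) (j := 2) (by omega) (by omega)).symm⟩
  have hx1 : c1 2 ≠ z ∧ c1 2 ≠ w := by
    rw [← h10, ← h11]
    exact ⟨(hc1.cyc.ne_of (i := 0) (j := 2) (by omega) (by omega)).symm,
      (hc1.cyc.ne_of (i := 1) (j := 2) (by omega) (by omega)).symm⟩
  have hy : c2 2 ∉ Set.range c1 := by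
    intro hmem
    have : c2 2 ∈ ({z, w} : Set V) := hinter ▸ ⟨hmem, ⟨2, rfl⟩⟩
    rcases this with h' | h'
    exacts [hx2.1 h', hx2.2 h']
  have hle : res G (A ∪ {z, w}) ≤ G ⊔ edge q (c1 2) ⊔ edge q (c2 2) :=
    res_le.trans (le_sup_left.trans le_sup_left)
  have hleG : G ≤ G ⊔ edge q (c1 2) ⊔ edge q (c2 2) := le_sup_left.trans le_sup_left
  have hBN : Disjoint B0 (A ∪ {z, w}) := by
    rw [Set.disjoint_left]
    rintro x hx (hx' | hx')
    exacts [Set.disjoint_left.1 h.dAB hx' (hB0 hx), hBS x (hB0 hx) hx']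
  have hxN : c1 2 ∈ A ∪ {z, w} := hc1.sub ⟨2, rfl⟩
  have hyN : c2 2 ∈ A ∪ {z, w} := hc2.sub ⟨2, rfl⟩
  have hqN : q ∉ A ∪ {z, w} := Set.disjoint_left.1 hBN hqB
  have a12 : G.Adj w (c1 2) := by
    have := (hc1.cyc.adj 1).1
    rw [h11] at this
    simpa using this
  have a20 : G.Adj (c1 2) z := by
    have := (hc1.cyc.adj 2).1
    have h3 := hc1.cyc.add_l 0
    norm_num at this h3
    rwa [h3, h10] at this
  refine not_planar_K5 (A := {z}) (B := {w}) (C := B0) (D := {c1 2})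
    (E := (A ∪ {z, w}) \ Set.range c1) (ConnSet.singleton _) (ConnSet.singleton _)
    (hBc.mono hleG) (ConnSet.singleton _) (hc1.conn.mono hle) ?_ ?_ <;>
    simp only [List.pairwise_cons, List.mem_cons, List.not_mem_nil, or_false, forall_eq_or_imp,
      forall_eq, false_imp_iff, implies_true, and_true, List.Pairwise.nil]
  · refine ⟨⟨?_, ?_, ?_, ?_⟩, ⟨?_, ?_, ?_⟩, ⟨?_, ?_⟩, ?_⟩
    · simpa using hzw.ne
    · simpa using hzB
    · simpa using hx1.1.symm
    · rw [Set.disjoint_singleton_left]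
      exact fun h' => h'.2 ⟨0, h10⟩
    · simpa using hwB
    · simpa using hx1.2.symm
    · rw [Set.disjoint_singleton_left]
      exact fun h' => h'.2 ⟨1, h11⟩
    · rw [Set.disjoint_singleton_right]
      exact fun h' => Set.disjoint_left.1 hBN h' hxN
    · exact hBN.mono_right Set.sdiff_subset
    · rw [Set.disjoint_singleton_left]
      exact fun h' => h'.2 ⟨2, rfl⟩
  · refine ⟨⟨?_, ?_, ?_, ?_⟩, ⟨?_, ?_, ?_⟩, ⟨?_, ?_⟩, ?_⟩
    · exact ⟨z, rfl, w, rfl, hleG hzw⟩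
    · exact (hBt z (by simp)).mono hleG subset_rfl subset_rfl
    · exact ⟨z, rfl, _, rfl, hleG a20.symm⟩
    · have := (hc1.touch_out hC3 0).mono hle subset_rfl subset_rfl
      rwa [h10] at this
    · exact (hBt w (by simp)).mono hleG subset_rfl subset_rfl
    · exact ⟨w, rfl, _, rfl, hleG a12⟩
    · have := (hc1.touch_out hC3 1).mono hle subset_rfl subset_rfl
      rwa [h11] at this
    · refine ⟨q, hqB, _, rfl, Or.inl (Or.inr (edge_adj'.2 ⟨Or.inl ⟨rfl, rfl⟩, ?_⟩))⟩
      exact fun h' => hqN (h' ▸ hxN)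
    · refine ⟨q, hqB, _, ⟨hyN, hy⟩, Or.inr (edge_adj'.2 ⟨Or.inl ⟨rfl, rfl⟩, ?_⟩)⟩
      exact fun h' => hqN (h' ▸ hyN)
    · exact (hc1.touch_out hC3 2).mono hle subset_rfl subset_rfl

end TriSide

/-! ### Conflicting triples of addable edges -/

noncomputable section Conflicts
open scoped Classical
variable {V : Type*} [Fintype V] {G H : SimpleGraph V} {X W A B S : Set V} {l : ℕ} {c : ℤ → V}

/-- There are at most three pairs inside `W` each of which can be added to `G` while keeping it
planar, but which cannot all be added together. -/
def Conflict (G : SimpleGraph V) (W : Set V) : Prop :=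
  ∃ C : Set (Sym2 V), C.ncard ≤ 3 ∧ (∀ e ∈ C, ∀ x ∈ e, x ∈ W) ∧
    (∀ e ∈ C, IsPlanar (G ⊔ fromEdgeSet {e})) ∧ ¬ IsPlanar (G ⊔ fromEdgeSet C)

theorem inW_fromEdgeSet {C : Set (Sym2 V)} (h : ∀ e ∈ C, ∀ x ∈ e, x ∈ W) :
    InW (fromEdgeSet C) W := fun u v huv => by
  rw [fromEdgeSet_adj] at huv
  exact ⟨h _ huv.1 u (by simp), h _ huv.1 v (by simp)⟩

theorem Link.mono (h : Link G S B) (hGH : G ≤ H)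
    (hcl : ∀ a ∈ B, ∀ b ∈ B, H.Adj a b → G.Adj a b) : Link H S B := by
  obtain ⟨B0, h1, h2, h3, h4⟩ := h
  exact ⟨B0, h1, h2.mono hGH, fun a ha b hb hab => h3 a ha b hb (hcl a (h1 ha) b hb hab),
    fun s hs => (h4 s hs).mono hGH subset_rfl subset_rfl⟩

/-- A conflict on one completed side of a separation is a conflict of the whole graph. -/
theorem Sep.lift (h : Sep G W S A B) (hW : InW G W) (hS : S.ncard ≤ 2) (hB : Link G S B)
    (hPB : IsPlanar (res G (B ∪ S) ⊔ res ⊤ S))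
    (hC : Conflict (res G (A ∪ S) ⊔ res ⊤ S) (A ∪ S)) : Conflict G W := by
  obtain ⟨C, hC3, hCW, hCp, hCn⟩ := hC
  have hBA : ∀ x ∈ B, x ∉ A ∪ S := by
    rintro x hx (h' | h')
    exacts [Set.disjoint_left.1 h.dAB h' hx, Set.disjoint_left.1 h.dBS hx h']
  refine ⟨C, hC3, fun e he x hx => h.subA (hCW e he x hx), fun e he => ?_, fun hp => hCn ?_⟩
  · have := h.glue hS ((inW_res.sup (inW_res_top Set.subset_union_right)).sup
      (inW_fromEdgeSet (C := {e}) (by rintro e' rfl; exact hCW e' he)))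
      (inW_res.sup (inW_res_top Set.subset_union_right))
      (le_sup_right.trans le_sup_left) le_sup_right (hCp e he) hPB
    refine planar_mono this (sup_le ?_ (le_sup_right.trans le_sup_left))
    conv_lhs => rw [h.eq_sup hW]
    exact sup_le_sup (le_sup_left.trans le_sup_left) le_sup_left
  · have := side_planar (A := A) hp hS (Set.disjoint_left.2 hBA) (hB.mono le_sup_left (by
      rintro a ha b - (hab | hab)
      · exact hab
      · exact (hBA a ha (inW_fromEdgeSet hCW hab).1).elim))
    refine planar_mono this (sup_le (sup_le ?_ le_sup_right) (le_trans ?_ le_sup_left))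
    · exact fun u v huv => Or.inl ⟨Or.inl huv.1, huv.2⟩
    · exact fun u v huv => ⟨Or.inr huv, inW_fromEdgeSet hCW huv⟩

theorem fromEdgeSet_pair (e f : Sym2 V) :
    fromEdgeSet {e, f} = fromEdgeSet {e} ⊔ fromEdgeSet {f} := by
  rw [Set.insert_eq, fromEdgeSet_union]

theorem conflict_two {e f : Sym2 V} (he : ∀ x ∈ e, x ∈ W) (hf : ∀ x ∈ f, x ∈ W)
    (h1 : IsPlanar (G ⊔ fromEdgeSet {e})) (h2 : IsPlanar (G ⊔ fromEdgeSet {f}))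
    (h3 : ¬ IsPlanar (G ⊔ fromEdgeSet {e} ⊔ fromEdgeSet {f})) : Conflict G W := by
  refine ⟨{e, f}, (Set.ncard_insert_le _ _).trans (by simp), ?_, ?_, ?_⟩
  · rintro x (rfl | rfl) <;> assumption
  · rintro x (rfl | rfl) <;> assumption
  · rwa [fromEdgeSet_pair, ← sup_assoc]

theorem conflict_three {d e f : Sym2 V} (hd : ∀ x ∈ d, x ∈ W) (he : ∀ x ∈ e, x ∈ W)
    (hf : ∀ x ∈ f, x ∈ W) (h1 : IsPlanar (G ⊔ fromEdgeSet {d} ⊔ fromEdgeSet {e}))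
    (h2 : IsPlanar (G ⊔ fromEdgeSet {d} ⊔ fromEdgeSet {f}))
    (h3 : ¬ IsPlanar (G ⊔ fromEdgeSet {d} ⊔ fromEdgeSet {e} ⊔ fromEdgeSet {f})) :
    Conflict G W := by
  refine ⟨{d, e, f}, (Set.ncard_insert_le _ _).trans ?_, ?_, ?_, ?_⟩
  · have := (Set.ncard_insert_le e {f}).trans (by simp : _ ≤ 2)
    omega
  · rintro x (rfl | rfl | rfl) <;> assumption
  · rintro x (rfl | rfl | rfl)
    · exact planar_mono h1 le_sup_left
    · exact planar_mono h1 (sup_le_sup_right le_sup_left _)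
    · exact planar_mono h2 (sup_le_sup_right le_sup_left _)
  · rwa [Set.insert_eq, fromEdgeSet_union, fromEdgeSet_pair, ← sup_assoc, ← sup_assoc]

theorem mem_pair_W {u v : V} (hu : u ∈ W) (hv : v ∈ W) : ∀ x ∈ s(u, v), x ∈ W := by
  intro x hx
  rcases Sym2.mem_iff.1 hx with rfl | rfl <;> assumption

theorem choose_two_gt {N : ℕ} (h : 5 ≤ N) : 3 * N < N.choose 2 + 6 := by
  induction N, h using Nat.le_induction with
  | base => decide
  | succ k hk ih =>
    have : (k + 1).choose 2 = k + k.choose 2 := by rw [Nat.choose_succ_succ' k 1]; simp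
    omega

/-- A planar graph on at least five vertices is not complete. -/
theorem exists_not_adj (hG : IsPlanar G) (hW : InW G W) (h5 : 5 ≤ W.ncard) :
    ∃ u ∈ W, ∃ v ∈ W, u ≠ v ∧ ¬ G.Adj u v := by
  by_contra! hcon
  have h1 : res ⊤ W ≤ G := fun u v h => hcon u h.2.1 v h.2.2 h.1
  have h2 := edgeCount_mono h1
  rw [edgeCount_complete] at h2
  have h3 := edge_le _ rfl (by omega) hG hW
  have := choose_two_gt h5
  omega

theorem Conn3.exists_nbr (h : Conn3 G W) {z : V} (hz : z ∈ W) : ∃ w, G.Adj z w := by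
  have h4 := h.1
  have hne : (W \ {z}).Nonempty := by
    rw [Set.nonempty_iff_ne_empty]
    intro h'
    have := Set.ncard_sdiff_singleton_add_one hz (Set.toFinite W)
    rw [h', Set.ncard_empty] at this
    omega
  obtain ⟨_, rfl, w, -, hw⟩ := h.conn.touch_diff (Set.singleton_subset_iff.2 hz) (by simp) hne
  exact ⟨w, hw⟩

/-- A separation with a triangulated (completed) side yields a conflict. -/
theorem conflict_tri (h : Sep G W S A B) (hW : InW G W) (hG : IsPlanar G) (hS : S.ncard ≤ 2)
    (hB : Link G S B) (hPB : IsPlanar (res G (B ∪ S) ⊔ res ⊤ S)) (h4 : 4 ≤ (A ∪ S).ncard)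
    (h5 : S = ∅ → 5 ≤ (A ∪ S).ncard)
    (hm : 3 * (A ∪ S).ncard ≤ edgeCount (res G (A ∪ S) ⊔ res ⊤ S) + 6) : Conflict G W := by
  have hBA : ∀ x ∈ B, x ∉ A ∪ S := by
    rintro x hx (h' | h')
    exacts [Set.disjoint_left.1 h.dAB h' hx, Set.disjoint_left.1 h.dBS hx h']
  have hPA := side_planar (A := A) hG hS (Set.disjoint_left.2 hBA) hB
  rcases (by omega : S.ncard = 0 ∨ S.ncard = 1 ∨ S.ncard = 2) with h0 | h1 | h2
  · obtain rfl := (Set.ncard_eq_zero (Set.toFinite _)).1 h0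
    rw [res_top_subsingleton (by simp), sup_bot_eq] at hm hPA
    obtain ⟨u1, hu1, u2, hu2, hne, hnadj⟩ := exists_not_adj hPA inW_res (h5 rfl)
    obtain ⟨v, hv⟩ := h.neB
    have hW1 := h.subA hu1
    have hW2 := h.subA hu2
    have hvW := h.subB (Or.inl hv)
    have hd1 : u1 ≠ v := fun h' => hBA v hv (h' ▸ hu1)
    have hd2 : u2 ≠ v := fun h' => hBA v hv (h' ▸ hu2)
    refine conflict_two (e := s(u1, v)) (f := s(u2, v)) (mem_pair_W hW1 hvW) (mem_pair_W hW2 hvW)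
      (h.bridge hW hG (by simp) (by simpa using hu1) hv (by simp) (by simp))
      (h.bridge hW hG (by simp) (by simpa using hu2) hv (by simp) (by simp)) fun hp => ?_
    have hp' : IsPlanar (G ⊔ edge u1 v ⊔ edge u2 v) := hp
    have := virtual_edge (P := {v}) hp' (G1 := res G (A ∪ ∅)) inW_res
      (res_le.trans (le_sup_left.trans le_sup_left)) (ConnSet.singleton v)
      (by simpa using hBA v hv) hu1 hu2
      ⟨u1, rfl, v, rfl, Or.inl (Or.inr (edge_adj'.2 ⟨Or.inl ⟨rfl, rfl⟩, hd1⟩))⟩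
      ⟨u2, rfl, v, rfl, Or.inr (edge_adj'.2 ⟨Or.inl ⟨rfl, rfl⟩, hd2⟩)⟩
    have e1 := edge_le _ rfl (by omega) this (inW_res.sup (inW_edge hu1 hu2))
    rw [edgeCount_add_edge hne hnadj] at e1
    omega
  · obtain ⟨z, rfl⟩ := Set.ncard_eq_one.1 h1
    rw [res_top_subsingleton (by simp), sup_bot_eq] at hm hPA
    have hC3 := conn3_of_triangulated hPA inW_res h4 hm
    have hzA : z ∈ A ∪ {z} := by simp
    obtain ⟨w, hzw⟩ := hC3.exists_nbr hzA
    have hwA : w ∈ A := hzw.2.2.resolve_right (fun h' => hzw.ne (Set.mem_singleton_iff.1 h').symm)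
    obtain ⟨B0, hB0, hBc, hcl, hBt⟩ := hB
    obtain ⟨z', hz', q, hq, hzq⟩ := hBt z rfl
    rw [Set.mem_singleton_iff.1 hz'] at hzq
    have hWw := h.subA hzw.2.2
    have hqW := h.subB (Or.inl (hB0 hq))
    have hwq : w ≠ q := fun h' => Set.disjoint_left.1 h.dAB hwA (h' ▸ hB0 hq)
    have hPb := h.bridge hW hG (by simp) hwA (hB0 hq)
      (by rintro s rfl; exact hzw.1.symm) (by rintro s rfl; exact hzq.symm)
    have hAe : A \ {w} ∪ {z, w} = A ∪ {z} := by
      ext x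
      simp only [Set.mem_union, Set.mem_sdiff, Set.mem_singleton_iff, Set.mem_insert_iff]
      by_cases hx : x = w
      · subst hx; tauto
      · tauto
    have hwB : w ∉ B := fun h' => Set.disjoint_left.1 h.dAB hwA h'
    have hsep : Sep (G ⊔ edge w q) W {z, w} (A \ {w}) B := by
      refine ⟨?_, h.dAB.mono_left Set.sdiff_subset, ?_, ?_, ?_, h.neB, ?_⟩
      · rw [← h.cover, Set.union_right_comm, hAe, Set.union_right_comm]
      · rw [Set.disjoint_left]
        rintro x hx (rfl | rfl)
        exacts [Set.disjoint_left.1 h.dAS hx.1 rfl, hx.2 rfl]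
      · rw [Set.disjoint_left]
        rintro x hx (rfl | rfl)
        exacts [Set.disjoint_left.1 h.dBS hx rfl, hwB hx]
      · rw [Set.nonempty_iff_ne_empty]
        intro h'
        rw [h', Set.empty_union] at hAe
        rw [← hAe] at h4
        have := ncard_pair_le z w
        omega
      · rintro a ha b hb (hab | hab)
        · exact h.cut a ha.1 b hb hab
        · rcases edge_adj'.1 hab with ⟨⟨rfl, rfl⟩ | ⟨rfl, rfl⟩, -⟩
          exacts [ha.2 rfl, hwB hb]
    have hlink : Link (G ⊔ edge w q) {z, w} B := by
      refine ⟨B0, hB0, hBc.mono le_sup_left, ?_, ?_⟩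
      · rintro a ha b hb (hab | hab)
        · exact hcl a ha b hb hab
        · rcases edge_adj'.1 hab with ⟨⟨rfl, rfl⟩ | ⟨rfl, rfl⟩, -⟩
          exacts [hq, (hwB hb).elim]
      · rintro s (rfl | rfl)
        · exact ⟨_, rfl, q, hq, Or.inl hzq⟩
        · exact ⟨_, rfl, q, hq, Or.inr (edge_adj'.2 ⟨Or.inl ⟨rfl, rfl⟩, hwq⟩)⟩
    have hW' : InW (G ⊔ edge w q) W := hW.sup (inW_edge hWw hqW)
    obtain ⟨q', hq', x, hx, y, hy, p1, p2, p3⟩ := tri_side hsep hW' hPb (Or.inl hzw.1) hlink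
      (by rwa [hAe]) (by
        rw [hAe]
        have := edgeCount_mono (G := res G (A ∪ {z})) (H := res (G ⊔ edge w q) (A ∪ {z}))
          fun u v huv => ⟨Or.inl huv.1, huv.2⟩
        omega)
    exact conflict_three (d := s(w, q)) (e := s(q', x)) (f := s(q', y)) (mem_pair_W hWw hqW)
      (mem_pair_W hq' hx) (mem_pair_W hq' hy) p1 p2 p3
  · obtain ⟨z, w, hne, rfl⟩ := Set.ncard_eq_two.1 h2
    have hGl := h.glue hS (inW_res.sup (inW_res_top Set.subset_union_right))
      (inW_res.sup (inW_res_top Set.subset_union_right)) le_sup_right le_sup_right hPA hPB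
    rw [res_top_pair] at hGl hm
    have hPz : IsPlanar (G ⊔ edge z w) := by
      refine planar_mono hGl (sup_le ?_ (le_sup_right.trans le_sup_left))
      conv_lhs => rw [h.eq_sup hW]
      exact sup_le_sup le_sup_left le_sup_left
    have hzW := h.subS (show z ∈ ({z, w} : Set V) by simp)
    have hwW := h.subS (show w ∈ ({z, w} : Set V) by simp)
    have hnotB : ∀ b ∈ B, b ≠ z ∧ b ≠ w := fun b hb =>
      ⟨fun h' => Set.disjoint_left.1 h.dBS hb (by simp [h']),
        fun h' => Set.disjoint_left.1 h.dBS hb (by simp [h'])⟩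
    have hBe : ∀ b ∈ B, ∀ a, (edge z w).Adj a b → False := by
      intro b hb a hab
      have := hnotB b hb
      rcases edge_adj'.1 hab with ⟨⟨rfl, rfl⟩ | ⟨rfl, rfl⟩, -⟩ <;> simp at this
    have hsep : Sep (G ⊔ edge z w) W {z, w} A B := by
      refine ⟨h.cover, h.dAB, h.dAS, h.dBS, h.neA, h.neB, ?_⟩
      rintro a ha b hb (hab | hab)
      exacts [h.cut a ha b hb hab, hBe b hb a hab]
    have hlink : Link (G ⊔ edge z w) {z, w} B := hB.mono le_sup_left (by
      rintro a ha b hb (hab | hab)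
      exacts [hab, (hBe b hb a hab).elim])
    obtain ⟨q', hq', x, hx, y, hy, p1, p2, p3⟩ := tri_side hsep (hW.sup (inW_edge hzW hwW)) hPz
      (Or.inr (edge_adj'.2 ⟨Or.inl ⟨rfl, rfl⟩, hne⟩)) hlink h4 (by
        have := edgeCount_mono (G := res G (A ∪ {z, w}) ⊔ edge z w)
          (H := res (G ⊔ edge z w) (A ∪ {z, w}))
          (sup_le (fun u v huv => ⟨Or.inl huv.1, huv.2⟩)
            fun u v huv => ⟨Or.inr huv, inW_edge (by simp) (by simp) huv⟩)
        omega)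
    exact conflict_three (d := s(z, w)) (e := s(q', x)) (f := s(q', y)) (mem_pair_W hzW hwW)
      (mem_pair_W hq' hx) (mem_pair_W hq' hy) p1 p2 p3

end Conflicts

/-! ### Existence of conflicts in dense planar graphs -/

noncomputable section ConflictExists
open scoped Classical
variable {V : Type*} [Fintype V] {G H : SimpleGraph V} {X W A B S : Set V} {l : ℕ} {c : ℤ → V}

/-- The density range in which conflicts are shown to exist. -/
structure Range (G : SimpleGraph V) (W : Set V) : Prop where
  five : 5 ≤ W.ncard
  planar : IsPlanar G
  inW : InW G W
  low : 2 * W.ncard ≤ edgeCount G + 3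
  high : edgeCount G + 7 ≤ 3 * W.ncard

/-- If one completed side of a separation is dense enough, either it is triangulated or
it has a conflict by induction; both give a conflict of the whole graph. -/
theorem conflict_side
    (ih : ∀ (H : SimpleGraph V) (X : Set V), X.ncard < W.ncard → Range H X → Conflict H X)
    (h : Sep G W S A B) (hW : InW G W) (hG : IsPlanar G) (hS : S.ncard ≤ 2) (hB : Link G S B)
    (hPB : IsPlanar (res G (B ∪ S) ⊔ res ⊤ S)) (h4 : 4 ≤ (A ∪ S).ncard)
    (h5 : S = ∅ → 5 ≤ (A ∪ S).ncard)
    (h6 : (A ∪ S).ncard = 4 → 6 ≤ edgeCount (res G (A ∪ S) ⊔ res ⊤ S))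
    (hm : 2 * (A ∪ S).ncard ≤ edgeCount (res G (A ∪ S) ⊔ res ⊤ S) + 3) : Conflict G W := by
  by_cases ht : 3 * (A ∪ S).ncard ≤ edgeCount (res G (A ∪ S) ⊔ res ⊤ S) + 6
  · exact conflict_tri h hW hG hS hB hPB h4 h5 ht
  · refine h.lift hW hS hB hPB (ih _ _ ?_ ⟨by omega, ?_, ?_, hm, by omega⟩)
    · have := h.card
      have := h.symm.cardA
      have := h.symm.cardA_pos
      omega
    · refine side_planar hG hS ?_ hB
      rw [Set.disjoint_union_right]
      exact ⟨h.dAB.symm, h.dBS⟩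
    · exact inW_res.sup (inW_res_top Set.subset_union_right)

theorem edgeCount_le_del (hW : InW G W) (v : V) :
    edgeCount G ≤ edgeCount (res G (W \ {v})) + (G.neighborSet v).ncard := by
  have hsub : G.edgeSet ⊆ (res G (W \ {v})).edgeSet ∪ (fun x => s(v, x)) '' G.neighborSet v := by
    intro e
    induction e using Sym2.ind with
    | _ x y =>
      intro hxy
      have hxy' : G.Adj x y := hxy
      by_cases hx : x = v
      · subst hx; exact Or.inr ⟨y, hxy', rfl⟩
      by_cases hy : y = v
      · subst hy; exact Or.inr ⟨x, hxy'.symm, Sym2.eq_swap⟩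
      exact Or.inl ⟨hxy', ⟨(hW hxy').1, hx⟩, (hW hxy').2, hy⟩
  refine (Set.ncard_le_ncard hsub (Set.toFinite _)).trans ((Set.ncard_union_le _ _).trans ?_)
  exact Nat.add_le_add_left (Set.ncard_image_le (Set.toFinite _)) _

/-- On five vertices, all the missing edges together form a conflict. -/
theorem conflict_five (h : Range G W) (h5 : W.ncard = 5) : Conflict G W := by
  have hle := le_res_top h.inW
  have hsub : G.edgeSet ⊆ (res ⊤ W).edgeSet := edgeSet_subset_edgeSet.2 hle
  have hcard := Set.ncard_sdiff_add_ncard_of_subset hsub (Set.toFinite _)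
  have h10 : (res ⊤ W).edgeSet.ncard = 10 := by
    have := edgeCount_complete W
    rw [h5] at this
    exact this
  have hlow := h.low
  have hhigh := h.high
  unfold edgeCount at hlow hhigh
  refine ⟨(res ⊤ W).edgeSet \ G.edgeSet, by omega, fun e he => (mem_edgeSet_res.1 he.1).2, ?_, ?_⟩
  · intro e he
    obtain ⟨f, hf, hfe⟩ := Set.exists_ne_of_one_lt_ncard
      (show 1 < ((res ⊤ W).edgeSet \ G.edgeSet).ncard by omega) e
    induction f using Sym2.ind with
    | _ x y =>
      have hxy := hf.1
      refine planar_of_card_five (Set.toFinite W) (h.inW.sup (inW_fromEdgeSet (by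
        rintro e' rfl; exact (mem_edgeSet_res.1 he.1).2))) h5 (x := x) (y := y) hxy.2.1 hxy.2.2
        hxy.1 ?_
      rintro (h' | h')
      · exact hf.2 h'
      · rw [fromEdgeSet_adj] at h'
        exact hfe h'.1
  · intro hp
    have hle2 : res ⊤ W ≤ G ⊔ fromEdgeSet ((res ⊤ W).edgeSet \ G.edgeSet) := by
      intro u v huv
      by_cases hadj : G.Adj u v
      · exact Or.inl hadj
      · exact Or.inr ((fromEdgeSet_adj _).2 ⟨⟨huv, hadj⟩, huv.ne⟩)
    have := edge_le _ rfl (by omega) (planar_mono hp hle2) inW_res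
    rw [h5] at this
    unfold edgeCount at this
    omega

/-- A vertex of degree at most two can be removed. -/
theorem conflict_low_degree
    (ih : ∀ (H : SimpleGraph V) (X : Set V), X.ncard < W.ncard → Range H X → Conflict H X)
    (h : Range G W) (h6 : 6 ≤ W.ncard) {v : V} (hv : v ∈ W) (hd : (G.neighborSet v).ncard ≤ 2) :
    Conflict G W := by
  set S := G.neighborSet v with hSdef
  have hvS : v ∉ S := G.irrefl
  have hSW : S ⊆ W := fun x hx => (h.inW hx).2
  have hAS : (W \ insert v S) ∪ S = W \ {v} := by
    ext x
    simp only [Set.mem_union, Set.mem_sdiff, Set.mem_insert_iff, Set.mem_singleton_iff]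
    constructor
    · rintro (⟨h1, h2⟩ | h1)
      · exact ⟨h1, fun h' => h2 (Or.inl h')⟩
      · exact ⟨hSW h1, fun h' => hvS (h' ▸ h1)⟩
    · rintro ⟨h1, h2⟩
      by_cases hx : x ∈ S
      · exact Or.inr hx
      · exact Or.inl ⟨h1, fun h' => h'.elim h2 hx⟩
  have hcard : (W \ {v}).ncard + 1 = W.ncard :=
    Set.ncard_sdiff_singleton_add_one hv (Set.toFinite W)
  have hsep : Sep G W S (W \ insert v S) {v} := by
    refine ⟨?_, ?_, ?_, ?_, ?_, by simp, ?_⟩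
    · rw [Set.union_right_comm, hAS, Set.sdiff_union_of_subset (Set.singleton_subset_iff.2 hv)]
    · rw [Set.disjoint_left]
      rintro x hx rfl
      exact hx.2 (Or.inl rfl)
    · rw [Set.disjoint_left]
      exact fun x hx hxS => hx.2 (Or.inr hxS)
    · rw [Set.disjoint_left]
      rintro x rfl
      exact hvS
    · rw [Set.nonempty_iff_ne_empty]
      intro h'
      rw [h', Set.empty_union] at hAS
      rw [← hAS] at hcard
      omega
    · rintro a ha b rfl hab
      exact ha.2 (Or.inr hab.symm)
  have hlink : Link G S {v} := by
    refine ⟨{v}, subset_rfl, ConnSet.singleton v, fun a _ b hb _ => hb, fun s hs => ?_⟩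
    exact ⟨s, rfl, v, rfl, (show G.Adj v s from hs).symm⟩
  have hPB : IsPlanar (res G ({v} ∪ S) ⊔ res ⊤ S) := by
    refine planar_of_card_le_four (Set.toFinite ({v} ∪ S))
      (inW_res.sup (inW_res_top Set.subset_union_right)) ?_
    refine (Set.ncard_union_le _ _).trans ?_
    rw [Set.ncard_singleton]
    omega
  have hlow := h.low
  have hdel := edgeCount_le_del h.inW v
  rw [← hSdef] at hdel
  have hmono := edgeCount_mono (G := res G (W \ {v})) (H := res G (W \ {v}) ⊔ res ⊤ S) le_sup_left
  refine conflict_side ih hsep h.inW h.planar hd hlink hPB ?_ ?_ ?_ ?_ <;> rw [hAS]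
  · omega
  · intro; omega
  · intro; omega
  · omega

/-- In a graph of minimum degree three, each side of a small separation has at least four vertices,
with equality only if the completed side is complete. -/
theorem Sep.side_four (h : Sep G W S A B) (hW : InW G W)
    (hd : ∀ v ∈ W, 3 ≤ (G.neighborSet v).ncard) :
    4 ≤ (A ∪ S).ncard ∧ ((A ∪ S).ncard = 4 → 6 ≤ edgeCount (res G (A ∪ S) ⊔ res ⊤ S)) := by
  have hN : ∀ a ∈ A, G.neighborSet a ⊆ (A ∪ S) \ {a} := by
    intro a ha x hx
    have hax : G.Adj a x := hx
    have hxW := (hW hax).2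
    rw [← h.cover] at hxW
    refine ⟨?_, fun h' => hax.ne (Set.mem_singleton_iff.1 h').symm⟩
    rcases hxW with (hxA | hxB) | hxS
    · exact Or.inl hxA
    · exact (h.cut a ha x hxB hax).elim
    · exact Or.inr hxS
  have hc : ∀ a ∈ A, ((A ∪ S) \ {a}).ncard + 1 = (A ∪ S).ncard := fun a ha =>
    Set.ncard_sdiff_singleton_add_one (Or.inl ha) (Set.toFinite _)
  constructor
  · obtain ⟨a, ha⟩ := h.neA
    have h1 := Set.ncard_le_ncard (hN a ha) (Set.toFinite _)
    have h2 := hc a ha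
    have h3 := hd a (h.subA (Or.inl ha))
    omega
  · intro h4
    have hfull : ∀ a ∈ A, ∀ x ∈ A ∪ S, x ≠ a → G.Adj a x := by
      intro a ha x hx hxa
      have h2 := hc a ha
      have h3 := hd a (h.subA (Or.inl ha))
      have := Set.eq_of_subset_of_ncard_le (hN a ha) (by omega) (Set.toFinite _)
      have hx' : x ∈ (A ∪ S) \ {a} := ⟨hx, hxa⟩
      rw [← this] at hx'
      exact hx'
    have hle : res ⊤ (A ∪ S) ≤ res G (A ∪ S) ⊔ res ⊤ S := by
      rintro u v ⟨huv, hu, hv⟩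
      have hne : u ≠ v := huv
      rcases hu with hu | hu
      · exact Or.inl ⟨hfull u hu v hv hne.symm, Or.inl hu, hv⟩
      rcases hv with hv | hv
      · exact Or.inl ⟨(hfull v hv u (Or.inr hu) hne).symm, Or.inr hu, Or.inl hv⟩
      · exact Or.inr ⟨hne, hu, hv⟩
    have := edgeCount_mono hle
    rw [edgeCount_complete, h4] at this
    exact this

theorem Sep.completed_edges (h : Sep G W S A B) (hW : InW G W) :
    edgeCount G + S.ncard.choose 2 ≤
      edgeCount (res G (A ∪ S) ⊔ res ⊤ S) + edgeCount (res G (B ∪ S) ⊔ res ⊤ S) := by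
  have hAS : ∀ a ∈ A, a ∉ S := fun a ha hs => Set.disjoint_left.1 h.dAS ha hs
  have h' : Sep (G ⊔ res ⊤ S) W S A B := by
    refine ⟨h.cover, h.dAB, h.dAS, h.dBS, h.neA, h.neB, ?_⟩
    rintro a ha b hb (hab | hab)
    · exact h.cut a ha b hb hab
    · exact hAS a ha hab.2.1
  have h1 := h'.edges (hW.sup (inW_res_top fun x hx => h.subS hx))
  have h2 : ∀ Y : Set V, res (G ⊔ res ⊤ S) (Y ∪ S) = res G (Y ∪ S) ⊔ res ⊤ S := by
    intro Y
    ext u v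
    simp only [res_adj, sup_adj, top_adj, Set.mem_union]
    tauto
  have h3 : res (G ⊔ res ⊤ S) S = res ⊤ S := by
    ext u v
    simp only [res_adj, sup_adj, top_adj]
    constructor
    · rintro ⟨h1 | h1, h2⟩
      exacts [⟨h1.ne, h2⟩, h1]
    · exact fun h1 => ⟨Or.inr h1, h1.2⟩
  rw [h2, h2, h3, edgeCount_complete] at h1
  have h4 := edgeCount_mono (G := G) (H := G ⊔ res ⊤ S) le_sup_left
  omega

/-- Induction on the number of vertices. A 3-connected graph has a non-triangular face, whose crossing
chords conflict; otherwise a separation of order at most two has a side that is dense enough. -/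
theorem conflict_aux (n : ℕ) : ∀ (G : SimpleGraph V) (W : Set V), W.ncard = n → Range G W →
    Conflict G W := by
  induction n using Nat.strong_induction_on with
  | _ n IH =>
  intro G W hn h
  have ih : ∀ (H : SimpleGraph V) (X : Set V), X.ncard < W.ncard → Range H X → Conflict H X :=
    fun H X hX hR => IH _ (hn ▸ hX) H X rfl hR
  have h5 := h.five
  by_cases h5' : W.ncard = 5
  · exact conflict_five h h5'
  by_cases hd : ∃ v ∈ W, (G.neighborSet v).ncard ≤ 2
  · obtain ⟨v, hv, hd⟩ := hd
    exact conflict_low_degree ih h (by omega) hv hd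
  have hd' : ∀ v ∈ W, 3 ≤ (G.neighborSet v).ncard := by
    intro v hv
    by_contra hlt
    exact hd ⟨v, hv, by omega⟩
  by_cases hcon : ∀ S : Set V, S.ncard ≤ 2 → ConnSet G (W \ S)
  · have hC3 : Conn3 G W := ⟨by omega, hcon⟩
    have hper : ∃ l c, Per G W l c ∧ l ≠ 3 := by
      by_contra! hno
      have := conn3_edge_ge h.planar hC3 h.inW hno
      have := h.high
      omega
    obtain ⟨l, c, hp, hl⟩ := hper
    have h3 := hp.cyc.three
    have hl4 : 4 ≤ l := by omega
    have hmem : ∀ i, c i ∈ W := fun i => hp.sub ⟨i, rfl⟩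
    refine conflict_two (e := s(c 0, c 2)) (f := s(c 1, c 3)) (mem_pair_W (hmem _) (hmem _))
      (mem_pair_W (hmem _) (hmem _)) (chord_planar h.planar hC3 h.inW hp hl4)
      (chord_planar h.planar hC3 h.inW (hp.shift 1) hl4) (crossing_chords hC3 hp hl4)
  · obtain ⟨S, A, B, hS, hsep, hA, hB⟩ := sep_min (by omega) hcon
    have hPA : IsPlanar (res G (A ∪ S) ⊔ res ⊤ S) := side_planar h.planar hS (by
      rw [Set.disjoint_union_right]
      exact ⟨hsep.dAB.symm, hsep.dBS⟩) hB
    have hPB : IsPlanar (res G (B ∪ S) ⊔ res ⊤ S) := side_planar h.planar hS (by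
      rw [Set.disjoint_union_right]
      exact ⟨hsep.dAB, hsep.dAS⟩) hA
    obtain ⟨a4, a6⟩ := hsep.side_four h.inW hd'
    obtain ⟨b4, b6⟩ := hsep.symm.side_four h.inW hd'
    have hedges := hsep.completed_edges h.inW
    have hcard := hsep.card
    have ea := edge_le _ rfl (by omega) hPA (inW_res.sup (inW_res_top Set.subset_union_right))
    have eb := edge_le _ rfl (by omega) hPB (inW_res.sup (inW_res_top Set.subset_union_right))
    have hlow := h.low
    have hgood : ((S.ncard = 0 → 5 ≤ (A ∪ S).ncard) ∧
        2 * (A ∪ S).ncard ≤ edgeCount (res G (A ∪ S) ⊔ res ⊤ S) + 3) ∨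
        ((S.ncard = 0 → 5 ≤ (B ∪ S).ncard) ∧
        2 * (B ∪ S).ncard ≤ edgeCount (res G (B ∪ S) ⊔ res ⊤ S) + 3) := by
      rcases (by omega : S.ncard = 0 ∨ S.ncard = 1 ∨ S.ncard = 2) with h0 | h0 | h0 <;>
        rw [h0] at hedges hcard ⊢ <;> norm_num [Nat.choose] at hedges <;> omega
    rcases hgood with ⟨g1, g2⟩ | ⟨g1, g2⟩
    · exact conflict_side ih hsep h.inW h.planar hS hB hPB a4
        (fun h0 => g1 (by rw [h0, Set.ncard_empty])) a6 g2
    · exact conflict_side ih hsep.symm h.inW h.planar hS hA hPA b4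
        (fun h0 => g1 (by rw [h0, Set.ncard_empty])) b6 g2

/-- A planar graph with `n ≥ 5` vertices and between `2n - 3` and `3n - 7` edges has a conflict. -/
theorem Range.conflict (h : Range G W) : Conflict G W := conflict_aux _ G W rfl h

end ConflictExists

/-! ### The lower bound -/

noncomputable section Lower
open scoped Classical
variable {V : Type*} [Fintype V]

/-- Take a minimal non-planar subset `D` of a conflict: adding all of `D` but one pair `d` uses up
the addable pairs in `D`, and `d` stops being addable. Hence `|D| - 1 ∈ {1, 2}` added edges cost
at least `|D|` addable pairs, a ratio of at least `3 / 2`. -/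
theorem lower_bound (k : ℕ) : ∀ G : SimpleGraph V, IsPlanar G → 5 ≤ (Set.univ : Set V).ncard →
    edgeCount G + k + 6 = 3 * (Set.univ : Set V).ncard →
    2 * (Set.univ : Set V).ncard ≤ edgeCount G + 3 → 3 * k ≤ 2 * (addableSet G).ncard := by
  induction k using Nat.strong_induction_on with
  | _ k IH =>
  intro G hG h5 hk hlow
  rcases Nat.eq_zero_or_pos k with rfl | hkpos
  · simp
  have hU : ∀ H : SimpleGraph V, InW H Set.univ := fun H u v _ => ⟨trivial, trivial⟩
  obtain ⟨C, hC3, -, hCp, hCn⟩ := (Range.mk h5 hG (hU G) hlow (by omega)).conflict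
  obtain ⟨D, hDC, hDmin⟩ := exists_minimal_le_of_wellFoundedLT
    (fun D : Set (Sym2 V) => ¬ IsPlanar (G ⊔ fromEdgeSet D)) C hCn
  have hDn : ¬ IsPlanar (G ⊔ fromEdgeSet D) := hDmin.prop
  have hDle : D ⊆ C := hDC
  have hdel : ∀ d ∈ D, IsPlanar (G ⊔ fromEdgeSet (D \ {d})) := by
    intro d hd
    by_contra hn
    exact (hDmin.le_of_le hn Set.sdiff_subset hd).2 rfl
  have hsplit : ∀ d ∈ D, fromEdgeSet D = fromEdgeSet (D \ {d}) ⊔ fromEdgeSet {d} := by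
    intro d hd
    rw [← fromEdgeSet_union, Set.sdiff_union_of_subset (Set.singleton_subset_iff.2 hd)]
  have hnot : ∀ d ∈ D, ¬ fromEdgeSet {d} ≤ G := by
    intro d hd hle
    refine hDn (planar_mono (hdel d hd) ?_)
    rw [hsplit d hd]
    exact sup_le le_sup_left (sup_le le_sup_right (hle.trans le_sup_left))
  have hadd : ∀ d ∈ D, d ∈ addableSet G := by
    intro d hd
    refine ⟨fun hdiag => hnot d hd ?_, fun hmem => hnot d hd ?_, hCp d (hDle hd)⟩
    · intro u v huv
      rw [fromEdgeSet_adj] at huv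
      rw [← Set.mem_singleton_iff.1 huv.1] at hdiag
      exact (huv.2 (Sym2.mk_isDiag_iff.1 hdiag)).elim
    · intro u v huv
      rw [fromEdgeSet_adj] at huv
      rw [← Set.mem_singleton_iff.1 huv.1] at hmem
      exact hmem
  have hDne : D.Nonempty := by
    rw [Set.nonempty_iff_ne_empty]
    rintro rfl
    exact hDn (by simpa using hG)
  obtain ⟨d, hd⟩ := hDne
  have hScard : (D \ {d}).ncard + 1 = D.ncard :=
    Set.ncard_sdiff_singleton_add_one hd (Set.toFinite D)
  have hD3 : D.ncard ≤ 3 := (Set.ncard_le_ncard hDle (Set.toFinite _)).trans hC3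
  have hD2 : 1 ≤ (D \ {d}).ncard := by
    by_contra hlt
    have h0 : D \ {d} = ∅ := (Set.ncard_eq_zero (Set.toFinite _)).1 (by omega)
    apply hDn
    rw [hsplit d hd, h0, fromEdgeSet_empty, bot_sup_eq]
    exact hCp d (hDle hd)
  have hG' := hdel d hd
  set G' := G ⊔ fromEdgeSet (D \ {d}) with hGdef
  have hE : G'.edgeSet = G.edgeSet ∪ (D \ {d}) := by
    rw [hGdef, edgeSet_sup, edgeSet_fromEdgeSet]
    congr 1
    ext e
    constructor
    · exact fun h => h.1
    · exact fun h => ⟨h, (hadd e h.1).1⟩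
  have hcount : edgeCount G' = edgeCount G + (D \ {d}).ncard := by
    unfold edgeCount
    rw [hE]
    exact Set.ncard_union_eq (Set.disjoint_left.2 fun e he h => (hadd e h.1).2.1 he)
      (Set.toFinite _) (Set.toFinite _)
  have hle := edge_le _ rfl (by omega) hG' (hU G')
  have hrec := IH (k - (D \ {d}).ncard) (by omega) G' hG' h5 (by omega) (by omega)
  have hdisj : Disjoint (addableSet G') D := by
    rw [Set.disjoint_left]
    intro e he heD
    by_cases hed : e = d
    · subst hed
      apply hDn
      rw [hsplit e hd, ← sup_assoc]
      exact he.2.2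
    · exact he.2.1 (hE ▸ Or.inr ⟨heD, hed⟩)
  have hsub : addableSet G' ∪ D ⊆ addableSet G := by
    rintro e (he | he)
    · refine ⟨he.1, fun h => he.2.1 (hE ▸ Or.inl h), planar_mono he.2.2 ?_⟩
      exact sup_le_sup_right le_sup_left _
    · exact hadd e he
  have hfin := Set.ncard_le_ncard hsub (Set.toFinite _)
  rw [Set.ncard_union_eq hdisj (Set.toFinite _) (Set.toFinite _)] at hfin
  omega

end Lower

/-! ### Double wheels with missing spokes -/

noncomputable section Spools
open scoped Classical
universe u
variable {V : Type*} [Fintype V] {G H : SimpleGraph V} {N : ℕ} {c : ℤ → V} {z w : V} {P : Set V}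

/-- The graph consisting of the closed walk `c` only. -/
def cycG (c : ℤ → V) : SimpleGraph V := fromEdgeSet (Set.range fun i => s(c i, c (i + 1)))

/-- The double wheel with rim `c` and hubs `z`, `w`, in which the vertices of `P` are joined to
neither hub. -/
def spool (c : ℤ → V) (z w : V) (P : Set V) : SimpleGraph V :=
  cycG c ⊔ star z (Set.range c \ P) ⊔ star w (Set.range c \ P)

theorem cycG_isCyc (h3 : 3 ≤ N) (hinj : ∀ i j, c i = c j ↔ (N : ℤ) ∣ i - j) :
    IsCyc (cycG c) N c := by
  refine ⟨h3, hinj, fun i => (fromEdgeSet_adj _).2 ⟨⟨i, rfl⟩, fun h => ?_⟩⟩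
  rw [hinj] at h
  exact not_dvd_of (l := N) (x := 1) (by omega) (by omega) (by
    obtain ⟨t, ht⟩ := h; exact ⟨-t, by linear_combination -ht⟩)

theorem inW_cycG : InW (cycG c) (Set.range c) := by
  refine inW_fromEdgeSet ?_
  rintro _ ⟨i, rfl⟩ x hx
  rcases Sym2.mem_iff.1 hx with rfl | rfl
  exacts [⟨i, rfl⟩, ⟨i + 1, rfl⟩]

theorem cycG_edgeCount (hc : IsCyc (cycG c) N c) : edgeCount (cycG c) = N := by
  rw [← hc.weight]
  unfold edgeCount
  congr 1
  ext e
  rw [Set.mem_ofPred_eq, zeta_ne]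
  constructor
  · intro he
    rw [cycG, edgeSet_fromEdgeSet] at he
    obtain ⟨i, hi⟩ := he.1
    exact ⟨i, hi.symm⟩
  · rintro ⟨i, rfl⟩
    exact hc.adj i

theorem conn_range (hc : IsCyc G N c) : ConnSet G (Set.range c) := by
  have h3 := hc.three
  have : Set.range c = c '' Set.Icc (0 : ℤ) (N - 1) := by
    apply Set.Subset.antisymm
    · rintro _ ⟨j, rfl⟩
      obtain ⟨i, h1, h2, h⟩ := hc.rep 0 j
      exact ⟨i, ⟨h1, by omega⟩, h⟩
    · exact Set.image_subset_range _ _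
  rw [this]
  exact conn_Icc (by omega) fun i _ _ => hc.adj i

/-- The two faces of a cycle: both are bounded by the cycle itself. -/
theorem cycG_twoFam (hc : IsCyc (cycG c) N c) :
    TwoFam (ι := Bool) (Zc (cycG c)) fun _ => zeta c := by
  refine ⟨fun _ => hc.zeta_mem, ?_, fun e => ?_⟩
  · have h1 := finrank_Zc_le (conn_range hc)
    rw [hc.card_range, cycG_edgeCount hc] at h1
    have hne : zeta c ≠ 0 := by
      intro h0
      have : zeta c s(c 0, c (0 + 1)) ≠ 0 := zeta_ne.2 ⟨0, rfl⟩
      exact this (by rw [h0]; rfl)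
    rw [Set.range_const]
    refine (Submodule.eq_of_le_of_finrank_le ?_ ?_).ge
    · rw [Submodule.span_singleton_le_iff_mem]
      exact hc.zeta_mem
    · rw [finrank_span_singleton hne]
      omega
  · exact (Finset.card_filter_le _ _).trans (by simp)

/-- Both faces of the rim can be coned, so double wheels are planar, with or without missing
spokes. -/
theorem spool_planar (hc : IsCyc (cycG c) N c) (hz : z ∉ Set.range c) (hw : w ∉ Set.range c)
    (hzw : z ≠ w) : IsPlanar (spool c z w P) := by
  have hz0 : ∀ x, ¬ (cycG c).Adj z x := fun x hx => hz (inW_cycG hx).1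
  obtain ⟨κ, _, b', hb', hi⟩ := (cycG_twoFam hc).cone hc (i0 := true) rfl hz0 (Z := zeta c)
  obtain ⟨i1, hi1⟩ := hi ⟨false, by simp, rfl⟩
  have hc' : IsCyc (cycG c ⊔ star z (Set.range c)) N c :=
    ⟨hc.three, hc.inj, fun i => Or.inl (hc.adj i)⟩
  have hw0 : ∀ x, ¬ (cycG c ⊔ star z (Set.range c)).Adj w x := by
    rintro x (hx | hx)
    · exact hw (inW_cycG hx).1
    · rcases hx.2 with ⟨h, -⟩ | ⟨-, h⟩
      exacts [hzw h.symm, hw h]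
  obtain ⟨κ', _, b'', hb'', -⟩ := hb'.cone hc' hi1 hw0 (Z := zeta c)
  refine planar_mono hb''.planar ?_
  have hst : ∀ t : V, star t (Set.range c \ P) ≤ star t (Set.range c) := fun t u v huv =>
    ⟨huv.1, huv.2.imp (fun h => ⟨h.1, h.2.1⟩) fun h => ⟨h.1, h.2.1⟩⟩
  exact sup_le_sup (sup_le_sup le_rfl (hst z)) (hst w)

theorem edgeCount_sup_star {t : V} {S : Set V} (ht : ∀ x, ¬ G.Adj t x) (htS : t ∉ S) :
    edgeCount (G ⊔ star t S) = edgeCount G + S.ncard := by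
  unfold edgeCount
  have h1 : (star t S).edgeSet = (fun x => s(t, x)) '' S := by
    ext e
    induction e using Sym2.ind with
    | _ x y =>
      rw [mem_edgeSet, star_adj]
      constructor
      · rintro ⟨-, ⟨rfl, h⟩ | ⟨rfl, h⟩⟩
        exacts [⟨y, h, rfl⟩, ⟨x, h, Sym2.eq_swap⟩]
      · rintro ⟨s, hs, h⟩
        have hne : t ≠ s := fun h' => htS (h' ▸ hs)
        rcases Sym2.eq_iff.1 h with ⟨rfl, rfl⟩ | ⟨rfl, rfl⟩
        exacts [⟨hne, Or.inl ⟨rfl, hs⟩⟩, ⟨hne.symm, Or.inr ⟨rfl, hs⟩⟩]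
  rw [edgeSet_sup, h1, Set.ncard_union_eq _ (Set.toFinite _) (Set.toFinite _)]
  · congr 1
    refine Set.InjOn.ncard_image fun x _ y _ hxy => ?_
    exact Sym2.congr_right.1 hxy
  · rw [Set.disjoint_left]
    rintro _ he ⟨x, -, rfl⟩
    exact ht x he

theorem spool_edgeCount (hc : IsCyc (cycG c) N c) (hz : z ∉ Set.range c) (hw : w ∉ Set.range c)
    (hzw : z ≠ w) (hP : P ⊆ Set.range c) :
    edgeCount (spool c z w P) + 2 * P.ncard = 3 * N := by
  have h1 := edgeCount_sup_star (G := cycG c) (t := z) (S := Set.range c \ P)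
    (fun x hx => hz (inW_cycG hx).1) fun h => hz h.1
  have h2 := edgeCount_sup_star (G := cycG c ⊔ star z (Set.range c \ P)) (t := w)
    (S := Set.range c \ P) (by
      rintro x (hx | hx)
      · exact hw (inW_cycG hx).1
      · rcases hx.2 with ⟨h, -⟩ | ⟨-, h⟩
        exacts [hzw h.symm, hw h.1]) fun h => hw h.1
  have h3 := Set.ncard_sdiff_add_ncard_of_subset hP (Set.toFinite _)
  rw [hc.card_range] at h3
  rw [cycG_edgeCount hc] at h1
  rw [spool]
  omega

/-- Joining the two hubs gives a `K₅`-minor, with three arcs of the rim as branch sets. -/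
theorem hubs_not_planar (hc : IsCyc H N c) (hHz : ∀ i, c i ∉ P → H.Adj z (c i))
    (hHw : ∀ i, c i ∉ P → H.Adj w (c i)) (hz : z ∉ Set.range c) (hw : w ∉ Set.range c)
    (hzw : H.Adj z w) (h0 : c 0 ∉ P) (h2 : c 2 ∉ P) {t : ℤ} (ht3 : 3 ≤ t) (htN : t < N)
    (ht : c t ∉ P) : ¬ IsPlanar H := by
  have hconn : ∀ a b : ℤ, a ≤ b → ConnSet H (c '' Set.Icc a b) := fun a b hab =>
    conn_Icc hab fun i _ _ => hc.adj i
  have hdis : ∀ a b a' b' : ℤ, b < a' → b' < a + N → Disjoint (c '' Set.Icc a b)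
      (c '' Set.Icc a' b') := by
    intro a b a' b' h1 h2
    rw [Set.disjoint_left]
    rintro _ ⟨i, ⟨hi1, hi2⟩, rfl⟩ ⟨j, ⟨hj1, hj2⟩, hj⟩
    exact hc.ne_of (i := i) (j := j) (by omega) (by omega) hj.symm
  have hnot : ∀ (x : V), x ∉ Set.range c → ∀ a b : ℤ, x ∉ c '' Set.Icc a b := by
    rintro x hx a b ⟨i, -, rfl⟩
    exact hx ⟨i, rfl⟩
  have hmem : ∀ a b i : ℤ, a ≤ i → i ≤ b → c i ∈ c '' Set.Icc a b := fun a b i h1 h2 =>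
    ⟨i, ⟨h1, h2⟩, rfl⟩
  have hN0 : H.Adj (c (N - 1)) (c 0) := by
    have h1 := hc.adj ((N : ℤ) - 1)
    have h2 := hc.add_l 0
    rw [show (N : ℤ) - 1 + 1 = 0 + N by ring, h2] at h1
    exact h1
  have hadj1 : H.Adj (c 1) (c 2) := hc.adj 1
  have hadjt : H.Adj (c (t - 1)) (c t) := by
    have := hc.adj (t - 1)
    rwa [sub_add_cancel] at this
  refine not_planar_K5 (A := {z}) (B := {w}) (C := c '' Set.Icc 0 1) (D := c '' Set.Icc 2 (t - 1))
    (E := c '' Set.Icc t (N - 1)) (ConnSet.singleton _) (ConnSet.singleton _)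
    (hconn _ _ (by omega)) (hconn _ _ (by omega)) (hconn _ _ (by omega)) ?_ ?_
  · simp only [List.pairwise_cons, List.mem_cons, List.not_mem_nil, or_false, forall_eq_or_imp,
      forall_eq, false_imp_iff, implies_true, and_true, List.Pairwise.nil,
      Set.disjoint_singleton_left, Set.mem_singleton_iff]
    exact ⟨⟨hzw.ne, hnot z hz _ _, hnot z hz _ _, hnot z hz _ _⟩,
      ⟨hnot w hw _ _, hnot w hw _ _, hnot w hw _ _⟩,
      ⟨hdis _ _ _ _ (by omega) (by omega), hdis _ _ _ _ (by omega) (by omega)⟩,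
      hdis _ _ _ _ (by omega) (by omega)⟩
  · simp only [List.pairwise_cons, List.mem_cons, List.not_mem_nil, or_false, forall_eq_or_imp,
      forall_eq, false_imp_iff, implies_true, and_true, List.Pairwise.nil]
    refine ⟨⟨⟨z, rfl, w, rfl, hzw⟩,
      ⟨z, rfl, c 0, hmem _ _ _ (by omega) (by omega), hHz 0 h0⟩,
      ⟨z, rfl, c 2, hmem _ _ _ (by omega) (by omega), hHz 2 h2⟩,
      ⟨z, rfl, c t, hmem _ _ _ (by omega) (by omega), hHz t ht⟩⟩,
      ⟨⟨w, rfl, c 0, hmem _ _ _ (by omega) (by omega), hHw 0 h0⟩,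
      ⟨w, rfl, c 2, hmem _ _ _ (by omega) (by omega), hHw 2 h2⟩,
      ⟨w, rfl, c t, hmem _ _ _ (by omega) (by omega), hHw t ht⟩⟩,
      ⟨⟨c 1, hmem _ _ _ (by omega) (by omega), c 2, hmem _ _ _ (by omega) (by omega), hadj1⟩,
      ⟨c 0, hmem _ _ _ (by omega) (by omega), c (N - 1), hmem _ _ _ (by omega) (by omega),
        hN0.symm⟩⟩,
      ⟨c (t - 1), hmem _ _ _ (by omega) (by omega), c t, hmem _ _ _ (by omega) (by omega), hadjt⟩⟩

/-- Joining a rim vertex `c a`, whose rim neighbours are joined to both hubs, to a further rim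
vertex gives a `K₃,₃`-minor with `z`, `w` and `c a` on one side. -/
theorem rim_not_planar (hinj : ∀ i j, c i = c j ↔ (N : ℤ) ∣ i - j)
    (hHz : ∀ i, c i ∉ P → H.Adj z (c i))
    (hHw : ∀ i, c i ∉ P → H.Adj w (c i)) (hz : z ∉ Set.range c) (hw : w ∉ Set.range c)
    (hzw : z ≠ w) {a : ℤ} (ha1 : H.Adj (c a) (c (a + 1))) (ha2 : H.Adj (c a) (c (a + N - 1)))
    (hp1 : c (a + 1) ∉ P) (hp2 : c (a + N - 1) ∉ P)
    (harc : ConnSet H (c '' Set.Icc (a + 2) (a + N - 2))) {t : ℤ} (ht1 : a + 2 ≤ t)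
    (ht2 : t ≤ a + N - 2) (ht : c t ∉ P) {b : ℤ} (hb1 : a + 2 ≤ b) (hb2 : b ≤ a + N - 2)
    (hab : H.Adj (c a) (c b)) : ¬ IsPlanar H := by
  have hne : ∀ i j : ℤ, i < j → j < i + N → c i ≠ c j := by
    intro i j h1 h2 h
    rw [hinj] at h
    exact not_dvd_of (l := N) (x := j - i) (by omega) (by omega) (by
      obtain ⟨t, ht⟩ := h; exact ⟨-t, by linear_combination -ht⟩)
  have hcz : ∀ i, z ≠ c i := fun i h => hz ⟨i, h.symm⟩
  have hcw : ∀ i, w ≠ c i := fun i h => hw ⟨i, h.symm⟩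
  have hnz : z ∉ c '' Set.Icc (a + 2) (a + N - 2) := by
    rintro ⟨i, -, rfl⟩; exact hz ⟨i, rfl⟩
  have hnw : w ∉ c '' Set.Icc (a + 2) (a + N - 2) := by
    rintro ⟨i, -, rfl⟩; exact hw ⟨i, rfl⟩
  have hna : c a ∉ c '' Set.Icc (a + 2) (a + N - 2) := by
    rintro ⟨i, ⟨h1, h2⟩, h⟩; exact hne a i (by omega) (by omega) h.symm
  have hna1 : c (a + 1) ∉ c '' Set.Icc (a + 2) (a + N - 2) := by
    rintro ⟨i, ⟨h1, h2⟩, h⟩; exact hne (a + 1) i (by omega) (by omega) h.symm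
  have hna2 : c (a + N - 1) ∉ c '' Set.Icc (a + 2) (a + N - 2) := by
    rintro ⟨i, ⟨h1, h2⟩, h⟩; exact hne i (a + N - 1) (by omega) (by omega) h
  have mt : c t ∈ c '' Set.Icc (a + 2) (a + N - 2) := ⟨t, ⟨ht1, ht2⟩, rfl⟩
  have mb : c b ∈ c '' Set.Icc (a + 2) (a + N - 2) := ⟨b, ⟨hb1, hb2⟩, rfl⟩
  refine not_planar_K33 (A := {z}) (B := {w}) (C := {c a}) (X := {c (a + 1)})
    (Y := {c (a + N - 1)}) (Z := c '' Set.Icc (a + 2) (a + N - 2)) (ConnSet.singleton _)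
    (ConnSet.singleton _) (ConnSet.singleton _) (ConnSet.singleton _) (ConnSet.singleton _) harc ?_
    ⟨z, rfl, _, rfl, hHz _ hp1⟩ ⟨z, rfl, _, rfl, hHz _ hp2⟩ ⟨z, rfl, _, mt, hHz _ ht⟩
    ⟨w, rfl, _, rfl, hHw _ hp1⟩ ⟨w, rfl, _, rfl, hHw _ hp2⟩ ⟨w, rfl, _, mt, hHw _ ht⟩
    ⟨_, rfl, _, rfl, ha1⟩ ⟨_, rfl, _, rfl, ha2⟩ ⟨_, rfl, _, mb, hab⟩
  simp only [List.pairwise_cons, List.mem_cons, List.not_mem_nil, or_false, forall_eq_or_imp,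
    forall_eq, false_imp_iff, implies_true, and_true, List.Pairwise.nil,
    Set.disjoint_singleton_left, Set.mem_singleton_iff]
  exact ⟨⟨hzw, hcz _, hcz _, hcz _, hnz⟩, ⟨hcw _, hcw _, hcw _, hnw⟩,
    ⟨hne a (a + 1) (by omega) (by omega), hne a (a + N - 1) (by omega) (by omega), hna⟩,
    ⟨hne (a + 1) (a + N - 1) (by omega) (by omega), hna1⟩, hna2⟩

/-- Joining two rim vertices gives a `K₅`-minor if both arcs between them, and both vertices
themselves, are attached to the hubs. -/
theorem chord_not_planar (hc : IsCyc H N c) (hHz : ∀ i, c i ∉ P → H.Adj z (c i))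
    (hHw : ∀ i, c i ∉ P → H.Adj w (c i)) (hz : z ∉ Set.range c) (hw : w ∉ Set.range c)
    (hzw : z ≠ w) {a b s t : ℤ} (hab : H.Adj (c a) (c b)) (ha : c a ∉ P) (hb : c b ∉ P)
    (hs1 : a < s) (hs2 : s < b) (ht1 : b < t) (ht2 : t < a + N) (hs : c s ∉ P) (ht : c t ∉ P) :
    ¬ IsPlanar H := by
  have hne : ∀ i j : ℤ, i < j → j < i + N → c i ≠ c j := fun i j => hc.ne_of
  have hconn : ∀ a b : ℤ, a ≤ b → ConnSet H (c '' Set.Icc a b) := fun a b hab =>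
    conn_Icc hab fun i _ _ => hc.adj i
  have hcz : ∀ i, z ≠ c i := fun i h => hz ⟨i, h.symm⟩
  have hcw : ∀ i, w ≠ c i := fun i h => hw ⟨i, h.symm⟩
  have ms : c s ∈ c '' Set.Icc (a + 1) (b - 1) := ⟨s, ⟨by omega, by omega⟩, rfl⟩
  have mt : c t ∈ c '' Set.Icc (b + 1) (a + N - 1) := ⟨t, ⟨by omega, by omega⟩, rfl⟩
  have hE : ConnSet H (insert w (c '' Set.Icc (b + 1) (a + N - 1))) :=
    (hconn _ _ (by omega)).insert ⟨w, rfl, _, mt, hHw t ht⟩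
  have hadjb : H.Adj (c (b - 1)) (c b) := by
    have := hc.adj (b - 1)
    rwa [sub_add_cancel] at this
  have hadja : H.Adj (c (a + N - 1)) (c a) := by
    have := hc.adj (a + N - 1)
    rwa [sub_add_cancel, hc.add_l] at this
  refine not_planar_K5 (A := {c a}) (B := {c b}) (C := {z}) (D := c '' Set.Icc (a + 1) (b - 1))
    (E := insert w (c '' Set.Icc (b + 1) (a + N - 1))) (ConnSet.singleton _) (ConnSet.singleton _)
    (ConnSet.singleton _) (hconn _ _ (by omega)) hE ?_ ?_
  · simp only [List.pairwise_cons, List.mem_cons, List.not_mem_nil, or_false, forall_eq_or_imp,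
      forall_eq, false_imp_iff, implies_true, and_true, List.Pairwise.nil,
      Set.disjoint_singleton_left, Set.mem_singleton_iff]
    refine ⟨⟨hne a b (by omega) (by omega), (hcz a).symm, ?_, ?_⟩, ⟨(hcz b).symm, ?_, ?_⟩,
      ⟨?_, ?_⟩, ?_⟩
    · rintro ⟨i, ⟨h1, h2⟩, h⟩; exact hne a i (by omega) (by omega) h.symm
    · rintro (h | ⟨i, ⟨h1, h2⟩, h⟩)
      exacts [hcw a h.symm, hne a i (by omega) (by omega) h.symm]
    · rintro ⟨i, ⟨h1, h2⟩, h⟩; exact hne i b (by omega) (by omega) h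
    · rintro (h | ⟨i, ⟨h1, h2⟩, h⟩)
      exacts [hcw b h.symm, hne b i (by omega) (by omega) h.symm]
    · rintro ⟨i, -, h⟩; exact hcz i h.symm
    · rintro (h | ⟨i, -, h⟩)
      exacts [hzw h, hcz i h.symm]
    · rw [Set.disjoint_left]
      rintro _ ⟨i, ⟨h1, h2⟩, rfl⟩ (h | ⟨j, ⟨h3, h4⟩, h⟩)
      exacts [hcw i h.symm, hne i j (by omega) (by omega) h.symm]
  · simp only [List.pairwise_cons, List.mem_cons, List.not_mem_nil, or_false, forall_eq_or_imp,
      forall_eq, false_imp_iff, implies_true, and_true, List.Pairwise.nil]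
    exact ⟨⟨⟨_, rfl, _, rfl, hab⟩, ⟨_, rfl, _, rfl, (hHz a ha).symm⟩,
      ⟨_, rfl, c (a + 1), ⟨a + 1, ⟨by omega, by omega⟩, rfl⟩, hc.adj a⟩,
      ⟨_, rfl, c (a + N - 1), Or.inr ⟨a + N - 1, ⟨by omega, by omega⟩, rfl⟩, hadja.symm⟩⟩,
      ⟨⟨_, rfl, _, rfl, (hHz b hb).symm⟩,
      ⟨_, rfl, c (b - 1), ⟨b - 1, ⟨by omega, by omega⟩, rfl⟩, hadjb.symm⟩,
      ⟨_, rfl, c (b + 1), Or.inr ⟨b + 1, ⟨by omega, by omega⟩, rfl⟩, hc.adj b⟩⟩,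
      ⟨⟨_, rfl, _, ms, hHz s hs⟩, ⟨_, rfl, _, Or.inr mt, hHz t ht⟩⟩,
      ⟨_, ms, w, Or.inl rfl, (hHw s hs).symm⟩⟩

end Spools

/-! ### The addable pairs of the extremal graphs -/

noncomputable section Extremal
open scoped Classical
variable {V : Type*} [Fintype V] {G H : SimpleGraph V} {N j : ℕ} {c : ℤ → V} {z w : V} {P : Set V}

/-- If no two consecutive rim vertices miss their spokes, the only addable pairs are the missing
spokes and the chords cutting off a single vertex without spokes. -/
theorem spool_addable (hc : IsCyc (cycG c) N c) (hz : z ∉ Set.range c)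
    (hw : w ∉ Set.range c) (hzw : z ≠ w) (hcov : ∀ v, v ∈ Set.range c ∨ v = z ∨ v = w)
    (hcons : ∀ i, c i ∈ P → c (i + 1) ∈ P → False)
    (hfar : ∀ i, c i ∈ P → ∃ t, i + 2 ≤ t ∧ t ≤ i + N - 2 ∧ c t ∉ P)
    (h0 : c 0 ∉ P) (h2 : c 2 ∉ P) (h3 : ∃ t : ℤ, 3 ≤ t ∧ t < N ∧ c t ∉ P) :
    addableSet (spool c z w P) ⊆ (fun x => s(z, x)) '' P ∪ (fun x => s(w, x)) '' P ∪
      {e | ∃ i, c (i + 1) ∈ P ∧ e = s(c i, c (i + 2))} := by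
  have hHz : ∀ i, c i ∉ P → (spool c z w P).Adj z (c i) := fun i hi =>
    Or.inl (Or.inr ⟨fun h => hz ⟨i, h.symm⟩, Or.inl ⟨rfl, ⟨i, rfl⟩, hi⟩⟩)
  have hHw : ∀ i, c i ∉ P → (spool c z w P).Adj w (c i) := fun i hi =>
    Or.inr ⟨fun h => hw ⟨i, h.symm⟩, Or.inl ⟨rfl, ⟨i, rfl⟩, hi⟩⟩
  have hle : ∀ e : Sym2 V, spool c z w P ≤ spool c z w P ⊔ fromEdgeSet {e} := fun e => le_sup_left
  have hcyc : ∀ e : Sym2 V, IsCyc (spool c z w P ⊔ fromEdgeSet {e}) N c := fun e =>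
    ⟨hc.three, hc.inj, fun i => Or.inl (Or.inl (Or.inl (hc.adj i)))⟩
  have hnew : ∀ {u v : V}, u ≠ v → (spool c z w P ⊔ fromEdgeSet {s(u, v)}).Adj u v :=
    fun huv => Or.inr ((fromEdgeSet_adj _).2 ⟨rfl, huv⟩)
  -- spokes and hub pair
  have hub : ∀ u v, s(u, v) ∈ addableSet (spool c z w P) → u = z ∨ u = w →
      s(u, v) ∈ (fun x => s(z, x)) '' P ∪ (fun x => s(w, x)) '' P := by
    intro u v he hu
    have hne : u ≠ v := fun h => he.1 (Sym2.mk_isDiag_iff.2 h)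
    obtain ⟨t, ht3, htN, ht⟩ := h3
    have hnzw : ¬ (s(u, v) = s(z, w)) := by
      intro h'
      have hp := he.2.2
      rw [h'] at hp
      exact hubs_not_planar (hcyc _) (fun i hi => hle _ (hHz i hi)) (fun i hi => hle _ (hHw i hi))
        hz hw (hnew hzw) h0 h2 ht3 htN ht hp
    rcases hcov v with ⟨i, rfl⟩ | hv
    · rcases hu with rfl | rfl
      · by_cases hi : c i ∈ P
        · exact Or.inl ⟨c i, hi, rfl⟩
        · exact (he.2.1 (hHz i hi)).elim
      · by_cases hi : c i ∈ P
        · exact Or.inr ⟨c i, hi, rfl⟩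
        · exact (he.2.1 (hHw i hi)).elim
    · rcases hu with rfl | rfl <;> rcases hv with rfl | rfl
      exacts [(hne rfl).elim, (hnzw rfl).elim, (hnzw Sym2.eq_swap).elim, (hne rfl).elim]
  -- a vertex of `P` is not joined to further rim vertices
  have hrim : ∀ a b : ℤ, c a ∈ P → a + 2 ≤ b → b ≤ a + N - 2 →
      s(c a, c b) ∉ addableSet (spool c z w P) := by
    intro a b ha hb1 hb2 he
    obtain ⟨t, ht1, ht2, ht⟩ := hfar a ha
    have h1 := (hcyc s(c a, c b)).adj (a + N - 1)
    rw [sub_add_cancel, hc.add_l] at h1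
    refine rim_not_planar hc.inj (fun i hi => hle _ (hHz i hi)) (fun i hi => hle _ (hHw i hi))
      hz hw hzw ((hcyc _).adj a) h1.symm (fun h => hcons a ha h) (fun h => hcons _ h ?_)
      (conn_Icc (by omega) fun i _ _ => (hcyc _).adj i) ht1 ht2 ht hb1 hb2
      (hnew (hc.ne_of (by omega) (by omega))) he.2.2
    rwa [sub_add_cancel, hc.add_l]
  intro e he
  induction e using Sym2.ind with
  | _ u v =>
    rcases hcov u with ⟨a, rfl⟩ | hu
    swap
    · exact Or.inl (hub u v he hu)
    rcases hcov v with ⟨b', rfl⟩ | hv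
    swap
    · rw [Sym2.eq_swap] at he ⊢
      exact Or.inl (hub v _ he hv)
    right
    obtain ⟨b, hb1, hb2, hb⟩ := hc.rep a b'
    rw [← hb] at he ⊢
    have hne : c a ≠ c b := fun h => he.1 (Sym2.mk_isDiag_iff.2 h)
    have hba : b ≠ a := by rintro rfl; exact hne rfl
    have hba1 : b ≠ a + 1 := by
      rintro rfl
      exact he.2.1 (Or.inl (Or.inl (hc.adj a)))
    have hba2 : b ≠ a + N - 1 := by
      rintro rfl
      have h1 := hc.adj (a + N - 1)
      rw [sub_add_cancel, hc.add_l] at h1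
      exact he.2.1 (Or.inl (Or.inl h1.symm))
    by_cases haP : c a ∈ P
    · exact (hrim a b haP (by omega) (by omega) he).elim
    by_cases hbP : c b ∈ P
    · rw [Sym2.eq_swap, ← hc.add_l a] at he
      exact (hrim b (a + N) hbP (by omega) (by omega) he).elim
    by_cases hs : ∃ s, a < s ∧ s < b ∧ c s ∉ P
    · by_cases ht : ∃ t, b < t ∧ t < a + N ∧ c t ∉ P
      · obtain ⟨s, hs1, hs2, hsP⟩ := hs
        obtain ⟨t, ht1, ht2, htP⟩ := ht
        exact (chord_not_planar (hcyc _) (fun i hi => hle _ (hHz i hi))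
          (fun i hi => hle _ (hHw i hi)) hz hw hzw (hnew hne) haP hbP hs1 hs2 ht1 ht2 hsP htP
          he.2.2).elim
      · push Not at ht
        have hb3 : a + N = b + 2 := by
          by_contra hcon
          refine hcons (b + 1) (ht _ (by omega) (by omega)) ?_
          exact ht _ (by omega) (by omega)
        refine ⟨b, ht _ (by omega) (by omega), ?_⟩
        rw [← hb3, hc.add_l, Sym2.eq_swap]
    · push Not at hs
      have hb3 : b = a + 2 := by
        by_contra hcon
        refine hcons (a + 1) (hs _ (by omega) (by omega)) ?_
        exact hs _ (by omega) (by omega)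
      exact ⟨a, hs _ (by omega) (by omega), by rw [hb3]⟩

/-- The first `j` rim vertices in odd position. -/
def odds (c : ℤ → V) (j : ℕ) : Set V := (fun i : ℤ => c (2 * i + 1)) '' Set.Ico 0 j

theorem mem_odds (hinj : ∀ i j, c i = c j ↔ (N : ℤ) ∣ i - j) {x : ℤ} :
    c x ∈ odds c j ↔ ∃ k : ℤ, 0 ≤ k ∧ k < j ∧ (N : ℤ) ∣ x - (2 * k + 1) := by
  constructor
  · rintro ⟨k, ⟨h1, h2⟩, hk⟩
    exact ⟨k, h1, h2, (hinj _ _).1 hk.symm⟩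
  · rintro ⟨k, h1, h2, hk⟩
    exact ⟨k, ⟨h1, h2⟩, ((hinj _ _).2 hk).symm⟩

theorem not_dvd_small {N : ℕ} {x : ℤ} (h1 : -(N : ℤ) < x) (h2 : x < N) (h : x ≠ 0) :
    ¬ (N : ℤ) ∣ x := fun hd => h (Int.eq_zero_of_abs_lt_dvd hd (abs_lt.2 ⟨h1, h2⟩))

theorem odds_ncard (hinj : ∀ i j, c i = c j ↔ (N : ℤ) ∣ i - j) (hj : 2 * j ≤ N) :
    (odds c j).ncard = j := by
  rw [odds, Set.InjOn.ncard_image]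
  · simp [Set.ncard_eq_toFinset_card']
  · rintro x ⟨hx1, hx2⟩ y ⟨hy1, hy2⟩ hxy
    by_contra hne
    exact not_dvd_small (by omega) (by omega) (by omega) ((hinj _ _).1 hxy)

/-- The extremal graph with `2j` edges fewer than a triangulation has at most `3j` addable pairs. -/
theorem extremal_addable (hc : IsCyc (cycG c) N c) (hz : z ∉ Set.range c)
    (hw : w ∉ Set.range c) (hzw : z ≠ w) (hcov : ∀ v, v ∈ Set.range c ∨ v = z ∨ v = w)
    (hN : 4 ≤ N) (hj : 2 * j ≤ N) (hj4 : N = 4 → j ≤ 1) :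
    (addableSet (spool c z w (odds c j))).ncard ≤ 3 * j := by
  have hinj := hc.inj
  have hcons : ∀ i, c i ∈ odds c j → c (i + 1) ∈ odds c j → False := by
    intro i h1 h2
    obtain ⟨k, hk1, hk2, hk⟩ := (mem_odds hinj).1 h1
    obtain ⟨k', hk1', hk2', hk'⟩ := (mem_odds hinj).1 h2
    have := dvd_sub hk' hk
    exact not_dvd_small (by omega) (by omega) (by omega) this
  have hsub := spool_addable hc hz hw hzw hcov (P := odds c j) hcons (by
      intro i hi
      by_cases h4 : N = 4
      · refine ⟨i + 2, by omega, by omega, fun h => ?_⟩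
        obtain ⟨k, hk1, hk2, hk⟩ := (mem_odds hinj).1 hi
        obtain ⟨k', hk1', hk2', hk'⟩ := (mem_odds hinj).1 h
        have := dvd_sub hk' hk
        have := hj4 h4
        exact not_dvd_small (by omega) (by omega) (by omega) (dvd_sub hk' hk)
      · by_cases h2 : c (i + 2) ∈ odds c j
        · refine ⟨i + 2 + 1, by omega, by omega, fun h => hcons _ h2 h⟩
        · exact ⟨i + 2, by omega, by omega, h2⟩)
    (by
      intro h
      obtain ⟨k, hk1, hk2, hk⟩ := (mem_odds hinj).1 h
      exact not_dvd_small (by omega) (by omega) (by omega) hk)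
    (by
      intro h
      obtain ⟨k, hk1, hk2, hk⟩ := (mem_odds hinj).1 h
      exact not_dvd_small (by omega) (by omega) (by omega) hk)
    (by
      by_cases h4 : N = 4
      · refine ⟨3, by omega, by omega, fun h => ?_⟩
        obtain ⟨k, hk1, hk2, hk⟩ := (mem_odds hinj).1 h
        have := hj4 h4
        exact not_dvd_small (by omega) (by omega) (by omega) hk
      · refine ⟨4, by omega, by omega, fun h => ?_⟩
        obtain ⟨k, hk1, hk2, hk⟩ := (mem_odds hinj).1 h
        exact not_dvd_small (by omega) (by omega) (by omega) hk)
  have hT : {e | ∃ i, c (i + 1) ∈ odds c j ∧ e = s(c i, c (i + 2))} ⊆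
      (fun k : ℤ => s(c (2 * k), c (2 * k + 2))) '' Set.Ico (0 : ℤ) j := by
    rintro _ ⟨i, hi, rfl⟩
    obtain ⟨k, hk1, hk2, t, ht⟩ := (mem_odds hinj).1 hi
    refine ⟨k, ⟨hk1, hk2⟩, ?_⟩
    have e1 : c (2 * k) = c i := (hinj _ _).2 ⟨-t, by linear_combination -ht⟩
    have e2 : c (2 * k + 2) = c (i + 2) := (hinj _ _).2 ⟨-t, by linear_combination -ht⟩
    simp only [e1, e2]
  have hTc := (Set.ncard_le_ncard hT (Set.toFinite _)).trans
    (Set.ncard_image_le (Set.finite_Ico (0 : ℤ) j))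
  have hIco : (Set.Ico (0 : ℤ) j).ncard = j := by simp [Set.ncard_eq_toFinset_card']
  have hPc := odds_ncard hinj hj
  have h1 := Set.ncard_image_le (f := fun x => s(z, x)) (Set.toFinite (odds c j))
  have h2 := Set.ncard_image_le (f := fun x => s(w, x)) (Set.toFinite (odds c j))
  have h3 := (Set.ncard_le_ncard hsub (Set.toFinite _)).trans (Set.ncard_union_le _ _)
  have h4 := Set.ncard_union_le ((fun x => s(z, x)) '' odds c j) ((fun x => s(w, x)) '' odds c j)
  omega

end Extremal

/-! ### The upper bound -/

noncomputable section Upper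
open scoped Classical
variable {N : ℕ}

/-- The rim of the double wheel: the vertices `0, …, N - 1` of `Fin (N + 2)` in cyclic order. -/
def rim (hN : 4 ≤ N) (i : ℤ) : Fin (N + 2) :=
  ⟨(i % (N : ℤ)).toNat, by
    have h1 := Int.emod_nonneg i (b := (N : ℤ)) (by omega)
    have h2 := Int.emod_lt_of_pos i (b := (N : ℤ)) (by omega)
    omega⟩

theorem rim_inj (hN : 4 ≤ N) (i j : ℤ) : rim hN i = rim hN j ↔ (N : ℤ) ∣ i - j := by
  have h1 := Int.emod_nonneg i (b := (N : ℤ)) (by omega)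
  have h2 := Int.emod_nonneg j (b := (N : ℤ)) (by omega)
  rw [rim, rim, Fin.mk.injEq, Int.dvd_iff_emod_eq_zero,
    ← Int.emod_eq_emod_iff_emod_sub_eq_zero]
  omega

theorem rim_lt (hN : 4 ≤ N) (i : ℤ) : (rim hN i).val < N := by
  have h1 := Int.emod_nonneg i (b := (N : ℤ)) (by omega)
  have h2 := Int.emod_lt_of_pos i (b := (N : ℤ)) (by omega)
  change (i % (N : ℤ)).toNat < N
  omega

/-- The first hub. -/
def hubZ (N : ℕ) : Fin (N + 2) := ⟨N, by omega⟩

/-- The second hub. -/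
def hubW (N : ℕ) : Fin (N + 2) := ⟨N + 1, by omega⟩

theorem hubZ_notMem (hN : 4 ≤ N) : hubZ N ∉ Set.range (rim hN) := by
  rintro ⟨i, hi⟩
  have := rim_lt hN i
  rw [hi, hubZ] at this
  exact absurd this (lt_irrefl _)

theorem hubW_notMem (hN : 4 ≤ N) : hubW N ∉ Set.range (rim hN) := by
  rintro ⟨i, hi⟩
  have := rim_lt hN i
  rw [hi, hubW] at this
  simp at this

theorem hub_ne : hubZ N ≠ hubW N := by
  simp [hubZ, hubW]

theorem rim_cover (hN : 4 ≤ N) (v : Fin (N + 2)) :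
    v ∈ Set.range (rim hN) ∨ v = hubZ N ∨ v = hubW N := by
  obtain ⟨x, hx⟩ := v
  by_cases h : x < N
  · refine Or.inl ⟨x, Fin.ext ?_⟩
    change ((x : ℤ) % (N : ℤ)).toNat = x
    rw [Int.emod_eq_of_lt (by omega) (by omega)]
    simp
  · right
    rcases (by omega : x = N ∨ x = N + 1) with rfl | rfl
    exacts [Or.inl rfl, Or.inr rfl]

theorem rim_cyc (hN : 4 ≤ N) : IsCyc (cycG (rim hN)) N (rim hN) :=
  cycG_isCyc (by omega) (rim_inj hN)

/-- The extremal graphs missing an even number of edges. -/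
theorem exists_even (hN : 4 ≤ N) {j : ℕ} (hj : 2 * j ≤ N) :
    IsPlanar (spool (rim hN) (hubZ N) (hubW N) (odds (rim hN) j)) ∧
      edgeCount (spool (rim hN) (hubZ N) (hubW N) (odds (rim hN) j)) + 2 * j = 3 * N ∧
      ((N = 4 → j ≤ 1) →
        (addableSet (spool (rim hN) (hubZ N) (hubW N) (odds (rim hN) j))).ncard ≤ 3 * j) := by
  refine ⟨spool_planar (rim_cyc hN) (hubZ_notMem hN) (hubW_notMem hN) hub_ne, ?_, fun h4 =>
    extremal_addable (rim_cyc hN) (hubZ_notMem hN) (hubW_notMem hN) hub_ne (rim_cover hN) hN hj h4⟩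
  have := spool_edgeCount (rim_cyc hN) (hubZ_notMem hN) (hubW_notMem hN) hub_ne
    (P := odds (rim hN) j) (by rintro _ ⟨i, -, rfl⟩; exact ⟨_, rfl⟩)
  rwa [odds_ncard (rim_inj hN) hj] at this

/-- With an odd number of missing edges, a missing spoke is added to an extremal graph; the spoke
itself is no longer addable. -/
theorem exists_odd (hN : 4 ≤ N) {j : ℕ} (hj : 2 * j ≤ N) (hj1 : 1 ≤ j) (h4 : N = 4 → j ≤ 1) :
    ∃ G : SimpleGraph (Fin (N + 2)), IsPlanar G ∧ edgeCount G + (2 * j - 1) = 3 * N ∧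
      (addableSet G).ncard ≤ 3 * j - 1 := by
  obtain ⟨-, h2, h3⟩ := exists_even hN hj
  set G0 := spool (rim hN) (hubZ N) (hubW N) (odds (rim hN) j) with hG0
  have hpar : rim hN 1 ∈ odds (rim hN) j := ⟨0, ⟨le_rfl, by exact_mod_cast hj1⟩, rfl⟩
  have hne : hubZ N ≠ rim hN 1 := fun h => hubZ_notMem hN ⟨1, h.symm⟩
  have hnadj : ¬ G0.Adj (hubZ N) (rim hN 1) := by
    rintro ((h | h) | h)
    · exact hubZ_notMem hN (inW_cycG h).1
    · rcases h.2 with ⟨-, h⟩ | ⟨h, -⟩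
      exacts [h.2 hpar, hne h.symm]
    · rcases h.2 with ⟨h, -⟩ | ⟨h, -⟩
      exacts [hub_ne h, hubW_notMem hN ⟨1, h⟩]
  have hplanar : IsPlanar (G0 ⊔ edge (hubZ N) (rim hN 1)) := by
    refine planar_mono (spool_planar (rim_cyc hN) (hubZ_notMem hN) (hubW_notMem hN) hub_ne
      (P := ∅)) (sup_le (sup_le_sup (sup_le_sup le_rfl ?_) ?_) ?_)
    · exact fun u v huv =>
        ⟨huv.1, huv.2.imp (fun h => ⟨h.1, h.2.1, id⟩) fun h => ⟨h.1, h.2.1, id⟩⟩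
    · exact fun u v huv =>
        ⟨huv.1, huv.2.imp (fun h => ⟨h.1, h.2.1, id⟩) fun h => ⟨h.1, h.2.1, id⟩⟩
    · intro u v huv
      obtain ⟨h, huv⟩ := edge_adj'.1 huv
      refine Or.inl (Or.inr ⟨huv, h.imp ?_ ?_⟩)
      · rintro ⟨rfl, rfl⟩; exact ⟨rfl, ⟨1, rfl⟩, id⟩
      · rintro ⟨rfl, rfl⟩; exact ⟨rfl, ⟨1, rfl⟩, id⟩
  refine ⟨G0 ⊔ edge (hubZ N) (rim hN 1), hplanar, ?_, ?_⟩
  · rw [edgeCount_add_edge hne hnadj]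
    omega
  · have hmem : s(hubZ N, rim hN 1) ∈ addableSet G0 :=
      ⟨fun h => hne (Sym2.mk_isDiag_iff.1 h), hnadj, hplanar⟩
    have hsub : addableSet (G0 ⊔ edge (hubZ N) (rim hN 1)) ⊆
        addableSet G0 \ {s(hubZ N, rim hN 1)} := by
      intro e he
      refine ⟨⟨he.1, fun h => he.2.1 ?_, planar_mono he.2.2 (sup_le_sup_right le_sup_left _)⟩, ?_⟩
      · exact edgeSet_mono le_sup_left h
      · rintro rfl
        exact he.2.1 (Or.inr (edge_adj'.2 ⟨Or.inl ⟨rfl, rfl⟩, hne⟩))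
    have h5 := Set.ncard_le_ncard hsub (Set.toFinite _)
    have h6 := Set.ncard_sdiff_singleton_add_one hmem (Set.toFinite _)
    have := h3 h4
    omega

/-- Six vertices and nine edges: an edge of the extremal graph with ten edges is removed; of the six
non-edges one is not addable. -/
theorem exists_six : ∃ G : SimpleGraph (Fin (4 + 2)), IsPlanar G ∧ edgeCount G + 3 = 3 * 4 ∧
      (addableSet G).ncard ≤ 5 := by
  have hN : 4 ≤ 4 := le_rfl
  obtain ⟨h1, h2, -⟩ := exists_even hN (j := 1) (by omega)
  set c := rim hN with hcdef
  set G0 := spool c (hubZ 4) (hubW 4) (odds c 1) with hG0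
  have hinj := rim_inj hN
  rw [← hcdef] at hinj
  have hc := rim_cyc hN
  rw [← hcdef] at hc
  have hz := hubZ_notMem hN
  have hw := hubW_notMem hN
  rw [← hcdef] at hz hw
  have hodd : ∀ i, ¬ (4 : ℤ) ∣ i - 1 → c i ∉ odds c 1 := by
    intro i hi h
    obtain ⟨k, hk1, hk2, hk⟩ := (mem_odds hinj).1 h
    obtain rfl : k = 0 := by push_cast at hk2; omega
    exact hi (by simpa using hk)
  have hadj0 : ∀ i, G0.Adj (c i) (c (i + 1)) := fun i => Or.inl (Or.inl (hc.adj i))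
  have h12 : c 1 ≠ c 2 := hc.ne_of (by omega) (by norm_num)
  have h13 : c 1 ≠ c 3 := hc.ne_of (by omega) (by norm_num)
  set G := G0.deleteEdges {s(c 2, c 3)} with hG
  have hle : G ≤ G0 := G0.deleteEdges_le _
  have hkeep : ∀ u v, u ≠ c 2 → u ≠ c 3 → G0.Adj u v → G.Adj u v := by
    intro u v h2 h3 huv
    rw [hG, deleteEdges_adj]
    refine ⟨huv, fun h => ?_⟩
    rcases Sym2.eq_iff.1 (Set.mem_singleton_iff.1 h) with h | h
    exacts [h2 h.1, h3 h.1]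
  have hcount : edgeCount G + 1 = edgeCount G0 := by
    unfold edgeCount
    rw [hG, edgeSet_deleteEdges]
    exact Set.ncard_sdiff_singleton_add_one (hadj0 2) (Set.toFinite _)
  have hGp := planar_mono h1 hle
  have hspz : ∀ i, c i ∉ odds c 1 → G.Adj (hubZ 4) (c i) := fun i hi =>
    hkeep _ _ (fun h => hz ⟨2, h.symm⟩) (fun h => hz ⟨3, h.symm⟩)
      (Or.inl (Or.inr ⟨fun h => hz ⟨i, h.symm⟩, Or.inl ⟨rfl, ⟨i, rfl⟩, hi⟩⟩))
  have hspw : ∀ i, c i ∉ odds c 1 → G.Adj (hubW 4) (c i) := fun i hi =>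
    hkeep _ _ (fun h => hw ⟨2, h.symm⟩) (fun h => hw ⟨3, h.symm⟩)
      (Or.inr ⟨fun h => hw ⟨i, h.symm⟩, Or.inl ⟨rfl, ⟨i, rfl⟩, hi⟩⟩)
  have hbad : ¬ IsPlanar (G ⊔ fromEdgeSet {s(c 1, c 3)}) := by
    have e4 : c (1 + ((4 : ℕ) : ℤ) - 1) = c 0 := (hinj _ _).2 (by norm_num)
    have h01 : G0.Adj (c 0) (c 1) := hadj0 0
    refine rim_not_planar (N := 4) (P := odds c 1) (z := hubZ 4) (w := hubW 4) (a := 1) (b := 3)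
      (t := 3) hinj (fun i hi => Or.inl (hspz i hi)) (fun i hi => Or.inl (hspw i hi)) hz hw hub_ne
      (Or.inl (hkeep _ _ h12 h13 (hadj0 1))) ?_ (hodd _ (by norm_num)) ?_ ?_ (by norm_num)
      (by norm_num) (hodd _ (by norm_num)) (by norm_num) (by norm_num)
      (Or.inr ((fromEdgeSet_adj _).2 ⟨rfl, h13⟩))
    · rw [e4]; exact Or.inl (hkeep _ _ h12 h13 h01.symm)
    · rw [e4]; exact hodd _ (by norm_num)
    · exact conn_Icc (by norm_num) fun i hi1 hi2 => by push_cast at hi2; omega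
  refine ⟨G, hGp, by omega, ?_⟩
  have hnG : s(c 1, c 3) ∉ G.edgeSet := by
    intro h
    refine hbad (planar_mono hGp (sup_le le_rfl fun u v huv => ?_))
    rw [fromEdgeSet_adj, Set.mem_singleton_iff] at huv
    rw [← mem_edgeSet, huv.1]
    exact h
  have hsub : insert s(c 1, c 3) (addableSet G) ∪ G.edgeSet ⊆
      (res (⊤ : SimpleGraph (Fin (4 + 2))) Set.univ).edgeSet := by
    have hall : ∀ e : Sym2 (Fin (4 + 2)), ¬ e.IsDiag → e ∈ (res ⊤ Set.univ).edgeSet := by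
      intro e
      induction e using Sym2.ind with
      | _ u v => exact fun h => ⟨fun h' => h (Sym2.mk_isDiag_iff.2 h'), trivial, trivial⟩
    rintro e ((rfl | he) | he)
    · exact hall _ fun h => h13 (Sym2.mk_isDiag_iff.1 h)
    · exact hall _ he.1
    · exact hall _ (G.not_isDiag_of_mem_edgeSet he)
  have h15 := edgeCount_complete (Set.univ : Set (Fin (4 + 2)))
  rw [Set.ncard_univ, Nat.card_eq_fintype_card, Fintype.card_fin] at h15
  have hcard := Set.ncard_le_ncard hsub (Set.toFinite _)
  rw [Set.ncard_union_eq _ (Set.toFinite _) (Set.toFinite _), Set.ncard_insert_of_notMem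
    (fun h => hbad h.2.2) (Set.toFinite _)] at hcard
  · unfold edgeCount at *
    norm_num [Nat.choose] at h15
    omega
  · rw [Set.disjoint_left]
    rintro e (rfl | he)
    exacts [hnG, he.2.1]

theorem upper_bound (hN : 4 ≤ N) {k : ℕ} (hk : k + 1 ≤ N) :
    ∃ G : SimpleGraph (Fin (N + 2)), IsPlanar G ∧ edgeCount G + k = 3 * N ∧
      2 * (addableSet G).ncard ≤ 3 * k + 1 := by
  rcases Nat.even_or_odd' k with ⟨j, rfl | rfl⟩
  · obtain ⟨h1, h2, h3⟩ := exists_even hN (j := j) (by omega)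
    have := h3 (by omega)
    exact ⟨_, h1, h2, by omega⟩
  · by_cases h4 : N = 4 ∧ j = 1
    · obtain ⟨rfl, rfl⟩ := h4
      obtain ⟨G, h1, h2, h3⟩ := exists_six
      exact ⟨G, h1, h2, by omega⟩
    · obtain ⟨G, h1, h2, h3⟩ := exists_odd hN (j := j + 1) (by omega) (by omega) (by omega)
      exact ⟨G, h1, by omega, by omega⟩

end Upper
end PlanarAdd

theorem addMin_dense_range (n m : ℕ) (hn : 6 ≤ n) (h1 : 2 * n - 3 ≤ m)
    (h2 : m ≤ 3 * n - 6) :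
    (addMin n m : ℤ) = ⌈(3 : ℚ) / 2 * (3 * (n : ℚ) - 6 - (m : ℚ))⌉ := by
  obtain ⟨N, rfl⟩ : ∃ N, n = N + 2 := ⟨n - 2, by omega⟩
  obtain ⟨k, hk⟩ : ∃ k, m + k = 3 * N := ⟨3 * N - m, by omega⟩
  have hcard : (Set.univ : Set (Fin (N + 2))).ncard = N + 2 := by
    rw [Set.ncard_univ, Nat.card_eq_fintype_card, Fintype.card_fin]
  obtain ⟨G, hG, hGm, hGa⟩ := PlanarAdd.upper_bound (N := N) (by omega) (k := k) (by omega)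
  have hmem : G ∈ planarSet (N + 2) m := ⟨hG, by omega⟩
  have hup : addMin (N + 2) m ≤ (addableSet G).ncard := Nat.sInf_le ⟨G, hmem, rfl⟩
  have hlow : 3 * k ≤ 2 * addMin (N + 2) m := by
    obtain ⟨H, ⟨hH, hHm⟩, hHa⟩ := Nat.sInf_mem (s := (fun G => (addableSet G).ncard) ''
      planarSet (N + 2) m) ⟨_, G, hmem, rfl⟩
    have := PlanarAdd.lower_bound k H hH (by omega) (by omega) (by omega)
    rw [show addMin (N + 2) m = (addableSet H).ncard from hHa.symm]
    exact this
  have hq : (3 : ℚ) / 2 * (3 * ((N + 2 : ℕ) : ℚ) - 6 - (m : ℚ)) = 3 * (k : ℚ) / 2 := by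
    have : (m : ℚ) + k = 3 * N := by exact_mod_cast hk
    push_cast
    linear_combination (-(3 : ℚ) / 2) * this
  rw [hq, eq_comm, Int.ceil_eq_iff]
  have hl : (3 * k : ℚ) ≤ 2 * (addMin (N + 2) m : ℚ) := by exact_mod_cast hlow
  have hu : (2 * (addMin (N + 2) m) : ℚ) ≤ 3 * k + 1 := by
    have : 2 * addMin (N + 2) m ≤ 3 * k + 1 := by omega
    exact_mod_cast this
  push_cast
  constructor <;> linarith
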